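/- (Decision-tree complexity of Hopcroft's problem in ℝ^d.) For every integer d ≥ 2 there exist constants C and D such that: for every n ≥ 1 there is an algebraic decision tree of degree at most D over ℝ^N, with N = d·n + (d+1)·n, whose input encodes n points p_1, …, p_n ∈ ℝ^d and n hyperplanes given by coefficient pairs (a_1,b_1), …, (a_n,b_n) ∈ ℝ^d × ℝ, of depth at most C·n^{2d/(d+1)}, that computes, on every input with a_j ≠ 0 for all j, the number of pairs (i,j) with a_j·p_i > b_j. -/

import Mathlib

/-!
Only sign queries are counted, so all computation between queries is free. A strategy is described
by the finite set `A` of sign patterns (represented by generic inputs) that are still possible, and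
is charged against a budget that contains the potential `K * log |A|` (`Cost`). At the beginning
Warren's bound (`warren`) on the number of sign conditions of `poly(n)` polynomials in `O(n)`
variables gives `log |A| = O(n log n)`. Searching for a valid option among `R` options then has
constant amortised cost (`Cost.search`): the option tested is one that is valid for at least
`|A| / R` of the inputs, so each failure shrinks `A` by a constant factor and is paid for by the
drop of the potential.

Points and hyperplanes are homogenised to vectors of `ℝ ^ (d + 1)`, so that `a ⬝ᵥ p - b` becomes an
inner product and the two kinds of objects play symmetric roles. The cells of the arrangement of a
sample `R`, which always contains the coordinate hyperplanes, are triangulated by pulling: each face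
is coned from its point nearest to the sign vector of the cell. A cone is named by a
combinatorial `Code` that depends on at most `D0 d` items, and `Act v R c` says that `c` is a cone of
the triangulation for `R`. Every generic vector lies in such a cone (`exists_act`), their number
is `O(|R| ^ d)` (`card_act_le`), and activity is local (`Act.locality`), which is what the Clarkson-Shor
argument (`clarkson`) needs. All predicates about cones are decided by the signs of inner products of
vectors in `N3`, that is, of iterated cross products of constant degree; this gives the degree
bound `qdeg d`.

Let `Bd d ι K α β γ δ` say that all signs in `P × H` can be found at amortised cost
`α |P| + β |H| + γ |P| |H| + δ`. One step of the recursion (`bd_step`) takes a sample of `b`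
hyperplanes, locates all points, and recurses in each cone with the hyperplanes crossing it. On
average a sample is good, and a good one is found by a chain of increasingly large random tests
(`chain_exists`, `Cost.staged`). By Chernoff bounds the proportion of inputs that pass the tests so
far but fail the next one is exponentially small in the cost of the tests made, so again the potential
pays for the failures. Up to constants a step multiplies `β` by `b ^ (d - 1)`, `γ` by `1 / b` and
`δ` by `b ^ d`.

The recursion starts with a direct treatment of groups of points (`bd_leaf`), then makes about `L`
steps, exchanges the roles of points and hyperplanes, and makes `L` more steps (`bd_main`). With
`r = b ^ L` the total is `O(n r ^ (d - 1) + n ^ 2 / r ^ 2 + r ^ (2 d))` plus the potential term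
`b ^ O(1) n log n`. For `r` about `n ^ (1 / (d + 1))` the first three terms are
`O(n ^ (2 d / (d + 1)))`, and since `L` is a large constant, the last one is smaller. The constant
number `2 L` of levels is the reason why no logarithmic factor appears.

Degenerate inputs are handled by running the strategy on the infinitesimally perturbed input
`base + ε e + ε ^ 2 g` with `g` generic (`exists_adt`): the sign of a query is the sign of the first
nonzero coefficient in `ε`, which takes at most `2 * qdeg d + 1` comparisons. The vector `e`
increases all offsets by `ε`, so `b < a ⬝ᵥ p` holds for the original input exactly if it holds for the
perturbed one.
-/

/-- An algebraic decision tree over `ℝ^N` with output values in `β`: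
each internal node is labeled by a polynomial in `N` variables and has three
children corresponding to the sign (negative / zero / positive) of the
polynomial at the input; each leaf is labeled by an output value. -/
inductive ADT (N : ℕ) (β : Type) : Type
  | leaf : β → ADT N β
  | node : MvPolynomial (Fin N) ℝ → ADT N β → ADT N β → ADT N β → ADT N β

namespace ADT

/-- Evaluating an algebraic decision tree on an input `x ∈ ℝ^N`. -/
noncomputable def eval {N : ℕ} {β : Type} : ADT N β → (Fin N → ℝ) → β
  | leaf b, _ => b
  | node p tneg tzero tpos, x =>
      if MvPolynomial.eval x p < 0 then tneg.eval x
      else if MvPolynomial.eval x p = 0 then tzero.eval x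
      else tpos.eval x

/-- The depth of an algebraic decision tree: the maximum number of internal
nodes on a root-to-leaf path. -/
def depth {N : ℕ} {β : Type} : ADT N β → ℕ
  | leaf _ => 0
  | node _ tneg tzero tpos => 1 + max (max tneg.depth tzero.depth) tpos.depth

/-- All node polynomials of the tree have total degree at most `D`. -/
def DegLE {N : ℕ} {β : Type} (D : ℕ) : ADT N β → Prop
  | leaf _ => True
  | node p tneg tzero tpos => p.totalDegree ≤ D ∧ tneg.DegLE D ∧ tzero.DegLE D ∧ tpos.DegLE D

end ADT

/-- Index of the `j`-th coordinate of the `i`-th point in the input vector. -/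
def ptIdx (d n : ℕ) (i : Fin n) (j : Fin d) : Fin (d * n + (d + 1) * n) :=
  ⟨(i : ℕ) * d + (j : ℕ), by
    have hi : (i : ℕ) + 1 ≤ n := i.isLt
    have hj : (j : ℕ) < d := j.isLt
    calc (i : ℕ) * d + (j : ℕ) < (i : ℕ) * d + d := by omega
      _ = ((i : ℕ) + 1) * d := by ring
      _ ≤ n * d := Nat.mul_le_mul_right d hi
      _ = d * n := Nat.mul_comm n d
      _ ≤ d * n + (d + 1) * n := Nat.le_add_right _ _⟩

/-- Index of the `j`-th coefficient of the `i`-th hyperplane in the input vector. -/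
def coefIdx (d n : ℕ) (i : Fin n) (j : Fin d) : Fin (d * n + (d + 1) * n) :=
  ⟨d * n + ((i : ℕ) * (d + 1) + (j : ℕ)), by
    have hi : (i : ℕ) + 1 ≤ n := i.isLt
    have hj : (j : ℕ) < d := j.isLt
    have : (i : ℕ) * (d + 1) + (j : ℕ) < (d + 1) * n := by
      calc (i : ℕ) * (d + 1) + (j : ℕ) < (i : ℕ) * (d + 1) + (d + 1) := by omega
        _ = ((i : ℕ) + 1) * (d + 1) := by ring
        _ ≤ n * (d + 1) := Nat.mul_le_mul_right (d + 1) hi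
        _ = (d + 1) * n := Nat.mul_comm n (d + 1)
    omega⟩

/-- Index of the offset (right-hand side) of the `i`-th hyperplane in the input vector. -/
def offIdx (d n : ℕ) (i : Fin n) : Fin (d * n + (d + 1) * n) :=
  ⟨d * n + ((i : ℕ) * (d + 1) + d), by
    have hi : (i : ℕ) + 1 ≤ n := i.isLt
    have : (i : ℕ) * (d + 1) + d < (d + 1) * n := by
      calc (i : ℕ) * (d + 1) + d < (i : ℕ) * (d + 1) + (d + 1) := by omega
        _ = ((i : ℕ) + 1) * (d + 1) := by ring
        _ ≤ n * (d + 1) := Nat.mul_le_mul_right (d + 1) hi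
        _ = (d + 1) * n := Nat.mul_comm n (d + 1)
    omega⟩

/-! ### Warren's bound on the number of sign conditions -/

namespace Hopcroft
open MvPolynomial

section Perron
variable {σ : Type} [Fintype σ] [DecidableEq σ]

/-- The product `∏ g_s ^ a_s * l ^ j` of Perron's relation. -/
noncomputable def perronTerm (g : σ → MvPolynomial σ ℝ) (l : MvPolynomial σ ℝ) {k K : ℕ}
    (i : (σ → Fin (k + 1)) × Fin (K + 1)) : MvPolynomial σ ℝ :=
  (∏ s, g s ^ (i.1 s : ℕ)) * l ^ (i.2 : ℕ)

set_option linter.unusedSectionVars false in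
lemma totalDegree_perronTerm (g : σ → MvPolynomial σ ℝ) (l : MvPolynomial σ ℝ) {k K Δ : ℕ}
    (hg : ∀ s, (g s).totalDegree ≤ Δ) (hl : l.totalDegree ≤ 1)
    (i : (σ → Fin (k + 1)) × Fin (K + 1)) :
    (perronTerm g l i).totalDegree ≤ Fintype.card σ * (k * Δ) + K := by
  refine (totalDegree_mul _ _).trans (add_le_add ?_ ?_)
  · refine (totalDegree_finsetProd _ _).trans ?_
    refine (Finset.sum_le_card_nsmul _ _ (k * Δ) ?_).trans (by simp)
    intro s _
    refine (totalDegree_pow _ _).trans (Nat.mul_le_mul (Nat.lt_succ_iff.1 (i.1 s).2) (hg s))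
  · refine (totalDegree_pow _ _).trans ?_
    have := Nat.lt_succ_iff.1 i.2.2
    nlinarith

/-- A nontrivial polynomial relation between the `g_s` and `l`, by a dimension count. -/
lemma exists_perron_relation (g : σ → MvPolynomial σ ℝ) (l : MvPolynomial σ ℝ) {k K Δ E : ℕ}
    (hg : ∀ s, (g s).totalDegree ≤ Δ) (hl : l.totalDegree ≤ 1)
    (hE : Fintype.card σ * (k * Δ) + K ≤ E)
    (hlt : (E + 1) ^ Fintype.card σ < (k + 1) ^ Fintype.card σ * (K + 1)) :
    ∃ w : (σ → Fin (k + 1)) × Fin (K + 1) → ℝ, w ≠ 0 ∧ ∑ i, C (w i) * perronTerm g l i = 0 := by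
  classical
  let expo : (σ → Fin (E + 1)) → (σ →₀ ℕ) := fun e => Finsupp.equivFunOnFinite.symm fun s => (e s : ℕ)
  let L : ((σ → Fin (k + 1)) × Fin (K + 1) → ℝ) →ₗ[ℝ] ((σ → Fin (E + 1)) → ℝ) :=
    { toFun := fun w e => coeff (expo e) (∑ i, C (w i) * perronTerm g l i)
      map_add' := by
        intro w w'
        funext e
        simp [add_mul, Finset.sum_add_distrib]
      map_smul' := by
        intro r w
        funext e
        simp [mul_assoc, Finset.mul_sum, coeff_sum, coeff_C_mul] }
  have hker : LinearMap.ker L ≠ ⊥ := by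
    apply LinearMap.ker_ne_bot_of_finrank_lt
    simpa using hlt
  obtain ⟨w, hw, hw0⟩ := (Submodule.ne_bot_iff _).1 hker
  refine ⟨w, hw0, ?_⟩
  have hdeg : (∑ i, C (w i) * perronTerm g l i).totalDegree ≤ E := by
    refine totalDegree_finsetSum_le fun i _ => ?_
    refine (totalDegree_mul _ _).trans ?_
    rw [totalDegree_C, zero_add]
    exact (totalDegree_perronTerm g l hg hl i).trans hE
  ext m
  rw [coeff_zero]
  by_contra hm
  have hmem : m ∈ (∑ i, C (w i) * perronTerm g l i).support := mem_support_iff.2 hm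
  have hle := (le_totalDegree hmem).trans hdeg
  have hms : ∀ s, m s < E + 1 := fun s => by
    have : m s ≤ m.sum fun _ e => e := by
      by_cases h : s ∈ m.support
      · exact Finset.single_le_sum (f := fun s => m s) (fun _ _ => Nat.zero_le _) h
      · simp [Finsupp.notMem_support_iff.1 h]
    omega
  have := congrFun (LinearMap.mem_ker.1 hw) (fun s => ⟨m s, hms s⟩)
  have he : expo (fun s => ⟨m s, hms s⟩) = m := by ext s; simp [expo]
  simp only [L, LinearMap.coe_mk, AddHom.coe_mk, he, Pi.zero_apply] at this
  exact hm this

/-- For all `c` off a hypersurface, a linear form takes at most `K` values on the fibre of `g`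
over `c`. -/
lemma exists_fiber_bound (g : σ → MvPolynomial σ ℝ) (l : MvPolynomial σ ℝ) {k K Δ E : ℕ}
    (hg : ∀ s, (g s).totalDegree ≤ Δ) (hl : l.totalDegree ≤ 1)
    (hE : Fintype.card σ * (k * Δ) + K ≤ E)
    (hlt : (E + 1) ^ Fintype.card σ < (k + 1) ^ Fintype.card σ * (K + 1)) :
    ∃ q : MvPolynomial σ ℝ, q ≠ 0 ∧ ∀ c : σ → ℝ, eval c q ≠ 0 → ∀ Z : Finset (σ → ℝ),
      (∀ z ∈ Z, ∀ s, eval z (g s) = c s) → (Z.image fun z => eval z l).card ≤ K := by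
  classical
  obtain ⟨w, hw0, hw⟩ := exists_perron_relation g l hg hl hE hlt
  obtain ⟨⟨a₀, j₀⟩, hi⟩ : ∃ i, w i ≠ 0 := by
    by_contra h
    push Not at h
    exact hw0 (funext h)
  let expo : (σ → Fin (k + 1)) → (σ →₀ ℕ) := fun e => Finsupp.equivFunOnFinite.symm fun s => (e s : ℕ)
  have hinj : Function.Injective expo := by
    intro a b hab
    funext s
    have := DFunLike.congr_fun hab s
    exact Fin.ext (by simpa [expo] using this)
  let q : Fin (K + 1) → MvPolynomial σ ℝ := fun j => ∑ a, monomial (expo a) (w (a, j))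
  refine ⟨q j₀, ?_, ?_⟩
  · intro h
    have := congrArg (coeff (expo a₀)) h
    simp only [q, coeff_sum, coeff_monomial, coeff_zero, hinj.eq_iff] at this
    simp at this
    exact hi this
  · intro c hc Z hZ
    let P : Polynomial ℝ := ∑ j : Fin (K + 1), Polynomial.monomial (j : ℕ) (eval c (q j))
    have hP0 : P ≠ 0 := by
      intro h
      have := congrArg (fun p => Polynomial.coeff p (j₀ : ℕ)) h
      simp only [P, Polynomial.finsetSum_coeff, Polynomial.coeff_monomial, Polynomial.coeff_zero,
        Fin.val_inj] at this
      simp at this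
      exact hc this
    have hPd : P.natDegree ≤ K := by
      refine Polynomial.natDegree_sum_le_of_forall_le _ _ fun j _ => ?_
      exact (Polynomial.natDegree_monomial_le _).trans (Nat.lt_succ_iff.1 j.2)
    have hsub : (Z.image fun z => eval z l) ⊆ P.roots.toFinset := by
      intro v hv
      obtain ⟨z, hz, rfl⟩ := Finset.mem_image.1 hv
      rw [Multiset.mem_toFinset, Polynomial.mem_roots hP0, Polynomial.IsRoot]
      have h1 := congrArg (eval z) hw
      simp only [map_sum, map_mul, eval_C, map_zero, perronTerm, map_prod, map_pow] at h1
      rw [Fintype.sum_prod_type_right] at h1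
      rw [← h1]
      simp only [P, Polynomial.eval_finsetSum, Polynomial.eval_monomial, q, map_sum,
        eval_monomial]
      refine Finset.sum_congr rfl fun j _ => Finset.sum_congr rfl fun a _ => ?_
      rw [← mul_assoc]
      congr 2
      rw [Finsupp.prod_fintype _ _ (by simp)]
      refine Finset.prod_congr rfl fun s _ => ?_
      simp [expo, hZ z hz s]
    exact (Finset.card_le_card hsub).trans ((Multiset.toFinset_card_le _).trans
      ((Polynomial.card_roots' P).trans hPd))

/-- Finitely many linear forms suffice to separate any `M` points. -/
lemma exists_separating (M : ℕ) : ∃ (U : ℕ) (l : Fin U → MvPolynomial σ ℝ),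
    (∀ u, (l u).totalDegree ≤ 1) ∧ ∀ Z : Finset (σ → ℝ), Z.card ≤ M →
      ∃ u, Set.InjOn (fun z => eval z (l u)) Z := by
  classical
  let N := Fintype.card σ
  let e := Fintype.equivFin σ
  refine ⟨M * M * N + 1, fun u => ∑ s, C ((u : ℝ) ^ (e s : ℕ)) * X s, ?_, ?_⟩
  · intro u
    refine totalDegree_finsetSum_le fun s _ => ?_
    refine (totalDegree_mul _ _).trans ?_
    rw [totalDegree_C, totalDegree_X]
  · intro Z hZ
    by_contra hcon
    push Not at hcon
    have h : ∀ u : Fin (M * M * N + 1), ∃ p ∈ Z ×ˢ Z, p.1 ≠ p.2 ∧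
        ∑ s, (u : ℝ) ^ (e s : ℕ) * p.1 s = ∑ s, (u : ℝ) ^ (e s : ℕ) * p.2 s := by
      intro u
      have := hcon u
      simp only [Set.InjOn, not_forall] at this
      obtain ⟨a, ha, b, hb, hab, hne⟩ := this
      refine ⟨(a, b), Finset.mem_product.2 ⟨ha, hb⟩, hne, ?_⟩
      simpa using hab
    let P : (σ → ℝ) × (σ → ℝ) → Polynomial ℝ := fun p =>
      ∑ s, Polynomial.monomial (e s : ℕ) (p.1 s - p.2 s)
    have hP0 : ∀ p : (σ → ℝ) × (σ → ℝ), p.1 ≠ p.2 → P p ≠ 0 := by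
      intro p hp h0
      apply hp
      funext s
      have := congrArg (fun r => Polynomial.coeff r (e s : ℕ)) h0
      simp only [P, Polynomial.finsetSum_coeff, Polynomial.coeff_monomial, Polynomial.coeff_zero,
        Fin.val_inj, e.injective.eq_iff] at this
      simp at this
      linarith
    have hPd : ∀ p, (P p).natDegree ≤ N := by
      intro p
      refine Polynomial.natDegree_sum_le_of_forall_le _ _ fun j _ => ?_
      exact (Polynomial.natDegree_monomial_le _).trans (e j).2.le
    let B : Finset ℝ := (Z ×ˢ Z).biUnion fun p => (P p).roots.toFinset
    have hB : B.card ≤ M * M * N := by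
      refine (Finset.card_biUnion_le_card_mul _ _ N ?_).trans ?_
      · intro p _
        exact (Multiset.toFinset_card_le _).trans ((Polynomial.card_roots' _).trans (hPd p))
      · rw [Finset.card_product]
        gcongr
    have hmaps : ∀ u ∈ (Finset.univ : Finset (Fin (M * M * N + 1))), ((u : ℕ) : ℝ) ∈ B := by
      intro u _
      obtain ⟨p, hp, hne, heq⟩ := h u
      refine Finset.mem_biUnion.2 ⟨p, hp, ?_⟩
      rw [Multiset.mem_toFinset, Polynomial.mem_roots (hP0 p hne), Polynomial.IsRoot]
      simp only [P, Polynomial.eval_finsetSum, Polynomial.eval_monomial, sub_mul,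
        Finset.sum_sub_distrib]
      rw [sub_eq_zero]
      simpa [mul_comm] using heq
    have := Finset.card_le_card_of_injOn (fun u : Fin (M * M * N + 1) => ((u : ℕ) : ℝ)) hmaps
      (by intro a _ b _ hab; exact Fin.ext (by simpa using hab))
    simp at this
    omega

end Perron

section Warren
variable {σ : Type} [Fintype σ]

lemma totalDegree_pderiv_le (s : σ) (p : MvPolynomial σ ℝ) :
    (pderiv s p).totalDegree ≤ p.totalDegree := by
  classical
  conv_lhs => rw [p.as_sum]
  rw [map_sum]
  refine totalDegree_finsetSum_le fun m hm => ?_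
  rw [pderiv_monomial]
  refine (totalDegree_monomial_le _ _).trans ?_
  refine le_trans ?_ (le_totalDegree hm)
  rw [Finsupp.sum_fintype _ _ (by simp), Finsupp.sum_fintype _ _ (by simp)]
  exact Finset.sum_le_sum fun i _ => by simp

lemma hasDerivAt_eval_update [DecidableEq σ] (s : σ) (p : MvPolynomial σ ℝ) (z : σ → ℝ) :
    HasDerivAt (fun t => eval (Function.update z s t) p) (eval z (pderiv s p)) (z s) := by
  induction p using MvPolynomial.induction_on with
  | C a => simpa using hasDerivAt_const (z s) a
  | add p q hp hq =>
    have := hp.fun_add hq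
    simp only [map_add]
    exact this
  | mul_X p i hp =>
    have hX : HasDerivAt (fun t => Function.update z s t i) (if i = s then 1 else 0) (z s) := by
      by_cases h : i = s
      · subst h
        simpa using hasDerivAt_id' (z i)
      · simpa [h] using hasDerivAt_const (z s) (z i)
    have := hp.fun_mul hX
    simp only [map_mul, eval_X, Derivation.leibniz, smul_eq_mul, map_add, pderiv_X]
    refine this.congr_deriv ?_
    rw [Function.update_eq_self]
    by_cases h : i = s
    · subst h; simp; ring
    · simp [h, Pi.single_apply, Ne.symm h]; ring

/-- The auxiliary function `(∏ q)² (ρ - |z|²)`: positive at the chosen points, zero on the walls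
of all sign regions inside the ball. -/
noncomputable def warrenPoly (Q : Finset (MvPolynomial σ ℝ)) (ρ : ℝ) : MvPolynomial σ ℝ :=
  (∏ q ∈ Q, q) ^ 2 * (C ρ - ∑ s, X s ^ 2)

lemma totalDegree_warrenPoly (Q : Finset (MvPolynomial σ ℝ)) (ρ : ℝ) {Dg : ℕ}
    (hdeg : ∀ q ∈ Q, q.totalDegree ≤ Dg) :
    (warrenPoly Q ρ).totalDegree ≤ 2 * (Q.card * Dg) + 2 := by
  refine (totalDegree_mul _ _).trans (add_le_add ?_ ?_)
  · refine (totalDegree_pow _ _).trans (Nat.mul_le_mul_left _ ?_)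
    refine (totalDegree_finsetProd _ _).trans ?_
    simpa using Finset.sum_le_card_nsmul _ _ Dg hdeg
  · refine (totalDegree_sub _ _).trans ?_
    rw [totalDegree_C]
    refine max_le (Nat.zero_le _) (totalDegree_finsetSum_le fun s _ => ?_)
    exact (totalDegree_pow _ _).trans (by rw [totalDegree_X])

lemma eval_warrenPoly (Q : Finset (MvPolynomial σ ℝ)) (ρ : ℝ) (z : σ → ℝ) :
    eval z (warrenPoly Q ρ) = (∏ q ∈ Q, eval z q) ^ 2 * (ρ - ∑ s, z s ^ 2) := by
  simp [warrenPoly, map_prod]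

/-- For small `c`, the function `G - ⟨c, ·⟩` has a local maximum inside the sign region of `x`. -/
lemma exists_critical (Q : Finset (MvPolynomial σ ℝ)) (ρ m : ℝ) (x : σ → ℝ)
    (hx : ∀ q ∈ Q, eval x q ≠ 0) (hρ : ∑ s, x s ^ 2 < ρ) (hm : m ≤ eval x (warrenPoly Q ρ))
    (c : σ → ℝ) (hc : ∀ z : σ → ℝ, ∑ s, z s ^ 2 ≤ ρ → |∑ s, c s * z s| < m / 2) :
    ∃ z : σ → ℝ, (∀ q ∈ Q, SignType.sign (eval z q) = SignType.sign (eval x q)) ∧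
      ∀ s, eval z (pderiv s (warrenPoly Q ρ)) = c s := by
  classical
  set G := warrenPoly Q ρ with hG
  let S : Set (σ → ℝ) := {z | ∑ s, z s ^ 2 ≤ ρ ∧ ∀ q ∈ Q, 0 ≤ eval x q * eval z q}
  let F : (σ → ℝ) → ℝ := fun z => eval z G - ∑ s, c s * z s
  have hFc : Continuous F := by
    refine (MvPolynomial.continuous_eval G).sub ?_
    fun_prop
  have hρ0 : 0 < ρ := lt_of_le_of_lt (Finset.sum_nonneg fun s _ => sq_nonneg _) hρ
  have hSclosed : IsClosed S := by
    refine IsClosed.inter (isClosed_le (f := fun z : σ → ℝ => ∑ s, z s ^ 2) (by fun_prop) continuous_const) ?_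
    have : {z : σ → ℝ | ∀ q ∈ Q, 0 ≤ eval x q * eval z q}
        = ⋂ q ∈ Q, {z | 0 ≤ eval x q * eval z q} := by ext; simp
    change IsClosed {z : σ → ℝ | ∀ q ∈ Q, 0 ≤ eval x q * eval z q}
    rw [this]
    exact isClosed_biInter fun q _ =>
      isClosed_le continuous_const (continuous_const.mul (MvPolynomial.continuous_eval q))
  have hScomp : IsCompact S := by
    refine (isCompact_univ_pi (fun _ : σ => isCompact_Icc (a := -(ρ + 1)) (b := ρ + 1))).of_isClosed_subset
      hSclosed ?_
    intro z hz s _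
    have : z s ^ 2 ≤ ρ := (Finset.single_le_sum (f := fun s => z s ^ 2) (fun _ _ => sq_nonneg _)
      (Finset.mem_univ s)).trans hz.1
    constructor <;> nlinarith
  have hxS : x ∈ S := ⟨hρ.le, fun q _ => mul_self_nonneg _⟩
  obtain ⟨z, hzS, hzmax⟩ := hScomp.exists_isMaxOn ⟨x, hxS⟩ hFc.continuousOn
  have h1 : F x ≤ F z := hzmax hxS
  have hzpos : 0 < eval z G := by
    have a1 := abs_lt.1 (hc x hρ.le)
    have a2 := abs_lt.1 (hc z hzS.1)
    simp only [F] at h1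
    linarith
  rw [hG, eval_warrenPoly] at hzpos
  have hprod : ∏ q ∈ Q, eval z q ≠ 0 := by
    intro h
    rw [h] at hzpos
    simp at hzpos
  have hzρ : ∑ s, z s ^ 2 < ρ := by
    by_contra h
    push Not at h
    have : (∏ q ∈ Q, eval z q) ^ 2 * (ρ - ∑ s, z s ^ 2) ≤ 0 :=
      mul_nonpos_of_nonneg_of_nonpos (sq_nonneg _) (by linarith)
    linarith
  have hzq : ∀ q ∈ Q, 0 < eval x q * eval z q := fun q hq =>
    lt_of_le_of_ne (hzS.2 q hq) (Ne.symm (mul_ne_zero (hx q hq) (Finset.prod_ne_zero_iff.1 hprod q hq)))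
  refine ⟨z, ?_, ?_⟩
  · intro q hq
    have := hzq q hq
    rcases lt_or_gt_of_ne (hx q hq) with h | h
    · rw [sign_neg h, sign_neg (by nlinarith)]
    · rw [sign_pos h, sign_pos (by by_contra h'; nlinarith)]
  · intro s
    have hnhds : S ∈ nhds z := by
      have ho : IsOpen ({z : σ → ℝ | ∑ s, z s ^ 2 < ρ} ∩ ⋂ q ∈ Q, {z | 0 < eval x q * eval z q}) := by
        refine IsOpen.inter (isOpen_lt (by fun_prop) continuous_const) ?_
        exact isOpen_biInter_finset fun q _ =>
          isOpen_lt continuous_const (continuous_const.mul (MvPolynomial.continuous_eval q))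
      refine Filter.mem_of_superset (ho.mem_nhds ⟨hzρ, by simpa using hzq⟩) ?_
      intro y hy
      refine ⟨le_of_lt hy.1, fun q hq => le_of_lt ?_⟩
      have := hy.2
      simp only [Set.mem_iInter] at this
      exact this q hq
    have hloc : IsLocalMax F z := hzmax.isLocalMax hnhds
    have hup : Filter.Tendsto (fun t => Function.update z s t) (nhds (z s)) (nhds z) := by
      have : Continuous fun t => Function.update z s t := by fun_prop
      simpa using this.tendsto (z s)
    have hloc' : IsLocalMax (fun t => F (Function.update z s t)) (z s) := by
      have := hup.eventually hloc
      simpa [IsLocalMax, IsMaxFilter] using this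
    have hd : HasDerivAt (fun t => F (Function.update z s t))
        (eval z (pderiv s G) - c s) (z s) := by
      refine (hasDerivAt_eval_update s G z).sub ?_
      have := hasDerivAt_eval_update s (∑ s, C (c s) * X s) z
      simpa [pderiv_X, Pi.single_apply] using this
    have := hloc'.hasDerivAt_eq_zero hd
    linarith

/-- Warren's bound, in a weak form: polynomials of degree at most `Dg` in `N` variables realise at
most `(2 N (2 |Q| Dg + 2)) ^ (N + 1)` nowhere vanishing sign patterns. -/
theorem warren [Nonempty σ] (Q : Finset (MvPolynomial σ ℝ)) (Dg : ℕ)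
    (hdeg : ∀ q ∈ Q, q.totalDegree ≤ Dg) (A : Finset (σ → ℝ))
    (hne : ∀ x ∈ A, ∀ q ∈ Q, eval x q ≠ 0)
    (hinj : ∀ x ∈ A, ∀ y ∈ A,
      (∀ q ∈ Q, SignType.sign (eval x q) = SignType.sign (eval y q)) → x = y) :
    A.card ≤ (2 * Fintype.card σ * (2 * (Q.card * Dg) + 2)) ^ (Fintype.card σ + 1) := by
  classical
  set N := Fintype.card σ with hN
  set Δ := 2 * (Q.card * Dg) + 2 with hΔ
  have hN1 : 1 ≤ N := Fintype.card_pos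
  rcases A.eq_empty_or_nonempty with rfl | hA
  · simp
  -- radius and lower bound
  obtain ⟨ρ, hρ⟩ : ∃ ρ : ℝ, ∀ x ∈ A, ∑ s, x s ^ 2 < ρ := by
    refine ⟨∑ x ∈ A, ∑ s, x s ^ 2 + 1, fun x hx => ?_⟩
    have := Finset.single_le_sum (f := fun x : σ → ℝ => ∑ s, x s ^ 2)
      (fun _ _ => Finset.sum_nonneg fun _ _ => sq_nonneg _) hx
    linarith
  set G := warrenPoly Q ρ with hG
  obtain ⟨x₀, hx₀, hmin⟩ := A.exists_min_image (fun x => eval x G) hA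
  set m := eval x₀ G with hm
  have hm0 : 0 < m := by
    rw [hm, hG, eval_warrenPoly]
    have : ∏ q ∈ Q, eval x₀ q ≠ 0 := Finset.prod_ne_zero_iff.2 (hne x₀ hx₀)
    have h2 := hρ x₀ hx₀
    exact mul_pos (by positivity) (by linarith)
  have hρ0 : 0 < ρ := lt_of_le_of_lt (Finset.sum_nonneg fun s _ => sq_nonneg _) (hρ x₀ hx₀)
  -- parameters of Perron's relation
  set k := (2 * N * Δ) ^ N with hk
  set K := N * (k * Δ) with hK
  have hΔ1 : 1 ≤ Δ := by omega
  have hg : ∀ s, (pderiv s G).totalDegree ≤ Δ := fun s =>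
    (totalDegree_pderiv_le s G).trans (totalDegree_warrenPoly Q ρ hdeg)
  have hlt : (2 * K + 1) ^ N < (k + 1) ^ N * (K + 1) := by
    have h1 : 2 * K + 1 ≤ 2 * N * Δ * (k + 1) := by
      have : 1 ≤ N * Δ := Nat.mul_pos hN1 hΔ1
      rw [hK]; nlinarith
    have h2 : (2 * K + 1) ^ N ≤ (2 * N * Δ) ^ N * (k + 1) ^ N := by
      rw [← mul_pow]; exact Nat.pow_le_pow_left h1 N
    have h3 : k < K + 1 := by
      have : 1 ≤ N * Δ := Nat.mul_pos hN1 hΔ1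
      rw [hK]; nlinarith
    calc (2 * K + 1) ^ N ≤ k * (k + 1) ^ N := h2
      _ < (K + 1) * (k + 1) ^ N := by
        exact Nat.mul_lt_mul_of_pos_right h3 (by positivity)
      _ = _ := mul_comm _ _
  obtain ⟨U, l, hl1, hsep⟩ := exists_separating (σ := σ) A.card
  choose q hq0 hq using fun u => exists_fiber_bound (fun s => pderiv s G) (l u) (k := k) (K := K)
    (E := 2 * K) hg (hl1 u) (by rw [← hN, ← hK]; omega) hlt
  -- a small generic value of the gradient
  have hprod : ∏ u, q u ≠ 0 := Finset.prod_ne_zero_iff.2 fun u _ => hq0 u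
  set δ := m / (4 * (N * (ρ + 1))) with hδ
  have hNr : (1 : ℝ) ≤ N := by exact_mod_cast hN1
  have hδ0 : 0 < δ := by positivity
  obtain ⟨c, hcδ, hc⟩ : ∃ c : σ → ℝ, (∀ s, c s ∈ Set.Ioo 0 δ) ∧ eval c (∏ u, q u) ≠ 0 := by
    by_contra hcon
    push Not at hcon
    apply hprod
    refine MvPolynomial.funext_set (fun _ => Set.Ioo 0 δ) (fun _ => Set.Ioo_infinite hδ0) ?_
    intro x hx
    rw [hcon x (fun s => hx s (Set.mem_univ s)), map_zero]
  have hcsmall : ∀ z : σ → ℝ, ∑ s, z s ^ 2 ≤ ρ → |∑ s, c s * z s| < m / 2 := by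
    intro z hz
    have hzs : ∀ s, |z s| ≤ ρ + 1 := by
      intro s
      have : z s ^ 2 ≤ ρ := (Finset.single_le_sum (f := fun s => z s ^ 2) (fun _ _ => sq_nonneg _)
        (Finset.mem_univ s)).trans hz
      rw [abs_le]
      constructor <;> nlinarith
    calc |∑ s, c s * z s| ≤ ∑ s, |c s * z s| := Finset.abs_sum_le_sum_abs _ _
      _ ≤ ∑ _s : σ, δ * (ρ + 1) := by
        refine Finset.sum_le_sum fun s _ => ?_
        rw [abs_mul, abs_of_pos (hcδ s).1]
        exact mul_le_mul (hcδ s).2.le (hzs s) (abs_nonneg _) hδ0.le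
      _ = m / 4 := by
        rw [Finset.sum_const, Finset.card_univ, nsmul_eq_mul, ← hN, hδ]
        field_simp
      _ < m / 2 := by linarith
  choose! ζ hζ1 hζ2 using fun x (hx : x ∈ A) =>
    exists_critical Q ρ m x (hne x hx) (hρ x hx) (hmin x hx) c hcsmall
  have hζinj : Set.InjOn ζ A := by
    intro x hx y hy hxy
    refine hinj x hx y hy fun r hr => ?_
    rw [← hζ1 x hx r hr, hxy, hζ1 y hy r hr]
  have hcard : (A.image ζ).card = A.card := Finset.card_image_of_injOn hζinj
  obtain ⟨u, hu⟩ := hsep (A.image ζ) hcard.le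
  have hcu : eval c (q u) ≠ 0 := by
    rw [map_prod] at hc
    exact Finset.prod_ne_zero_iff.1 hc u (Finset.mem_univ u)
  have hfin := hq u c hcu (A.image ζ) (by
    intro z hz s
    obtain ⟨x, hx, rfl⟩ := Finset.mem_image.1 hz
    exact hζ2 x hx s)
  rw [Finset.card_image_of_injOn hu, hcard] at hfin
  refine hfin.trans ?_
  rw [hK, pow_succ, ← hk]
  nlinarith [Nat.zero_le (N * (k * Δ))]

end Warren
end Hopcroft

/-! ### Query strategies and amortised cost -/

namespace Hopcroft

section RunFramework
variable {X κ : Type} (sg : κ → X → SignType)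

/-- `RunG sg T A F`: from the set `A` of still possible inputs and budget `F`, one can ask sign
queries adaptively so that along every branch the possible inputs become empty, or reach a set `B`
and remaining budget `F'` with `T B F'`. -/
inductive RunG (T : Finset X → ℝ → Prop) : Finset X → ℝ → Prop
  | halt {A F} : T A F → RunG T A F
  | query {A F} (q : κ) : (∀ s, RunG T (A.filter fun x => sg q x = s) (F - 1)) → RunG T A F
  | empty {F} : RunG T ∅ F

variable {sg}

/-- Sequential composition: from every state where the first strategy ends, continue with another. -/
lemma RunG.bind {T T' : Finset X → ℝ → Prop} {A : Finset X} {F : ℝ} (h : RunG sg T A F)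
    (h' : ∀ B ⊆ A, ∀ F', T B F' → RunG sg T' B F') : RunG sg T' A F := by
  induction h with
  | halt ht => exact h' _ subset_rfl _ ht
  | query q _ ih =>
    exact RunG.query q fun s => ih s fun B hB F' hT =>
      h' B (hB.trans (Finset.filter_subset _ _)) F' hT
  | empty => exact RunG.empty

/-- A surplus `c` in the initial budget is still there at the end. -/
lemma RunG.shift {T : Finset X → ℝ → Prop} {A : Finset X} {F : ℝ} (h : RunG sg T A F) (c : ℝ) :
    RunG sg (fun B F' => T B (F' - c)) A (F + c) := by
  induction h with
  | halt ht => exact RunG.halt (by simpa using ht)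
  | query q _ ih =>
    refine RunG.query q fun s => ?_
    have := ih s
    rwa [sub_add_eq_add_sub] at this
  | empty => exact RunG.empty

/-- The potential `K log |A|`, which is zero for empty `A`. -/
noncomputable def pot (K : ℝ) (A : Finset X) : ℝ := K * Real.log A.card

lemma pot_nonneg {K : ℝ} (hK : 0 ≤ K) (A : Finset X) : 0 ≤ pot K A :=
  mul_nonneg hK (Real.log_natCast_nonneg _)

lemma pot_mono {K : ℝ} (hK : 0 ≤ K) {A B : Finset X} (h : A ⊆ B) : pot K A ≤ pot K B := by
  refine mul_le_mul_of_nonneg_left ?_ hK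
  rcases A.eq_empty_or_nonempty with rfl | hA
  · simpa using Real.log_natCast_nonneg _
  · exact Real.log_le_log (by exact_mod_cast hA.card_pos) (by exact_mod_cast Finset.card_le_card h)

/-- If the set of inputs shrinks by the factor `δ`, the potential drops by at least `K * -log δ`. -/
lemma pot_drop {K δ c : ℝ} (hK : 0 ≤ K) {A B : Finset X} (hB : B.Nonempty) (hδ : 0 < δ)
    (h : (B.card : ℝ) ≤ δ * A.card) (hc : c ≤ K * -Real.log δ) : c + pot K B ≤ pot K A := by
  have hB' : (0 : ℝ) < B.card := by exact_mod_cast hB.card_pos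
  have hA : (0 : ℝ) < A.card := by
    by_contra h'
    have : (A.card : ℝ) = 0 := le_antisymm (not_lt.1 h') (by positivity)
    rw [this] at h
    linarith
  have h1 : Real.log B.card ≤ Real.log δ + Real.log A.card := by
    rw [← Real.log_mul hδ.ne' hA.ne']
    exact Real.log_le_log hB' h
  have h2 := mul_le_mul_of_nonneg_left h1 hK
  unfold pot
  linarith

variable (sg) in
/-- `Cost sg K P A c`: from `A` the property `P` can be reached with amortised cost `c`. The strategy
starts with budget `c` plus the potential of `A`, and must leave at least the potential of the set
of inputs that remain. -/
def Cost (K : ℝ) (P : Finset X → Prop) (A : Finset X) (c : ℝ) : Prop :=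
  RunG sg (fun B F => P B ∧ pot K B ≤ F) A (c + pot K A)

variable (sg) in
/-- The answer of the query `q` is the same for all inputs in `A`. -/
def Known (A : Finset X) (q : κ) : Prop := ∀ x ∈ A, ∀ y ∈ A, sg q x = sg q y

lemma Known.mono {A B : Finset X} {q : κ} (h : Known sg A q) (hB : B ⊆ A) : Known sg B q :=
  fun x hx y hy => h x (hB hx) y (hB hy)

variable {K : ℝ}

lemma Cost.of_le {P : Finset X → Prop} {A : Finset X} {c c' : ℝ} (h : Cost sg K P A c)
    (hc : c ≤ c') : Cost sg K P A c' := by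
  have := RunG.shift h (c' - c)
  rw [Cost]
  have e : c' + pot K A = c + pot K A + (c' - c) := by ring
  rw [e]
  refine this.bind fun B _ F' hF => RunG.halt ⟨hF.1, by linarith [hF.2]⟩

lemma Cost.imp {P P' : Finset X → Prop} {A : Finset X} {c : ℝ} (h : Cost sg K P A c)
    (hP : ∀ B ⊆ A, P B → P' B) : Cost sg K P' A c :=
  RunG.bind h fun B hB _ hF => RunG.halt ⟨hP B hB hF.1, hF.2⟩

lemma Cost.pure {P : Finset X → Prop} {A : Finset X} {c : ℝ} (h : P A) (hc : 0 ≤ c) :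
    Cost sg K P A c :=
  RunG.halt ⟨h, by linarith⟩

lemma Cost.empty {P : Finset X → Prop} {c : ℝ} : Cost sg K P ∅ c := RunG.empty

lemma Cost.bind {P P' : Finset X → Prop} {A : Finset X} {c c' : ℝ} (h : Cost sg K P A c)
    (h' : ∀ B ⊆ A, P B → Cost sg K P' B c') : Cost sg K P' A (c + c') := by
  have := RunG.shift h c'
  rw [Cost]
  have e : c + c' + pot K A = c + pot K A + c' := by ring
  rw [e]
  refine this.bind fun B hB F' hF => ?_
  have h1 := RunG.shift (h' B hB hF.1) (F' - (c' + pot K B))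
  rw [add_sub_cancel] at h1
  refine h1.bind fun B' _ F'' hF' => RunG.halt ⟨hF'.1, ?_⟩
  linarith [hF.2, hF'.2]

lemma Cost.single (hK : 0 ≤ K) (A : Finset X) (q : κ) : Cost sg K (fun B => Known sg B q) A 1 := by
  refine RunG.query q fun s => RunG.halt ⟨?_, ?_⟩
  · intro x hx y hy
    rw [(Finset.mem_filter.1 hx).2, (Finset.mem_filter.1 hy).2]
  · have := pot_mono hK (Finset.filter_subset (fun x => sg q x = s) A)
    linarith

/-- A property passing to subsets. -/
def Hered (P : Finset X → Prop) : Prop := ∀ ⦃A B : Finset X⦄, B ⊆ A → P A → P B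

lemma hered_known (q : κ) : Hered fun A : Finset X => Known sg A q := fun _ _ h hA => hA.mono h

/-- Hereditary goals are reached one after the other, and their amortised costs add up. -/
lemma Cost.all {ι : Type*} (S : Finset ι) {P : ι → Finset X → Prop} (hP : ∀ i ∈ S, Hered (P i))
    {A : Finset X} {c : ι → ℝ} (h : ∀ i ∈ S, ∀ B ⊆ A, Cost sg K (P i) B (c i)) :
    Cost sg K (fun B => ∀ i ∈ S, P i B) A (∑ i ∈ S, c i) := by
  classical
  induction S using Finset.induction_on with
  | empty => exact Cost.pure (by simp) (by simp)
  | insert i S hi ih =>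
    rw [Finset.sum_insert hi, add_comm]
    have h1 := ih (fun j hj => hP j (Finset.mem_insert_of_mem hj))
      (fun j hj => h j (Finset.mem_insert_of_mem hj))
    refine h1.bind fun B hB hPB => ?_
    refine (h i (Finset.mem_insert_self i S) B hB).imp fun B' hB' hPi => ?_
    intro j hj
    rcases Finset.mem_insert.1 hj with rfl | hj
    · exact hPi
    · exact hP j (Finset.mem_insert_of_mem hj) hB' (hPB j hj)

lemma Cost.queries (hK : 0 ≤ K) (A : Finset X) (S : Finset κ) :
    Cost sg K (fun B => ∀ q ∈ S, Known sg B q) A S.card := by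
  have := Cost.all (sg := sg) (K := K) S (P := fun q B => Known sg B q) (A := A) (c := fun _ => 1)
    (fun q _ => hered_known q) (fun q _ B _ => Cost.single hK B q)
  simpa using this

/-- Retrying: it is enough to reach `P` or to shrink the set of inputs so much that the potential
pays for a fresh start. -/
lemma Cost.retry {P : Finset X → Prop} {c : ℝ} (A : Finset X)
    (h : ∀ B ⊆ A, B.Nonempty → RunG sg (fun B' F => (P B' ∧ pot K B' ≤ F) ∨
      (B'.card < B.card ∧ c + pot K B' ≤ F)) B (c + pot K B)) : Cost sg K P A c := by
  induction hn : A.card using Nat.strong_induction_on generalizing A with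
  | _ n ih =>
    rcases A.eq_empty_or_nonempty with rfl | hA
    · exact Cost.empty
    · refine (h A subset_rfl hA).bind fun B hB F hF => ?_
      rcases hF with hF | ⟨hlt, hF⟩
      · exact RunG.halt hF
      · have h1 := ih B.card (hn ▸ hlt) B (fun B' hB' => h B' (hB'.trans hB)) rfl
        have h2 := h1.of_le (c' := F - pot K B) (by linarith)
        rw [Cost, sub_add_cancel] at h2
        exact h2

lemma pot_add (K₁ K₂ : ℝ) (A : Finset X) : pot (K₁ + K₂) A = pot K₁ A + pot K₂ A := by
  unfold pot; ring

/-- Spending only the part `K₁` of the potential leaves the other part at its initial value. -/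
lemma Cost.lift {K₁ : ℝ} {P : Finset X → Prop} {A : Finset X} {c : ℝ} (h : Cost sg K₁ P A c)
    (G : ℝ) : RunG sg (fun B F => P B ∧ pot K₁ B + G ≤ F) A (c + pot K₁ A + G) :=
  (RunG.shift h G).bind fun _ _ _ hF => RunG.halt ⟨hF.1, by linarith [hF.2]⟩

lemma Cost.mono_K {K₁ K₂ : ℝ} (hK : K₁ ≤ K₂) {P : Finset X → Prop} {A : Finset X} {c : ℝ}
    (h : Cost sg K₁ P A c) : Cost sg K₂ P A c := by
  obtain ⟨K', rfl⟩ : ∃ K', K₂ = K₁ + K' := ⟨K₂ - K₁, by ring⟩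
  have hK' : 0 ≤ K' := by linarith
  have h1 := h.lift (pot K' A)
  rw [Cost, pot_add, ← add_assoc]
  refine h1.bind fun B hB F hF => RunG.halt ⟨hF.1, ?_⟩
  rw [pot_add]
  linarith [hF.2, pot_mono hK' hB]

/-- Searching among at most `R` options: if every input has a valid option and validity of each
option is decided by at most `k` queries, a valid option is found with amortised cost `k`, because
a failed test of the most popular option shrinks the set of inputs by a factor `1 - 1 / R`. -/
lemma Cost.search {O : Type} (S : Finset O) {R k : ℕ} (hS : S.card ≤ R) (hKR : (k : ℝ) * R ≤ K)
    (truth : O → X → Prop) (qs : O → Finset κ) (hqs : ∀ o ∈ S, (qs o).card ≤ k) (A : Finset X)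
    (hdet : ∀ o ∈ S, ∀ B ⊆ A, (∀ q ∈ qs o, Known sg B q) → ∀ x ∈ B, ∀ y ∈ B, truth o x → truth o y)
    (hex : ∀ x ∈ A, ∃ o ∈ S, truth o x) :
    Cost sg K (fun B => ∃ o ∈ S, ∀ x ∈ B, truth o x) A k := by
  classical
  have hK : 0 ≤ K := le_trans (by positivity) hKR
  refine Cost.retry A fun B hB hBne => ?_
  obtain ⟨x₀, hx₀⟩ := hBne
  obtain ⟨o₀, ho₀, -⟩ := hex x₀ (hB hx₀)
  have hSpos : 0 < S.card := Finset.card_pos.2 ⟨o₀, ho₀⟩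
  have hRpos : 0 < R := by omega
  have hRr : (0 : ℝ) < R := by exact_mod_cast hRpos
  obtain ⟨o, ho, hbig⟩ : ∃ o ∈ S, (B.card : ℝ) / R ≤ ((B.filter (truth o)).card : ℝ) := by
    by_contra hcon
    push Not at hcon
    have h1 : (B.card : ℝ) ≤ ∑ o ∈ S, ((B.filter (truth o)).card : ℝ) := by
      have : B ⊆ S.biUnion fun o => B.filter (truth o) := by
        intro x hx
        obtain ⟨o, ho, ht⟩ := hex x (hB hx)
        exact Finset.mem_biUnion.2 ⟨o, ho, Finset.mem_filter.2 ⟨hx, ht⟩⟩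
      exact_mod_cast (Finset.card_le_card this).trans Finset.card_biUnion_le
    have h2 : ∑ o ∈ S, ((B.filter (truth o)).card : ℝ) < ∑ _o ∈ S, (B.card : ℝ) / R :=
      Finset.sum_lt_sum_of_nonempty ⟨o₀, ho₀⟩ hcon
    rw [Finset.sum_const, nsmul_eq_mul] at h2
    have h3 : (S.card : ℝ) * (B.card / R) ≤ B.card := by
      rw [← mul_div_assoc, div_le_iff₀ hRr, mul_comm]
      exact mul_le_mul_of_nonneg_left (by exact_mod_cast hS) (by positivity)
    linarith
  have hrun : Cost sg 0 (fun B' => ∀ q ∈ qs o, Known sg B' q) B k :=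
    (Cost.queries le_rfl B (qs o)).of_le (by exact_mod_cast hqs o ho)
  have hrun' := hrun.lift (pot K B)
  have h0 : ∀ B : Finset X, pot 0 B = 0 := fun B => by simp [pot]
  simp only [h0, zero_add, add_zero] at hrun'
  refine hrun'.bind fun B' hB' F hF => ?_
  rcases B'.eq_empty_or_nonempty with rfl | ⟨x, hx⟩
  · exact RunG.empty
  by_cases hxo : truth o x
  · exact RunG.halt (Or.inl ⟨⟨o, ho, fun y hy => hdet o ho B' (hB'.trans hB) hF.1 x hx y hy hxo⟩,
      (pot_mono hK hB').trans hF.2⟩)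
  · have hsub : B' ⊆ B.filter fun y => ¬ truth o y := fun y hy => Finset.mem_filter.2
      ⟨hB' hy, fun hyo => hxo (hdet o ho B' (hB'.trans hB) hF.1 y hy x hx hyo)⟩
    have hsum := Finset.card_filter_add_card_filter_not (s := B) (truth o)
    have hBpos : (0 : ℝ) < B.card := by exact_mod_cast Finset.card_pos.2 ⟨x₀, hx₀⟩
    have hcard : (B'.card : ℝ) ≤ B.card - B.card / R := by
      have h1 : (B'.card : ℝ) ≤ (B.filter fun y => ¬ truth o y).card := by
        exact_mod_cast Finset.card_le_card hsub
      have h2 : ((B.filter (truth o)).card : ℝ) + (B.filter fun y => ¬ truth o y).card = B.card := by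
        exact_mod_cast hsum
      linarith
    have hB'pos : (0 : ℝ) < B'.card := by exact_mod_cast Finset.card_pos.2 ⟨x, hx⟩
    refine RunG.halt (Or.inr ⟨?_, ?_⟩)
    · have : (B'.card : ℝ) < B.card := by
        have : 0 < (B.card : ℝ) / R := by positivity
        linarith
      exact_mod_cast this
    · have hδ : (0 : ℝ) < 1 - 1 / R := by
        by_contra hneg
        have : (B.card : ℝ) * (1 - 1 / R) ≤ 0 := mul_nonpos_of_nonneg_of_nonpos hBpos.le (not_lt.1 hneg)
        have e : (B.card : ℝ) * (1 - 1 / R) = B.card - B.card / R := by ring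
        linarith
      refine (pot_drop hK ⟨x, hx⟩ hδ (by linarith [show (1 - 1 / (R : ℝ)) * B.card = B.card - B.card / R by ring]) ?_).trans hF.2
      have hlog : Real.log (1 - 1 / R) ≤ -(1 / R) := by
        have := Real.log_le_sub_one_of_pos hδ
        linarith
      calc (k : ℝ) = k * R * (1 / R) := by field_simp
        _ ≤ K * (1 / R) := mul_le_mul_of_nonneg_right hKR (by positivity)
        _ ≤ K * -Real.log (1 - 1 / R) := mul_le_mul_of_nonneg_left (by linarith) hK

/-- Running a sequence of tests `pass 0, …, pass (m - 1)`; if few inputs fail at stage `i`, the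
potential pays for the queries wasted on a failure. -/
lemma Cost.staged {K₁ K₂ : ℝ} (hK₂ : 0 ≤ K₂) {P : Finset X → Prop}
    (A : Finset X) {m : ℕ} (t δ : ℕ → ℝ)
    (hδ : ∀ i < m, 0 < δ i ∧ δ i < 1) (hpay : ∀ i < m, ∑ j ∈ Finset.range (i + 1), t j ≤ K₂ * -Real.log (δ i))
    (h : ∀ B ⊆ A, B.Nonempty → ∃ pass : ℕ → X → Prop,
      (∀ i < m, ∀ B' ⊆ B, Cost sg K₁ (fun B'' => (∀ x ∈ B'', pass i x) ∨ (∀ x ∈ B'', ¬ pass i x)) B' (t i)) ∧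
      (∀ i < m, ∀ B' ⊆ B, (∀ x ∈ B', (∀ j < i, pass j x) ∧ ¬ pass i x) → (B'.card : ℝ) ≤ δ i * B.card) ∧
      (∀ B' ⊆ B, (∀ x ∈ B', ∀ j < m, pass j x) → Cost sg K₁ P B' (t m))) :
    Cost sg (K₁ + K₂) P A (∑ j ∈ Finset.range (m + 1), t j) := by
  set c := ∑ j ∈ Finset.range (m + 1), t j with hc
  refine Cost.retry A fun B hB hBne => ?_
  obtain ⟨pass, h1, h2, h3⟩ := h B hB hBne
  have hBpos : (0 : ℝ) < B.card := by exact_mod_cast hBne.card_pos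
  -- `Q i`: the state before stage `i`
  have key : ∀ i ≤ m, RunG sg (fun B' F => ((∀ x ∈ B', ∀ j < i, pass j x) ∧
      (c - ∑ j ∈ Finset.range i, t j) + pot K₁ B' + pot K₂ B ≤ F) ∨
      (B'.card < B.card ∧ c + pot (K₁ + K₂) B' ≤ F)) B (c + pot (K₁ + K₂) B) := by
    intro i
    induction i with
    | zero =>
      intro _
      refine RunG.halt (Or.inl ⟨by simp, ?_⟩)
      rw [pot_add]; simp [add_assoc]
    | succ i ih =>
      intro hi
      refine (ih (by omega)).bind fun B' hB' F hF => ?_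
      rcases hF with ⟨hp, hF⟩ | hF
      swap
      · exact RunG.halt (Or.inr hF)
      have h4 := (h1 i (by omega) B' hB').lift (F - t i - pot K₁ B')
      have e : t i + pot K₁ B' + (F - t i - pot K₁ B') = F := by ring
      rw [e] at h4
      refine h4.bind fun B'' hB'' F' hF' => ?_
      rcases B''.eq_empty_or_nonempty with rfl | hne
      · exact RunG.empty
      rcases hF'.1 with hpass | hfail
      · refine RunG.halt (Or.inl ⟨?_, ?_⟩)
        · intro x hx j hj
          rcases Nat.lt_succ_iff_lt_or_eq.1 hj with hj | rfl
          · exact hp x (hB'' hx) j hj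
          · exact hpass x hx
        · rw [Finset.sum_range_succ]
          linarith [hF'.2]
      · have hcard := h2 i (by omega) B'' (hB''.trans hB')
          (fun x hx => ⟨hp x (hB'' hx), hfail x hx⟩)
        have hd := hδ i (by omega)
        refine RunG.halt (Or.inr ⟨?_, ?_⟩)
        · have : (B''.card : ℝ) < B.card := by nlinarith
          exact_mod_cast this
        · have h5 := pot_drop hK₂ hne hd.1 hcard (hpay i (by omega))
          rw [Finset.sum_range_succ] at h5
          rw [pot_add]
          linarith [hF'.2]
  refine (key m le_rfl).bind fun B' hB' F hF => ?_
  rcases hF with ⟨hp, hF⟩ | hF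
  swap
  · exact RunG.halt (Or.inr hF)
  have h4 := (h3 B' hB' hp).lift (F - t m - pot K₁ B')
  have e : t m + pot K₁ B' + (F - t m - pot K₁ B') = F := by ring
  rw [e] at h4
  refine h4.bind fun B'' hB'' F' hF' => RunG.halt (Or.inl ⟨hF'.1, ?_⟩)
  rw [hc, Finset.sum_range_succ] at hF
  rw [pot_add]
  linarith [hF'.2, pot_mono hK₂ (hB''.trans hB')]

/-- Decision trees over an abstract set of sign queries. -/
inductive QTree (κ β : Type) : Type
  | leaf : β → QTree κ β
  | node : κ → (SignType → QTree κ β) → QTree κ β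

/-- Depth of a query tree. -/
def QTree.depth {κ β : Type} : QTree κ β → ℕ
  | .leaf _ => 0
  | .node _ c => 1 + max (max (c (-1)).depth (c 0).depth) (c 1).depth

/-- Evaluation of a query tree, given the answers to the queries. -/
def QTree.eval {κ β : Type} : QTree κ β → (κ → SignType) → β
  | .leaf b, _ => b
  | .node q c, a => (c (a q)).eval a

/-- A strategy whose budget stays nonnegative unrolls to a query tree of depth at most its budget,
whose output depends only on the set of inputs left at the leaf. -/
lemma RunG.exists_tree {β : Type} [Inhabited β] {P : Finset X → Prop} (out : Finset X → β)
    {A : Finset X} {F : ℝ} (h : RunG sg (fun B F => P B ∧ 0 ≤ F) A F) :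
    ∃ t : QTree κ β, (A.Nonempty → (t.depth : ℝ) ≤ F) ∧ (A = ∅ → t.depth = 0) ∧
      ∀ x ∈ A, ∃ B, x ∈ B ∧ P B ∧ t.eval (fun q => sg q x) = out B := by
  induction h with
  | @halt A F ht =>
    exact ⟨.leaf (out A), fun _ => by simpa [QTree.depth] using ht.2, fun _ => rfl,
      fun x hx => ⟨A, hx, ht.1, rfl⟩⟩
  | empty => exact ⟨.leaf default, by simp, fun _ => rfl, by simp⟩
  | @query A F q _ ih =>
    rcases A.eq_empty_or_nonempty with rfl | hA
    · exact ⟨.leaf default, by simp, fun _ => rfl, by simp⟩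
    choose c h1 h2 h3 using ih
    refine ⟨.node q c, fun _ => ?_, fun h => absurd h hA.ne_empty, ?_⟩
    · have hF : 0 ≤ F - 1 := by
        obtain ⟨x, hx⟩ := hA
        have := h1 (sg q x) ⟨x, Finset.mem_filter.2 ⟨hx, rfl⟩⟩
        exact le_trans (by positivity) this
      have h4 : ∀ s, ((c s).depth : ℝ) ≤ F - 1 := by
        intro s
        rcases (A.filter fun x => sg q x = s).eq_empty_or_nonempty with h | h
        · rw [h2 s h]; simpa using hF
        · exact h1 s h
      simp only [QTree.depth, Nat.cast_add, Nat.cast_one, Nat.cast_max]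
      have := max_le (max_le (h4 (-1)) (h4 0)) (h4 1)
      linarith
    · intro x hx
      exact h3 (sg q x) x (Finset.mem_filter.2 ⟨hx, rfl⟩)

end RunFramework
end Hopcroft

/-! ### Infinitesimal perturbation -/

namespace Hopcroft
open MvPolynomial Filter Topology

section Perturb

/-- First nonzero sign in a list of reals. -/
noncomputable def firstSign : List ℝ → SignType
  | [] => 0
  | c :: cs => if c = 0 then firstSign cs else SignType.sign c

/-- For small positive arguments, a real polynomial has the sign of its lowest nonzero
coefficient. -/
lemma eventually_sign_eq (M : ℕ) (p : Polynomial ℝ) (hp : ∀ i, M ≤ i → p.coeff i = 0) :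
    ∀ᶠ ε in 𝓝[>] (0 : ℝ), SignType.sign (p.eval ε) = firstSign ((List.range M).map p.coeff) := by
  induction M generalizing p with
  | zero =>
    have : p = 0 := Polynomial.ext fun i => by simpa using hp i (Nat.zero_le i)
    subst this
    simp [firstSign]
  | succ M ih =>
    rw [List.range_succ_eq_map, List.map_cons, firstSign]
    have hcont : Tendsto (fun ε => p.eval ε) (𝓝[>] 0) (𝓝 (p.coeff 0)) := by
      have := (p.continuous.tendsto 0).mono_left (nhdsWithin_le_nhds (s := Set.Ioi 0))
      rwa [← Polynomial.coeff_zero_eq_eval_zero] at this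
    split_ifs with h
    · have h1 := ih p.divX (fun i hi => by rw [Polynomial.coeff_divX]; exact hp _ (by omega))
      filter_upwards [h1, self_mem_nhdsWithin] with ε hε hpos
      have e : p.eval ε = ε * p.divX.eval ε := by
        conv_lhs => rw [← Polynomial.divX_mul_X_add p]
        simp [h, mul_comm]
      rw [e, sign_mul, sign_pos hpos, one_mul, hε, List.map_map]
      congr 1
      exact List.map_congr_left fun i _ => by simp [Polynomial.coeff_divX]
    · rcases lt_or_gt_of_ne h with h' | h'
      · filter_upwards [hcont.eventually_lt_const h'] with ε hε
        rw [sign_neg hε, sign_neg h']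
      · filter_upwards [hcont.eventually_const_lt h'] with ε hε
        rw [sign_pos hε, sign_pos h']

variable {N : ℕ} {β : Type}

/-- Querying a list of polynomials in turn until one does not vanish. -/
def chainTree : List (MvPolynomial (Fin N) ℝ) → (SignType → ADT N β) → ADT N β
  | [], c => c 0
  | p :: ps, c => .node p (c (-1)) (chainTree ps c) (c 1)

lemma chainTree_depth (L : List (MvPolynomial (Fin N) ℝ)) (c : SignType → ADT N β) {k : ℕ}
    (h : ∀ s, (c s).depth ≤ k) : (chainTree L c).depth ≤ L.length + k := by
  induction L with
  | nil => simpa [chainTree] using h 0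
  | cons p ps ih =>
    simp only [chainTree, ADT.depth, List.length_cons]
    have := h (-1); have := h 1
    omega

lemma chainTree_degLE (L : List (MvPolynomial (Fin N) ℝ)) (c : SignType → ADT N β) {k : ℕ}
    (h : ∀ s, (c s).DegLE k) (hL : ∀ p ∈ L, p.totalDegree ≤ k) : (chainTree L c).DegLE k := by
  induction L with
  | nil => simpa [chainTree] using h 0
  | cons p ps ih =>
    refine ⟨hL p (by simp), h _, ih fun q hq => hL q (by simp [hq]), h _⟩

lemma chainTree_eval (L : List (MvPolynomial (Fin N) ℝ)) (c : SignType → ADT N β)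
    (y : Fin N → ℝ) :
    (chainTree L c).eval y = (c (firstSign (L.map (eval y)))).eval y := by
  induction L with
  | nil => rfl
  | cons p ps ih =>
    simp only [chainTree, ADT.eval, List.map_cons, firstSign]
    split_ifs with h1 h2 h3
    · exact absurd h2 h1.ne
    · rw [sign_neg h1]
    · exact ih
    · rw [sign_pos (lt_of_le_of_ne (not_lt.1 h1) (Ne.symm h3))]

variable {σ : Type} [Fintype σ]

/-- A polynomial in `ε` of degree at most `2 k` whose coefficients have degree at most `k`. -/
def CurveBd (k : ℕ) (P : Polynomial (MvPolynomial (Fin N) ℝ)) : Prop :=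
  P.natDegree ≤ 2 * k ∧ ∀ i, (P.coeff i).totalDegree ≤ k

lemma CurveBd.mul {k l : ℕ} {P R : Polynomial (MvPolynomial (Fin N) ℝ)} (hP : CurveBd k P)
    (hR : CurveBd l R) : CurveBd (k + l) (P * R) := by
  refine ⟨Polynomial.natDegree_mul_le.trans (by have := hP.1; have := hR.1; omega), fun i => ?_⟩
  rw [Polynomial.coeff_mul]
  refine totalDegree_finsetSum_le fun j _ => (totalDegree_mul _ _).trans ?_
  exact add_le_add (hP.2 _) (hR.2 _)

lemma CurveBd.one : CurveBd 0 (1 : Polynomial (MvPolynomial (Fin N) ℝ)) := by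
  refine ⟨by simp, fun i => ?_⟩
  rw [Polynomial.coeff_one]
  split_ifs <;> simp

lemma CurveBd.pow {k : ℕ} {P : Polynomial (MvPolynomial (Fin N) ℝ)} (hP : CurveBd k P) (m : ℕ) :
    CurveBd (m * k) (P ^ m) := by
  induction m with
  | zero => simpa using CurveBd.one
  | succ m ih => rw [pow_succ, Nat.succ_mul]; exact ih.mul hP

lemma CurveBd.prod {ι : Type} (s : Finset ι) (k : ι → ℕ)
    (P : ι → Polynomial (MvPolynomial (Fin N) ℝ)) (h : ∀ i ∈ s, CurveBd (k i) (P i)) :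
    CurveBd (∑ i ∈ s, k i) (∏ i ∈ s, P i) := by
  classical
  induction s using Finset.induction_on with
  | empty => simpa using CurveBd.one
  | insert i s hi ih =>
    rw [Finset.sum_insert hi, Finset.prod_insert hi]
    exact (h i (by simp)).mul (ih fun j hj => h j (by simp [hj]))

/-- The perturbation curve `base + ε e + ε² g` as a polynomial in `ε`. -/
noncomputable def crv (base : σ → MvPolynomial (Fin N) ℝ) (e g : σ → ℝ) (s : σ) :
    Polynomial (MvPolynomial (Fin N) ℝ) :=
  Polynomial.C (base s) + Polynomial.C (C (e s)) * Polynomial.X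
    + Polynomial.C (C (g s)) * Polynomial.X ^ 2

/-- A polynomial along the perturbation curve. -/
noncomputable def alongCrv (base : σ → MvPolynomial (Fin N) ℝ) (e g : σ → ℝ)
    (q : MvPolynomial σ ℝ) : Polynomial (MvPolynomial (Fin N) ℝ) :=
  eval₂ (Polynomial.C.comp C) (crv base e g) q

lemma curveBd_crv {base : σ → MvPolynomial (Fin N) ℝ} (hb : ∀ s, (base s).totalDegree ≤ 1)
    (e g : σ → ℝ) (s : σ) : CurveBd 1 (crv base e g s) := by
  constructor
  · unfold crv; compute_degree
  · intro i
    simp only [crv, Polynomial.coeff_add, Polynomial.coeff_C, Polynomial.coeff_C_mul,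
      Polynomial.coeff_X, Polynomial.coeff_X_pow]
    refine (totalDegree_add _ _).trans (max_le ((totalDegree_add _ _).trans (max_le ?_ ?_)) ?_)
    · split_ifs
      · exact hb s
      · simp
    · split_ifs <;> simp
    · split_ifs <;> simp

lemma curveBd_alongCrv {base : σ → MvPolynomial (Fin N) ℝ} (hb : ∀ s, (base s).totalDegree ≤ 1)
    (e g : σ → ℝ) (q : MvPolynomial σ ℝ) : CurveBd q.totalDegree (alongCrv base e g q) := by
  rw [alongCrv, eval₂_eq']
  have h : ∀ m ∈ q.support, CurveBd (N := N) q.totalDegree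
      ((Polynomial.C.comp C) (coeff m q) * ∏ i, crv base e g i ^ m i) := by
    intro m hm
    have h1 : CurveBd (∑ i, m i * 1) (∏ i, crv base e g i ^ m i) :=
      CurveBd.prod _ _ _ fun i _ => (curveBd_crv hb e g i).pow (m i)
    have h0 : CurveBd (N := N) 0 ((Polynomial.C.comp C) (coeff m q)) := by
      refine ⟨by simp, fun i => ?_⟩
      simp only [RingHom.comp_apply, Polynomial.coeff_C]
      split_ifs <;> simp
    have h2 := h0.mul h1
    have hle : 0 + ∑ i, m i * 1 ≤ q.totalDegree := by
      have := le_totalDegree hm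
      rw [Finsupp.sum_fintype _ _ (by simp)] at this
      simpa using this
    exact ⟨h2.1.trans (by omega), fun i => (h2.2 i).trans hle⟩
  refine ⟨Polynomial.natDegree_sum_le_of_forall_le _ _ fun m hm => (h m hm).1, fun i => ?_⟩
  rw [Polynomial.finsetSum_coeff]
  exact totalDegree_finsetSum_le fun m hm => (h m hm).2 i

/-- The perturbed configuration. -/
noncomputable def pertPt (base : σ → MvPolynomial (Fin N) ℝ) (e g : σ → ℝ) (y : Fin N → ℝ) (ε : ℝ) :
    σ → ℝ := fun s => eval y (base s) + e s * ε + g s * ε ^ 2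

lemma map_alongCrv (base : σ → MvPolynomial (Fin N) ℝ) (e g : σ → ℝ) (q : MvPolynomial σ ℝ)
    (y : Fin N → ℝ) : (alongCrv base e g q).map (eval y) = eval₂ Polynomial.C
      (fun s => Polynomial.C (eval y (base s)) + Polynomial.C (e s) * Polynomial.X
        + Polynomial.C (g s) * Polynomial.X ^ 2) q := by
  rw [alongCrv, ← Polynomial.coe_mapRingHom, eval₂_comp_left]
  congr 1
  · ext <;> simp
  · funext s; simp [crv]

lemma eval_map_alongCrv (base : σ → MvPolynomial (Fin N) ℝ) (e g : σ → ℝ) (q : MvPolynomial σ ℝ)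
    (y : Fin N → ℝ) (ε : ℝ) :
    ((alongCrv base e g q).map (eval y)).eval ε = eval (pertPt base e g y ε) q := by
  rw [map_alongCrv, ← Polynomial.coe_evalRingHom, eval₂_comp_left]
  have : (Polynomial.evalRingHom ε).comp Polynomial.C = RingHom.id ℝ := by ext; simp
  rw [this, ← eval₂_id]
  congr 1
  funext s; simp [pertPt]

/-- A query tree becomes an algebraic decision tree simulating it on an infinitesimal perturbation
of the input. -/
lemma exists_adt {κ : Type} {base : σ → MvPolynomial (Fin N) ℝ}
    (hb : ∀ s, (base s).totalDegree ≤ 1) (e g : σ → ℝ) {Dg : ℕ} (poly : κ → MvPolynomial σ ℝ)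
    (hdeg : ∀ q, (poly q).totalDegree ≤ Dg) (t : QTree κ β) :
    ∃ T : ADT N β, T.DegLE Dg ∧ T.depth ≤ (2 * Dg + 1) * t.depth ∧ ∀ y, ∀ᶠ ε in 𝓝[>] (0 : ℝ),
      T.eval y = t.eval fun q => SignType.sign (eval (pertPt base e g y ε) (poly q)) := by
  induction t with
  | leaf b => exact ⟨.leaf b, trivial, by simp [ADT.depth], fun y => by simp [ADT.eval, QTree.eval]⟩
  | node q c ih =>
    choose T h1 h2 h3 using ih
    have hbd := curveBd_alongCrv hb e g (poly q)
    refine ⟨chainTree ((List.range (2 * Dg + 1)).map (alongCrv base e g (poly q)).coeff) T,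
      chainTree_degLE _ _ h1 ?_, ?_, ?_⟩
    · intro p hp
      obtain ⟨i, -, rfl⟩ := List.mem_map.1 hp
      exact (hbd.2 i).trans (hdeg q)
    · have : ∀ s, (T s).depth ≤
          (2 * Dg + 1) * max (max (c (-1)).depth (c 0).depth) (c 1).depth := by
        intro s
        refine (h2 s).trans (Nat.mul_le_mul_left _ ?_)
        cases s
        · exact (le_max_right _ _).trans (le_max_left _ _)
        · exact (le_max_left _ _).trans (le_max_left _ _)
        · exact le_max_right _ _
      refine (chainTree_depth _ _ this).trans ?_
      simp only [List.length_map, List.length_range, QTree.depth]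
      rw [mul_add, mul_one]
    · intro y
      have hs := eventually_sign_eq (2 * Dg + 1) ((alongCrv base e g (poly q)).map (eval y)) (by
        intro i hi
        rw [Polynomial.coeff_map, Polynomial.coeff_eq_zero_of_natDegree_lt, map_zero]
        have := hbd.1; have := hdeg q
        omega)
      have hall : ∀ᶠ ε in 𝓝[>] (0 : ℝ), ∀ s, (T s).eval y =
          (c s).eval fun q => SignType.sign (eval (pertPt base e g y ε) (poly q)) :=
        eventually_all.2 fun s => h3 s y
      filter_upwards [hs, hall] with ε hε hT
      rw [chainTree_eval, hT, QTree.eval]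
      congr 1
      rw [eval_map_alongCrv] at hε
      rw [hε]
      rw [List.map_map]
      refine congrArg (fun l => c (firstSign l)) (List.map_congr_left fun i _ => ?_)
      simp [Polynomial.coeff_map]

lemma top_ne_zero {q : MvPolynomial σ ℝ} (hq : q ≠ 0) :
    homogeneousComponent q.totalDegree q ≠ 0 := by
  obtain ⟨m, hm, hmd⟩ : ∃ m ∈ q.support, q.totalDegree = m.sum fun _ e => e := by
    have hne : q.support.Nonempty := by rwa [Finset.nonempty_iff_ne_empty, Ne, support_eq_empty]
    obtain ⟨m, hm, h⟩ := Finset.exists_mem_eq_sup q.support hne fun m => m.sum fun _ e => e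
    exact ⟨m, hm, h⟩
  intro h
  have := congrArg (coeff m) h
  rw [coeff_homogeneousComponent, if_pos, coeff_zero] at this
  · exact mem_support_iff.1 hm this
  · rw [hmd]; rfl

/-- A point at which the top homogeneous parts of finitely many nonzero polynomials do not vanish. -/
lemma exists_top_generic (Q : Finset (MvPolynomial σ ℝ)) (hQ : ∀ q ∈ Q, q ≠ 0) :
    ∃ g : σ → ℝ, ∀ q ∈ Q, eval g (homogeneousComponent q.totalDegree q) ≠ 0 := by
  have hne : ∏ q ∈ Q, homogeneousComponent q.totalDegree q ≠ 0 :=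
    Finset.prod_ne_zero_iff.2 fun q hq => top_ne_zero (hQ q hq)
  by_contra hcon
  push Not at hcon
  apply hne
  refine MvPolynomial.funext fun g => ?_
  obtain ⟨q, hq, h⟩ := hcon g
  rw [map_prod, map_zero]
  exact Finset.prod_eq_zero hq h

/-- The coefficient of `ε ^ (2 deg q)` along the curve is the top part of `q` at `g`. -/
lemma coeff_top (base : σ → MvPolynomial (Fin N) ℝ) (e g : σ → ℝ) (q : MvPolynomial σ ℝ)
    (y : Fin N → ℝ) : ((alongCrv base e g q).map (eval y)).coeff (2 * q.totalDegree)
      = eval g (homogeneousComponent q.totalDegree q) := by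
  classical
  rw [map_alongCrv, eval₂_eq', Polynomial.finsetSum_coeff, homogeneousComponent_apply, map_sum,
    Finset.sum_filter]
  refine Finset.sum_congr rfl fun m hm => ?_
  set L : σ → Polynomial ℝ := fun s => Polynomial.C (eval y (base s))
    + Polynomial.C (e s) * Polynomial.X + Polynomial.C (g s) * Polynomial.X ^ 2 with hL
  have hLd : ∀ s, (L s).natDegree ≤ 2 := fun s => by simp only [hL]; compute_degree
  have hLc : ∀ s, (L s).coeff 2 = g s := fun s => by
    simp [hL]
  have hprod : ∀ t : Finset σ, (∏ s ∈ t, L s ^ m s).natDegree ≤ 2 * ∑ s ∈ t, m s ∧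
      (∏ s ∈ t, L s ^ m s).coeff (2 * ∑ s ∈ t, m s) = ∏ s ∈ t, g s ^ m s := by
    intro t
    induction t using Finset.induction_on with
    | empty => simp
    | insert i t hi ih =>
      rw [Finset.prod_insert hi, Finset.sum_insert hi, Finset.prod_insert hi, mul_add]
      have h1 : (L i ^ m i).natDegree ≤ 2 * m i :=
        (Polynomial.natDegree_pow_le).trans (by have := hLd i; nlinarith)
      refine ⟨Polynomial.natDegree_mul_le.trans (add_le_add h1 ih.1), ?_⟩
      rw [Polynomial.coeff_mul_add_eq_of_natDegree_le h1 ih.1, ih.2, mul_comm 2 (m i),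
        Polynomial.coeff_pow_of_natDegree_le (hLd i), hLc]
  have hmdeg : m.degree = ∑ s, m s := by
    simp [Finsupp.degree_eq_sum]
  obtain ⟨h1, h2⟩ := hprod Finset.univ
  rw [Polynomial.coeff_C_mul, eval_monomial, Finsupp.prod_fintype _ _ (by simp)]
  split_ifs with h
  · rw [← h, hmdeg, h2]
  · have hle := le_totalDegree hm
    rw [Finsupp.sum_fintype _ _ (by simp)] at hle
    rw [Polynomial.coeff_eq_zero_of_natDegree_lt, mul_zero]
    rw [hmdeg] at h
    have : ∑ s, m s ≤ q.totalDegree := hle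
    exact lt_of_le_of_lt h1 (by omega)

/-- For small `ε` the perturbed input avoids the zero set of `q`, as the coefficient of the highest
power of `ε` does not vanish. -/
lemma eventually_generic (base : σ → MvPolynomial (Fin N) ℝ) (e g : σ → ℝ) {q : MvPolynomial σ ℝ}
    (hq : eval g (homogeneousComponent q.totalDegree q) ≠ 0) (y : Fin N → ℝ) :
    ∀ᶠ ε in 𝓝[>] (0 : ℝ), eval (pertPt base e g y ε) q ≠ 0 := by
  set p := (alongCrv base e g q).map (eval y) with hp
  have hp0 : p ≠ 0 := by
    intro h
    have := coeff_top base e g q y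
    rw [← hp, h, Polynomial.coeff_zero] at this
    exact hq this.symm
  have hfin : {ε | p.IsRoot ε}.Finite := Polynomial.finite_setOfPred_isRoot hp0
  have h1 : ∀ᶠ ε in 𝓝[≠] (0 : ℝ), ε ∉ {ε | p.IsRoot ε} := by
    have : (({ε | p.IsRoot ε} \ {0})ᶜ : Set ℝ) ∈ 𝓝 (0 : ℝ) :=
      (hfin.subset Set.sdiff_subset).isClosed.isOpen_compl.mem_nhds (by simp)
    filter_upwards [mem_nhdsWithin_of_mem_nhds this, self_mem_nhdsWithin] with ε h1 h2 h3
    exact h1 ⟨h3, h2⟩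
  have h2 : 𝓝[>] (0 : ℝ) ≤ 𝓝[≠] 0 := nhdsWithin_mono _ fun x hx => ne_of_gt hx
  filter_upwards [h2 h1] with ε hε h0
  apply hε
  change p.eval ε = 0
  rw [hp, eval_map_alongCrv, h0]

end Perturb
end Hopcroft

/-! ### Cross products and rays of an arrangement -/

namespace Hopcroft
open Matrix

section Cross
variable {R : Type*} [CommRing R] {d : ℕ}

/-- The generalised cross product of `d` vectors in dimension `d + 1`. -/
def cross (T : Fin d → Fin (d + 1) → R) : Fin (d + 1) → R :=
  fun k => (Matrix.of (Fin.cons (Pi.single k 1) T : Fin (d + 1) → Fin (d + 1) → R)).det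

lemma dot_cross (T : Fin d → Fin (d + 1) → R) (y : Fin (d + 1) → R) :
    y ⬝ᵥ cross T = (Matrix.of (Fin.cons y T : Fin (d + 1) → Fin (d + 1) → R)).det := by
  have key : ∀ z : Fin (d + 1) → R,
      (Matrix.of (Fin.cons z T : Fin (d + 1) → Fin (d + 1) → R)).det =
      ∑ j : Fin (d + 1), (-1) ^ (j : ℕ) * z j * (Matrix.of fun i k => T i (j.succAbove k)).det := by
    intro z
    rw [Matrix.det_succ_row_zero]
    rfl
  rw [key, dotProduct]
  refine Finset.sum_congr rfl fun k _ => ?_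
  rw [cross, key, Finset.sum_eq_single k]
  · simp only [Pi.single_eq_same]; ring
  · intro j _ hj; simp [Pi.single_eq_of_ne hj]
  · simp

lemma map_cross {S : Type*} [CommRing S] (f : R →+* S) (T : Fin d → Fin (d + 1) → R) :
    (fun k => f (cross T k)) = cross fun i k => f (T i k) := by
  funext k
  simp only [cross, RingHom.map_det]
  congr 1
  ext i j
  refine Fin.cases ?_ (fun i => ?_) i
  · simp [Pi.single_apply, apply_ite f]
  · simp

lemma dot_cross_self (T : Fin d → Fin (d + 1) → R) (i : Fin d) : T i ⬝ᵥ cross T = 0 := by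
  rw [dot_cross]
  refine Matrix.det_zero_of_row_eq (i := 0) (j := i.succ) (Fin.succ_ne_zero i).symm ?_
  rfl

end Cross

section RealCross
variable {d : ℕ}

lemma eq_smul_cross_of_orthogonal {T : Fin d → Fin (d + 1) → ℝ} (hT : cross T ≠ 0)
    {z : Fin (d + 1) → ℝ} (hz : ∀ i, T i ⬝ᵥ z = 0) : ∃ c : ℝ, z = c • cross T := by
  set n := cross T with hn
  have hnn : n ⬝ᵥ n ≠ 0 := by rwa [Ne, dotProduct_self_eq_zero]
  refine ⟨(n ⬝ᵥ z) / (n ⬝ᵥ n), ?_⟩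
  have hdet : (Matrix.of (Fin.cons n T : Fin (d + 1) → Fin (d + 1) → ℝ)).det ≠ 0 := by
    rw [← dot_cross]; exact hnn
  have h0 := Matrix.eq_zero_of_mulVec_eq_zero hdet (v := z - ((n ⬝ᵥ z) / (n ⬝ᵥ n)) • n) (by
    funext i
    refine Fin.cases ?_ (fun i => ?_) i
    · change n ⬝ᵥ _ = 0
      rw [dotProduct_sub, dotProduct_smul, smul_eq_mul]
      field_simp
      simp
    · change T i ⬝ᵥ _ = 0
      rw [dotProduct_sub, dotProduct_smul, hz i, hn, dot_cross_self]
      simp)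
  exact sub_eq_zero.1 h0

lemma dot_eq_zero_of_mem_span {ι : Type*} [Fintype ι] {b : Set (ι → ℝ)} {v : ι → ℝ}
    (hb : ∀ g ∈ b, g ⬝ᵥ v = 0) {g : ι → ℝ} (hg : g ∈ Submodule.span ℝ b) : g ⬝ᵥ v = 0 := by
  induction hg using Submodule.span_induction with
  | mem x hx => exact hb x hx
  | zero => simp
  | add x z _ _ hx hz => rw [add_dotProduct, hx, hz, add_zero]
  | smul r x _ hx => rw [smul_dotProduct, hx, smul_zero]

lemma cross_ne_zero {T : Fin d → Fin (d + 1) → ℝ} (hT : LinearIndependent ℝ T) : cross T ≠ 0 := by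
  obtain ⟨y, hy⟩ : ∃ y, y ∉ Submodule.span ℝ (Set.range T) := by
    by_contra h
    push Not at h
    have htop : Submodule.span ℝ (Set.range T) = ⊤ := eq_top_iff.2 fun y _ => h y
    have := finrank_range_le_card (R := ℝ) T
    rw [Set.finrank, htop, finrank_top] at this
    simp at this
  have hli : LinearIndependent ℝ (Fin.cons y T : Fin (d + 1) → Fin (d + 1) → ℝ) :=
    linearIndependent_finCons.2 ⟨hT, hy⟩
  intro h0
  have h1 := dot_cross T y
  rw [h0, dotProduct_zero] at h1
  have h2 := (Matrix.linearIndependent_rows_iff_isUnit (A := Matrix.of (Fin.cons y T))).1 hli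
  rw [Matrix.isUnit_iff_isUnit_det] at h2
  exact h2.ne_zero h1.symm

/-- The dual vectors of a family of `d + 1` vectors. -/
def dualVec {R : Type*} [CommRing R] (W : Fin (d + 1) → Fin (d + 1) → R) (i : Fin (d + 1)) :
    Fin (d + 1) → R := cross fun k => W (i.succAbove k)

lemma dot_dualVec_of_ne {R : Type*} [CommRing R] (W : Fin (d + 1) → Fin (d + 1) → R)
    {i j : Fin (d + 1)} (h : j ≠ i) : W j ⬝ᵥ dualVec W i = 0 := by
  obtain ⟨k, rfl⟩ := Fin.exists_succAbove_eq h
  exact dot_cross_self (fun k => W (i.succAbove k)) k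

lemma sum_dot_dualVec (W : Fin (d + 1) → Fin (d + 1) → ℝ) (t : Fin (d + 1) → ℝ)
    (i : Fin (d + 1)) : (∑ j, t j • W j) ⬝ᵥ dualVec W i = t i * (W i ⬝ᵥ dualVec W i) := by
  rw [sum_dotProduct, Finset.sum_eq_single i]
  · rw [smul_dotProduct, smul_eq_mul]
  · intro j _ hj; rw [smul_dotProduct, dot_dualVec_of_ne W hj, smul_zero]
  · simp

lemma linearIndependent_of_dual (W : Fin (d + 1) → Fin (d + 1) → ℝ)
    (hW : ∀ i, W i ⬝ᵥ dualVec W i ≠ 0) : LinearIndependent ℝ W := by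
  rw [Fintype.linearIndependent_iff]
  intro t ht i
  have := sum_dot_dualVec W t i
  rw [ht, zero_dotProduct] at this
  exact (mul_eq_zero.1 this.symm).resolve_right (hW i)

lemma eq_sum_dual (W : Fin (d + 1) → Fin (d + 1) → ℝ) (hW : ∀ i, W i ⬝ᵥ dualVec W i ≠ 0)
    (y : Fin (d + 1) → ℝ) : y = ∑ i, (y ⬝ᵥ dualVec W i / (W i ⬝ᵥ dualVec W i)) • W i := by
  have hli := linearIndependent_of_dual W hW
  have hspan : Submodule.span ℝ (Set.range W) = ⊤ :=
    hli.span_eq_top_of_card_eq_finrank (by simp)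
  have hy : y ∈ Submodule.span ℝ (Set.range W) := hspan ▸ Submodule.mem_top
  obtain ⟨t, rfl⟩ := (Submodule.mem_span_range_iff_exists_fun ℝ).1 hy
  refine Finset.sum_congr rfl fun i _ => ?_
  rw [sum_dot_dualVec, mul_div_cancel_right₀ _ (hW i)]

lemma dual_ne_zero {W : Fin (d + 1) → Fin (d + 1) → ℝ} (hW : LinearIndependent ℝ W)
    (i : Fin (d + 1)) : W i ⬝ᵥ dualVec W i ≠ 0 := by
  have hne : dualVec W i ≠ 0 :=
    cross_ne_zero (hW.comp _ (Fin.succAbove_right_injective))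
  intro h
  apply hne
  have hspan : Submodule.span ℝ (Set.range W) = ⊤ :=
    hW.span_eq_top_of_card_eq_finrank (by simp)
  have hy : dualVec W i ∈ Submodule.span ℝ (Set.range W) := hspan ▸ Submodule.mem_top
  obtain ⟨t, ht⟩ := (Submodule.mem_span_range_iff_exists_fun ℝ).1 hy
  have := sum_dot_dualVec W t i
  rw [h, mul_zero, ht] at this
  exact dotProduct_self_eq_zero.1 this

end RealCross

section Generators
variable {d : ℕ}

/-- `z` is weakly sign-consistent with `y` on the vectors of `G`. -/
def Cons (G : Finset (Fin (d + 1) → ℝ)) (y z : Fin (d + 1) → ℝ) : Prop :=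
  ∀ g ∈ G, (g ⬝ᵥ y = 0 → g ⬝ᵥ z = 0) ∧ 0 ≤ (g ⬝ᵥ y) * (g ⬝ᵥ z)

lemma Cons.trans {G : Finset (Fin (d + 1) → ℝ)} {x y z : Fin (d + 1) → ℝ} (h : Cons G x y)
    (h' : Cons G y z) : Cons G x z := by
  intro g hg
  obtain ⟨a1, a2⟩ := h g hg
  obtain ⟨b1, b2⟩ := h' g hg
  refine ⟨fun h0 => b1 (a1 h0), ?_⟩
  rcases eq_or_ne (g ⬝ᵥ y) 0 with h0 | h0
  · rw [b1 h0, mul_zero]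
  · have : 0 ≤ ((g ⬝ᵥ x) * (g ⬝ᵥ z)) * ((g ⬝ᵥ y) * (g ⬝ᵥ y)) := by nlinarith [mul_nonneg a2 b2]
    exact nonneg_of_mul_nonneg_left this (mul_self_pos.2 h0)

/-- The set of vectors of `G` not orthogonal to `y`. -/
noncomputable def offSet (G : Finset (Fin (d + 1) → ℝ)) (y : Fin (d + 1) → ℝ) :
    Finset (Fin (d + 1) → ℝ) := by
  classical exact G.filter fun g => g ⬝ᵥ y ≠ 0

lemma mem_offSet {G : Finset (Fin (d + 1) → ℝ)} {y g : Fin (d + 1) → ℝ} :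
    g ∈ offSet G y ↔ g ∈ G ∧ g ⬝ᵥ y ≠ 0 := by simp [offSet]

/-- Moving from `y` in direction `v` until the first new wall is hit. -/
lemma exists_move {G : Finset (Fin (d + 1) → ℝ)} {y v : Fin (d + 1) → ℝ}
    (hv : ∀ g ∈ G, g ⬝ᵥ y = 0 → g ⬝ᵥ v = 0) (hneg : ∃ g ∈ G, (g ⬝ᵥ y) * (g ⬝ᵥ v) < 0) :
    ∃ t : ℝ, 0 < t ∧ Cons G y (y + t • v) ∧
      ∃ g ∈ G, g ⬝ᵥ (y + t • v) = 0 ∧ g ⬝ᵥ v ≠ 0 ∧ g ⬝ᵥ y ≠ 0 := by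
  classical
  let S := G.filter fun g => (g ⬝ᵥ y) * (g ⬝ᵥ v) < 0
  have hS : S.Nonempty := by
    obtain ⟨g, hg, h⟩ := hneg
    exact ⟨g, Finset.mem_filter.2 ⟨hg, h⟩⟩
  obtain ⟨g₀, hg₀, hmin⟩ := S.exists_min_image (fun g => -(g ⬝ᵥ y) / (g ⬝ᵥ v)) hS
  obtain ⟨hg₀G, hg₀n⟩ := Finset.mem_filter.1 hg₀
  set t := -(g₀ ⬝ᵥ y) / (g₀ ⬝ᵥ v) with ht
  have hpos : ∀ g, (g ⬝ᵥ y) * (g ⬝ᵥ v) < 0 → g ⬝ᵥ v ≠ 0 := by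
    intro g h h0; rw [h0, mul_zero] at h; exact lt_irrefl _ h
  have ht0 : 0 < t := by
    have h1 := hpos g₀ hg₀n
    have : t = -((g₀ ⬝ᵥ y) * (g₀ ⬝ᵥ v)) / (g₀ ⬝ᵥ v) ^ 2 := by rw [ht]; field_simp
    rw [this]
    exact div_pos (by linarith) (by positivity)
  refine ⟨t, ht0, ?_, g₀, hg₀G, ?_, hpos g₀ hg₀n, ?_⟩
  · intro g hg
    refine ⟨fun h0 => ?_, ?_⟩
    · rw [dotProduct_add, dotProduct_smul, h0, hv g hg h0]; simp
    · rw [dotProduct_add, dotProduct_smul, smul_eq_mul]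
      by_cases h : (g ⬝ᵥ y) * (g ⬝ᵥ v) < 0
      · have h1 := hmin g (Finset.mem_filter.2 ⟨hg, h⟩)
        have h2 := hpos g h
        have h3 : t * ((g ⬝ᵥ y) * (g ⬝ᵥ v)) ≥ -(g ⬝ᵥ y) / (g ⬝ᵥ v) * ((g ⬝ᵥ y) * (g ⬝ᵥ v)) :=
          mul_le_mul_of_nonpos_right h1 h.le
        have h4 : -(g ⬝ᵥ y) / (g ⬝ᵥ v) * ((g ⬝ᵥ y) * (g ⬝ᵥ v)) = -((g ⬝ᵥ y) * (g ⬝ᵥ y)) := by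
          field_simp
        nlinarith
      · have := mul_nonneg ht0.le (not_lt.1 h)
        nlinarith [mul_self_nonneg (g ⬝ᵥ y)]
  · rw [dotProduct_add, dotProduct_smul, smul_eq_mul, ht]
    have := hpos g₀ hg₀n
    field_simp
    ring
  · intro h0; rw [h0, zero_mul] at hg₀n; exact lt_irrefl _ hg₀n

lemma offSet_ssubset {G : Finset (Fin (d + 1) → ℝ)} {y z : Fin (d + 1) → ℝ} (h : Cons G y z)
    (hg : ∃ g ∈ G, g ⬝ᵥ z = 0 ∧ g ⬝ᵥ y ≠ 0) : (offSet G z).card < (offSet G y).card := by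
  obtain ⟨g, hgG, h1, h2⟩ := hg
  refine Finset.card_lt_card (Finset.ssubset_iff_of_subset ?_ |>.2 ⟨g, mem_offSet.2 ⟨hgG, h2⟩, ?_⟩)
  · intro g hg
    rw [mem_offSet] at hg ⊢
    exact ⟨hg.1, fun h0 => hg.2 ((h g hg.1).1 h0)⟩
  · rw [mem_offSet]; exact fun h => h.2 h1

/-- `G` separates the zero vector, that is, spans the space. -/
def Spanning (G : Finset (Fin (d + 1) → ℝ)) : Prop := ∀ v, (∀ g ∈ G, g ⬝ᵥ v = 0) → v = 0

/-- Every nonzero vector is consistent with some ray of the arrangement of `G`. -/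
lemma exists_ray {G : Finset (Fin (d + 1) → ℝ)} (hG : Spanning G) (y : Fin (d + 1) → ℝ)
    (hy : y ≠ 0) : ∃ T : Fin d → Fin (d + 1) → ℝ, (∀ i, T i ∈ G) ∧ cross T ≠ 0 ∧
      ∃ c : ℝ, c ≠ 0 ∧ Cons G y (c • cross T) := by
  classical
  induction hn : (offSet G y).card using Nat.strong_induction_on generalizing y with
  | _ n ih =>
    by_cases hline : ∀ v, (∀ g ∈ G, g ⬝ᵥ y = 0 → g ⬝ᵥ v = 0) → ∃ c : ℝ, v = c • y
    · -- the vectors orthogonal to `y` span a hyperplane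
      let Z : Set (Fin (d + 1) → ℝ) := {g | g ∈ G ∧ g ⬝ᵥ y = 0}
      obtain ⟨b, hbZ, hspan, hli⟩ := exists_linearIndependent ℝ Z
      have hbfin : b.Finite := (G.finite_toSet.subset fun g hg => (hbZ hg).1)
      haveI := hbfin.fintype
      let φ : (Fin (d + 1) → ℝ) →ₗ[ℝ] (b → ℝ) :=
        LinearMap.pi fun g => dotProductBilin ℝ ℝ g.1
      have hφ : ∀ v g, φ v g = g.1 ⬝ᵥ v := fun v g => rfl
      have hker : LinearMap.ker φ ≤ Submodule.span ℝ {y} := by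
        intro v hv
        rw [LinearMap.mem_ker] at hv
        have hb0 : ∀ g ∈ b, g ⬝ᵥ v = 0 := fun g hg => by
          have := congrFun hv ⟨g, hg⟩
          simpa [hφ] using this
        obtain ⟨c, rfl⟩ := hline v (by
          intro g hg h0
          have hgm : g ∈ Submodule.span ℝ b := hspan ▸ Submodule.subset_span ⟨hg, h0⟩
          exact dot_eq_zero_of_mem_span hb0 hgm)
        exact Submodule.smul_mem _ _ (Submodule.mem_span_singleton_self y)
      have hk1 : Module.finrank ℝ (LinearMap.ker φ) ≤ 1 :=
        (Submodule.finrank_mono hker).trans (finrank_span_singleton hy).le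
      have hrn := LinearMap.finrank_range_add_finrank_ker φ
      have hr : Module.finrank ℝ (LinearMap.range φ) ≤ Fintype.card b := by
        simpa using Submodule.finrank_le (LinearMap.range φ)
      rw [Module.finrank_fin_fun] at hrn
      have hcard : d ≤ Fintype.card b := by omega
      obtain ⟨f⟩ : Nonempty (Fin d ↪ b) := by
        apply Function.Embedding.nonempty_of_card_le; simpa using hcard
      let T : Fin d → Fin (d + 1) → ℝ := fun i => (f i).1
      have hT : LinearIndependent ℝ T := hli.comp f f.injective
      have hc := cross_ne_zero hT
      obtain ⟨c, hcy⟩ := eq_smul_cross_of_orthogonal hc (z := y) fun i => (hbZ (f i).2).2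
      refine ⟨T, fun i => (hbZ (f i).2).1, hc, c, ?_, ?_⟩
      · rintro rfl; rw [zero_smul] at hcy; exact hy hcy
      · rw [← hcy]
        exact fun g _ => ⟨id, mul_self_nonneg _⟩
    · push Not at hline
      obtain ⟨v, hv, hvy⟩ := hline
      have hv0 : v ≠ 0 := by rintro rfl; exact hvy 0 (by simp)
      obtain ⟨g, hg, hgv⟩ : ∃ g ∈ G, g ⬝ᵥ v ≠ 0 := by
        by_contra h; push Not at h; exact hv0 (hG v h)
      have hgy : g ⬝ᵥ y ≠ 0 := fun h => hgv (hv g hg h)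
      obtain ⟨v', hv', hvy', hneg⟩ : ∃ v', (∀ g ∈ G, g ⬝ᵥ y = 0 → g ⬝ᵥ v' = 0) ∧
          (∀ c : ℝ, v' ≠ c • y) ∧ (g ⬝ᵥ y) * (g ⬝ᵥ v') < 0 := by
        rcases lt_or_gt_of_ne (mul_ne_zero hgy hgv) with h | h
        · exact ⟨v, hv, hvy, h⟩
        · refine ⟨-v, fun g hg h0 => by rw [dotProduct_neg, hv g hg h0, neg_zero], ?_, ?_⟩
          · intro c hc; exact hvy (-c) (by rw [neg_smul, ← hc, neg_neg])
          · rw [dotProduct_neg]; linarith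
      obtain ⟨t, ht, hcons, g₁, hg₁, h1, -, h2⟩ := exists_move hv' ⟨g, hg, hneg⟩
      have hne : y + t • v' ≠ 0 := by
        intro h0
        apply hvy' (-t⁻¹)
        have : t • v' = -y := eq_neg_of_add_eq_zero_right h0
        calc v' = t⁻¹ • (t • v') := by rw [smul_smul, inv_mul_cancel₀ ht.ne', one_smul]
          _ = _ := by rw [this]; simp
      obtain ⟨T, hT, hc0, c, hc, hcc⟩ := ih _ (hn ▸ offSet_ssubset hcons ⟨g₁, hg₁, h1, h2⟩) _ hne rfl
      exact ⟨T, hT, hc0, c, hc, hcons.trans hcc⟩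

/-- The vectors `cross T` with `T` taken from `G`. -/
def rays (G : Finset (Fin (d + 1) → ℝ)) : Set (Fin (d + 1) → ℝ) :=
  {w | ∃ T : Fin d → Fin (d + 1) → ℝ, (∀ i, T i ∈ G) ∧ w = cross T}

/-- Every vector is a combination of linearly independent rays, each term consistent with it. -/
lemma exists_ray_combination {G : Finset (Fin (d + 1) → ℝ)} (hG : Spanning G)
    (y : Fin (d + 1) → ℝ) : ∃ (s : Finset (Fin (d + 1) → ℝ)) (c : (Fin (d + 1) → ℝ) → ℝ),
      (s : Set (Fin (d + 1) → ℝ)) ⊆ rays G ∧ LinearIndepOn ℝ id (s : Set (Fin (d + 1) → ℝ)) ∧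
      y = ∑ w ∈ s, c w • w ∧ (∀ w ∈ s, Cons G y (c w • w)) ∧ ∀ w ∈ s, Cons G y (c w • w) ∧ c w ≠ 0 := by
  classical
  induction hn : (offSet G y).card using Nat.strong_induction_on generalizing y with
  | _ n ih =>
    rcases eq_or_ne y 0 with rfl | hy
    · exact ⟨∅, 0, by simp, by simp, by simp, by simp, by simp⟩
    obtain ⟨T, hT, hT0, c₀, hc₀, hcons₀⟩ := exists_ray hG y hy
    set w₀ := cross T with hw₀
    have hne : c₀ • w₀ ≠ 0 := smul_ne_zero hc₀ hT0
    obtain ⟨g, hg, hgw⟩ : ∃ g ∈ G, g ⬝ᵥ (c₀ • w₀) ≠ 0 := by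
      by_contra h; push Not at h; exact hne (hG _ h)
    have hgy : g ⬝ᵥ y ≠ 0 := fun h => hgw ((hcons₀ g hg).1 h)
    obtain ⟨t, ht, hcons, g₁, hg₁, h1, h2, h3⟩ := exists_move (G := G) (y := y) (v := -(c₀ • w₀))
      (fun g hg h0 => by rw [dotProduct_neg, (hcons₀ g hg).1 h0, neg_zero])
      ⟨g, hg, by
        rw [dotProduct_neg]
        have := lt_of_le_of_ne (hcons₀ g hg).2 (Ne.symm (mul_ne_zero hgy hgw))
        linarith⟩
    obtain ⟨s, c, hs, hli, hsum, -, hc⟩ := ih _ (hn ▸ offSet_ssubset hcons ⟨g₁, hg₁, h1, h3⟩) _ rfl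
    have horth : ∀ w ∈ s, g₁ ⬝ᵥ w = 0 := by
      intro w hw
      have := ((hc w hw).1 g₁ hg₁).1 h1
      rw [dotProduct_smul, smul_eq_mul] at this
      exact (mul_eq_zero.1 this).resolve_left (hc w hw).2
    have hg₁w : g₁ ⬝ᵥ w₀ ≠ 0 := by
      intro h0; apply h2; rw [dotProduct_neg, dotProduct_smul, h0]; simp
    have hws : w₀ ∉ s := fun h => hg₁w (horth w₀ h)
    have hspan : w₀ ∉ Submodule.span ℝ (s : Set (Fin (d + 1) → ℝ)) := by
      intro hmem
      apply hg₁w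
      rw [dotProduct_comm]
      exact dot_eq_zero_of_mem_span (fun x hx => by rw [dotProduct_comm]; exact horth x hx) hmem
    have hmain : ∀ w ∈ insert w₀ s, Cons G y (Function.update c w₀ (t * c₀) w • w) ∧
        Function.update c w₀ (t * c₀) w ≠ 0 := by
      intro w hw
      rcases Finset.mem_insert.1 hw with rfl | hw
      · rw [Function.update_self]
        refine ⟨?_, mul_ne_zero ht.ne' hc₀⟩
        intro g hg
        obtain ⟨a1, a2⟩ := hcons₀ g hg
        rw [mul_smul, dotProduct_smul, smul_eq_mul]
        refine ⟨fun h => by rw [a1 h, mul_zero], ?_⟩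
        nlinarith [mul_nonneg ht.le a2]
      · rw [Function.update_of_ne (ne_of_mem_of_not_mem hw hws)]
        exact ⟨hcons.trans (hc w hw).1, (hc w hw).2⟩
    refine ⟨insert w₀ s, Function.update c w₀ (t * c₀), ?_, ?_, ?_, fun w hw => (hmain w hw).1, hmain⟩
    · intro w hw
      rcases Finset.mem_insert.1 (Finset.mem_coe.1 hw) with rfl | hw
      · exact ⟨T, hT, rfl⟩
      · exact hs hw
    · rw [Finset.coe_insert]
      exact hli.id_insert hspan
    · rw [Finset.sum_insert hws, Function.update_self]
      have : ∑ w ∈ s, Function.update c w₀ (t * c₀) w • w = ∑ w ∈ s, c w • w :=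
        Finset.sum_congr rfl fun w hw => by
          rw [Function.update_of_ne (ne_of_mem_of_not_mem hw hws)]
      rw [this, ← hsum, mul_smul]
      simp

/-- The certificate used for locating `y`: `d + 1` independent rays in which `y` has coordinates all
of whose terms are consistent with `y`. -/
lemma exists_certificate {G : Finset (Fin (d + 1) → ℝ)} (hG : Spanning G) (y : Fin (d + 1) → ℝ) :
    ∃ T : Fin (d + 1) → Fin d → Fin (d + 1) → ℝ, (∀ i k, T i k ∈ G) ∧
      (∀ i, cross (T i) ⬝ᵥ dualVec (fun i => cross (T i)) i ≠ 0) ∧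
      ∀ i, Cons G y ((y ⬝ᵥ dualVec (fun i => cross (T i)) i /
        (cross (T i) ⬝ᵥ dualVec (fun i => cross (T i)) i)) • cross (T i)) := by
  classical
  obtain ⟨s, c, hs, hli, hsum, hcons, -⟩ := exists_ray_combination hG y
  obtain ⟨b, hb, hsb, hspan, hbli⟩ := exists_linearIndepOn_id_extension hli hs
  have htop : Submodule.span ℝ b = ⊤ := by
    rw [eq_top_iff]
    intro z _
    obtain ⟨s', c', hs', -, hz, -⟩ := exists_ray_combination hG z
    rw [hz]
    exact Submodule.sum_mem _ fun w hw => Submodule.smul_mem _ _ (hspan (hs' hw))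
  have hbli' : LinearIndependent ℝ (fun w : b => (w : Fin (d + 1) → ℝ)) := hbli
  have hbfin : Finite b := hbli'.finite
  haveI := Fintype.ofFinite b
  let bas : Module.Basis b ℝ (Fin (d + 1) → ℝ) := Module.Basis.mk hbli' (by simp [htop])
  have hcard : Fintype.card b = d + 1 := by
    have := Module.finrank_eq_card_basis bas
    rw [Module.finrank_fin_fun] at this
    exact this.symm
  let e : Fin (d + 1) ≃ b := (Fintype.equivFinOfCardEq hcard).symm
  choose T hTG hT using fun i => hb (e i).2
  have hW : (fun i => cross (T i)) = fun i => ((e i : b) : Fin (d + 1) → ℝ) :=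
    funext fun i => (hT i).symm
  have hWli : LinearIndependent ℝ fun i => cross (T i) := by
    rw [hW]; exact hbli'.comp e e.injective
  refine ⟨T, hTG, dual_ne_zero hWli, fun i => ?_⟩
  let c' : Fin (d + 1) → ℝ := fun i => if (e i : Fin (d + 1) → ℝ) ∈ s then c (e i) else 0
  have hy : y = ∑ i, c' i • cross (T i) := by
    have h1 : ∑ i, c' i • cross (T i) = ∑ w : b, (if (w : Fin (d + 1) → ℝ) ∈ s then c w else 0) • (w : Fin (d + 1) → ℝ) := by
      rw [← e.sum_comp]
      exact Finset.sum_congr rfl fun i _ => by rw [← hT i]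
    rw [h1]
    have h2 : ∑ w : b, (if (w : Fin (d + 1) → ℝ) ∈ s then c w else 0) • (w : Fin (d + 1) → ℝ)
        = ∑ w ∈ b.toFinset, (if w ∈ s then c w else 0) • w := by
      rw [← Finset.sum_coe_sort b.toFinset]
      exact Fintype.sum_equiv (Equiv.subtypeEquivRight (by simp)) _ _ (by simp)
    rw [h2, hsum]
    refine Finset.sum_subset_zero_on_sdiff (fun w hw => by simpa using hsb hw) ?_ ?_
    · intro w hw; rw [if_neg (Finset.mem_sdiff.1 hw).2, zero_smul]
    · intro w hw; rw [if_pos hw]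
  have hcoef : y ⬝ᵥ dualVec (fun i => cross (T i)) i /
      (cross (T i) ⬝ᵥ dualVec (fun i => cross (T i)) i) = c' i := by
    conv_lhs => rw [hy, sum_dot_dualVec (fun i => cross (T i)) c' i]
    exact mul_div_cancel_right₀ _ (dual_ne_zero hWli i)
  rw [hcoef]
  by_cases h : (e i : Fin (d + 1) → ℝ) ∈ s
  · have := hcons _ h
    simp only [c', if_pos h]
    rwa [← hT i]
  · simp only [c', if_neg h, zero_smul]
    exact fun g _ => ⟨fun _ => by simp, by simp⟩

end Generators
end Hopcroft

/-! ### Projections of sign vectors and closure under cross products -/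

namespace Hopcroft
open Matrix

section Algebra
variable {A : Type*} [CommRing A] {d : ℕ} {I : Type*}

/-- A sign vector, read in a ring. -/
def sv (A : Type*) [CommRing A] {d : ℕ} (a : Fin (d + 1) → SignType) : Fin (d + 1) → A :=
  fun k => (a k : A)

/-- The Gram matrix of the vectors `v s`, `s ∈ S`. -/
def gramM (v : I → Fin (d + 1) → A) (S : Finset I) : Matrix S S A :=
  Matrix.of fun s t => v s ⬝ᵥ v t

/-- The component in the span of `S` of a sign vector, scaled by the Gram determinant. -/
noncomputable def rv (v : I → Fin (d + 1) → A) (S : Finset I) (a : Fin (d + 1) → SignType) :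
    Fin (d + 1) → A := by
  classical exact
    ∑ s : S, ((gramM v S).adjugate *ᵥ fun t => v t ⬝ᵥ sv A a) s • v s

/-- The component orthogonal to `S` of a sign vector, scaled by the Gram determinant. -/
noncomputable def ov (v : I → Fin (d + 1) → A) (S : Finset I) (a : Fin (d + 1) → SignType) :
    Fin (d + 1) → A := by
  classical exact (gramM v S).det • sv A a - rv v S a

lemma dot_ov (v : I → Fin (d + 1) → A) (S : Finset I) (a : Fin (d + 1) → SignType) {s : I}
    (hs : s ∈ S) : v s ⬝ᵥ ov v S a = 0 := by
  classical
  have h : (gramM v S) *ᵥ ((gramM v S).adjugate *ᵥ fun t => v t ⬝ᵥ sv A a) =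
      (gramM v S).det • fun t : S => v t ⬝ᵥ sv A a := by
    rw [mulVec_mulVec, mul_adjugate, smul_mulVec, one_mulVec]
  have h1 := congrFun h ⟨s, hs⟩
  have h2 : v s ⬝ᵥ rv v S a = (gramM v S).det * (v s ⬝ᵥ sv A a) := by
    rw [Pi.smul_apply, smul_eq_mul] at h1
    rw [← h1, rv, dotProduct_sum]
    simp only [mulVec, dotProduct_smul, smul_eq_mul]
    rw [dotProduct]
    refine Finset.sum_congr rfl fun t _ => ?_
    simp only [gramM, of_apply]
    rw [mul_comm]
    rfl
  rw [ov, dotProduct_sub, dotProduct_smul, h2, smul_eq_mul]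
  convert sub_self _

lemma rv_dot (v : I → Fin (d + 1) → A) (S : Finset I) (a : Fin (d + 1) → SignType)
    (z : Fin (d + 1) → A) (hz : ∀ s ∈ S, v s ⬝ᵥ z = 0) : rv v S a ⬝ᵥ z = 0 := by
  classical
  rw [rv, sum_dotProduct]
  refine Finset.sum_eq_zero fun s _ => ?_
  rw [smul_dotProduct, hz s s.2, smul_zero]

lemma ov_congr {v v' : I → Fin (d + 1) → A} {S : Finset I} (h : ∀ s ∈ S, v s = v' s)
    (a : Fin (d + 1) → SignType) : ov v S a = ov v' S a ∧ rv v S a = rv v' S a := by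
  classical
  have h0 : ∀ s : S, v s = v' s := fun s => h s s.2
  have hg : gramM v S = gramM v' S := by
    ext s t; simp only [gramM, of_apply, h0]
  have hr : rv v S a = rv v' S a := by
    simp only [rv, hg, h0]
  exact ⟨by simp only [ov, hg, hr], hr⟩

lemma map_sv {B : Type*} [CommRing B] (f : A →+* B) (a : Fin (d + 1) → SignType)
    (k : Fin (d + 1)) : f (sv A a k) = sv B a k := by
  simp only [sv]
  cases a k <;> simp

lemma map_dot {B : Type*} [CommRing B] (f : A →+* B) {m : Type*} [Fintype m] (y z : m → A) :
    f (y ⬝ᵥ z) = (fun k => f (y k)) ⬝ᵥ fun k => f (z k) := by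
  simp [dotProduct, map_sum]

lemma map_gram {B : Type*} [CommRing B] (f : A →+* B) (v : I → Fin (d + 1) → A) (S : Finset I)
    [DecidableEq S] : f.mapMatrix (gramM v S) = gramM (fun i k => f (v i k)) S := by
  ext s t
  simp [gramM, map_dot]

lemma map_rv {B : Type*} [CommRing B] (f : A →+* B) (v : I → Fin (d + 1) → A) (S : Finset I)
    (a : Fin (d + 1) → SignType) :
    (fun k => f (rv v S a k)) = rv (fun i k => f (v i k)) S a := by
  classical
  funext k
  simp only [rv, Finset.sum_apply, Pi.smul_apply, smul_eq_mul, map_sum, map_mul]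
  refine Finset.sum_congr rfl fun s _ => ?_
  congr 1
  simp only [mulVec, map_dot]
  congr 1
  · funext t
    rw [← map_gram f v S, ← RingHom.map_adjugate]
    rfl
  · funext t
    congr 1
    funext k
    exact map_sv f a k

lemma map_ov {B : Type*} [CommRing B] (f : A →+* B) (v : I → Fin (d + 1) → A) (S : Finset I)
    (a : Fin (d + 1) → SignType) :
    (fun k => f (ov v S a k)) = ov (fun i k => f (v i k)) S a := by
  classical
  funext k
  simp only [ov, Pi.sub_apply, Pi.smul_apply, smul_eq_mul, map_sub, map_mul, map_sv, RingHom.map_det,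
    map_gram]
  rw [← map_rv]

end Algebra

section Levels
variable {A : Type*} [CommRing A] {d : ℕ} {I : Type*}

/-- The items of `R` and the scaled projections of sign vectors determined by small subsets. -/
noncomputable def Wf (v : I → Fin (d + 1) → A) (R : Finset I) : Finset (Fin (d + 1) → A) := by
  classical exact R.image v ∪
    ((R.powerset.filter fun S => S.card ≤ d) ×ˢ Finset.univ).image (fun q => ov v q.1 q.2) ∪
    ((R.powerset.filter fun S => S.card ≤ d) ×ˢ Finset.univ).image (fun q => rv v q.1 q.2)

/-- A set of vectors together with all cross products of its members. -/
noncomputable def cl (s : Finset (Fin (d + 1) → A)) : Finset (Fin (d + 1) → A) := by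
  classical exact s ∪ (Fintype.piFinset fun _ : Fin d => s).image cross

lemma mem_cl {s : Finset (Fin (d + 1) → A)} {y : Fin (d + 1) → A} :
    y ∈ cl s ↔ y ∈ s ∨ ∃ T : Fin d → Fin (d + 1) → A, (∀ i, T i ∈ s) ∧ cross T = y := by
  classical
  simp [cl]

lemma subset_cl (s : Finset (Fin (d + 1) → A)) : s ⊆ cl s := fun _ h => mem_cl.2 (Or.inl h)

lemma cross_mem_cl {s : Finset (Fin (d + 1) → A)} {T : Fin d → Fin (d + 1) → A}
    (h : ∀ i, T i ∈ s) : cross T ∈ cl s := mem_cl.2 (Or.inr ⟨T, h, rfl⟩)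

lemma dual_mem_cl {s : Finset (Fin (d + 1) → A)} {W : Fin (d + 1) → Fin (d + 1) → A}
    (h : ∀ i, W i ∈ s) (i) : dualVec W i ∈ cl s := cross_mem_cl fun _ => h _

lemma cl_mono {s t : Finset (Fin (d + 1) → A)} (h : s ⊆ t) : cl s ⊆ cl t := by
  intro y hy
  rw [mem_cl] at hy ⊢
  rcases hy with hy | ⟨T, hT, rfl⟩
  · exact Or.inl (h hy)
  · exact Or.inr ⟨T, fun i => h (hT i), rfl⟩

lemma mem_Wf {v : I → Fin (d + 1) → A} {R : Finset I} {y : Fin (d + 1) → A} :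
    y ∈ Wf v R ↔ (∃ g ∈ R, v g = y) ∨ ∃ S ⊆ R, S.card ≤ d ∧ ∃ a, (ov v S a = y ∨ rv v S a = y) := by
  classical
  simp only [Wf, Finset.mem_union, Finset.mem_image, Finset.mem_product, Finset.mem_filter,
    Finset.mem_powerset, Finset.mem_univ, and_true, Prod.exists]
  constructor
  · rintro ((h | ⟨S, a, ⟨h1, h2⟩, h3⟩) | ⟨S, a, ⟨h1, h2⟩, h3⟩)
    · exact Or.inl h
    · exact Or.inr ⟨S, h1, h2, a, Or.inl h3⟩
    · exact Or.inr ⟨S, h1, h2, a, Or.inr h3⟩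
  · rintro (h | ⟨S, h1, h2, a, h3 | h3⟩)
    · exact Or.inl (Or.inl h)
    · exact Or.inl (Or.inr ⟨S, a, ⟨h1, h2⟩, h3⟩)
    · exact Or.inr ⟨S, a, ⟨h1, h2⟩, h3⟩

lemma item_mem_Wf {v : I → Fin (d + 1) → A} {R : Finset I} {g : I} (h : g ∈ R) : v g ∈ Wf v R :=
  mem_Wf.2 (Or.inl ⟨g, h, rfl⟩)

lemma ov_mem_Wf {v : I → Fin (d + 1) → A} {R S : Finset I} (h : S ⊆ R) (hc : S.card ≤ d)
    (a : Fin (d + 1) → SignType) : ov v S a ∈ Wf v R := mem_Wf.2 (Or.inr ⟨S, h, hc, a, Or.inl rfl⟩)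

lemma rv_mem_Wf {v : I → Fin (d + 1) → A} {R S : Finset I} (h : S ⊆ R) (hc : S.card ≤ d)
    (a : Fin (d + 1) → SignType) : rv v S a ∈ Wf v R := mem_Wf.2 (Or.inr ⟨S, h, hc, a, Or.inr rfl⟩)

lemma Wf_mono {v : I → Fin (d + 1) → A} {R R' : Finset I} (h : R ⊆ R') : Wf v R ⊆ Wf v R' := by
  intro y hy
  rw [mem_Wf] at hy ⊢
  rcases hy with ⟨g, hg, e⟩ | ⟨S, hS, r⟩
  · exact Or.inl ⟨g, h hg, e⟩
  · exact Or.inr ⟨S, hS.trans h, r⟩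

lemma Wf_congr {v v' : I → Fin (d + 1) → A} {R : Finset I} (h : ∀ s ∈ R, v s = v' s) :
    Wf v R = Wf v' R := by
  ext y
  rw [mem_Wf, mem_Wf]
  refine or_congr (exists_congr fun g => and_congr_right fun hg => by rw [h g hg]) ?_
  refine exists_congr fun S => and_congr_right fun hS => and_congr_right fun _ =>
    exists_congr fun a => ?_
  obtain ⟨h1, h2⟩ := ov_congr (fun s hs => h s (hS hs)) a
  rw [h1, h2]

lemma map_cl {B : Type*} [CommRing B] (f : A →+* B) {s : Finset (Fin (d + 1) → A)}
    {t : Finset (Fin (d + 1) → B)} (h : ∀ y ∈ t, ∃ z ∈ s, (fun k => f (z k)) = y) :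
    ∀ y ∈ cl t, ∃ z ∈ cl s, (fun k => f (z k)) = y := by
  intro y hy
  rcases mem_cl.1 hy with hy | ⟨T, hT, rfl⟩
  · obtain ⟨z, hz, e⟩ := h y hy
    exact ⟨z, subset_cl _ hz, e⟩
  · choose U hU hUe using fun i => h (T i) (hT i)
    refine ⟨cross U, cross_mem_cl hU, ?_⟩
    rw [map_cross]
    congr 1
    funext i
    exact hUe i

lemma map_Wf {B : Type*} [CommRing B] (f : A →+* B) (v : I → Fin (d + 1) → A) (R : Finset I) :
    ∀ y ∈ Wf (fun i k => f (v i k)) R, ∃ z ∈ Wf v R, (fun k => f (z k)) = y := by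
  intro y hy
  rcases mem_Wf.1 hy with ⟨g, hg, rfl⟩ | ⟨S, hS, hc, a, rfl | rfl⟩
  · exact ⟨v g, item_mem_Wf hg, rfl⟩
  · exact ⟨_, ov_mem_Wf hS hc a, map_ov f v S a⟩
  · exact ⟨_, rv_mem_Wf hS hc a, map_rv f v S a⟩

end Levels
end Hopcroft

/-! ### Codes of the cones of the canonical triangulation -/

namespace Hopcroft
open Matrix

/-- The combinatorial name of a simplicial cone: the walls `h`, the sign vector `a`, and the sets of
walls through each of the generators. -/
abbrev Code (d : ℕ) (I : Type*) :=
  (Fin d → I) × (Fin (d + 1) → SignType) × (Fin (d + 1) → Finset I)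

section Codes
variable {d : ℕ} {I : Type*}

/-- The `j`-th generator of the cone of `c`. -/
noncomputable def oc {A : Type*} [CommRing A] (v : I → Fin (d + 1) → A) (c : Code d I)
    (j : Fin (d + 1)) : Fin (d + 1) → A := ov v (c.2.2 j) c.2.1

/-- The residual of the `j`-th generator. -/
noncomputable def rc {A : Type*} [CommRing A] (v : I → Fin (d + 1) → A) (c : Code d I)
    (j : Fin (d + 1)) : Fin (d + 1) → A := rv v (c.2.2 j) c.2.1

/-- Membership in the `j`-th face of the cell of `c` in the arrangement of `R`. -/
def InK (v : I → Fin (d + 1) → ℝ) (R : Finset I) (c : Code d I) (j : Fin (d + 1))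
    (y : Fin (d + 1) → ℝ) : Prop :=
  (∀ i : Fin d, i.castSucc < j → v (c.1 i) ⬝ᵥ y = 0) ∧
    ∀ g ∈ R, ∀ j', 0 ≤ (v g ⬝ᵥ oc v c j') * (v g ⬝ᵥ y)

/-- `c` names a cone of the canonical triangulation of the arrangement of `R`. The walls belong to `R`
(`wall`); the `j`-th generator lies in the `j`-th face of the cell (`mem`), the walls through it are
exactly the listed ones (`zero`, `card`), and it is the nearest point to the sign vector in that
face, by the variational inequality `vi`. The generators are linearly independent (`dual`), wall `i`
does not contain generator `i` (`piv`), the sign vector is that of the orthant of the cell (`sgn`), and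
the items of `R` vanishing on a final segment of the generators are walls (`flag`). -/
structure Act (v : I → Fin (d + 1) → ℝ) (R : Finset I) (c : Code d I) : Prop where
  wall : ∀ i, c.1 i ∈ R
  card : ∀ j, (c.2.2 j).card ≤ d
  mem : ∀ j, InK v R c j (oc v c j)
  zero : ∀ j g, g ∈ c.2.2 j ↔ g ∈ R ∧ v g ⬝ᵥ oc v c j = 0
  vi : ∀ j y, InK v R c j y → rc v c j ⬝ᵥ y ≤ 0
  dual : ∀ j, oc v c j ⬝ᵥ dualVec (oc v c) j ≠ 0
  piv : ∀ i : Fin d, v (c.1 i) ⬝ᵥ oc v c i.castSucc ≠ 0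
  sgn : ∀ k, c.2.1 k ≠ 0 ∧ ∀ j, 0 ≤ ((c.2.1 k : SignType) : ℝ) * oc v c j k
  flag : ∀ i : Fin d, ∀ g ∈ R, (∀ j, i.castSucc < j → v g ⬝ᵥ oc v c j = 0) → ∃ i' ≤ i, g = c.1 i'

/-- The vector `u` lies in the interior of the cone of `c`. -/
def InC (v : I → Fin (d + 1) → ℝ) (c : Code d I) (u : Fin (d + 1) → ℝ) : Prop :=
  ∀ j, SignType.sign (u ⬝ᵥ dualVec (oc v c) j) = SignType.sign (oc v c j ⬝ᵥ dualVec (oc v c) j)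

/-- The hyperplane `h` meets the interior of the cone of `c`. -/
def Crosses (v : I → Fin (d + 1) → ℝ) (c : Code d I) (h : Fin (d + 1) → ℝ) : Prop :=
  ∃ j j', 0 < h ⬝ᵥ oc v c j ∧ h ⬝ᵥ oc v c j' < 0

variable {v : I → Fin (d + 1) → ℝ} {R R' : Finset I} {c c' : Code d I} {u : Fin (d + 1) → ℝ}

lemma dot_self_nonneg {m : Type*} [Fintype m] (y : m → ℝ) : 0 ≤ y ⬝ᵥ y :=
  Finset.sum_nonneg fun _ _ => mul_self_nonneg _

lemma rc_dot_oc (v : I → Fin (d + 1) → ℝ) (c : Code d I) (j) : rc v c j ⬝ᵥ oc v c j = 0 :=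
  rv_dot _ _ _ _ fun _ hs => dot_ov _ _ _ hs

/-- A cone active for `R` stays active for every smaller set that contains its defining items. -/
lemma Act.locality (h : Act v R c) (hR : R' ⊆ R) (h1 : ∀ i, c.1 i ∈ R') (h2 : ∀ j, c.2.2 j ⊆ R') :
    Act v R' c where
  wall := h1
  card := h.card
  mem j := ⟨(h.mem j).1, fun g hg => (h.mem j).2 g (hR hg)⟩
  zero j g := ⟨fun hg => ⟨h2 j hg, ((h.zero j g).1 hg).2⟩, fun hg => (h.zero j g).2 ⟨hR hg.1, hg.2⟩⟩
  vi := by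
    intro j y hy
    have hev : ∀ᶠ t : ℝ in nhdsWithin 0 (Set.Ioi 0), ∀ g ∈ R, ∀ j',
        0 ≤ (v g ⬝ᵥ oc v c j') * (v g ⬝ᵥ (oc v c j + t • y)) := by
      rw [Filter.eventually_all_finset]
      intro g hg
      rw [Filter.eventually_all]
      intro j'
      by_cases h0 : (v g ⬝ᵥ oc v c j') * (v g ⬝ᵥ oc v c j) = 0
      · rcases mul_eq_zero.1 h0 with h0 | h0
        · exact Filter.Eventually.of_forall fun t => by rw [h0, zero_mul]
        · have hg' : g ∈ R' := h2 j ((h.zero j g).2 ⟨hg, h0⟩)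
          filter_upwards [self_mem_nhdsWithin] with t ht
          rw [dotProduct_add, h0, dotProduct_smul, zero_add, smul_eq_mul, mul_left_comm]
          exact mul_nonneg (le_of_lt ht) (hy.2 g hg' j')
      · have hpos := lt_of_le_of_ne ((h.mem j).2 g hg j') (Ne.symm h0)
        have hc : Filter.Tendsto (fun t : ℝ => (v g ⬝ᵥ oc v c j') * (v g ⬝ᵥ (oc v c j + t • y)))
            (nhdsWithin 0 (Set.Ioi 0)) (nhds ((v g ⬝ᵥ oc v c j') * (v g ⬝ᵥ oc v c j))) := by
          have : Continuous (fun t : ℝ => (v g ⬝ᵥ oc v c j') * (v g ⬝ᵥ oc v c j + t * (v g ⬝ᵥ y))) := by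
            fun_prop
          have h3 := this.tendsto 0
          simp only [zero_mul, add_zero] at h3
          simp only [dotProduct_add, dotProduct_smul, smul_eq_mul]
          exact h3.mono_left nhdsWithin_le_nhds
        exact (hc.eventually (lt_mem_nhds hpos)).mono fun t ht => le_of_lt ht
    obtain ⟨t, ht, ht0⟩ := (hev.and self_mem_nhdsWithin).exists
    have := h.vi j (oc v c j + t • y) ⟨fun i hi => by
      rw [dotProduct_add, dotProduct_smul, (h.mem j).1 i hi, hy.1 i hi]; simp, ht⟩
    rw [dotProduct_add, rc_dot_oc, zero_add, dotProduct_smul, smul_eq_mul] at this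
    exact nonpos_of_mul_nonpos_right this ht0
  dual := h.dual
  piv := h.piv
  sgn := h.sgn
  flag i g hg := h.flag i g (hR hg)

lemma Act.not_crosses (h : Act v R c) {g : I} (hg : g ∈ R) : ¬ Crosses v c (v g) := by
  rintro ⟨j, j', h1, h2⟩
  have := (h.mem j).2 g hg j'
  nlinarith

lemma InC.coeff (hd : ∀ j, oc v c j ⬝ᵥ dualVec (oc v c) j ≠ 0) (hu : InC v c u) :
    ∃ t : Fin (d + 1) → ℝ, (∀ j, 0 < t j) ∧ u = ∑ j, t j • oc v c j := by
  refine ⟨_, fun j => ?_, eq_sum_dual (oc v c) hd u⟩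
  have h1 := hu j
  rcases lt_or_gt_of_ne (hd j) with h | h
  · rw [sign_neg h, sign_eq_neg_one_iff] at h1
    exact div_pos_of_neg_of_neg h1 h
  · rw [sign_pos h, sign_eq_one_iff] at h1
    exact div_pos h1 h

lemma InC.of_sum (hd : ∀ j, oc v c j ⬝ᵥ dualVec (oc v c) j ≠ 0) {t : Fin (d + 1) → ℝ}
    (ht : ∀ j, 0 < t j) (hu : u = ∑ j, t j • oc v c j) : InC v c u := by
  intro j
  rw [hu, sum_dot_dualVec, sign_mul, sign_pos (ht j), one_mul]

/-- If the cone of `c` is not crossed by `h`, the side of `h` on which the cone lies is read off from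
the generators. -/
lemma sign_of_not_crosses (hd : ∀ j, oc v c j ⬝ᵥ dualVec (oc v c) j ≠ 0) (hu : InC v c u)
    {h : Fin (d + 1) → ℝ} (hc : ¬ Crosses v c h) :
    (0 < h ⬝ᵥ u ↔ ∃ j, 0 < h ⬝ᵥ oc v c j) ∧ (h ⬝ᵥ u < 0 ↔ ∃ j, h ⬝ᵥ oc v c j < 0) := by
  obtain ⟨t, ht, rfl⟩ := hu.coeff hd
  have he : h ⬝ᵥ (∑ j, t j • oc v c j) = ∑ j, t j * (h ⬝ᵥ oc v c j) := by
    rw [dotProduct_sum]; simp only [dotProduct_smul, smul_eq_mul]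
  rw [he]
  have hp : (∃ j, 0 < h ⬝ᵥ oc v c j) → 0 < ∑ j, t j * (h ⬝ᵥ oc v c j) := by
    rintro ⟨j, hj⟩
    refine Finset.sum_pos' (fun i _ => mul_nonneg (ht i).le ?_) ⟨j, Finset.mem_univ _, mul_pos (ht j) hj⟩
    by_contra hi
    exact hc ⟨j, i, hj, not_le.1 hi⟩
  have hn : (∃ j, h ⬝ᵥ oc v c j < 0) → ∑ j, t j * (h ⬝ᵥ oc v c j) < 0 := by
    rintro ⟨j, hj⟩
    have := Finset.sum_pos' (f := fun i => t i * -(h ⬝ᵥ oc v c i)) (s := Finset.univ) (fun i _ => mul_nonneg (ht i).le (by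
      by_contra hi
      exact hc ⟨i, j, by linarith, hj⟩)) ⟨j, Finset.mem_univ _, mul_pos (ht j) (by linarith)⟩
    simp only [mul_neg, Finset.sum_neg_distrib] at this
    linarith
  refine ⟨⟨fun h0 => ?_, hp⟩, ⟨fun h0 => ?_, hn⟩⟩
  · by_contra hne
    push Not at hne
    exact absurd h0 (not_lt.2 (Finset.sum_nonpos fun j _ => mul_nonpos_of_nonneg_of_nonpos (ht j).le (hne j)))
  · by_contra hne
    push Not at hne
    exact absurd h0 (not_lt.2 (Finset.sum_nonneg fun j _ => mul_nonneg (ht j).le (hne j)))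

lemma Act.oc_ne_zero (h : Act v R c) (j) : oc v c j ≠ 0 := by
  intro h0; apply h.dual j; rw [h0, zero_dotProduct]

lemma Act.sv_dot_pos (h : Act v R c) (j) : 0 < sv ℝ c.2.1 ⬝ᵥ oc v c j := by
  obtain ⟨k, hk⟩ := Function.ne_iff.1 (h.oc_ne_zero j)
  refine Finset.sum_pos' (fun k _ => (h.sgn k).2 j) ⟨k, Finset.mem_univ _, ?_⟩
  refine lt_of_le_of_ne ((h.sgn k).2 j) (Ne.symm (mul_ne_zero ?_ hk))
  have := (h.sgn k).1
  rw [sv]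
  revert this
  generalize c.2.1 k = s
  intro hs
  cases s
  · exact absurd rfl hs
  · simp
  · simp

/-- The Gram determinant of an active generator is positive, since the generator is the scaled
projection of a vector with which it has positive inner product. -/
lemma Act.exists_scale (h : Act v R c) (j) :
    ∃ γ : ℝ, 0 < γ ∧ rc v c j = γ • sv ℝ c.2.1 - oc v c j := by
  classical
  refine ⟨(gramM v (c.2.2 j)).det, ?_, ?_⟩
  · have h1 : oc v c j ⬝ᵥ oc v c j = (gramM v (c.2.2 j)).det * (sv ℝ c.2.1 ⬝ᵥ oc v c j) := by
      conv_lhs => rw [oc, ov, sub_dotProduct, smul_dotProduct, smul_eq_mul]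
      have := rc_dot_oc v c j
      rw [rc, oc, ov] at this
      rw [this, sub_zero]
      congr 2
    have h2 : 0 < oc v c j ⬝ᵥ oc v c j :=
      lt_of_le_of_ne (dot_self_nonneg _) fun h0 =>
        h.oc_ne_zero j (dotProduct_self_eq_zero.1 h0.symm)
    rw [h1] at h2
    exact pos_of_mul_pos_left h2 (h.sv_dot_pos j).le
  · rw [rc, oc, ov]; simp

/-- The generators are determined by the sign vector and the faces. -/
lemma Act.generator_unique (h : Act v R c) (h' : Act v R c') (ha : c.2.1 = c'.2.1) (j)
    (hK : ∀ y, InK v R c j y ↔ InK v R c' j y) : c.2.2 j = c'.2.2 j ∧ oc v c j = oc v c' j := by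
  obtain ⟨γ, hγ, e⟩ := h.exists_scale j
  obtain ⟨γ', hγ', e'⟩ := h'.exists_scale j
  have i1 := h.vi j _ ((hK _).2 (h'.mem j))
  have i2 := h'.vi j _ ((hK _).1 (h.mem j))
  have j1 := rc_dot_oc v c j
  have j2 := rc_dot_oc v c' j
  rw [e, sub_dotProduct, smul_dotProduct, smul_eq_mul] at i1 j1
  rw [e', sub_dotProduct, smul_dotProduct, smul_eq_mul] at i2 j2
  rw [← ha] at i2 j2
  set o := oc v c j
  set o' := oc v c' j
  set a := sv ℝ c.2.1
  have hcomm : o' ⬝ᵥ o = o ⬝ᵥ o' := dotProduct_comm _ _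
  have hz : (γ' • o - γ • o') ⬝ᵥ (γ' • o - γ • o') ≤ 0 := by
    simp only [sub_dotProduct, dotProduct_sub, smul_dotProduct, dotProduct_smul, smul_eq_mul]
    rw [hcomm] at i2 ⊢
    have k1 := mul_le_mul_of_nonneg_left i1 (mul_pos hγ hγ').le
    have k2 := mul_le_mul_of_nonneg_left i2 (mul_pos hγ hγ').le
    have l1 : γ' * γ' * (γ * (a ⬝ᵥ o) - o ⬝ᵥ o) = 0 := by rw [j1, mul_zero]
    have l2 : γ * γ * (γ' * (a ⬝ᵥ o') - o' ⬝ᵥ o') = 0 := by rw [j2, mul_zero]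
    nlinarith
  have hz0 : γ' • o - γ • o' = 0 :=
    dotProduct_self_eq_zero.1 (le_antisymm hz (dot_self_nonneg _))
  have hprop : γ' • o = γ • o' := sub_eq_zero.1 hz0
  have hS : c.2.2 j = c'.2.2 j := by
    ext g
    rw [h.zero, h'.zero]
    have : γ' * (v g ⬝ᵥ o) = γ * (v g ⬝ᵥ o') := by
      rw [← smul_eq_mul, ← dotProduct_smul, hprop, dotProduct_smul, smul_eq_mul]
    refine and_congr_right fun _ => ⟨fun h0 => ?_, fun h0 => ?_⟩
    · change v g ⬝ᵥ o = 0 at h0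
      rw [h0, mul_zero] at this
      exact (mul_eq_zero.1 this.symm).resolve_left hγ.ne'
    · change v g ⬝ᵥ o' = 0 at h0
      rw [h0, mul_zero] at this
      exact (mul_eq_zero.1 this).resolve_left hγ'.ne'
  refine ⟨hS, ?_⟩
  simp only [o, o', oc, hS, ha]

lemma Act.wall_injective (h : Act v R c) : Function.Injective c.1 := by
  have key : ∀ i j : Fin d, i < j → c.1 i ≠ c.1 j := by
    intro i j hij he
    apply h.piv j
    rw [← he]
    exact (h.mem j.castSucc).1 i (by simpa using hij)
  intro i j he
  rcases lt_trichotomy i j with hl | hl | hl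
  · exact absurd he (key i j hl)
  · exact hl
  · exact absurd he.symm (key j i hl)

lemma Act.zero_last (h : Act v R c) {g : I} : g ∈ c.2.2 (Fin.last d) ↔ g ∈ Set.range c.1 := by
  rw [h.zero]
  constructor
  · rintro ⟨hg, h0⟩
    rcases Nat.eq_zero_or_pos d with rfl | hd
    · exfalso
      apply h.oc_ne_zero (Fin.last 0)
      -- in dimension one the set of walls through the only generator has no members
      have hc := h.card (Fin.last 0)
      have : g ∈ c.2.2 (Fin.last 0) := (h.zero _ g).2 ⟨hg, h0⟩
      rw [Finset.card_eq_zero.1 (Nat.le_zero.1 hc)] at this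
      simp at this
    · obtain ⟨i', -, e⟩ := h.flag ⟨d - 1, by omega⟩ g hg (by
        intro j hj
        have : j = Fin.last d := by
          apply Fin.ext
          have h1 := j.2
          have : d - 1 < (j : ℕ) := by simpa [Fin.lt_def] using hj
          simp only [Fin.val_last]
          omega
        rw [this, h0])
      exact ⟨i', e.symm⟩
  · rintro ⟨i, rfl⟩
    exact ⟨h.wall i, (h.mem (Fin.last d)).1 i (Fin.castSucc_lt_last i)⟩

/-- All generators lie weakly on the same side of each item of `R`, so one of them off the hyperplane
decides the side. -/
lemma Act.consistent_iff (h : Act v R c) {g : I} (hg : g ∈ R) {j₀ : Fin (d + 1)}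
    (h0 : v g ⬝ᵥ oc v c j₀ ≠ 0) (z : ℝ) :
    (∀ j', 0 ≤ (v g ⬝ᵥ oc v c j') * z) ↔ 0 ≤ (v g ⬝ᵥ oc v c j₀) * z := by
  refine ⟨fun H => H j₀, fun H j' => ?_⟩
  have h1 := (h.mem j').2 g hg j₀
  have h2 := mul_nonneg H h1
  have h3 : 0 ≤ ((v g ⬝ᵥ oc v c j') * z) * ((v g ⬝ᵥ oc v c j₀) * (v g ⬝ᵥ oc v c j₀)) := by nlinarith
  exact nonneg_of_mul_nonneg_left h3 (mul_self_pos.2 h0)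

lemma nonneg_mul_congr {s s' z : ℝ} (h : SignType.sign s = SignType.sign s') :
    0 ≤ s * z ↔ 0 ≤ s' * z := by
  rcases lt_trichotomy s 0 with hs | hs | hs
  · rw [sign_neg hs] at h
    have hs' := sign_eq_neg_one_iff.1 h.symm
    have key : ∀ {r : ℝ}, r < 0 → (0 ≤ r * z ↔ z ≤ 0) := fun {r} hr =>
      ⟨fun H => by by_contra hz; push Not at hz; nlinarith, fun H => mul_nonneg_of_nonpos_of_nonpos hr.le H⟩
    rw [key hs, key hs']
  · rw [hs, sign_zero] at h
    rw [hs, sign_eq_zero_iff.1 h.symm]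
  · rw [sign_pos hs] at h
    have hs' := sign_eq_one_iff.1 h.symm
    rw [mul_nonneg_iff_of_pos_left hs, mul_nonneg_iff_of_pos_left hs']

/-- An active code is determined by its walls, its sign vector and the signs at the pivots. -/
lemma Act.eq_of_key (h : Act v R c) (h' : Act v R c') (hw : c.1 = c'.1) (ha : c.2.1 = c'.2.1)
    (hs : ∀ i : Fin d, SignType.sign (v (c.1 i) ⬝ᵥ oc v c i.castSucc) =
      SignType.sign (v (c'.1 i) ⬝ᵥ oc v c' i.castSucc)) : c = c' := by
  have hlast : c.2.2 (Fin.last d) = c'.2.2 (Fin.last d) := by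
    ext g; rw [h.zero_last, h'.zero_last, hw]
  have holast : oc v c (Fin.last d) = oc v c' (Fin.last d) := by simp only [oc, hlast, ha]
  have hK : ∀ j y, InK v R c j y ↔ InK v R c' j y := by
    intro j y
    refine and_congr (by rw [hw]) (forall_congr' fun g => forall_congr' fun hg => ?_)
    by_cases hr : g ∈ Set.range c.1
    · obtain ⟨i, rfl⟩ := hr
      have hg' : c'.1 i ∈ R := h'.wall i
      rw [h.consistent_iff hg (h.piv i), nonneg_mul_congr (hs i), hw,
        h'.consistent_iff hg' (h'.piv i)]
    · have h1 : v g ⬝ᵥ oc v c (Fin.last d) ≠ 0 := fun h0 =>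
        hr (h.zero_last.1 ((h.zero _ g).2 ⟨hg, h0⟩))
      rw [h.consistent_iff hg h1, h'.consistent_iff hg (holast ▸ h1), holast]
  exact Prod.ext hw (Prod.ext ha (funext fun j => (h.generator_unique h' ha j (hK j)).1))

/-- The number of cones of the canonical triangulation. -/
lemma card_act_le [Fintype I] (v : I → Fin (d + 1) → ℝ) (R : Finset I)
    (s : Finset (Code d I)) (hs : ∀ c ∈ s, Act v R c) :
    s.card ≤ R.card ^ d * 3 ^ (d + 1) * 3 ^ d := by
  classical
  have h := Finset.card_le_card_of_injOn (s := s)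
    (t := ((Fintype.piFinset fun _ : Fin d => R) ×ˢ (Finset.univ : Finset (Fin (d + 1) → SignType))) ×ˢ
      (Finset.univ : Finset (Fin d → SignType)))
    (fun c => ((c.1, c.2.1), fun i : Fin d => SignType.sign (v (c.1 i) ⬝ᵥ oc v c i.castSucc)))
    (fun c hc => by
      simp only [Finset.coe_product, Finset.coe_univ, Set.mem_prod, Set.mem_univ, and_true,
        Finset.mem_coe, Fintype.mem_piFinset]
      exact (hs c hc).wall)
    (by
      intro c hc c' hc' e
      simp only [Prod.mk.injEq] at e
      exact (hs c hc).eq_of_key (hs c' hc') e.1.1 e.1.2 (congrFun e.2))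
  refine h.trans (le_of_eq ?_)
  rw [Finset.card_product, Finset.card_product, Fintype.card_piFinset_const, Finset.card_univ,
    Finset.card_univ, Fintype.card_fun, Fintype.card_fun]
  simp [show Fintype.card SignType = 3 from rfl]

/-- A vector lies in the interior of at most one cone of the canonical triangulation. -/
lemma Act.unique (h : Act v R c) (h' : Act v R c') (hu : InC v c u) (hu' : InC v c' u)
    (hg0 : ∀ g ∈ R, v g ⬝ᵥ u ≠ 0) (hk0 : ∀ k, u k ≠ 0) : c = c' := by
  classical
  -- the sign vector is the sign vector of `u`, and the cell is the cell of `u`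
  have hsign : ∀ {c : Code d I}, Act v R c → InC v c u → ∀ k, c.2.1 k = SignType.sign (u k) := by
    intro c h hu k
    obtain ⟨t, ht, e⟩ := hu.coeff h.dual
    have h1 : 0 ≤ ((c.2.1 k : SignType) : ℝ) * u k := by
      rw [e, Finset.sum_apply, Finset.mul_sum]
      refine Finset.sum_nonneg fun j _ => ?_
      rw [Pi.smul_apply, smul_eq_mul, mul_left_comm]
      exact mul_nonneg (ht j).le ((h.sgn k).2 j)
    have h2 := (h.sgn k).1
    revert h1 h2
    generalize c.2.1 k = s
    intro h1 h2
    have h3 := hk0 k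
    cases s
    · exact absurd rfl h2
    · simp only [SignType.neg_eq_neg_one, SignType.coe_neg_one] at h1
      rw [sign_neg (lt_of_le_of_ne (by linarith) h3)]; rfl
    · simp only [SignType.pos_eq_one, SignType.coe_one] at h1
      rw [sign_pos (lt_of_le_of_ne (by linarith) h3.symm)]; rfl
  have ha : c.2.1 = c'.2.1 := funext fun k => by rw [hsign h hu, hsign h' hu']
  have hcell : ∀ {c : Code d I}, Act v R c → InC v c u → ∀ g ∈ R, ∀ z : ℝ,
      (∀ j', 0 ≤ (v g ⬝ᵥ oc v c j') * z) ↔ 0 ≤ (v g ⬝ᵥ u) * z := by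
    intro c h hu g hg z
    obtain ⟨t, ht, e⟩ := hu.coeff h.dual
    have he : v g ⬝ᵥ u = ∑ j, t j * (v g ⬝ᵥ oc v c j) := by
      conv_lhs => rw [e, dotProduct_sum]
      simp only [dotProduct_smul, smul_eq_mul]
    constructor
    · intro H
      rw [he, Finset.sum_mul]
      exact Finset.sum_nonneg fun j _ => by rw [mul_assoc]; exact mul_nonneg (ht j).le (H j)
    · intro H j'
      have h1 : 0 ≤ (v g ⬝ᵥ u) * (v g ⬝ᵥ oc v c j') := by
        rw [he, Finset.sum_mul]
        exact Finset.sum_nonneg fun j _ => by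
          rw [mul_assoc]; exact mul_nonneg (ht j).le ((h.mem j').2 g hg j)
      have h3 : 0 ≤ ((v g ⬝ᵥ oc v c j') * z) * ((v g ⬝ᵥ u) * (v g ⬝ᵥ u)) := by
        nlinarith [mul_nonneg H h1]
      exact nonneg_of_mul_nonneg_left h3 (mul_self_pos.2 (hg0 g hg))
  obtain ⟨t, ht, e⟩ := hu.coeff h.dual
  obtain ⟨t', ht', e'⟩ := hu'.coeff h'.dual
  -- comparison of the coefficients of the first generator on which nothing is known yet
  have hcmp : ∀ {c c' : Code d I} {t t' : Fin (d + 1) → ℝ}, Act v R c → Act v R c' →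
      (∀ j, 0 < t' j) → u = ∑ j, t j • oc v c j → u = ∑ j, t' j • oc v c' j → ∀ m : Fin d,
      (∀ j < m.castSucc, oc v c j = oc v c' j ∧ t j = t' j) → oc v c m.castSucc = oc v c' m.castSucc →
      t' m.castSucc ≤ t m.castSucc ∧ (t' m.castSucc = t m.castSucc →
        ∀ j, m.castSucc < j → v (c.1 m) ⬝ᵥ oc v c' j = 0) := by
    intro c c' t t' h h' ht' e e' m hlt ho
    set g := v (c.1 m) with hg
    set q := g ⬝ᵥ oc v c m.castSucc with hq
    have hq0 : q ≠ 0 := h.piv m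
    have hqq : 0 < q * q := mul_self_pos.2 hq0
    let F : Fin (d + 1) → ℝ := fun j => (t j * (g ⬝ᵥ oc v c j) - t' j * (g ⬝ᵥ oc v c' j)) * q
    have hF0 : ∑ j, F j = 0 := by
      rw [← Finset.sum_mul, Finset.sum_sub_distrib]
      have e1 : g ⬝ᵥ u = ∑ j, t j * (g ⬝ᵥ oc v c j) := by
        conv_lhs => rw [e, dotProduct_sum]
        simp only [dotProduct_smul, smul_eq_mul]
      have e2 : g ⬝ᵥ u = ∑ j, t' j * (g ⬝ᵥ oc v c' j) := by
        conv_lhs => rw [e', dotProduct_sum]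
        simp only [dotProduct_smul, smul_eq_mul]
      rw [← e1, ← e2, sub_self, zero_mul]
    have hgt : ∀ j, m.castSucc < j → F j = -(t' j * (q * (g ⬝ᵥ oc v c' j))) ∧
        0 ≤ q * (g ⬝ᵥ oc v c' j) := by
      intro j hj
      have h1 : g ⬝ᵥ oc v c j = 0 := (h.mem j).1 m hj
      refine ⟨by simp only [F, h1]; ring, ?_⟩
      have := (h'.mem j).2 (c.1 m) (h.wall m) m.castSucc
      rw [← ho] at this
      exact this
    have hFn : ∀ j, j ≠ m.castSucc → F j ≤ 0 := by
      intro j hj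
      rcases lt_or_gt_of_ne hj with hj | hj
      · have := hlt j hj
        simp only [F, this.1, this.2, sub_self, zero_mul, le_refl]
      · rw [(hgt j hj).1]
        have := mul_nonneg (ht' j).le (hgt j hj).2
        linarith
    have hFm : F m.castSucc = (t m.castSucc - t' m.castSucc) * (q * q) := by
      simp only [F, ← ho, ← hq]; ring
    have hsplit := Finset.add_sum_erase Finset.univ F (Finset.mem_univ m.castSucc)
    have hle : ∑ j ∈ Finset.univ.erase m.castSucc, F j ≤ 0 :=
      Finset.sum_nonpos fun j hj => hFn j (Finset.ne_of_mem_erase hj)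
    refine ⟨?_, fun heq j hj => ?_⟩
    · by_contra hlt'
      push Not at hlt'
      have : F m.castSucc < 0 := by rw [hFm]; exact mul_neg_of_neg_of_pos (by linarith) hqq
      linarith
    · have hs0 : ∑ j ∈ Finset.univ.erase m.castSucc, F j = 0 := by
        rw [heq, sub_self, zero_mul] at hFm
        linarith
      have := (Finset.sum_eq_zero_iff_of_nonpos fun j hj => hFn j (Finset.ne_of_mem_erase hj)).1 hs0 j
        (Finset.mem_erase.2 ⟨hj.ne', Finset.mem_univ _⟩)
      rw [(hgt j hj).1, neg_eq_zero] at this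
      have := (mul_eq_zero.1 this).resolve_left (ht' j).ne'
      exact (mul_eq_zero.1 this).resolve_left hq0
  have main : ∀ m : ℕ, (∀ i : Fin d, (i : ℕ) < m → c.1 i = c'.1 i) ∧
      ∀ j : Fin (d + 1), (j : ℕ) < m → (c.2.2 j = c'.2.2 j ∧ oc v c j = oc v c' j) ∧
        (j ≠ Fin.last d → t j = t' j) := by
    intro m
    induction m with
    | zero => exact ⟨fun i hi => absurd hi (Nat.not_lt_zero _), fun i hi => absurd hi (Nat.not_lt_zero _)⟩
    | succ m ih =>
      obtain ⟨ih1, ih2⟩ := ih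
      have hgen : ∀ j : Fin (d + 1), (j : ℕ) < m + 1 → c.2.2 j = c'.2.2 j ∧ oc v c j = oc v c' j := by
        intro j hj
        refine h.generator_unique h' ha j fun y => ?_
        refine and_congr (forall_congr' fun i => forall_congr' fun hi => ?_)
          (forall_congr' fun g => forall_congr' fun hg => ?_)
        · have hi' : (i : ℕ) < (j : ℕ) := hi
          rw [ih1 i (by omega)]
        · rw [hcell h hu g hg, hcell h' hu' g hg]
      have hlt : ∀ i : Fin d, (i : ℕ) = m → ∀ j < i.castSucc, oc v c j = oc v c' j ∧ t j = t' j := by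
        intro i hi j hj
        have hj' : (j : ℕ) < (i : ℕ) := hj
        obtain ⟨⟨-, h1⟩, h2⟩ := ih2 j (by omega)
        exact ⟨h1, h2 (ne_of_lt (hj.trans (Fin.castSucc_lt_last i)))⟩
      have hstep : ∀ i : Fin d, (i : ℕ) = m → c.1 i = c'.1 i ∧ t i.castSucc = t' i.castSucc := by
        intro i hi
        have ho := (hgen i.castSucc (by simp; omega)).2
        have A1 := hcmp h h' ht' e e' i (hlt i hi) ho
        have A2 := hcmp h' h ht e' e i (fun j hj => ⟨(hlt i hi j hj).1.symm, (hlt i hi j hj).2.symm⟩)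
          ho.symm
        have heq := le_antisymm A2.1 A1.1
        refine ⟨?_, heq⟩
        obtain ⟨i', hi', he⟩ := h'.flag i (c.1 i) (h.wall i) (A1.2 heq.symm)
        rcases hi'.lt_or_eq with hl | rfl
        · have hl' : (i' : ℕ) < (i : ℕ) := hl
          rw [← ih1 i' (by omega)] at he
          exact absurd (h.wall_injective he) (ne_of_gt hl)
        · exact he
      refine ⟨fun i hi => ?_, fun j hj => ⟨hgen j hj, fun hne => ?_⟩⟩
      · rcases Nat.lt_succ_iff_lt_or_eq.1 hi with hi | hi
        · exact ih1 i hi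
        · exact (hstep i hi).1
      · rcases Nat.lt_succ_iff_lt_or_eq.1 hj with hj | hj
        · exact (ih2 j hj).2 hne
        · obtain ⟨i, rfl⟩ := Fin.exists_castSucc_eq.2 hne
          exact (hstep i (by simpa using hj)).2
  exact Prod.ext (funext fun i => (main d).1 i i.2) (Prod.ext ha (funext fun j =>
    ((main (d + 1)).2 j j.2).1.1))

end Codes
end Hopcroft

/-! ### Dependence of activity on signs only -/

namespace Hopcroft
open Matrix

section Transfer
variable {A : Type*} [CommRing A] {d : ℕ} {I : Type*}

/-- The image of a vector under a ring homomorphism. -/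
def evv {B : Type*} [CommRing B] {m : Type*} (f : A →+* B) (y : m → A) : m → B := fun k => f (y k)

lemma evv_dot {B : Type*} [CommRing B] {m : Type*} [Fintype m] (f : A →+* B) (y z : m → A) :
    evv f y ⬝ᵥ evv f z = f (y ⬝ᵥ z) := (map_dot f y z).symm

lemma oc_map {B : Type*} [CommRing B] (f : A →+* B) (v : I → Fin (d + 1) → A) (c : Code d I) (j) :
    oc (fun i => evv f (v i)) c j = evv f (oc v c j) := (map_ov f v _ _).symm

lemma rc_map {B : Type*} [CommRing B] (f : A →+* B) (v : I → Fin (d + 1) → A) (c : Code d I) (j) :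
    rc (fun i => evv f (v i)) c j = evv f (rc v c j) := (map_rv f v _ _).symm

lemma cross_map {B : Type*} [CommRing B] (f : A →+* B) (T : Fin d → Fin (d + 1) → A) :
    cross (fun i => evv f (T i)) = evv f (cross T) := (map_cross f T).symm

lemma dualVec_map {B : Type*} [CommRing B] (f : A →+* B) (W : Fin (d + 1) → Fin (d + 1) → A) (i) :
    dualVec (fun i => evv f (W i)) i = evv f (dualVec W i) := cross_map f _

lemma nonneg_mul_congr₂ {s s' z z' : ℝ} (h : SignType.sign s = SignType.sign s')
    (hz : SignType.sign z = SignType.sign z') : 0 ≤ s * z ↔ 0 ≤ s' * z' := by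
  rw [nonneg_mul_congr h, mul_comm, nonneg_mul_congr hz, mul_comm]

lemma eq_zero_congr {s s' : ℝ} (h : SignType.sign s = SignType.sign s') : s = 0 ↔ s' = 0 := by
  rw [← sign_eq_zero_iff, h, sign_eq_zero_iff]

lemma pos_congr {s s' : ℝ} (h : SignType.sign s = SignType.sign s') : 0 < s ↔ 0 < s' := by
  rw [← sign_eq_one_iff, h, sign_eq_one_iff]

lemma neg_congr {s s' : ℝ} (h : SignType.sign s = SignType.sign s') : s < 0 ↔ s' < 0 := by
  rw [← sign_eq_neg_one_iff, h, sign_eq_neg_one_iff]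

lemma nonpos_congr {s s' : ℝ} (h : SignType.sign s = SignType.sign s') : s ≤ 0 ↔ s' ≤ 0 := by
  rw [← not_lt, pos_congr h, not_lt]

/-- Being active depends only on the signs of inner products of vectors computed from `R`. -/
lemma Act.transfer {v : I → Fin (d + 1) → A} {R : Finset I} (f f' : A →+* ℝ)
    (hE : ∀ k, ∃ g ∈ R, v g = Pi.single k 1)
    (hs : ∀ y ∈ cl (Wf v R), ∀ z ∈ cl (Wf v R), SignType.sign (f (y ⬝ᵥ z)) = SignType.sign (f' (y ⬝ᵥ z)))
    {c : Code d I} (h : Act (fun i => evv f (v i)) R c) : Act (fun i => evv f' (v i)) R c := by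
  classical
  have hSR : ∀ j, c.2.2 j ⊆ R := fun j g hg => ((h.zero j g).1 hg).1
  have hoW : ∀ j, oc v c j ∈ Wf v R := fun j => ov_mem_Wf (hSR j) (h.card j) _
  have ho : ∀ j, oc v c j ∈ cl (Wf v R) := fun j => subset_cl _ (hoW j)
  have hr : ∀ j, rc v c j ∈ cl (Wf v R) := fun j => subset_cl _ (rv_mem_Wf (hSR j) (h.card j) _)
  have hg : ∀ g ∈ R, v g ∈ cl (Wf v R) := fun g hg => subset_cl _ (item_mem_Wf hg)
  have hsd : ∀ y ∈ cl (Wf v R), ∀ z ∈ cl (Wf v R), SignType.sign (evv f y ⬝ᵥ evv f z) =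
      SignType.sign (evv f' y ⬝ᵥ evv f' z) := by
    intro y hy z hz; rw [evv_dot, evv_dot]; exact hs y hy z hz
  have hsr : ∀ y ∈ cl (Wf v R), ∀ z ∈ cl (Wf v R), ∀ r : ℝ,
      SignType.sign (evv f y ⬝ᵥ (r • evv f z)) = SignType.sign (evv f' y ⬝ᵥ (r • evv f' z)) := by
    intro y hy z hz r
    rw [dotProduct_smul, dotProduct_smul, smul_eq_mul, smul_eq_mul, sign_mul, sign_mul, hsd y hy z hz]
  have hK : ∀ j, ∀ z ∈ cl (Wf v R), ∀ r : ℝ, InK (fun i => evv f (v i)) R c j (r • evv f z) ↔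
      InK (fun i => evv f' (v i)) R c j (r • evv f' z) := by
    intro j z hz r
    refine and_congr (forall_congr' fun i => forall_congr' fun _ =>
      eq_zero_congr (hsr _ (hg _ (h.wall i)) z hz r)) (forall_congr' fun g => forall_congr' fun hgR =>
      forall_congr' fun j' => ?_)
    rw [oc_map, oc_map]
    exact nonneg_mul_congr₂ (hsd _ (hg g hgR) _ (ho j')) (hsr _ (hg g hgR) z hz r)
  have hK1 : ∀ j j', InK (fun i => evv f (v i)) R c j (oc (fun i => evv f (v i)) c j') ↔
      InK (fun i => evv f' (v i)) R c j (oc (fun i => evv f' (v i)) c j') := by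
    intro j j'
    have := hK j _ (ho j') 1
    rwa [one_smul, one_smul, ← oc_map, ← oc_map] at this
  refine ⟨h.wall, h.card, fun j => (hK1 j j).1 (h.mem j), fun j g => ?_, fun j y hy => ?_, fun j => ?_,
    fun i => ?_, fun k => ⟨(h.sgn k).1, fun j => ?_⟩, fun i g hgR H => ?_⟩
  · rw [h.zero j g, oc_map, oc_map]
    exact and_congr_right fun hgR => eq_zero_congr (hsd _ (hg g hgR) _ (ho j))
  · -- it suffices to test the rays of the arrangement
    have hspan : Spanning (R.image fun i => evv f' (v i)) := by
      intro z hz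
      funext k
      obtain ⟨g, hgR, e⟩ := hE k
      have h1 := hz _ (Finset.mem_image_of_mem (fun i => evv f' (v i)) hgR)
      have h2 : evv f' (v g) = Pi.single k 1 := by
        rw [e]; funext i; simp [evv, Pi.single_apply, apply_ite f']
      simp only [h2] at h1
      simpa using h1
    obtain ⟨s, cw, hsr', -, hy', -, hcons⟩ := exists_ray_combination hspan y
    rw [hy', dotProduct_sum]
    refine Finset.sum_nonpos fun w hw => ?_
    obtain ⟨T, hT, hwT⟩ := hsr' hw
    choose gT hgT hgTe using fun i => Finset.mem_image.1 (hT i)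
    have hwe : w = evv f' (cross fun i => v (gT i)) := by
      rw [hwT, ← cross_map]; congr 1; funext i; exact (hgTe i).symm
    have hm : cross (fun i => v (gT i)) ∈ cl (Wf v R) := cross_mem_cl fun i => item_mem_Wf (hgT i)
    have hin : InK (fun i => evv f' (v i)) R c j (cw w • w) := by
      refine ⟨fun i hi => ((hcons w hw).1 _ (Finset.mem_image_of_mem (fun i => evv f' (v i)) (h.wall i))).1
        (hy.1 i hi), fun g hgR j' => ?_⟩
      obtain ⟨b1, b2⟩ := (hcons w hw).1 _ (Finset.mem_image_of_mem (fun i => evv f' (v i)) hgR)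
      have b3 := hy.2 g hgR j'
      by_cases h0 : evv f' (v g) ⬝ᵥ y = 0
      · rw [b1 h0, mul_zero]
      · have b4 := mul_nonneg b3 b2
        have : 0 ≤ ((evv f' (v g) ⬝ᵥ oc (fun i => evv f' (v i)) c j') * (evv f' (v g) ⬝ᵥ (cw w • w))) *
            ((evv f' (v g) ⬝ᵥ y) * (evv f' (v g) ⬝ᵥ y)) := by nlinarith
        exact nonneg_of_mul_nonneg_left this (mul_self_pos.2 h0)
    rw [hwe] at hin ⊢
    have h1 := h.vi j _ ((hK j _ hm _).2 hin)
    rw [rc_map] at h1 ⊢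
    exact (nonpos_congr (hsr _ (hr j) _ hm _)).1 h1
  · have h1 := h.dual j
    have e : ∀ f : A →+* ℝ, (oc fun i => evv f (v i)) c = fun j => evv f (oc v c j) :=
      fun f => funext fun j => oc_map f v c j
    rw [e, dualVec_map] at h1 ⊢
    exact fun h0 => h1 ((eq_zero_congr (hsd _ (ho j) _ (dual_mem_cl hoW j))).2 h0)
  · have h1 := h.piv i
    rw [oc_map] at h1 ⊢
    exact fun h0 => h1 ((eq_zero_congr (hsd _ (hg _ (h.wall i)) _ (ho _))).2 h0)
  · have h1 := (h.sgn k).2 j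
    obtain ⟨g, hgR, e⟩ := hE k
    rw [oc_map] at h1 ⊢
    have e2 : ∀ f : A →+* ℝ, evv f (oc v c j) k = evv f (v g) ⬝ᵥ evv f (oc v c j) := by
      intro f; rw [evv_dot, e, single_one_dotProduct]; rfl
    rw [e2] at h1 ⊢
    exact (nonneg_mul_congr₂ rfl (hsd _ (hg g hgR) _ (ho j))).1 h1
  · refine h.flag i g hgR fun j hj => ?_
    have h1 := H j hj
    rw [oc_map] at h1 ⊢
    exact (eq_zero_congr (hsd _ (hg g hgR) _ (ho j))).2 h1

end Transfer
end Hopcroft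

/-! ### Nearest points in faces -/

namespace Hopcroft
open Matrix

section Existence
variable {d : ℕ} {I : Type*} {v : I → Fin (d + 1) → ℝ} {R : Finset I} {u : Fin (d + 1) → ℝ}

lemma gram_det_pos [DecidableEq I] {S : Finset I} (h : LinearIndependent ℝ fun s : S => v s) :
    0 < (gramM v S).det := by
  let M : Matrix S (Fin (d + 1)) ℝ := Matrix.of fun s => v s
  have hM : gramM v S = M * Mᵀ := by
    ext s t; rfl
  have h1 : 0 ≤ (gramM v S).det := by
    rw [hM]
    have := Matrix.posSemidef_self_mul_conjTranspose M
    rw [conjTranspose_eq_transpose_of_trivial] at this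
    exact this.det_nonneg
  refine lt_of_le_of_ne h1 fun h0 => ?_
  obtain ⟨c, hc, hc0⟩ := Matrix.exists_mulVec_eq_zero_iff.2 h0.symm
  have h2 : (∑ s, c s • v s) ⬝ᵥ (∑ s, c s • v s) = 0 := by
    have : ∀ s : S, v s ⬝ᵥ (∑ t : S, c t • v t) = 0 := by
      intro s
      have := congrFun hc0 s
      rw [dotProduct_sum]
      simp only [mulVec, dotProduct, gramM, of_apply, Pi.zero_apply] at this
      rw [← this]
      refine Finset.sum_congr rfl fun t _ => ?_
      rw [dotProduct_smul, smul_eq_mul, mul_comm]; rfl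
    rw [sum_dotProduct]
    exact Finset.sum_eq_zero fun s _ => by rw [smul_dotProduct, this s, smul_zero]
  have h3 := dotProduct_self_eq_zero.1 h2
  exact hc (funext fun s => Fintype.linearIndependent_iff.1 h c h3 s)

lemma eq_zero_of_orth (hE : ∀ k, ∃ g ∈ R, v g = Pi.single k 1) {z : Fin (d + 1) → ℝ}
    (hz : ∀ g ∈ R, v g ⬝ᵥ z = 0) : z = 0 := by
  funext k
  obtain ⟨g, hg, e⟩ := hE k
  have := hz g hg
  rw [e, single_one_dotProduct] at this
  exact this

/-- The orthogonal complement of independent items is spanned by few cross products of items. -/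
lemma orth_span (hE : ∀ k, ∃ g ∈ R, v g = Pi.single k 1) {Q : Finset I} (hQ : Q ⊆ R)
    (hli : LinearIndependent ℝ fun s : Q => v s) {z : Fin (d + 1) → ℝ}
    (hz : ∀ g ∈ Q, v g ⬝ᵥ z = 0) : ∃ F : Finset (Fin (d + 1) → ℝ), F ⊆ cl (Wf v R) ∧
      F.card + Q.card ≤ d + 1 ∧ z ∈ Submodule.span ℝ (F : Set (Fin (d + 1) → ℝ)) := by
  classical
  have hli' : LinearIndepOn ℝ v (Q : Set I) := hli
  obtain ⟨b, hbR, hQb, hspan, hb⟩ := exists_linearIndepOn_extension hli' (Finset.coe_subset.2 hQ)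
  have htop : Submodule.span ℝ (Set.image v b) = ⊤ := by
    rw [eq_top_iff]
    intro y _
    have : y = ∑ k, y k • (Pi.single k 1 : Fin (d + 1) → ℝ) := by
      conv_lhs => rw [pi_eq_sum_univ' y]
    rw [this]
    refine Submodule.sum_mem _ fun k _ => Submodule.smul_mem _ _ ?_
    obtain ⟨g, hg, e⟩ := hE k
    rw [← e]
    exact hspan ⟨g, hg, rfl⟩
  have hbfin : b.Finite := R.finite_toSet.subset hbR
  haveI := hbfin.fintype
  have hb' : LinearIndependent ℝ (fun w : b => v w) := hb
  let bas : Module.Basis b ℝ (Fin (d + 1) → ℝ) := Module.Basis.mk hb' (by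
    rw [← htop]; apply Submodule.span_mono; rintro _ ⟨i, hi, rfl⟩; exact ⟨⟨i, hi⟩, rfl⟩)
  have hcard : Fintype.card b = d + 1 := by
    have := Module.finrank_eq_card_basis bas
    rw [Module.finrank_fin_fun] at this
    exact this.symm
  let e : Fin (d + 1) ≃ b := (Fintype.equivFinOfCardEq hcard).symm
  let W : Fin (d + 1) → Fin (d + 1) → ℝ := fun i => v (e i)
  have hW : LinearIndependent ℝ W := hb'.comp e e.injective
  have hd := dual_ne_zero hW
  have hz' : z = ∑ i, (W i ⬝ᵥ z / (W i ⬝ᵥ dualVec W i)) • dualVec W i := by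
    rw [← sub_eq_zero]
    have hWt : Submodule.span ℝ (Set.range W) = ⊤ :=
      hW.span_eq_top_of_card_eq_finrank (by simp)
    apply dotProduct_self_eq_zero.1
    refine dot_eq_zero_of_mem_span (b := Set.range W) ?_ (hWt ▸ Submodule.mem_top)
    rintro _ ⟨j, rfl⟩
    rw [dotProduct_sub, dotProduct_sum, Finset.sum_eq_single j]
    · rw [dotProduct_smul, smul_eq_mul, div_mul_cancel₀ _ (hd j), sub_self]
    · intro i _ hij
      rw [dotProduct_smul, dot_dualVec_of_ne W hij.symm, smul_zero]
    · simp
  let N : Finset (Fin (d + 1)) := Finset.univ.filter fun i => (e i : I) ∉ Q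
  refine ⟨N.image (dualVec W), ?_, ?_, ?_⟩
  · intro y hy
    obtain ⟨i, -, rfl⟩ := Finset.mem_image.1 hy
    exact dual_mem_cl (fun i => item_mem_Wf (hbR (e i).2)) i
  · have h1 : (N.image (dualVec W)).card ≤ N.card := Finset.card_image_le
    have h2 : Q.card ≤ (Finset.univ.filter fun i => (e i : I) ∈ Q).card := by
      refine Finset.card_le_card_of_injOn (fun g => if hg : g ∈ b then e.symm ⟨g, hg⟩ else 0) ?_ ?_
      · intro g hg
        have hgb : g ∈ b := hQb hg
        simp only [dif_pos hgb, Finset.coe_filter, Finset.mem_univ, true_and, Set.mem_setOf_eq,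
          Equiv.apply_symm_apply]
        exact hg
      · intro g hg g' hg' he
        simp only [dif_pos (hQb hg), dif_pos (hQb hg')] at he
        simpa using e.symm.injective he
    have h3 := Finset.card_filter_add_card_filter_not (s := (Finset.univ : Finset (Fin (d + 1))))
      (fun i => (e i : I) ∈ Q)
    rw [Finset.card_univ, Fintype.card_fin] at h3
    have : N.card = (Finset.univ.filter fun i => ¬ (e i : I) ∈ Q).card := rfl
    omega
  · rw [hz']
    refine Submodule.sum_mem _ fun i _ => ?_
    by_cases hi : (e i : I) ∈ Q
    · rw [show W i ⬝ᵥ z = 0 from hz _ hi, zero_div, zero_smul]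
      exact Submodule.zero_mem _
    · refine Submodule.smul_mem _ _ (Submodule.subset_span ?_)
      exact Finset.mem_coe.2 (Finset.mem_image_of_mem _ (Finset.mem_filter.2 ⟨Finset.mem_univ _, hi⟩))

lemma eq_zero_of_orth_indep {Q : Finset I} (hc : Q.card = d + 1)
    (hli : LinearIndependent ℝ fun s : Q => v s) {z : Fin (d + 1) → ℝ}
    (hz : ∀ g ∈ Q, v g ⬝ᵥ z = 0) : z = 0 := by
  haveI : Nonempty Q := by
    obtain ⟨g, hg⟩ := Finset.card_pos.1 (by omega : 0 < Q.card)
    exact ⟨⟨g, hg⟩⟩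
  have htop : Submodule.span ℝ (Set.range fun s : Q => v s) = ⊤ :=
    hli.span_eq_top_of_card_eq_finrank (by simp [hc])
  apply dotProduct_self_eq_zero.1
  refine dot_eq_zero_of_mem_span (b := Set.range fun s : Q => v s) ?_ (htop ▸ Submodule.mem_top)
  rintro _ ⟨s, rfl⟩
  exact hz s s.2

/-- A point of a closed cone nearest to a given point, with its variational inequality. -/
lemma exists_nearest (K : Set (Fin (d + 1) → ℝ)) (hcl : IsClosed K) (h0 : (0 : Fin (d + 1) → ℝ) ∈ K)
    (hadd : ∀ y ∈ K, ∀ z ∈ K, ∀ s t : ℝ, 0 ≤ s → 0 ≤ t → s • y + t • z ∈ K) (a : Fin (d + 1) → ℝ) :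
    ∃ p ∈ K, (a - p) ⬝ᵥ p = 0 ∧ ∀ y ∈ K, (a - p) ⬝ᵥ y ≤ 0 := by
  have hcont : Continuous fun y : Fin (d + 1) → ℝ => (y - a) ⬝ᵥ (y - a) := by
    unfold dotProduct; fun_prop
  have hlim : Filter.Tendsto (fun y : Fin (d + 1) → ℝ => (y - a) ⬝ᵥ (y - a))
      (Filter.cocompact _) Filter.atTop := by
    have h1 : Filter.Tendsto (fun y : Fin (d + 1) → ℝ => ‖y - a‖) (Filter.cocompact _) Filter.atTop := by
      have := tendsto_norm_cocompact_atTop (E := Fin (d + 1) → ℝ)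
      exact this.comp (Homeomorph.subRight a).isClosedEmbedding.tendsto_cocompact
    have h2 : Filter.Tendsto (fun y : Fin (d + 1) → ℝ => ‖y - a‖ ^ 2) (Filter.cocompact _) Filter.atTop :=
      (Filter.tendsto_pow_atTop two_ne_zero).comp h1
    refine Filter.tendsto_atTop_mono (fun y => ?_) h2
    obtain ⟨k, hk⟩ : ∃ k, ‖y - a‖ = ‖(y - a) k‖ := by
      obtain ⟨k, -, hk⟩ := Finset.exists_mem_eq_sup Finset.univ Finset.univ_nonempty
        (fun b => ‖(y - a) b‖₊)
      exact ⟨k, by rw [Pi.norm_def, hk]; rfl⟩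
    rw [hk, Real.norm_eq_abs, sq_abs, sq]
    exact Finset.single_le_sum (f := fun k => (y - a) k * (y - a) k) (fun _ _ => mul_self_nonneg _)
      (Finset.mem_univ k)
  obtain ⟨p, hpK, hp⟩ := hcont.continuousOn.exists_isMinOn' hcl h0 (by
    have h3 := hlim.eventually (Filter.eventually_ge_atTop (((0 : Fin (d + 1) → ℝ) - a) ⬝ᵥ ((0 : Fin (d + 1) → ℝ) - a)))
    exact h3.filter_mono inf_le_left)
  have hmin : ∀ y ∈ K, (p - a) ⬝ᵥ (p - a) ≤ (y - a) ⬝ᵥ (y - a) := fun y hy => hp hy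
  have hdir : ∀ z : Fin (d + 1) → ℝ, (∀ t : ℝ, 0 < t → t ≤ 1 → p + t • z ∈ K) → (a - p) ⬝ᵥ z ≤ 0 := by
    intro z hz
    by_contra hneg
    push Not at hneg
    set q := (a - p) ⬝ᵥ z with hq
    have hzz := dot_self_nonneg z
    set t := min 1 (q / (z ⬝ᵥ z + 1)) with ht
    have ht0 : 0 < t := lt_min one_pos (by positivity)
    have ht1 : t ≤ 1 := min_le_left _ _
    have h1 := hmin _ (hz t ht0 ht1)
    have e : (p + t • z - a) ⬝ᵥ (p + t • z - a) = (p - a) ⬝ᵥ (p - a) - 2 * t * q + t * t * (z ⬝ᵥ z) := by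
      have : p + t • z - a = t • z - (a - p) := by abel
      rw [this, hq]
      have e2 : p - a = -(a - p) := by abel
      rw [e2]
      generalize a - p = w
      simp only [sub_dotProduct, dotProduct_sub, smul_dotProduct, dotProduct_smul, smul_eq_mul,
        neg_dotProduct, dotProduct_neg, neg_neg]
      rw [dotProduct_comm z w]; ring
    rw [e] at h1
    have h2 : t * (z ⬝ᵥ z + 1) ≤ q := by
      have := min_le_right 1 (q / (z ⬝ᵥ z + 1))
      rw [← ht] at this
      rwa [le_div_iff₀ (by positivity)] at this
    nlinarith
  refine ⟨p, hpK, ?_, fun y hy => hdir y fun t ht _ => by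
    simpa using hadd p hpK y hy 1 t zero_le_one ht.le⟩
  apply le_antisymm
  · exact hdir p fun t ht _ => by simpa using hadd p hpK p hpK 1 t zero_le_one ht.le
  · have := hdir (-p) fun t ht ht1 => by
      have := hadd p hpK p hpK (1 - t) 0 (by linarith) le_rfl
      convert this using 1
      rw [zero_smul, add_zero, sub_smul, one_smul, smul_neg, sub_eq_add_neg]
    rw [dotProduct_neg] at this
    linarith

/-- The sign vector of `u`. -/
noncomputable def sgv (u : Fin (d + 1) → ℝ) : Fin (d + 1) → SignType := fun k => SignType.sign (u k)

/-- `S` is the set of walls through the point nearest to the sign vector of `u` in the face `Z` of the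
cell of `u`. -/
structure FaceOK (v : I → Fin (d + 1) → ℝ) (R : Finset I) (u : Fin (d + 1) → ℝ) (Z S : Finset I) :
    Prop where
  sub : Z ⊆ S
  card : S.card ≤ d
  zero : ∀ g, g ∈ S ↔ g ∈ R ∧ v g ⬝ᵥ ov v S (sgv u) = 0
  pos : ∀ g ∈ R, 0 ≤ (v g ⬝ᵥ u) * (v g ⬝ᵥ ov v S (sgv u))
  ne : ov v S (sgv u) ≠ 0
  vi : ∀ y, (∀ g ∈ Z, v g ⬝ᵥ y = 0) → (∀ g ∈ R, 0 ≤ (v g ⬝ᵥ u) * (v g ⬝ᵥ y)) →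
    rv v S (sgv u) ⬝ᵥ y ≤ 0

/-- In a nonzero face of the cell of `u`, the nearest point to the sign vector of `u` exists; it is
nonzero because the coordinate vectors belong to `R`. -/
lemma exists_face (hE : ∀ k, ∃ g ∈ R, v g = Pi.single k 1)
    (hgp : ∀ S ⊆ R, S.card ≤ d + 1 → LinearIndependent ℝ fun s : S => v s)
    (hu : ∀ g ∈ R, v g ⬝ᵥ u ≠ 0) {Z : Finset I} (hZ : Z ⊆ R) {y : Fin (d + 1) → ℝ} (hy : y ≠ 0)
    (hy0 : ∀ g ∈ Z, v g ⬝ᵥ y = 0) (hypos : ∀ g ∈ R, 0 ≤ (v g ⬝ᵥ u) * (v g ⬝ᵥ y)) :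
    ∃ S, FaceOK v R u Z S := by
  classical
  let K : Set (Fin (d + 1) → ℝ) :=
    {z | (∀ g ∈ Z, v g ⬝ᵥ z = 0) ∧ ∀ g ∈ R, 0 ≤ (v g ⬝ᵥ u) * (v g ⬝ᵥ z)}
  have hcd : ∀ g : I, Continuous fun z : Fin (d + 1) → ℝ => v g ⬝ᵥ z := by
    intro g; unfold dotProduct; fun_prop
  have hcl : IsClosed K := by
    have : K = (⋂ g ∈ Z, {z | v g ⬝ᵥ z = 0}) ∩ ⋂ g ∈ R, {z | 0 ≤ (v g ⬝ᵥ u) * (v g ⬝ᵥ z)} := by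
      ext z; simp [K]
    rw [this]
    refine IsClosed.inter (isClosed_biInter fun g _ => isClosed_eq (hcd g) continuous_const)
      (isClosed_biInter fun g _ => isClosed_le continuous_const (continuous_const.mul (hcd g)))
  have hadd : ∀ y ∈ K, ∀ z ∈ K, ∀ s t : ℝ, 0 ≤ s → 0 ≤ t → s • y + t • z ∈ K := by
    rintro y ⟨y1, y2⟩ z ⟨z1, z2⟩ s t hs ht
    refine ⟨fun g hg => ?_, fun g hg => ?_⟩
    · rw [dotProduct_add, dotProduct_smul, dotProduct_smul, y1 g hg, z1 g hg]; simp
    · rw [dotProduct_add, dotProduct_smul, dotProduct_smul, smul_eq_mul, smul_eq_mul]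
      nlinarith [mul_nonneg hs (y2 g hg), mul_nonneg ht (z2 g hg)]
  obtain ⟨p, hpK, hp0, hpvi⟩ := exists_nearest K hcl ⟨by simp, by simp⟩ hadd (sv ℝ (sgv u))
  set a : Fin (d + 1) → ℝ := sv ℝ (sgv u) with ha
  have huk : ∀ k, u k ≠ 0 := by
    intro k
    obtain ⟨g, hg, e⟩ := hE k
    have := hu g hg
    rwa [e, single_one_dotProduct] at this
  have hak : ∀ k (r : ℝ), 0 ≤ u k * r → 0 ≤ a k * r := by
    intro k r h
    have hs : SignType.sign (a k) = SignType.sign (u k) := by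
      simp only [ha, sv, sgv]
      rcases lt_or_gt_of_ne (huk k) with h | h
      · rw [sign_neg h]; simp
      · rw [sign_pos h]; simp
    exact (nonneg_mul_congr hs).2 h
  have hak0 : ∀ k, a k ≠ 0 := by
    intro k
    simp only [ha, sv, sgv]
    rcases lt_or_gt_of_ne (huk k) with h | h
    · rw [sign_neg h]; simp
    · rw [sign_pos h]; simp
  have hpne : p ≠ 0 := by
    rintro rfl
    have h1 := hpvi y ⟨hy0, hypos⟩
    rw [sub_zero] at h1
    obtain ⟨k, hk⟩ := Function.ne_iff.1 hy
    have hnn : ∀ k, 0 ≤ a k * y k := by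
      intro k
      obtain ⟨g, hg, e⟩ := hE k
      have := hypos g hg
      rw [e, single_one_dotProduct, single_one_dotProduct] at this
      exact hak k _ this
    have : 0 < a ⬝ᵥ y := Finset.sum_pos' (fun k _ => hnn k)
      ⟨k, Finset.mem_univ _, lt_of_le_of_ne (hnn k) (Ne.symm (mul_ne_zero (hak0 k) hk))⟩
    linarith
  let S : Finset I := R.filter fun g => v g ⬝ᵥ p = 0
  have hSR : S ⊆ R := Finset.filter_subset _ _
  have hSp : ∀ g ∈ S, v g ⬝ᵥ p = 0 := fun g hg => (Finset.mem_filter.1 hg).2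
  have hcard : S.card ≤ d := by
    by_contra hc
    push Not at hc
    obtain ⟨Q, hQS, hQc⟩ := Finset.exists_subset_card_eq (Nat.succ_le_of_lt hc)
    exact hpne (eq_zero_of_orth_indep hQc (hgp Q (hQS.trans hSR) (by omega))
      fun g hg => hSp g (hQS hg))
  have hγ := gram_det_pos (hgp S hSR (by omega))
  set γ := (gramM v S).det with hγd
  -- the residual is orthogonal to every direction parallel to all walls through `p`
  have hres : ∀ z : Fin (d + 1) → ℝ, (∀ g ∈ S, v g ⬝ᵥ z = 0) → (a - p) ⬝ᵥ z ≤ 0 := by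
    intro z hz
    have hev : ∀ᶠ t : ℝ in nhdsWithin 0 (Set.Ioi 0), ∀ g ∈ R,
        0 ≤ (v g ⬝ᵥ u) * (v g ⬝ᵥ (p + t • z)) := by
      rw [Filter.eventually_all_finset]
      intro g hg
      by_cases hgS : g ∈ S
      · refine Filter.Eventually.of_forall fun t => ?_
        rw [dotProduct_add, dotProduct_smul, hz g hgS, hSp g hgS]; simp
      · have h0 : v g ⬝ᵥ p ≠ 0 := fun h => hgS (Finset.mem_filter.2 ⟨hg, h⟩)
        have hpos : 0 < (v g ⬝ᵥ u) * (v g ⬝ᵥ p) :=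
          lt_of_le_of_ne (hpK.2 g hg) (Ne.symm (mul_ne_zero (hu g hg) h0))
        have hc : Filter.Tendsto (fun t : ℝ => (v g ⬝ᵥ u) * (v g ⬝ᵥ (p + t • z)))
            (nhdsWithin 0 (Set.Ioi 0)) (nhds ((v g ⬝ᵥ u) * (v g ⬝ᵥ p))) := by
          have : Continuous (fun t : ℝ => (v g ⬝ᵥ u) * (v g ⬝ᵥ p + t * (v g ⬝ᵥ z))) := by fun_prop
          have h3 := this.tendsto 0
          simp only [zero_mul, add_zero] at h3
          simp only [dotProduct_add, dotProduct_smul, smul_eq_mul]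
          exact h3.mono_left nhdsWithin_le_nhds
        exact (hc.eventually (lt_mem_nhds hpos)).mono fun t ht => le_of_lt ht
    obtain ⟨t, ht, ht0⟩ := (hev.and self_mem_nhdsWithin).exists
    have hZS : ∀ g ∈ Z, g ∈ S := fun g hg => Finset.mem_filter.2 ⟨hZ hg, hpK.1 g hg⟩
    have := hpvi (p + t • z) ⟨fun g hg => by
      rw [dotProduct_add, dotProduct_smul, hz g (hZS g hg), hpK.1 g hg]; simp, ht⟩
    rw [dotProduct_add, hp0, zero_add, dotProduct_smul, smul_eq_mul] at this
    exact nonpos_of_mul_nonpos_right this ht0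
  have hov : ov v S (sgv u) = γ • a - rv v S (sgv u) := by rw [ov]
  have hop : ov v S (sgv u) = γ • p := by
    rw [← sub_eq_zero]
    set o := ov v S (sgv u) with ho
    have hz : ∀ g ∈ S, v g ⬝ᵥ (o - γ • p) = 0 := by
      intro g hg
      rw [dotProduct_sub, dotProduct_smul, hSp g hg, ho, dot_ov v S _ hg]; simp
    have h1 : (a - p) ⬝ᵥ (o - γ • p) = 0 := by
      refine le_antisymm (hres _ hz) ?_
      have := hres (-(o - γ • p)) fun g hg => by rw [dotProduct_neg, hz g hg, neg_zero]
      rw [dotProduct_neg] at this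
      linarith
    have h2 : rv v S (sgv u) ⬝ᵥ (o - γ • p) = 0 := rv_dot _ _ _ _ hz
    apply dotProduct_self_eq_zero.1
    have e : o - γ • p = γ • (a - p) - rv v S (sgv u) := by
      rw [hov, smul_sub]; abel
    have e' : ∀ w, (o - γ • p) ⬝ᵥ w = (γ • (a - p) - rv v S (sgv u)) ⬝ᵥ w := fun w => by rw [e]
    rw [e', sub_dotProduct, smul_dotProduct, h1, h2]; simp
  have hrv : rv v S (sgv u) = γ • (a - p) := by
    have : rv v S (sgv u) = γ • a - ov v S (sgv u) := by rw [hov]; abel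
    rw [this, hop, smul_sub]
  refine ⟨S, ⟨fun g hg => Finset.mem_filter.2 ⟨hZ hg, hpK.1 g hg⟩, hcard, fun g => ?_, fun g hg => ?_,
    ?_, fun z hz1 hz2 => ?_⟩⟩
  · rw [hop, dotProduct_smul, smul_eq_mul, mul_eq_zero, or_iff_right hγ.ne']
    exact Finset.mem_filter
  · rw [hop, dotProduct_smul, smul_eq_mul, mul_left_comm]
    exact mul_nonneg hγ.le (hpK.2 g hg)
  · rw [hop]; exact smul_ne_zero hγ.ne' hpne
  · rw [hrv, smul_dotProduct, smul_eq_mul]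
    exact mul_nonpos_of_nonneg_of_nonpos hγ.le (hpvi z ⟨hz1, hz2⟩)

end Existence
end Hopcroft

/-! ### Existence of a cone containing a given vector -/

namespace Hopcroft
open Matrix

section Existence
variable {d : ℕ} {I : Type*} {v : I → Fin (d + 1) → ℝ} {R : Finset I} {u : Fin (d + 1) → ℝ}

/-- The state of the pulling process: `y` lies in the relative interior of the face `Z` of the cell of
`u`, and was reached from `u` using at most `Z.card` directions. -/
structure Pull (v : I → Fin (d + 1) → ℝ) (R : Finset I) (u : Fin (d + 1) → ℝ) (Z : Finset I)
    (y : Fin (d + 1) → ℝ) : Prop where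
  sub : Z ⊆ R
  zero : ∀ g ∈ R, (v g ⬝ᵥ y = 0 ↔ g ∈ Z)
  pos : ∀ g ∈ R, 0 ≤ (v g ⬝ᵥ u) * (v g ⬝ᵥ y)
  span : ∃ F : Finset (Fin (d + 1) → ℝ), F ⊆ cl (Wf v R) ∧ F.card ≤ Z.card ∧
    u - y ∈ Submodule.span ℝ (F : Set (Fin (d + 1) → ℝ))

lemma mul_nonneg_of_common {a b c : ℝ} (ha : a ≠ 0) (hb : 0 ≤ a * b) (hc : 0 ≤ a * c) : 0 ≤ b * c := by
  rcases lt_or_gt_of_ne ha with h | h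
  · exact mul_nonneg_of_nonpos_of_nonpos (nonpos_of_mul_nonneg_right hb h)
      (nonpos_of_mul_nonneg_right hc h)
  · exact mul_nonneg (nonneg_of_mul_nonneg_right hb h) (nonneg_of_mul_nonneg_right hc h)

lemma dot_ne_zero_of_generic (hE : ∀ k, ∃ g ∈ R, v g = Pi.single k 1)
    (hgp : ∀ S ⊆ R, S.card ≤ d + 1 → LinearIndependent ℝ fun s : S => v s)
    (hgen : ∀ F : Finset (Fin (d + 1) → ℝ), F ⊆ cl (Wf v R) → F.card ≤ d →
      u ∉ Submodule.span ℝ (F : Set (Fin (d + 1) → ℝ))) : ∀ g ∈ R, v g ⬝ᵥ u ≠ 0 := by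
  intro g hg h0
  obtain ⟨F, hF, hc, hs⟩ := orth_span (Q := {g}) (z := u) hE (by simpa using hg)
    (hgp _ (by simpa using hg) (by simp)) (by simpa using h0)
  rw [Finset.card_singleton] at hc
  exact hgen F hF (by omega) hs

/-- One step of pulling: moving from `y` away from the nearest point of the current face until a new
wall `h` is hit. When `Z` has `d` elements the face is a ray, spanned by its nearest point. The data are
produced before the hypotheses so that they can be iterated as functions of the state. -/
lemma Pull.step (hE : ∀ k, ∃ g ∈ R, v g = Pi.single k 1)
    (hgp : ∀ S ⊆ R, S.card ≤ d + 1 → LinearIndependent ℝ fun s : S => v s)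
    (hgen : ∀ F : Finset (Fin (d + 1) → ℝ), F ⊆ cl (Wf v R) → F.card ≤ d →
      u ∉ Submodule.span ℝ (F : Set (Fin (d + 1) → ℝ))) [DecidableEq I] [Nonempty I] (Z : Finset I)
    (y : Fin (d + 1) → ℝ) :
    ∃ (S : Finset I) (t : ℝ) (h : I), Pull v R u Z y → Z.card ≤ d → FaceOK v R u Z S ∧ 0 < t ∧
      (Z.card < d → h ∈ R ∧ h ∉ Z ∧ v h ⬝ᵥ ov v S (sgv u) ≠ 0 ∧
        Pull v R u (insert h Z) (y - t • ov v S (sgv u))) ∧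
      (Z.card = d → y = t • ov v S (sgv u)) := by
  by_cases hP : Pull v R u Z y ∧ Z.card ≤ d
  swap
  · exact ⟨∅, 0, Classical.arbitrary I, fun h h' => absurd ⟨h, h'⟩ hP⟩
  obtain ⟨hP, hc⟩ := hP
  have hu := dot_ne_zero_of_generic hE hgp hgen
  obtain ⟨F, hFsub, hFc, hFs⟩ := hP.span
  have hy : y ≠ 0 := by
    rintro rfl
    rw [sub_zero] at hFs
    exact hgen F hFsub (by omega) hFs
  obtain ⟨S, hS⟩ := exists_face hE hgp hu hP.sub hy (fun g hg => (hP.zero g (hP.sub hg)).2 hg) hP.pos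
  have hSR : S ⊆ R := fun g hg => ((hS.zero g).1 hg).1
  set o := ov v S (sgv u) with ho
  have hoZ : ∀ g ∈ Z, v g ⬝ᵥ o = 0 := fun g hg => ((hS.zero g).1 (hS.sub hg)).2
  obtain ⟨g₀, hg₀R, hg₀⟩ : ∃ g ∈ R, v g ⬝ᵥ o ≠ 0 := by
    by_contra hcon
    push Not at hcon
    exact hS.ne (eq_zero_of_orth hE hcon)
  have hg₀Z : g₀ ∉ Z := fun h => hg₀ (hoZ _ h)
  have hg₀y : v g₀ ⬝ᵥ y ≠ 0 := fun h => hg₀Z ((hP.zero _ hg₀R).1 h)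
  have hpos : ∀ g ∈ R, 0 ≤ (v g ⬝ᵥ y) * (v g ⬝ᵥ o) := fun g hg =>
    mul_nonneg_of_common (hu g hg) (hP.pos g hg) (hS.pos g hg)
  have hpos₀ : 0 < (v g₀ ⬝ᵥ y) * (v g₀ ⬝ᵥ o) :=
    lt_of_le_of_ne (hpos g₀ hg₀R) (mul_ne_zero hg₀y hg₀).symm
  by_cases hlt : Z.card < d
  · obtain ⟨t, ht, hcons, g, hg, hg0, hgo, hgy⟩ := exists_move (G := R.image v) (y := y) (v := -o)
      (by
        intro g hg hgy
        obtain ⟨i, hi, rfl⟩ := Finset.mem_image.1 hg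
        rw [dotProduct_neg, hoZ i ((hP.zero i hi).1 hgy), neg_zero])
      ⟨v g₀, Finset.mem_image_of_mem _ hg₀R, by rw [dotProduct_neg]; linarith⟩
    obtain ⟨h, hh, rfl⟩ := Finset.mem_image.1 hg
    have hhZ : h ∉ Z := fun h' => hgy ((hP.zero h hh).2 h')
    have hsub : insert h Z ⊆ R := Finset.insert_subset hh hP.sub
    have hyt : y - t • o = y + t • -o := by rw [smul_neg, sub_eq_add_neg]
    have hspan : u - (y - t • o) ∈
        Submodule.span ℝ ((insert o F : Finset _) : Set (Fin (d + 1) → ℝ)) := by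
      have : u - (y - t • o) = t • o + (u - y) := by abel
      rw [this, Finset.coe_insert]
      refine Submodule.add_mem _ (Submodule.smul_mem _ _ (Submodule.subset_span (by simp))) ?_
      exact Submodule.span_mono (Set.subset_insert _ _) hFs
    have hosub : insert o F ⊆ cl (Wf v R) :=
      Finset.insert_subset (subset_cl _ (ov_mem_Wf hSR hS.card _)) hFsub
    have hocard : (insert o F).card ≤ Z.card + 1 := (Finset.card_insert_le _ _).trans (by omega)
    refine ⟨S, t, h, fun _ _ => ⟨hS, ht, fun _ => ⟨hh, hhZ, ?_, ⟨hsub, ?_, ?_, ?_⟩⟩, fun h => by omega⟩⟩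
    · intro h0
      apply hgo
      rw [dotProduct_neg, h0, neg_zero]
    · intro g hgR
      rw [hyt]
      constructor
      · intro hgz
        by_contra hgn
        have hQ : insert g (insert h Z) ⊆ R := Finset.insert_subset hgR hsub
        have hQc : (insert g (insert h Z)).card = Z.card + 2 := by
          rw [Finset.card_insert_of_notMem hgn, Finset.card_insert_of_notMem hhZ]
        obtain ⟨F', hF', hF'c, hF's⟩ := orth_span (z := y + t • -o) hE hQ
          (hgp _ hQ (by omega)) (by
            intro i hi
            rcases Finset.mem_insert.1 hi with rfl | hi
            · exact hgz
            rcases Finset.mem_insert.1 hi with rfl | hi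
            · exact hg0
            · rw [dotProduct_add, (hP.zero i (hP.sub hi)).2 hi, dotProduct_smul, dotProduct_neg,
                hoZ i hi]; simp)
        refine hgen (insert o F ∪ F') (Finset.union_subset hosub hF') ?_ ?_
        · have := Finset.card_union_le (insert o F) F'
          omega
        · have : u = (u - (y - t • o)) + (y + t • -o) := by rw [hyt]; abel
          rw [this, Finset.coe_union]
          exact Submodule.add_mem _ (Submodule.span_mono Set.subset_union_left hspan)
            (Submodule.span_mono Set.subset_union_right hF's)
      · intro hi
        rcases Finset.mem_insert.1 hi with rfl | hi
        · exact hg0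
        · exact (hcons _ (Finset.mem_image_of_mem _ hgR)).1 ((hP.zero _ hgR).2 hi)
    · intro g hgR
      rw [hyt]
      obtain ⟨h1, h2⟩ := hcons _ (Finset.mem_image_of_mem _ hgR)
      by_cases h0 : v g ⬝ᵥ y = 0
      · rw [h1 h0, mul_zero]
      · exact mul_nonneg_of_common h0 (by rw [mul_comm]; exact hP.pos g hgR) h2
    · exact ⟨insert o F, hosub, by rw [Finset.card_insert_of_notMem hhZ]; exact hocard, hspan⟩
  · have hZc : Z.card = d := by omega
    refine ⟨S, (v g₀ ⬝ᵥ y) / (v g₀ ⬝ᵥ o), g₀, fun _ _ => ⟨hS, ?_, fun h => absurd h hlt, fun _ => ?_⟩⟩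
    · rcases mul_pos_iff.1 hpos₀ with ⟨h1, h2⟩ | ⟨h1, h2⟩
      · exact div_pos h1 h2
      · exact div_pos_of_neg_of_neg h1 h2
    · have hQ : insert g₀ Z ⊆ R := Finset.insert_subset hg₀R hP.sub
      have hQc : (insert g₀ Z).card = d + 1 := by rw [Finset.card_insert_of_notMem hg₀Z, hZc]
      rw [← sub_eq_zero]
      refine eq_zero_of_orth_indep hQc (hgp _ hQ hQc.le) fun g hg => ?_
      rw [dotProduct_sub, dotProduct_smul, smul_eq_mul]
      rcases Finset.mem_insert.1 hg with rfl | hg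
      · rw [← ho, div_mul_cancel₀ _ hg₀, sub_self]
      · rw [← ho, hoZ g hg, (hP.zero g (hP.sub hg)).2 hg]; simp

/-- Every generic vector lies in the interior of a cone of the canonical triangulation. -/
theorem exists_act (hE : ∀ k, ∃ g ∈ R, v g = Pi.single k 1)
    (hgp : ∀ S ⊆ R, S.card ≤ d + 1 → LinearIndependent ℝ fun s : S => v s)
    (hgen : ∀ F : Finset (Fin (d + 1) → ℝ), F ⊆ cl (Wf v R) → F.card ≤ d →
      u ∉ Submodule.span ℝ (F : Set (Fin (d + 1) → ℝ))) :
    ∃ c : Code d I, Act v R c ∧ InC v c u := by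
  classical
  obtain ⟨gE, -, -⟩ := hE 0
  haveI : Nonempty I := ⟨gE⟩
  have hu := dot_ne_zero_of_generic hE hgp hgen
  choose S t h hst using fun s : Finset I × (Fin (d + 1) → ℝ) => Pull.step hE hgp hgen s.1 s.2
  let st : ℕ → Finset I × (Fin (d + 1) → ℝ) := fun i => Nat.rec (∅, u)
    (fun _ s => (insert (h s) s.1, s.2 - t s • ov v (S s) (sgv u))) i
  have st_succ : ∀ i, st (i + 1) =
    (insert (h (st i)) (st i).1, (st i).2 - t (st i) • ov v (S (st i)) (sgv u)) := fun i => rfl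
  have hinv : ∀ i ≤ d, Pull v R u (st i).1 (st i).2 ∧ (st i).1.card = i := by
    intro i
    induction i with
    | zero =>
      intro _
      refine ⟨⟨by simp [st], fun g hg => ?_, fun g hg => mul_self_nonneg _, ⟨∅, by simp, by simp, ?_⟩⟩, rfl⟩
      · simpa [st] using hu g hg
      · simp [st]
    | succ i ih =>
      intro hi
      obtain ⟨h1, h2⟩ := ih (by omega)
      obtain ⟨-, -, h3, -⟩ := hst (st i) h1 (by omega)
      obtain ⟨-, h4, -, h5⟩ := h3 (by omega)
      rw [st_succ]
      exact ⟨h5, by simp only [Finset.card_insert_of_notMem h4, h2]⟩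
  let O : ℕ → Fin (d + 1) → ℝ := fun j => ov v (S (st j)) (sgv u)
  let H : ℕ → I := fun i => h (st i)
  have hface : ∀ j ≤ d, FaceOK v R u (st j).1 (S (st j)) := fun j hj =>
    (hst (st j) (hinv j hj).1 (by rw [(hinv j hj).2]; exact hj)).1
  have htpos : ∀ j ≤ d, 0 < t (st j) := fun j hj =>
    (hst (st j) (hinv j hj).1 (by rw [(hinv j hj).2]; exact hj)).2.1
  have hH : ∀ i < d, H i ∈ R ∧ v (H i) ⬝ᵥ O i ≠ 0 := fun i hi => by
    have := (hst (st i) (hinv i hi.le).1 (by rw [(hinv i hi.le).2]; exact hi.le)).2.2.1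
      (by rw [(hinv i hi.le).2]; exact hi)
    exact ⟨this.1, this.2.2.1⟩
  have hlast : (st d).2 = t (st d) • O d :=
    (hst (st d) (hinv d le_rfl).1 (by rw [(hinv d le_rfl).2])).2.2.2 (hinv d le_rfl).2
  have hZ : ∀ i g, g ∈ (st i).1 ↔ ∃ i' < i, g = H i' := by
    intro i g
    induction i with
    | zero => simp [st]
    | succ i ih =>
      rw [st_succ, Finset.mem_insert, ih]
      constructor
      · rintro (rfl | ⟨i', hi', rfl⟩)
        · exact ⟨i, by omega, rfl⟩
        · exact ⟨i', by omega, rfl⟩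
      · rintro ⟨i', hi', rfl⟩
        rcases Nat.lt_succ_iff_lt_or_eq.1 hi' with h | rfl
        · exact Or.inr ⟨i', h, rfl⟩
        · exact Or.inl rfl
  have hZO : ∀ j ≤ d, ∀ i < j, v (H i) ⬝ᵥ O j = 0 := fun j hj i hi =>
    (((hface j hj).zero _).1 ((hface j hj).sub ((hZ j _).2 ⟨i, hi, rfl⟩))).2
  have hsum : ∀ k ≤ d, (st (d - k)).2 = ∑ j ∈ Finset.Ico (d - k) (d + 1), t (st j) • O j := by
    intro k
    induction k with
    | zero => intro _; simpa using hlast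
    | succ k ih =>
      intro hk
      have e : d - k = d - (k + 1) + 1 := by omega
      have h1 := ih (by omega)
      rw [Finset.sum_eq_sum_Ico_succ_bot (by omega), ← e, ← h1, e, st_succ]
      simp [O]
  have hsum' : ∀ i ≤ d, (st i).2 = ∑ j ∈ Finset.Ico i (d + 1), t (st j) • O j := by
    intro i hi
    have := hsum (d - i) (by omega)
    rwa [Nat.sub_sub_self hi] at this
  let c : Code d I := (fun i => H i, sgv u, fun j => S (st j))
  have hoc : ∀ j : Fin (d + 1), oc v c j = O j := fun j => rfl
  have hu_sum : u = ∑ j : Fin (d + 1), t (st j) • oc v c j := by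
    have := hsum' 0 (Nat.zero_le _)
    rw [← Finset.range_eq_Ico, ← Fin.sum_univ_eq_sum_range (fun j => t (st j) • O j)] at this
    exact this
  have hle : ∀ j : Fin (d + 1), (j : ℕ) ≤ d := fun j => Nat.lt_succ_iff.1 j.2
  have hli : LinearIndependent ℝ (oc v c) := by
    rw [Fintype.linearIndependent_iff]
    intro x hx
    have key : ∀ m : ℕ, ∀ j : Fin (d + 1), (j : ℕ) = m → x j = 0 := by
      intro m
      induction m using Nat.strong_induction_on with
      | _ m ih =>
        intro j hj
        by_cases hjd : (j : ℕ) < d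
        · have h1 : v (H j) ⬝ᵥ ∑ i, x i • oc v c i = 0 := by rw [hx, dotProduct_zero]
          rw [dotProduct_sum, Finset.sum_eq_single j, dotProduct_smul, smul_eq_mul, mul_eq_zero] at h1
          · exact h1.resolve_right (hH j hjd).2
          · intro i _ hij
            rw [dotProduct_smul, smul_eq_mul]
            rcases lt_or_gt_of_ne (Fin.val_ne_of_ne hij) with h | h
            · rw [ih i (by omega) i rfl, zero_mul]
            · rw [hoc, hZO i (hle i) j h, mul_zero]
          · simp
        · have hjd : (j : ℕ) = d := le_antisymm (hle j) (not_lt.1 hjd)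
          rw [Finset.sum_eq_single j] at hx
          · exact (smul_eq_zero.1 hx).resolve_right (hface j (hle j)).ne
          · intro i _ hij
            have := hle i
            have := Fin.val_ne_of_ne hij
            rw [ih i (by omega) i rfl, zero_smul]
          · simp
    exact fun j => key j j rfl
  have hd := fun j => dual_ne_zero hli j
  refine ⟨c, ⟨fun i => (hH i i.2).1, fun j => (hface j (hle j)).card, fun j => ⟨fun i hi => ?_, fun g hg j' => ?_⟩,
    fun j g => (hface j (hle j)).zero g, fun j y hy => ?_, hd, fun i => (hH i i.2).2, fun k => ⟨?_, fun j => ?_⟩,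
    fun i g hg hz => ?_⟩, InC.of_sum hd (fun j => htpos j (hle j)) hu_sum⟩
  · exact hZO j (hle j) i hi
  · exact mul_nonneg_of_common (hu g hg) ((hface j' (hle j')).pos g hg) ((hface j (hle j)).pos g hg)
  · refine (hface j (hle j)).vi y (fun g hg => ?_) (fun g hg => ?_)
    · obtain ⟨i, hi, rfl⟩ := (hZ j g).1 hg
      exact hy.1 ⟨i, by have := hle j; omega⟩ hi
    · have e : v g ⬝ᵥ u = ∑ j : Fin (d + 1), t (st j) * (v g ⬝ᵥ oc v c j) := by
        conv_lhs => rw [hu_sum]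
        simp only [dotProduct_sum, dotProduct_smul, smul_eq_mul]
      rw [e, Finset.sum_mul]
      refine Finset.sum_nonneg fun j' _ => ?_
      rw [mul_assoc]
      exact mul_nonneg (htpos j' (hle j')).le (hy.2 g hg j')
  · obtain ⟨g, hg, e⟩ := hE k
    have := hu g hg
    rw [e, single_one_dotProduct] at this
    simpa [c, sgv] using this
  · obtain ⟨g, hg, e⟩ := hE k
    have h1 := (hface j (hle j)).pos g hg
    rw [e, single_one_dotProduct, single_one_dotProduct] at h1
    have h2 := hu g hg
    rw [e, single_one_dotProduct] at h2
    change 0 ≤ ((SignType.sign (u k) : SignType) : ℝ) * O j k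
    change 0 ≤ u k * O j k at h1
    rcases lt_or_gt_of_ne h2 with h | h
    · rw [sign_neg h]; have := nonpos_of_mul_nonneg_right h1 h; simpa using this
    · rw [sign_pos h]; have := nonneg_of_mul_nonneg_right h1 h; simpa using this
  · have h1 : v g ⬝ᵥ (st (i + 1)).2 = 0 := by
      rw [hsum' (i + 1) i.2, dotProduct_sum]
      refine Finset.sum_eq_zero fun j hj => ?_
      obtain ⟨h2, h3⟩ := Finset.mem_Ico.1 hj
      rw [dotProduct_smul]
      have := hz ⟨j, h3⟩ (by rw [Fin.lt_def]; exact h2)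
      rw [hoc] at this
      rw [this, smul_zero]
    obtain ⟨i', hi', e⟩ := (hZ (i + 1) g).1 (((hinv (i + 1) i.2).1.zero g hg).1 h1)
    have hi2 := i.2
    exact ⟨⟨i', by omega⟩, by rw [Fin.le_def]; simp only; omega, e⟩

end Existence
end Hopcroft

/-! ### Degree and cardinality bounds -/

namespace Hopcroft
open Matrix MvPolynomial

section Degree
variable {σ : Type*} {d : ℕ}

lemma totalDegree_det_le {m : Type*} [Fintype m] [DecidableEq m] (M : Matrix m m (MvPolynomial σ ℝ)) {k : ℕ}
    (h : ∀ i j, (M i j).totalDegree ≤ k) : M.det.totalDegree ≤ Fintype.card m * k := by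
  rw [Matrix.det_apply]
  refine (totalDegree_finsetSum _ _).trans (Finset.sup_le fun p _ => ?_)
  have h1 : (∏ i, M (p i) i).totalDegree ≤ Fintype.card m * k := by
    refine (totalDegree_finsetProd _ _).trans ((Finset.sum_le_sum fun i _ => h _ _).trans ?_)
    simp
  rcases Int.units_eq_one_or (Equiv.Perm.sign p) with hp | hp <;> rw [hp]
  · simpa using h1
  · simpa using h1

/-- All entries of the vector have degree at most `k`. -/
def DegV {m : Type*} (k : ℕ) (y : m → MvPolynomial σ ℝ) : Prop := ∀ i, (y i).totalDegree ≤ k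

lemma DegV.mono {m : Type*} {k k' : ℕ} {y : m → MvPolynomial σ ℝ} (h : DegV k y) (hk : k ≤ k') : DegV k' y :=
  fun i => (h i).trans hk

lemma DegV.dot {m : Type*} [Fintype m] {k k' : ℕ} {y z : m → MvPolynomial σ ℝ} (h : DegV k y)
    (h' : DegV k' z) : (y ⬝ᵥ z).totalDegree ≤ k + k' :=
  (totalDegree_finsetSum _ _).trans (Finset.sup_le fun i _ =>
    (totalDegree_mul _ _).trans (add_le_add (h i) (h' i)))

lemma DegV.cross {k : ℕ} {T : Fin d → Fin (d + 1) → MvPolynomial σ ℝ} (h : ∀ i, DegV k (T i)) :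
    DegV ((d + 1) * k) (Hopcroft.cross T) := by
  intro l
  have := totalDegree_det_le (k := k)
    (Matrix.of (Fin.cons (Pi.single l 1) T : Fin (d + 1) → Fin (d + 1) → MvPolynomial σ ℝ)) (by
      intro i j
      refine Fin.cases ?_ (fun i => ?_) i
      · simp only [of_apply, Fin.cons_zero, Pi.single_apply]
        split_ifs <;> simp
      · simpa using h i j)
  rwa [Fintype.card_fin] at this

lemma DegV.sv (a : Fin (d + 1) → SignType) : DegV 0 (sv (MvPolynomial σ ℝ) a) := by
  intro k
  simp only [Hopcroft.sv]
  cases a k <;> simp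

lemma DegV.rv_ov {I : Type*} {v : I → Fin (d + 1) → MvPolynomial σ ℝ} (hv : ∀ i, DegV 1 (v i))
    {S : Finset I} (hS : S.card ≤ d) (a : Fin (d + 1) → SignType) :
    DegV (2 * d + 2) (rv v S a) ∧ DegV (2 * d + 2) (ov v S a) := by
  classical
  have hg : ∀ i j, (gramM v S i j).totalDegree ≤ 2 := fun i j => (hv i).dot (hv j)
  have hdet : (gramM v S).det.totalDegree ≤ 2 * d := by
    have := totalDegree_det_le _ hg
    rw [Fintype.card_coe] at this
    nlinarith
  have hadj : ∀ i j, ((gramM v S).adjugate i j).totalDegree ≤ 2 * d := by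
    intro i j
    rw [adjugate_apply]
    have := totalDegree_det_le (k := 2) ((gramM v S).updateRow j (Pi.single i 1)) (by
      intro s t
      by_cases hs : s = j
      · subst hs
        rw [updateRow_self, Pi.single_apply]
        split_ifs <;> simp
      · rw [updateRow_ne hs]; exact hg s t)
    rw [Fintype.card_coe] at this
    nlinarith
  have hr : DegV (2 * d + 2) (rv v S a) := by
    intro k
    have e : rv v S a k = ∑ s : S, ((gramM v S).adjugate *ᵥ fun t => v t ⬝ᵥ Hopcroft.sv _ a) s * v s k := by
      unfold rv
      rw [Finset.sum_apply]
      refine Finset.sum_congr rfl fun s _ => ?_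
      rw [Pi.smul_apply, smul_eq_mul]
    rw [e]
    refine (totalDegree_finsetSum _ _).trans (Finset.sup_le fun s _ => (totalDegree_mul _ _).trans ?_)
    have h1 : (((gramM v S).adjugate *ᵥ fun t => v t ⬝ᵥ Hopcroft.sv _ a) s).totalDegree ≤ 2 * d + 1 := by
      refine DegV.dot (k' := 1) (fun t => hadj s t) fun t => ?_
      exact (hv t).dot (DegV.sv a)
    have := hv s k
    omega
  refine ⟨hr, fun k => ?_⟩
  have e : ov v S a k = (gramM v S).det * Hopcroft.sv _ a k - rv v S a k := by
    unfold ov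
    rw [Pi.sub_apply, Pi.smul_apply, smul_eq_mul]
  rw [e]
  refine (totalDegree_sub _ _).trans (max_le ?_ (hr k))
  refine (totalDegree_mul _ _).trans ?_
  have := DegV.sv (σ := σ) a k
  omega

lemma DegV.Wf {I : Type*} {v : I → Fin (d + 1) → MvPolynomial σ ℝ} (hv : ∀ i, DegV 1 (v i))
    {R : Finset I} : ∀ y ∈ Wf v R, DegV (2 * d + 2) y := by
  intro y hy
  rcases mem_Wf.1 hy with ⟨g, hg, rfl⟩ | ⟨S, hS, hc, a, rfl | rfl⟩
  · exact (hv g).mono (by omega)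
  · exact (DegV.rv_ov hv hc a).2
  · exact (DegV.rv_ov hv hc a).1

lemma DegV.cl {k : ℕ} {s : Finset (Fin (d + 1) → MvPolynomial σ ℝ)} (h : ∀ y ∈ s, DegV k y) :
    ∀ y ∈ cl s, DegV ((d + 1) * k) y := by
  intro y hy
  rcases mem_cl.1 hy with hy | ⟨T, hT, rfl⟩
  · exact (h y hy).mono (Nat.le_mul_of_pos_left _ (by omega))
  · exact DegV.cross fun i => h _ (hT i)

end Degree

section Card
variable {A : Type*} [CommRing A] {d : ℕ} {I : Type*}

lemma card_cl_le (s : Finset (Fin (d + 1) → A)) : (cl s).card ≤ s.card + s.card ^ d := by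
  classical
  unfold cl
  refine (Finset.card_union_le _ _).trans (add_le_add le_rfl (Finset.card_image_le.trans ?_))
  simp

lemma card_small_subsets (R : Finset I) :
    (R.powerset.filter fun S => S.card ≤ d).card ≤ (d + 1) * (R.card + 1) ^ d := by
  classical
  have : (R.powerset.filter fun S => S.card ≤ d) ⊆ (Finset.range (d + 1)).biUnion fun i => R.powersetCard i := by
    intro S hS
    obtain ⟨h1, h2⟩ := Finset.mem_filter.1 hS
    exact Finset.mem_biUnion.2 ⟨S.card, Finset.mem_range.2 (by omega),
      Finset.mem_powersetCard.2 ⟨Finset.mem_powerset.1 h1, rfl⟩⟩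
  refine (Finset.card_le_card this).trans (Finset.card_biUnion_le.trans ?_)
  refine (Finset.sum_le_card_nsmul _ _ ((R.card + 1) ^ d) fun i hi => ?_).trans (by simp)
  rw [Finset.card_powersetCard]
  refine (Nat.choose_le_pow _ _).trans ((Nat.pow_le_pow_left (Nat.le_succ _) _).trans ?_)
  exact Nat.pow_le_pow_right (by omega) (by have := Finset.mem_range.1 hi; omega)

lemma card_Wf_le (v : I → Fin (d + 1) → A) (R : Finset I) :
    (Wf v R).card ≤ R.card + 2 * ((d + 1) * (R.card + 1) ^ d * 3 ^ (d + 1)) := by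
  classical
  unfold Wf
  have h : ((R.powerset.filter fun S => S.card ≤ d) ×ˢ
      (Finset.univ : Finset (Fin (d + 1) → SignType))).card ≤ (d + 1) * (R.card + 1) ^ d * 3 ^ (d + 1) := by
    rw [Finset.card_product]
    refine Nat.mul_le_mul (card_small_subsets R) ?_
    rw [Finset.card_univ, Fintype.card_fun, Fintype.card_fin]
    exact le_of_eq rfl
  refine (Finset.card_union_le _ _).trans ?_
  have h1 := Finset.card_union_le (R.image v) (((R.powerset.filter fun S => S.card ≤ d) ×ˢ
    (Finset.univ : Finset (Fin (d + 1) → SignType))).image (fun q => ov v q.1 q.2))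
  have h2 : (R.image v).card ≤ R.card := Finset.card_image_le
  have h3 := (Finset.card_image_le (s := (R.powerset.filter fun S => S.card ≤ d) ×ˢ
    (Finset.univ : Finset (Fin (d + 1) → SignType))) (f := fun q => ov v q.1 q.2)).trans h
  have h4 := (Finset.card_image_le (s := (R.powerset.filter fun S => S.card ≤ d) ×ˢ
    (Finset.univ : Finset (Fin (d + 1) → SignType))) (f := fun q => rv v q.1 q.2)).trans h
  omega

/-- Polynomially bounded functions of an integer at least two; the exponent absorbs constants. -/
def PB (f : ℕ → ℕ) : Prop := ∃ e, ∀ m, 2 ≤ m → f m ≤ m ^ e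

lemma PB.const (c : ℕ) : PB fun _ => c :=
  ⟨c, fun _ hm => (Nat.lt_two_pow_self).le.trans (Nat.pow_le_pow_left hm c)⟩

lemma PB.id : PB fun m => m := ⟨1, fun m _ => by simp⟩

lemma PB.mul {f g : ℕ → ℕ} (hf : PB f) (hg : PB g) : PB fun m => f m * g m := by
  obtain ⟨e, he⟩ := hf
  obtain ⟨e', he'⟩ := hg
  exact ⟨e + e', fun m hm => by rw [pow_add]; exact Nat.mul_le_mul (he m hm) (he' m hm)⟩

lemma PB.add {f g : ℕ → ℕ} (hf : PB f) (hg : PB g) : PB fun m => f m + g m := by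
  obtain ⟨e, he⟩ := hf
  obtain ⟨e', he'⟩ := hg
  refine ⟨max e e' + 1, fun m hm => ?_⟩
  have h1 := (he m hm).trans (Nat.pow_le_pow_right (by omega) (le_max_left e e'))
  have h2 := (he' m hm).trans (Nat.pow_le_pow_right (by omega) (le_max_right e e'))
  rw [pow_succ]
  nlinarith

lemma PB.pow {f : ℕ → ℕ} (hf : PB f) (k : ℕ) : PB fun m => f m ^ k := by
  obtain ⟨e, he⟩ := hf
  exact ⟨e * k, fun m hm => by rw [pow_mul]; exact Nat.pow_le_pow_left (he m hm) k⟩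

lemma PB.of_le {f g : ℕ → ℕ} (hg : PB g) (h : ∀ m, f m ≤ g m) : PB f := by
  obtain ⟨e, he⟩ := hg
  exact ⟨e, fun m hm => (h m).trans (he m hm)⟩

/-- Bound on the size of `Wf`. -/
def wfB (d m : ℕ) : ℕ := m + 2 * ((d + 1) * (m + 1) ^ d * 3 ^ (d + 1))
/-- Bound on the size of `cl`. -/
def clB (d m : ℕ) : ℕ := m + m ^ d

lemma wfB_mono (d : ℕ) : Monotone (wfB d) := fun a b h => by
  unfold wfB; gcongr

lemma clB_mono (d : ℕ) : Monotone (clB d) := fun a b h => by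
  unfold clB; gcongr

lemma PB.wfB {f : ℕ → ℕ} (hf : PB f) (d : ℕ) : PB fun m => wfB d (f m) :=
  hf.add ((PB.const 2).mul (((PB.const (d + 1)).mul ((hf.add (PB.const 1)).pow d)).mul (PB.const _)))

lemma PB.clB {f : ℕ → ℕ} (hf : PB f) (d : ℕ) : PB fun m => clB d (f m) := hf.add (hf.pow d)

end Card
end Hopcroft

/-! ### Generic vectors and the query polynomials -/

namespace Hopcroft
open Matrix MvPolynomial

section Setting
variable {d : ℕ} {ι : Type}

/-- The variables: `d + 1` coordinates for each object. -/
abbrev Var (d : ℕ) (ι : Type) := ι × Fin (d + 1)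
/-- The items: the objects and the coordinate vectors. -/
abbrev Item (d : ℕ) (ι : Type) := ι ⊕ Fin (d + 1)

/-- The generic vector of an item. -/
noncomputable def vP : Item d ι → Fin (d + 1) → MvPolynomial (Var d ι) ℝ
  | Sum.inl o => fun k => X (o, k)
  | Sum.inr k => Pi.single k 1

/-- The vector of an item at the input `x`. -/
noncomputable def vx (x : Var d ι → ℝ) (i : Item d ι) : Fin (d + 1) → ℝ := evv (eval x) (vP i)

lemma vx_inl (x : Var d ι → ℝ) (o : ι) : vx x (Sum.inl o) = fun k => x (o, k) := by
  funext k; simp [vx, evv, vP]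

lemma evv_single {A B : Type*} [CommRing A] [CommRing B] (f : A →+* B) (k : Fin (d + 1)) :
    evv f (Pi.single k (1 : A)) = (Pi.single k 1 : Fin (d + 1) → B) := by
  funext l
  by_cases h : l = k
  · subst h; simp [evv]
  · simp [evv, h]

lemma vx_inr (x : Var d ι → ℝ) (k : Fin (d + 1)) : vx x (Sum.inr k : Item d ι) = Pi.single k 1 :=
  evv_single _ _

lemma degV_vP (i : Item d ι) : DegV 1 (vP i) := by
  rcases i with o | k
  · intro k; simp [vP]
  · intro l
    simp only [vP, Pi.single_apply]
    split_ifs <;> simp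

/-- The items of `R`, their projections of sign vectors, and the cross products of these. -/
noncomputable def N1 (R : Finset (Item d ι)) := cl (Wf (vP : Item d ι → _) R)
/-- Second level of cross products. -/
noncomputable def N2 (R : Finset (Item d ι)) := cl (N1 R)
/-- Third level of cross products. -/
noncomputable def N3 (R : Finset (Item d ι)) := cl (N2 R)

lemma N1_mono {R R' : Finset (Item d ι)} (h : R ⊆ R') : N1 R ⊆ N1 R' := cl_mono (Wf_mono h)
lemma N2_mono {R R' : Finset (Item d ι)} (h : R ⊆ R') : N2 R ⊆ N2 R' := cl_mono (N1_mono h)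
lemma N3_mono {R R' : Finset (Item d ι)} (h : R ⊆ R') : N3 R ⊆ N3 R' := cl_mono (N2_mono h)
lemma N1_sub_N2 (R : Finset (Item d ι)) : N1 R ⊆ N2 R := subset_cl _
lemma N2_sub_N3 (R : Finset (Item d ι)) : N2 R ⊆ N3 R := subset_cl _
lemma item_mem_N1 {R : Finset (Item d ι)} {i : Item d ι} (h : i ∈ R) : vP i ∈ N1 R :=
  subset_cl _ (item_mem_Wf h)

lemma card_N1_le (R : Finset (Item d ι)) : (N1 R).card ≤ clB d (wfB d R.card) :=
  (card_cl_le _).trans (clB_mono d (card_Wf_le _ _))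
lemma card_N2_le (R : Finset (Item d ι)) : (N2 R).card ≤ clB d (clB d (wfB d R.card)) :=
  (card_cl_le _).trans (clB_mono d (card_N1_le _))
lemma card_N3_le (R : Finset (Item d ι)) : (N3 R).card ≤ clB d (clB d (clB d (wfB d R.card))) :=
  (card_cl_le _).trans (clB_mono d (card_N2_le _))

lemma evv_congr {R : Finset (Item d ι)} {f f' : MvPolynomial (Var d ι) ℝ →+* ℝ}
    (h : ∀ i ∈ R, evv f (vP i) = evv f' (vP i)) : ∀ y ∈ N1 R, evv f y = evv f' y := by
  have h0 : ∀ y ∈ Wf (vP : Item d ι → _) R, evv f y = evv f' y := by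
    intro y hy
    rcases mem_Wf.1 hy with ⟨g, hg, rfl⟩ | ⟨S, hS, hc, a, rfl | rfl⟩
    · exact h g hg
    · have e1 := map_ov f vP S a
      have e2 := map_ov f' vP S a
      unfold evv
      rw [e1, e2]
      exact (ov_congr (fun s hs => h s (hS hs)) a).1
    · have e1 := map_rv f vP S a
      have e2 := map_rv f' vP S a
      unfold evv
      rw [e1, e2]
      exact (ov_congr (fun s hs => h s (hS hs)) a).2
  intro y hy
  rcases mem_cl.1 hy with hy | ⟨T, hT, rfl⟩
  · exact h0 y hy
  · rw [← cross_map, ← cross_map]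
    congr 1
    funext i
    exact h0 _ (hT i)

lemma vx_hE (x : Var d ι → ℝ) {R : Finset (Item d ι)} (hE : ∀ k, Sum.inr k ∈ R) :
    ∀ k, ∃ g ∈ R, vx x g = Pi.single k 1 := fun k => ⟨_, hE k, vx_inr x k⟩

variable [Fintype ι]

variable (d ι) in
/-- The polynomials whose signs may be queried. -/
noncomputable def QQ : Finset (MvPolynomial (Var d ι) ℝ) := by
  classical exact (N3 (d := d) (ι := ι) Finset.univ ×ˢ N3 Finset.univ).image fun p => p.1 ⬝ᵥ p.2

variable (d) in
/-- The degree bound of the queries. -/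
def qdeg : ℕ := 2 * ((d + 1) * ((d + 1) * ((d + 1) * (2 * d + 2))))

lemma QQ_deg : ∀ q ∈ QQ d ι, q.totalDegree ≤ qdeg d := by
  classical
  intro q hq
  obtain ⟨⟨y, z⟩, h, rfl⟩ := Finset.mem_image.1 hq
  obtain ⟨hy, hz⟩ := Finset.mem_product.1 h
  have key := DegV.cl (DegV.cl (DegV.cl (DegV.Wf (R := Finset.univ) (degV_vP (d := d) (ι := ι)))))
  refine ((key y hy).dot (key z hz)).trans ?_
  unfold qdeg; omega

lemma QQ_card : (QQ d ι).card ≤ (clB d (clB d (clB d (wfB d (Fintype.card ι + (d + 1)))))) ^ 2 := by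
  classical
  refine Finset.card_image_le.trans ?_
  rw [Finset.card_product, sq]
  have := card_N3_le (d := d) (ι := ι) Finset.univ
  rw [Finset.card_univ, Fintype.card_sum, Fintype.card_fin] at this
  exact Nat.mul_le_mul this this

lemma dot_mem_QQ {y z : Fin (d + 1) → MvPolynomial (Var d ι) ℝ} (hy : y ∈ N3 Finset.univ)
    (hz : z ∈ N3 Finset.univ) : y ⬝ᵥ z ∈ QQ d ι := by
  classical
  exact Finset.mem_image.2 ⟨(y, z), Finset.mem_product.2 ⟨hy, hz⟩, rfl⟩

variable (d ι) in
/-- The index type of the queries. -/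
abbrev Qr := {q : MvPolynomial (Var d ι) ℝ // q ∈ QQ d ι}

/-- The answer of a query. -/
noncomputable def sgQ (q : Qr d ι) (x : Var d ι → ℝ) : SignType := SignType.sign (eval x q.1)

/-- Inputs at which no nonzero query polynomial vanishes. -/
def Gen (x : Var d ι → ℝ) : Prop := ∀ q ∈ QQ d ι, q ≠ 0 → eval x q ≠ 0

/-- At a generic input an object is in general position with respect to the vectors built from the
other items. -/
lemma Gen.notMem_span {x : Var d ι → ℝ} (hx : Gen x) {R : Finset (Item d ι)} {o : ι}
    (ho : Sum.inl o ∉ R) (hE : ∀ k, Sum.inr k ∈ R) {F : Finset (Fin (d + 1) → ℝ)}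
    (hF : F ⊆ cl (Wf (vx x) R)) (hc : F.card ≤ d) :
    vx x (Sum.inl o) ∉ Submodule.span ℝ (F : Set (Fin (d + 1) → ℝ)) := by
  classical
  intro hmem
  obtain ⟨b, hbF, hbspan, hb⟩ := exists_linearIndependent ℝ (F : Set (Fin (d + 1) → ℝ))
  let E : Set (Fin (d + 1) → ℝ) := Set.range fun k => Pi.single k 1
  obtain ⟨b', hb'sub, hbb', hb'span, hb'⟩ := exists_linearIndepOn_id_extension (s := b) (t := b ∪ E) hb
    Set.subset_union_left
  have htop : Submodule.span ℝ b' = ⊤ := by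
    rw [eq_top_iff]
    intro y _
    have : y = ∑ k, y k • (Pi.single k 1 : Fin (d + 1) → ℝ) := by
      conv_lhs => rw [pi_eq_sum_univ' y]
    rw [this]
    refine Submodule.sum_mem _ fun k _ => Submodule.smul_mem _ _ ?_
    exact hb'span (Or.inr ⟨k, rfl⟩)
  have hbfin : b.Finite := F.finite_toSet.subset hbF
  have hb'fin : b'.Finite := (hbfin.union (Set.finite_range _)).subset hb'sub
  have hcard : hb'fin.toFinset.card = d + 1 := by
    haveI := hb'fin.fintype
    let bas : Module.Basis b' ℝ (Fin (d + 1) → ℝ) := Module.Basis.mk hb' (by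
      rw [← htop]; apply Submodule.span_mono; intro i hi; exact ⟨⟨i, hi⟩, rfl⟩)
    have := Module.finrank_eq_card_basis bas
    rw [Module.finrank_fin_fun] at this
    rw [Set.Finite.card_toFinset]
    exact this.symm
  have hbcard : hbfin.toFinset.card ≤ d := by
    refine (Finset.card_le_card ?_).trans hc
    intro y hy
    exact hbF (hbfin.mem_toFinset.1 hy)
  obtain ⟨t, hbt, htb', htc⟩ := Finset.exists_subsuperset_card_eq
    (s := hbfin.toFinset) (t := hb'fin.toFinset) (Set.Finite.toFinset_mono hbb') hbcard
    (by omega : d ≤ hb'fin.toFinset.card)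
  let eq := t.equivFinOfCardEq htc
  let T : Fin d → Fin (d + 1) → ℝ := fun i => (eq.symm i : Fin (d + 1) → ℝ)
  have hTt : ∀ i, T i ∈ t := fun i => (eq.symm i).2
  have hT : LinearIndependent ℝ T := by
    have h1 : LinearIndependent ℝ fun y : b' => (y : Fin (d + 1) → ℝ) := hb'
    refine h1.comp (fun i => (⟨T i, hb'fin.mem_toFinset.1 (htb' (hTt i))⟩ : b')) ?_
    intro i j hij
    have : T i = T j := congrArg (fun z : b' => (z : Fin (d + 1) → ℝ)) hij
    exact eq.symm.injective (Subtype.ext this)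
  have hTcl : ∀ i, ∃ z ∈ N1 R, evv (eval x) z = T i := by
    intro i
    have hcl := map_cl (eval x) (map_Wf (eval x) (vP : Item d ι → _) R)
    apply hcl
    rcases hb'sub (hb'fin.mem_toFinset.1 (htb' (hTt i))) with h | ⟨k, hk⟩
    · exact hF (hbF h)
    · refine subset_cl _ ?_
      have := item_mem_Wf (v := vx x) (hE k)
      rw [vx_inr] at this
      rw [← hk]
      exact this
  choose U hU hUT using hTcl
  have hcr : evv (eval x) (cross U) = cross T := by
    rw [← cross_map]; congr 1; funext i; exact hUT i
  have hq : vP (Sum.inl o) ⬝ᵥ cross U ∈ QQ d ι := by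
    refine dot_mem_QQ ?_ ?_
    · exact N2_sub_N3 _ (N1_sub_N2 _ (item_mem_N1 (Finset.mem_univ _)))
    · exact N2_sub_N3 _ (cross_mem_cl fun i => N1_mono (Finset.subset_univ _) (hU i))
  have hq0 : vP (Sum.inl o) ⬝ᵥ cross U = 0 := by
    by_contra hne
    apply hx _ hq hne
    rw [← evv_dot, hcr]
    have hspan : vx x (Sum.inl o) ∈ Submodule.span ℝ (t : Set (Fin (d + 1) → ℝ)) := by
      rw [← hbspan] at hmem
      refine Submodule.span_mono ?_ hmem
      intro y hy
      exact hbt (hbfin.mem_toFinset.2 hy)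
    refine dot_eq_zero_of_mem_span (b := (t : Set (Fin (d + 1) → ℝ))) ?_ hspan
    intro y hy
    obtain ⟨i, rfl⟩ : ∃ i, T i = y := ⟨eq ⟨y, hy⟩, by simp [T]⟩
    exact dot_cross_self T i
  -- moving the object onto the cross product makes the polynomial positive
  let x' : Var d ι → ℝ := fun p => if p.1 = o then cross T p.2 else x p
  have hcr' : evv (eval x') (cross U) = cross T := by
    rw [← hcr, ← cross_map, ← cross_map]
    congr 1
    funext i
    refine evv_congr (R := R) (fun j hj => ?_) _ (hU i)
    rcases j with o' | k
    · have : o' ≠ o := by rintro rfl; exact ho hj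
      funext k
      simp [evv, vP, x', this]
    · rw [vP, evv_single, evv_single]
  have h1 : evv (eval x') (vP (Sum.inl o)) ⬝ᵥ cross T = 0 := by
    rw [← hcr', evv_dot, hq0, map_zero]
  have h2 : evv (eval x') (vP (Sum.inl o)) = cross T := by
    funext k; simp [evv, vP, x']
  rw [h2] at h1
  exact cross_ne_zero hT (dotProduct_self_eq_zero.1 h1)

/-- At a generic input any `d + 1` items are linearly independent. -/
lemma Gen.indep {x : Var d ι → ℝ} (hx : Gen x) (S : Finset (Item d ι)) (hS : S.card ≤ d + 1) :
    LinearIndependent ℝ fun s : S => vx x s := by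
  classical
  suffices h : ∀ m, ∀ S : Finset (Item d ι), S.card = m → m ≤ d + 1 →
      LinearIndepOn ℝ (vx x) (S : Set (Item d ι)) from h S.card S rfl hS
  intro m
  induction m with
  | zero =>
    intro S h _
    rw [Finset.card_eq_zero.1 h, Finset.coe_empty]
    exact linearIndepOn_empty _ _
  | succ m ih =>
    intro S h hm
    by_cases hex : ∃ o, Sum.inl o ∈ S
    · obtain ⟨o, ho⟩ := hex
      have hcard : (S.erase (Sum.inl o)).card = m := by rw [Finset.card_erase_of_mem ho, h]; rfl
      rw [← Finset.insert_erase ho, Finset.coe_insert]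
      refine (linearIndepOn_insert (by simp)).2 ⟨ih _ hcard (by omega), ?_⟩
      have := hx.notMem_span (R := Finset.univ.erase (Sum.inl o)) (o := o) (by simp) (by simp)
        (F := (S.erase (Sum.inl o)).image (vx x)) (by
          intro y hy
          obtain ⟨i, hi, rfl⟩ := Finset.mem_image.1 hy
          exact subset_cl _ (item_mem_Wf (by simpa using (Finset.mem_erase.1 hi).1)))
        (Finset.card_image_le.trans (by omega))
      rwa [Finset.coe_image] at this
    · push Not at hex
      have h1 : LinearIndepOn ℝ (vx x) (Set.range (Sum.inr : Fin (d + 1) → Item d ι)) := by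
        rw [linearIndepOn_range_iff Sum.inr_injective]
        have : (vx x ∘ Sum.inr) = fun k : Fin (d + 1) => (Pi.basisFun ℝ (Fin (d + 1))) k := by
          funext k; simp [vx_inr]
        rw [this]
        exact (Pi.basisFun ℝ (Fin (d + 1))).linearIndependent
      refine h1.mono ?_
      rintro (o | k) hi
      · exact absurd hi (hex o)
      · exact ⟨k, rfl⟩

/-- The cones named by codes cover the objects outside `R`. -/
lemma Gen.exists_act {x : Var d ι → ℝ} (hx : Gen x) {R : Finset (Item d ι)} {o : ι}
    (ho : Sum.inl o ∉ R) (hE : ∀ k, Sum.inr k ∈ R) :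
    ∃ c, Act (vx x) R c ∧ InC (vx x) c (vx x (Sum.inl o)) :=
  Hopcroft.exists_act (vx_hE x hE) (fun S _ => hx.indep S) fun _ => hx.notMem_span ho hE

lemma Gen.dot_ne_zero {x : Var d ι → ℝ} (hx : Gen x) {R : Finset (Item d ι)} {o : ι}
    (ho : Sum.inl o ∉ R) (hE : ∀ k, Sum.inr k ∈ R) : ∀ g ∈ R, vx x g ⬝ᵥ vx x (Sum.inl o) ≠ 0 :=
  dot_ne_zero_of_generic (vx_hE x hE) (fun S _ => hx.indep S) fun _ => hx.notMem_span ho hE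

lemma Gen.unique_act {x : Var d ι → ℝ} (hx : Gen x) {R : Finset (Item d ι)} {o : ι}
    (ho : Sum.inl o ∉ R) (hE : ∀ k, Sum.inr k ∈ R) {c c' : Code d (Item d ι)} (h : Act (vx x) R c)
    (h' : Act (vx x) R c') (hu : InC (vx x) c (vx x (Sum.inl o)))
    (hu' : InC (vx x) c' (vx x (Sum.inl o))) : c = c' := by
  refine Act.unique h h' hu hu' (hx.dot_ne_zero ho hE) fun k => ?_
  have := hx.dot_ne_zero ho hE _ (hE k)
  rwa [vx_inr, single_one_dotProduct] at this

end Setting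
end Hopcroft

/-! ### Locating an object among the cones of a sample -/

namespace Hopcroft
open Matrix MvPolynomial

section Search
variable {d : ℕ} {ι : Type}

/-- The sign of the polynomial `p` is the same for all inputs in `B`. -/
def KP (B : Finset (Var d ι → ℝ)) (p : MvPolynomial (Var d ι) ℝ) : Prop :=
  ∀ x ∈ B, ∀ y ∈ B, SignType.sign (eval x p) = SignType.sign (eval y p)

lemma KP.mono {A B : Finset (Var d ι → ℝ)} {p : MvPolynomial (Var d ι) ℝ} (h : KP A p) (hB : B ⊆ A) :
    KP B p := fun x hx y hy => h x (hB hx) y (hB hy)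

lemma hered_KP (p : MvPolynomial (Var d ι) ℝ) : Hered fun A => KP A p := fun _ _ h hA => hA.mono h

lemma KP.neg {A : Finset (Var d ι → ℝ)} {p : MvPolynomial (Var d ι) ℝ} (h : KP A p) : KP A (-p) := by
  intro x hx y hy
  rw [RingHom.map_neg, RingHom.map_neg, Left.sign_neg, Left.sign_neg, h x hx y hy]

lemma KP.zero {A : Finset (Var d ι → ℝ)} : KP A 0 := fun _ _ _ _ => by simp

lemma hered_all {α : Type*} {X : Type} {P : α → Finset X → Prop} {s : α → Prop} (h : ∀ a, s a → Hered (P a)) :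
    Hered fun B => ∀ a, s a → P a B := fun _ _ hB hA a ha => h a ha hB (hA a ha)

lemma sign_sum_congr {α : Type*} (s : Finset α) {f f' : α → ℝ}
    (h : ∀ i ∈ s, SignType.sign (f i) = SignType.sign (f' i))
    (hc : ∀ i ∈ s, ∀ j ∈ s, ¬ (0 < f i ∧ f j < 0)) :
    SignType.sign (∑ i ∈ s, f i) = SignType.sign (∑ i ∈ s, f' i) := by
  by_cases hp : ∃ i ∈ s, 0 < f i
  · obtain ⟨i, hi, hfi⟩ := hp
    have h1 : ∀ j ∈ s, 0 ≤ f j := fun j hj => not_lt.1 fun h' => hc i hi j hj ⟨hfi, h'⟩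
    have h2 : ∀ j ∈ s, 0 ≤ f' j := fun j hj => not_lt.1 fun h' =>
      absurd ((neg_congr (h j hj)).2 h') (not_lt.2 (h1 j hj))
    rw [sign_pos (Finset.sum_pos' h1 ⟨i, hi, hfi⟩),
      sign_pos (Finset.sum_pos' h2 ⟨i, hi, (pos_congr (h i hi)).1 hfi⟩)]
  · push Not at hp
    by_cases hn : ∃ i ∈ s, f i < 0
    · obtain ⟨i, hi, hfi⟩ := hn
      have h2 : ∀ j ∈ s, f' j ≤ 0 := fun j hj => not_lt.1 fun h' =>
        absurd ((pos_congr (h j hj)).2 h') (not_lt.2 (hp j hj))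
      rw [sign_neg (Finset.sum_neg' hp ⟨i, hi, hfi⟩),
        sign_neg (Finset.sum_neg' h2 ⟨i, hi, (neg_congr (h i hi)).1 hfi⟩)]
    · push Not at hn
      have h0 : ∀ i ∈ s, f i = 0 := fun i hi => le_antisymm (hp i hi) (hn i hi)
      rw [Finset.sum_eq_zero h0, Finset.sum_eq_zero fun i hi => (eq_zero_congr (h i hi)).1 (h0 i hi)]

lemma sign_div_eq (a b : ℝ) : SignType.sign (a / b) = SignType.sign a * SignType.sign b := by
  rcases lt_trichotomy b 0 with h | rfl | h
  · rw [div_eq_mul_inv, sign_mul, sign_neg h, sign_neg (inv_lt_zero.2 h)]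
  · simp
  · rw [div_eq_mul_inv, sign_mul, sign_pos h, sign_pos (inv_pos.2 h)]

/-- All signs among the vectors built from `R` are known. -/
def KN (A : Finset (Var d ι → ℝ)) (R : Finset (Item d ι)) : Prop :=
  ∀ g ∈ N1 R, ∀ z ∈ N2 R, KP A (g ⬝ᵥ z)

/-- The object `o` is located in the arrangement of `R`. -/
def Loc (A : Finset (Var d ι → ℝ)) (R : Finset (Item d ι)) (o : ι) : Prop :=
  ∀ g ∈ N1 R, KP A (g ⬝ᵥ vP (Sum.inl o))

lemma KN.mono {A B : Finset (Var d ι → ℝ)} {R : Finset (Item d ι)} (h : KN A R) (hB : B ⊆ A) : KN B R :=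
  fun g hg z hz => (h g hg z hz).mono hB

lemma hered_Loc (R : Finset (Item d ι)) (o : ι) : Hered fun A => Loc A R o :=
  fun _ _ hB h g hg => (h g hg).mono hB

lemma KN.act {A : Finset (Var d ι → ℝ)} {R : Finset (Item d ι)} (h : KN A R) (hE : ∀ k, Sum.inr k ∈ R)
    {x x' : Var d ι → ℝ} (hx : x ∈ A) (hx' : x' ∈ A) {c : Code d (Item d ι)} (hc : Act (vx x) R c) :
    Act (vx x') R c :=
  Act.transfer (eval x) (eval x') (fun k => ⟨_, hE k, rfl⟩)
    (fun y hy z hz => h y hy z (N1_sub_N2 _ hz) x hx x' hx') hc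

lemma oc_mem_Wf {R : Finset (Item d ι)} {x : Var d ι → ℝ} {c : Code d (Item d ι)} (hc : Act (vx x) R c)
    (j) : oc vP c j ∈ Wf (vP : Item d ι → _) R :=
  ov_mem_Wf (fun _ hg => ((hc.zero j _).1 hg).1) (hc.card j) _

lemma Loc.inC {A : Finset (Var d ι → ℝ)} {R : Finset (Item d ι)} {o : ι} (h : KN A R) (ho : Loc A R o)
    {x x' : Var d ι → ℝ} (hx : x ∈ A) (hx' : x' ∈ A) {c : Code d (Item d ι)} (hc : Act (vx x) R c)
    (hi : InC (vx x) c (vx x (Sum.inl o))) : InC (vx x') c (vx x' (Sum.inl o)) := by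
  intro j
  have hocx : ∀ x : Var d ι → ℝ, oc (vx x) c = fun j => evv (eval x) (oc vP c j) := fun x =>
    funext fun j => oc_map (eval x) vP c j
  have hd : dualVec (oc vP c) j ∈ N1 R := dual_mem_cl (oc_mem_Wf hc) j
  have e1 := ho _ hd x hx x' hx'
  have e2 := h _ (subset_cl _ (oc_mem_Wf hc j)) _ (N1_sub_N2 _ hd) x hx x' hx'
  have := hi j
  rw [hocx, dualVec_map] at this ⊢
  rw [show vx x (Sum.inl o) = evv (eval x) (vP (Sum.inl o)) from rfl, evv_dot, evv_dot, e2,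
    dotProduct_comm, e1] at this
  rw [show vx x' (Sum.inl o) = evv (eval x') (vP (Sum.inl o)) from rfl, evv_dot, evv_dot,
    dotProduct_comm (vP _)]
  exact this

lemma Loc.dot_oc {A : Finset (Var d ι → ℝ)} {R : Finset (Item d ι)} {o : ι} (ho : Loc A R o)
    {x x' : Var d ι → ℝ} (hx : x ∈ A) (hx' : x' ∈ A) {c : Code d (Item d ι)} (hc : Act (vx x) R c) (j) :
    SignType.sign (vx x (Sum.inl o) ⬝ᵥ oc (vx x) c j) =
      SignType.sign (vx x' (Sum.inl o) ⬝ᵥ oc (vx x') c j) := by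
  have hocx : ∀ x : Var d ι → ℝ, oc (vx x) c j = evv (eval x) (oc vP c j) := fun x =>
    oc_map (eval x) vP c j
  rw [hocx, hocx, vx, vx, evv_dot, evv_dot, dotProduct_comm]
  exact ho _ (subset_cl _ (oc_mem_Wf hc j)) x hx x' hx'

lemma Loc.crosses {A : Finset (Var d ι → ℝ)} {R : Finset (Item d ι)} {o : ι} (ho : Loc A R o)
    {x x' : Var d ι → ℝ} (hx : x ∈ A) (hx' : x' ∈ A) {c : Code d (Item d ι)} (hc : Act (vx x) R c)
    (hi : Crosses (vx x) c (vx x (Sum.inl o))) : Crosses (vx x') c (vx x' (Sum.inl o)) := by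
  obtain ⟨j, j', h1, h2⟩ := hi
  exact ⟨j, j', (pos_congr (ho.dot_oc hx hx' hc j)).1 h1, (neg_congr (ho.dot_oc hx hx' hc j')).1 h2⟩

variable [Fintype ι] {K : ℝ}

lemma Cost.polys (hK : 0 ≤ K) (A : Finset (Var d ι → ℝ)) (S : Finset (MvPolynomial (Var d ι) ℝ))
    (hS : S ⊆ QQ d ι) : Cost (sgQ (d := d) (ι := ι)) K (fun B => ∀ p ∈ S, KP B p) A S.card := by
  have := Cost.queries (sg := sgQ (d := d) (ι := ι)) hK A (S.subtype (· ∈ QQ d ι))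
  refine (this.of_le ?_).imp fun B _ h p hp => h ⟨p, hS hp⟩ (by simpa using hp)
  rw [Finset.card_subtype]
  exact_mod_cast Finset.card_filter_le _ _

/-- The number of options in a search among the simplicial cones spanned by `G`. -/
def optB (d m : ℕ) : ℕ := (m ^ d) ^ (d + 1) * 3 ^ (d + 1)

/-- Once the cones spanned by `G` are known, the signs of a further vector against all of `G` are
found by searching for a cone that contains it. -/
lemma cost_search (G : Finset (Fin (d + 1) → MvPolynomial (Var d ι) ℝ)) (hGE : ∀ k, Pi.single k 1 ∈ G)
    (hG1 : G ⊆ N1 Finset.univ) (y : Fin (d + 1) → MvPolynomial (Var d ι) ℝ) (hy : y ∈ N3 Finset.univ)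
    (hKR : ((2 * (d + 1) : ℕ) : ℝ) * (optB d G.card : ℕ) ≤ K) (A : Finset (Var d ι → ℝ))
    (hA : ∀ g ∈ G, ∀ T : Fin d → Fin (d + 1) → MvPolynomial (Var d ι) ℝ, (∀ i, T i ∈ G) →
      KP A (g ⬝ᵥ cross T)) :
    Cost (sgQ (d := d) (ι := ι)) K (fun B => ∀ g ∈ G, KP B (g ⬝ᵥ y)) A (2 * (d + 1) : ℕ) := by
  classical
  let V := Fin (d + 1) → MvPolynomial (Var d ι) ℝ
  let O := (Fin (d + 1) → Fin d → V) × (Fin (d + 1) → SignType)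
  let S : Finset O := (Fintype.piFinset fun _ => Fintype.piFinset fun _ => G) ×ˢ Finset.univ
  have hScard : S.card ≤ optB d G.card := by
    rw [Finset.card_product, Finset.card_univ, Fintype.card_fun, Fintype.card_fin]
    refine Nat.mul_le_mul ?_ le_rfl
    simp
  have hSmem : ∀ o ∈ S, ∀ i k, o.1 i k ∈ G := fun o ho i k =>
    Fintype.mem_piFinset.1 (Fintype.mem_piFinset.1 (Finset.mem_product.1 ho).1 i) k
  let W : O → Fin (d + 1) → V := fun o i => cross (o.1 i)
  have hW : ∀ o ∈ S, ∀ i, W o i ∈ N2 Finset.univ := fun o ho i => cross_mem_cl fun k => hG1 (hSmem o ho i k)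
  have hν : ∀ o ∈ S, ∀ i, dualVec (W o) i ∈ N3 Finset.univ := fun o ho i => dual_mem_cl (hW o ho) i
  let sx : (Var d ι → ℝ) → MvPolynomial (Var d ι) ℝ → SignType := fun x p => SignType.sign (eval x p)
  let truth : O → (Var d ι → ℝ) → Prop := fun o x =>
    (∀ i, sx x (W o i ⬝ᵥ dualVec (W o) i) ≠ 0 ∧
      sx x (y ⬝ᵥ dualVec (W o) i) * sx x (W o i ⬝ᵥ dualVec (W o) i) = o.2 i) ∧
    ∀ g ∈ G, ∀ i j, ¬ (o.2 i * sx x (g ⬝ᵥ W o i) = 1 ∧ o.2 j * sx x (g ⬝ᵥ W o j) = -1)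
  let qs : O → Finset (Qr d ι) := fun o => Finset.univ.filter fun q =>
    q.1 ∈ (Finset.univ.image fun i => y ⬝ᵥ dualVec (W o) i) ∪
      Finset.univ.image fun i => W o i ⬝ᵥ dualVec (W o) i
  have hqs : ∀ o ∈ S, (qs o).card ≤ 2 * (d + 1) := by
    intro o _
    have h1 : (qs o).card ≤ ((Finset.univ.image fun i => y ⬝ᵥ dualVec (W o) i) ∪
        Finset.univ.image fun i => W o i ⬝ᵥ dualVec (W o) i).card :=
      Finset.card_le_card_of_injOn Subtype.val (fun q hq => (Finset.mem_filter.1 hq).2)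
        (Subtype.val_injective.injOn)
    have h2 : (Finset.univ.image fun i => y ⬝ᵥ dualVec (W o) i).card ≤ d + 1 :=
      Finset.card_image_le.trans (by simp)
    have h3 : (Finset.univ.image fun i => W o i ⬝ᵥ dualVec (W o) i).card ≤ d + 1 :=
      Finset.card_image_le.trans (by simp)
    have := Finset.card_union_le (Finset.univ.image fun i => y ⬝ᵥ dualVec (W o) i)
      (Finset.univ.image fun i => W o i ⬝ᵥ dualVec (W o) i)
    omega
  have hAW : ∀ o ∈ S, ∀ g ∈ G, ∀ i, KP A (g ⬝ᵥ W o i) := fun o ho g hg i => hA g hg _ (hSmem o ho i)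
  refine (Cost.search S hScard hKR truth qs hqs A ?_ ?_).imp ?_
  · intro o ho B hB hq x hx x' hx' ht
    have e1 : ∀ i, sx x (y ⬝ᵥ dualVec (W o) i) = sx x' (y ⬝ᵥ dualVec (W o) i) := fun i =>
      hq ⟨_, dot_mem_QQ hy (hν o ho i)⟩ (by simp [qs]) x hx x' hx'
    have e2 : ∀ i, sx x (W o i ⬝ᵥ dualVec (W o) i) = sx x' (W o i ⬝ᵥ dualVec (W o) i) := fun i =>
      hq ⟨_, dot_mem_QQ (N2_sub_N3 _ (hW o ho i)) (hν o ho i)⟩ (by simp [qs]) x hx x' hx'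
    have e3 : ∀ g ∈ G, ∀ i, sx x (g ⬝ᵥ W o i) = sx x' (g ⬝ᵥ W o i) := fun g hg i =>
      hAW o ho g hg i x (hB hx) x' (hB hx')
    refine ⟨fun i => ?_, fun g hg i j => ?_⟩
    · rw [← e1, ← e2]; exact ht.1 i
    · rw [← e3 g hg, ← e3 g hg]; exact ht.2 g hg i j
  · intro x hx
    have hsp : Spanning (G.image (evv (eval x))) := by
      intro v hv
      funext k
      have := hv _ (Finset.mem_image_of_mem _ (hGE k))
      rwa [evv_single, single_one_dotProduct] at this
    obtain ⟨T, hT, hT1, hT2⟩ := exists_certificate hsp (evv (eval x) y)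
    have : ∀ i k, ∃ z ∈ G, evv (eval x) z = T i k := fun i k => by simpa using hT i k
    choose U hU hUT using this
    let o : O := (U, fun i => sx x (y ⬝ᵥ dualVec (fun i => cross (U i)) i) *
      sx x (cross (U i) ⬝ᵥ dualVec (fun i => cross (U i)) i))
    have hcr : ∀ i, evv (eval x) (W o i) = cross (T i) := by
      intro i
      change evv (eval x) (cross (U i)) = cross (T i)
      rw [← cross_map]; congr 1; funext k; exact hUT i k
    have hdu : ∀ i, evv (eval x) (dualVec (W o) i) = dualVec (fun i => cross (T i)) i := by
      intro i
      rw [← dualVec_map]; congr 1; funext k; exact hcr k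
    refine ⟨o, Finset.mem_product.2 ⟨Fintype.mem_piFinset.2 fun i => Fintype.mem_piFinset.2 fun k => hU i k,
      Finset.mem_univ _⟩, ⟨fun i => ⟨?_, rfl⟩, fun g hg i j => ?_⟩⟩
    · change SignType.sign _ ≠ 0
      rw [Ne, sign_eq_zero_iff, ← evv_dot, hcr, hdu]
      exact hT1 i
    · have key : ∀ i, o.2 i * sx x (g ⬝ᵥ W o i) = SignType.sign (evv (eval x) g ⬝ᵥ
          ((evv (eval x) y ⬝ᵥ dualVec (fun i => cross (T i)) i /
            (cross (T i) ⬝ᵥ dualVec (fun i => cross (T i)) i)) • cross (T i))) := by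
        intro i
        rw [dotProduct_smul, smul_eq_mul, sign_mul, sign_div_eq, ← hdu, ← hcr, evv_dot, evv_dot, evv_dot]
      rw [key, key, sign_eq_one_iff, sign_eq_neg_one_iff]
      rintro ⟨h1, h2⟩
      obtain ⟨a1, a2⟩ := hT2 i _ (Finset.mem_image_of_mem _ hg)
      obtain ⟨b1, b2⟩ := hT2 j _ (Finset.mem_image_of_mem _ hg)
      rcases lt_trichotomy (evv (eval x) g ⬝ᵥ evv (eval x) y) 0 with h | h | h
      · nlinarith
      · rw [a1 h] at h1; exact lt_irrefl _ h1
      · nlinarith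
  · rintro B hB ⟨o, ho, ht⟩ g hg x hx x' hx'
    have expand : ∀ x ∈ B, eval x (g ⬝ᵥ y) = ∑ i, (eval x (y ⬝ᵥ dualVec (W o) i) /
        eval x (W o i ⬝ᵥ dualVec (W o) i)) * eval x (g ⬝ᵥ W o i) := by
      intro x hx
      have h1 := eq_sum_dual (fun i => evv (eval x) (W o i)) (fun i => by
        rw [dualVec_map, evv_dot]
        exact fun h => ((ht x hx).1 i).1 (sign_eq_zero_iff.2 h)) (evv (eval x) y)
      rw [← evv_dot, h1, dotProduct_sum]
      refine Finset.sum_congr rfl fun i _ => ?_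
      rw [dotProduct_smul, smul_eq_mul, dualVec_map, evv_dot, evv_dot, evv_dot]
    have hterm : ∀ x ∈ B, ∀ i, SignType.sign ((eval x (y ⬝ᵥ dualVec (W o) i) /
        eval x (W o i ⬝ᵥ dualVec (W o) i)) * eval x (g ⬝ᵥ W o i)) = o.2 i * sx x (g ⬝ᵥ W o i) := by
      intro x hx i
      rw [sign_mul, sign_div_eq, ← ((ht x hx).1 i).2]
    rw [expand x hx, expand x' hx']
    refine sign_sum_congr _ (fun i _ => ?_) (fun i _ j _ hij => ?_)
    · rw [hterm x hx, hterm x' hx']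
      congr 1
      exact hAW o ho g hg i x (hB hx) x' (hB hx')
    · refine (ht x hx).2 g hg i j ⟨?_, ?_⟩
      · rw [← hterm x hx, sign_eq_one_iff]; exact hij.1
      · rw [← hterm x hx, sign_eq_neg_one_iff]; exact hij.2

/-- Bound for the size of `N1 R` times that of `N2 R`. -/
def bruteB (d m : ℕ) : ℕ := clB d (wfB d m) * clB d (clB d (wfB d m))

/-- A sample is made known by asking all relevant queries. -/
lemma cost_brute (hK : 0 ≤ K) (A : Finset (Var d ι → ℝ)) (R : Finset (Item d ι)) :
    Cost (sgQ (d := d) (ι := ι)) K (fun B => KN B R) A (bruteB d R.card : ℕ) := by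
  classical
  have := Cost.polys hK A ((N1 R ×ˢ N2 R).image fun p => p.1 ⬝ᵥ p.2) (by
    intro p hp
    obtain ⟨⟨y, z⟩, h, rfl⟩ := Finset.mem_image.1 hp
    obtain ⟨hy, hz⟩ := Finset.mem_product.1 h
    exact dot_mem_QQ (N2_sub_N3 _ (N1_sub_N2 _ (N1_mono (Finset.subset_univ _) hy)))
      (N2_sub_N3 _ (N2_mono (Finset.subset_univ _) hz)))
  refine (this.of_le ?_).imp fun B _ h g hg z hz =>
    h _ (Finset.mem_image.2 ⟨(g, z), Finset.mem_product.2 ⟨hg, hz⟩, rfl⟩)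
  have h1 : ((N1 R ×ˢ N2 R).image fun p => p.1 ⬝ᵥ p.2).card ≤ bruteB d R.card := by
    refine Finset.card_image_le.trans ?_
    rw [Finset.card_product]
    exact Nat.mul_le_mul (card_N1_le R) (card_N2_le R)
  exact_mod_cast h1

lemma optB_mono (d : ℕ) : Monotone (optB d) := fun a b h => by unfold optB; gcongr

/-- An object is located with respect to a known sample at constant amortised cost, independent of the
size of the sample. -/
lemma cost_locate {R : Finset (Item d ι)} (hE : ∀ k, Sum.inr k ∈ R)
    (hKR : ((2 * (d + 1) : ℕ) : ℝ) * (optB d (clB d (wfB d R.card)) : ℕ) ≤ K)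
    (A : Finset (Var d ι → ℝ)) (hA : KN A R) (o : ι) :
    Cost (sgQ (d := d) (ι := ι)) K (fun B => Loc B R o) A (2 * (d + 1) : ℕ) := by
  refine cost_search (N1 R) (fun k => item_mem_N1 (hE k)) (N1_mono (Finset.subset_univ _)) _
    (N2_sub_N3 _ (N1_sub_N2 _ (item_mem_N1 (Finset.mem_univ _)))) ?_ A
    (fun g hg T hT => hA g hg _ (cross_mem_cl hT))
  refine le_trans ?_ hKR
  gcongr
  exact optB_mono d (card_N1_le R)

end Search
end Hopcroft

/-! ### Direct treatment of small groups of points -/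

namespace Hopcroft
open Matrix MvPolynomial

section Leaf
variable {d : ℕ} {ι : Type}

/-- All orientations of `(d + 1)`-tuples from `G` are known. -/
def KG (A : Finset (Var d ι → ℝ)) (G : Finset (Fin (d + 1) → MvPolynomial (Var d ι) ℝ)) : Prop :=
  ∀ T : Fin (d + 1) → Fin (d + 1) → MvPolynomial (Var d ι) ℝ, (∀ i, T i ∈ G) → KP A (of T).det

lemma hered_KG (G : Finset (Fin (d + 1) → MvPolynomial (Var d ι) ℝ)) : Hered fun A => KG A G :=
  fun _ _ hB h T hT => (h T hT).mono hB

lemma KG.dot_cross {A : Finset (Var d ι → ℝ)} {G : Finset (Fin (d + 1) → MvPolynomial (Var d ι) ℝ)}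
    (h : KG A G) {g : Fin (d + 1) → MvPolynomial (Var d ι) ℝ} (hg : g ∈ G)
    {T : Fin d → Fin (d + 1) → MvPolynomial (Var d ι) ℝ} (hT : ∀ i, T i ∈ G) : KP A (g ⬝ᵥ cross T) := by
  rw [Hopcroft.dot_cross]
  refine h _ fun i => ?_
  refine Fin.cases ?_ (fun i => ?_) i
  · simpa using hg
  · simpa using hT i

/-- The coordinate vectors. -/
noncomputable def E0 (d : ℕ) (ι : Type) : Finset (Fin (d + 1) → MvPolynomial (Var d ι) ℝ) := by
  classical exact Finset.univ.image fun k => Pi.single k 1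

lemma single_mem_E0 (k : Fin (d + 1)) : Pi.single k 1 ∈ E0 d ι := by
  classical exact Finset.mem_image.2 ⟨k, Finset.mem_univ _, rfl⟩

lemma card_E0 : (E0 d ι).card ≤ d + 1 := by
  classical exact Finset.card_image_le.trans (by simp)

lemma KG_E0 (A : Finset (Var d ι → ℝ)) : KG A (E0 d ι) := by
  classical
  intro T hT x _ y _
  have key : ∀ x : Var d ι → ℝ, eval x (of T).det = (of fun i => evv (eval x) (T i)).det := by
    intro x
    rw [RingHom.map_det]
    rfl
  rw [key, key]
  congr 3
  funext i
  obtain ⟨k, -, hk⟩ := Finset.mem_image.1 (hT i)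
  simp only [← hk, evv_single]

/-- A tuple from `insert u G` either contains `u` once, so that its orientation is known by
assumption up to sign, or contains `u` twice and is degenerate, or lies in `G`. -/
lemma KG.insert {A : Finset (Var d ι → ℝ)} [DecidableEq (Fin (d + 1) → MvPolynomial (Var d ι) ℝ)]
    {G : Finset (Fin (d + 1) → MvPolynomial (Var d ι) ℝ)} (hd : 0 < d)
    (h : KG A G) {u : Fin (d + 1) → MvPolynomial (Var d ι) ℝ}
    (hu : ∀ U : Fin d → Fin (d + 1) → MvPolynomial (Var d ι) ℝ, U ⟨0, hd⟩ = u →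
      (∀ i, i ≠ ⟨0, hd⟩ → U i ∈ G) → ∀ g ∈ G, KP A (g ⬝ᵥ cross U)) : KG A (insert u G) := by
  intro T hT
  by_cases hr : ∃ i, T i = u
  swap
  · push Not at hr
    exact h T fun i => (Finset.mem_insert.1 (hT i)).resolve_left (hr i)
  by_cases hinj : Function.Injective T
  swap
  · simp only [Function.Injective, not_forall] at hinj
    obtain ⟨i, j, hij, hne⟩ := hinj
    rw [det_zero_of_row_eq hne (by funext k; simp [hij])]
    exact KP.zero
  obtain ⟨i0, hi0⟩ := hr
  let s := Equiv.swap i0 (Fin.succ ⟨0, hd⟩)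
  let T' : Fin (d + 1) → Fin (d + 1) → MvPolynomial (Var d ι) ℝ := T ∘ s
  have hT'inj : Function.Injective T' := hinj.comp s.injective
  have h1 : T' (Fin.succ ⟨0, hd⟩) = u := by simp [T', s, hi0]
  have hG : ∀ i, i ≠ Fin.succ ⟨0, hd⟩ → T' i ∈ G := fun i hi =>
    (Finset.mem_insert.1 (hT _)).resolve_left fun h' => hi (hT'inj (by rw [h1]; exact h'))
  have h2 := hu (Fin.tail T') h1 (fun i hi => hG _ fun h' => hi (Fin.succ_injective _ h')) (T' 0)
    (hG 0 (Fin.succ_ne_zero _).symm)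
  rw [Hopcroft.dot_cross, Fin.cons_self_tail] at h2
  have h3 : (of T').det = ((Equiv.Perm.sign s : ℤˣ) : MvPolynomial (Var d ι) ℝ) * (of T).det :=
    det_permute s (of T)
  rcases Int.units_eq_one_or (Equiv.Perm.sign s) with e | e
  · rw [h3, e] at h2; simpa using h2
  · rw [h3, e] at h2
    have := h2.neg
    simpa using this

variable [Fintype ι] {K : ℝ}

/-- A new object is inserted by one search for each choice of `d - 1` vectors from `G`. -/
lemma cost_insert [DecidableEq (Fin (d + 1) → MvPolynomial (Var d ι) ℝ)]
    (G : Finset (Fin (d + 1) → MvPolynomial (Var d ι) ℝ)) (hd : 0 < d) (hGE : ∀ k, Pi.single k 1 ∈ G)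
    (hG : ∀ g ∈ G, ∃ i : Item d ι, vP i = g) (o : ι) {m : ℕ} (hm : G.card ≤ m)
    (hKR : ((2 * (d + 1) : ℕ) : ℝ) * (optB d m : ℕ) ≤ K) (A : Finset (Var d ι → ℝ)) (hA : KG A G) :
    Cost (sgQ (d := d) (ι := ι)) K (fun B => KG B (insert (vP (Sum.inl o)) G)) A
      ((2 * (d + 1) : ℕ) * (m : ℝ) ^ (d - 1)) := by
  classical
  have hGN : G ⊆ N1 Finset.univ := fun g hg => by
    obtain ⟨i, rfl⟩ := hG g hg
    exact item_mem_N1 (Finset.mem_univ _)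
  let S : Finset (Fin d → Fin (d + 1) → MvPolynomial (Var d ι) ℝ) :=
    Fintype.piFinset fun i => if i = ⟨0, hd⟩ then {vP (Sum.inl o)} else G
  have hScard : S.card ≤ m ^ (d - 1) := by
    rw [Fintype.card_piFinset, ← Finset.mul_prod_erase _ _ (Finset.mem_univ ⟨0, hd⟩)]
    rw [if_pos rfl, Finset.card_singleton, one_mul, Finset.prod_congr rfl (g := fun _ => G.card)]
    · rw [Finset.prod_const, Finset.card_erase_of_mem (Finset.mem_univ _), Finset.card_univ, Fintype.card_fin]
      exact Nat.pow_le_pow_left hm _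
    · intro i hi
      rw [if_neg (Finset.ne_of_mem_erase hi)]
  have hSmem : ∀ U ∈ S, ∀ i, U i ∈ N1 (Finset.univ : Finset (Item d ι)) := by
    intro U hU i
    have := Fintype.mem_piFinset.1 hU i
    split_ifs at this with h
    · rw [Finset.mem_singleton.1 this]; exact item_mem_N1 (Finset.mem_univ _)
    · exact hGN this
  have := Cost.all (sg := sgQ (d := d) (ι := ι)) (K := K) (A := A) S
    (P := fun U B => ∀ g ∈ G, KP B (g ⬝ᵥ cross U)) (c := fun _ => ((2 * (d + 1) : ℕ) : ℝ))
    (fun U _ => fun _ _ hB h g hg => (h g hg).mono hB)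
    (fun U hU B hB => cost_search G hGE hGN (cross U)
      (N2_sub_N3 _ (cross_mem_cl (hSmem U hU)))
      (le_trans (by gcongr; exact optB_mono d hm) hKR) B
      (fun g hg T hT => (KG.dot_cross hA hg hT).mono hB))
  refine (this.of_le ?_).imp fun B hB h => (hered_KG G hB hA).insert hd fun U hU hU' g hg => h U ?_ g hg
  · rw [Finset.sum_const, nsmul_eq_mul, mul_comm]
    gcongr
    exact_mod_cast hScard
  · refine Fintype.mem_piFinset.2 fun i => ?_
    split_ifs with hi
    · rw [hi, hU]; exact Finset.mem_singleton_self _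
    · exact hU' i hi

/-- The vectors of the objects in `P` and the coordinate vectors. -/
noncomputable def GP (P : Finset ι) : Finset (Fin (d + 1) → MvPolynomial (Var d ι) ℝ) := by
  classical exact (P.image fun o => vP (Sum.inl o)) ∪ E0 d ι

lemma card_GP (P : Finset ι) : (GP (d := d) P).card ≤ P.card + (d + 1) := by
  classical
  exact (Finset.card_union_le _ _).trans (add_le_add Finset.card_image_le card_E0)

lemma GP_sub (P : Finset ι) : ∀ g ∈ GP (d := d) P, ∃ i : Item d ι, vP i = g := by
  classical
  intro g hg
  rcases Finset.mem_union.1 hg with h | h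
  · obtain ⟨o, -, rfl⟩ := Finset.mem_image.1 h
    exact ⟨_, rfl⟩
  · obtain ⟨k, -, rfl⟩ := Finset.mem_image.1 h
    exact ⟨Sum.inr k, rfl⟩

/-- All orientations among a group of at most `M` objects are found by successive insertion. -/
lemma cost_KG (hd : 0 < d) {M : ℕ}
    (hKR : ((2 * (d + 1) : ℕ) : ℝ) * (optB d (M + (d + 1)) : ℕ) ≤ K)
    (P : Finset ι) (hP : P.card ≤ M) (A : Finset (Var d ι → ℝ)) :
    Cost (sgQ (d := d) (ι := ι)) K (fun B => KG B (GP P)) A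
      ((2 * (d + 1) : ℕ) * ((M + (d + 1) : ℕ) : ℝ) ^ (d - 1) * P.card) := by
  classical
  induction P using Finset.induction_on with
  | empty =>
    refine Cost.pure ?_ (by simp)
    have : GP (d := d) (∅ : Finset ι) = E0 d ι := by simp [GP]
    rw [this]
    exact KG_E0 A
  | insert o P ho ih =>
    rw [Finset.card_insert_of_notMem ho] at hP ⊢
    have := (ih (by omega)).bind fun B _ h => cost_insert (K := K) (GP P) hd
      (fun k => Finset.mem_union_right _ (single_mem_E0 k)) (GP_sub P) o
      (m := M + (d + 1)) ((card_GP P).trans (by omega)) hKR B h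
    refine (this.of_le (le_of_eq ?_)).imp fun B _ h => ?_
    · push_cast; ring
    · have e : GP (d := d) (insert o P) = insert (vP (Sum.inl o)) (GP P) := by
        simp [GP, Finset.image_insert, Finset.insert_union]
      rw [e]
      exact h

/-- For disjoint `P` and `H` all signs of `P × H` can be found at amortised cost
`α |P| + β |H| + γ |P| |H| + δ`. -/
def Bd (d : ℕ) (ι : Type) [Fintype ι] (K α β γ δ : ℝ) : Prop :=
  ∀ P H : Finset ι, Disjoint P H → ∀ A : Finset (Var d ι → ℝ), (∀ x ∈ A, Gen x) →
    Cost (sgQ (d := d) (ι := ι)) K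
      (fun B => ∀ p ∈ P, ∀ h ∈ H, KP B (vP (Sum.inl p) ⬝ᵥ vP (Sum.inl h))) A
      (α * P.card + β * H.card + γ * (P.card * H.card) + δ)

lemma Bd.swap {α β γ δ : ℝ} (h : Bd d ι K α β γ δ) : Bd d ι K β α γ δ := by
  intro P H hPH A hA
  refine ((h H P hPH.symm A hA).of_le (le_of_eq (by ring))).imp fun B _ hB p hp q hq => ?_
  rw [dotProduct_comm]
  exact hB q hq p hp

lemma Bd.of_le {α β γ δ α' β' γ' δ' : ℝ} (h : Bd d ι K α β γ δ) (h1 : α ≤ α') (h2 : β ≤ β') (h3 : γ ≤ γ')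
    (h4 : δ ≤ δ') : Bd d ι K α' β' γ' δ' := fun P H hPH A hA =>
  (h P H hPH A hA).of_le (by gcongr)

/-- Once the orientations of a group `P` are known, each hyperplane costs one search. -/
lemma cost_group (hd : 0 < d) {M : ℕ}
    (hKR : ((2 * (d + 1) : ℕ) : ℝ) * (optB d (M + (d + 1)) : ℕ) ≤ K)
    (P H : Finset ι) (hP : P.card ≤ M) (A : Finset (Var d ι → ℝ)) :
    Cost (sgQ (d := d) (ι := ι)) K
      (fun B => ∀ p ∈ P, ∀ h ∈ H, KP B (vP (Sum.inl p) ⬝ᵥ vP (Sum.inl h))) A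
      ((2 * (d + 1) : ℕ) * ((M + (d + 1) : ℕ) : ℝ) ^ (d - 1) * P.card + (2 * (d + 1) : ℕ) * H.card) := by
  classical
  refine (cost_KG hd hKR P hP A).bind fun B _ hB => ?_
  have hGN : GP (d := d) P ⊆ N1 Finset.univ := fun g hg => by
    obtain ⟨i, rfl⟩ := GP_sub P g hg
    exact item_mem_N1 (Finset.mem_univ _)
  have := Cost.all (sg := sgQ (d := d) (ι := ι)) (K := K) (A := B) H
    (P := fun h B => ∀ g ∈ GP P, KP B (g ⬝ᵥ vP (Sum.inl h))) (c := fun _ => ((2 * (d + 1) : ℕ) : ℝ))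
    (fun U _ => fun _ _ hB h g hg => (h g hg).mono hB)
    (fun h hh B' hB' => cost_search (GP P) (fun k => Finset.mem_union_right _ (single_mem_E0 k)) hGN _
      (N2_sub_N3 _ (N1_sub_N2 _ (item_mem_N1 (Finset.mem_univ _))))
      (le_trans (by gcongr; exact optB_mono d ((card_GP P).trans (by omega))) hKR) B'
      (fun g hg T hT => (KG.dot_cross hB hg hT).mono hB'))
  refine (this.of_le (le_of_eq ?_)).imp fun B' _ hB' p hp h hh =>
    hB' h hh _ (Finset.mem_union_left _ (Finset.mem_image_of_mem _ hp))
  rw [Finset.sum_const, nsmul_eq_mul, mul_comm]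

/-- Splitting `P` into groups of `M` points, each of which is treated by `cost_group`. -/
lemma bd_leaf (hd : 0 < d) {M : ℕ} (hM : 0 < M)
    (hKR : ((2 * (d + 1) : ℕ) : ℝ) * (optB d (M + (d + 1)) : ℕ) ≤ K) :
    Bd d ι K ((2 * (d + 1) : ℕ) * ((M + (d + 1) : ℕ) : ℝ) ^ (d - 1)) (2 * (d + 1) : ℕ)
      ((2 * (d + 1) : ℕ) / M) 0 := by
  classical
  intro P H hPH A hA
  clear hPH hA
  have hM' : (0 : ℝ) < M := by exact_mod_cast hM
  induction hn : P.card using Nat.strong_induction_on generalizing P A with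
  | _ n ih =>
  by_cases hP : P.card ≤ M
  · refine (cost_group hd hKR P H hP A).of_le ?_
    rw [hn]
    have : (0 : ℝ) ≤ (2 * (d + 1) : ℕ) / M * (n * H.card) := by positivity
    linarith
  · push Not at hP
    obtain ⟨P1, hP1, hc⟩ := Finset.exists_subset_card_eq hP.le
    have h2 : (P \ P1).card = n - M := by rw [Finset.card_sdiff_of_subset hP1, hn, hc]
    have := (cost_group hd hKR P1 H hc.le A).bind
      (P' := fun B => (∀ p ∈ P1, ∀ h ∈ H, KP B (vP (Sum.inl p) ⬝ᵥ vP (Sum.inl h))) ∧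
        ∀ p ∈ P \ P1, ∀ h ∈ H, KP B (vP (Sum.inl p) ⬝ᵥ vP (Sum.inl h)))
      fun B hB hk => (ih (n - M) (by omega) (P \ P1) B h2).imp fun B' hB' hk' =>
        ⟨fun p hp h hh => (hk p hp h hh).mono hB', hk'⟩
    refine (this.of_le (le_of_eq ?_)).imp fun B _ hB p hp h hh => ?_
    · rw [hc, Nat.cast_sub (by omega)]
      field_simp
      ring
    · by_cases hp1 : p ∈ P1
      · exact hB.1 p hp1 h hh
      · exact hB.2 p (Finset.mem_sdiff.2 ⟨hp, hp1⟩) h hh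

end Leaf
end Hopcroft

/-! ### Random sampling: Clarkson-Shor and Chernoff bounds -/

namespace Hopcroft

section Sampling

lemma card_Icc_finset_ge {J : Type*} [DecidableEq J] {S D : Finset J} {h : J} {D0 : ℕ} (hh : h ∈ S)
    (hD : D ⊆ S.erase h) (hc : D.card ≤ D0) :
    2 ^ S.card ≤ 2 ^ (D0 + 1) * (Finset.Icc D (S.erase h)).card := by
  rw [Finset.card_Icc_finset hD, ← pow_add, Finset.card_erase_of_mem hh]
  refine Nat.pow_le_pow_right (by norm_num) ?_
  have := Finset.card_le_card hD
  rw [Finset.card_erase_of_mem hh] at this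
  omega

/-- Backward analysis for one sample: few of its elements kill a configuration of the others. -/
lemma clarkson_one {J Γ : Type*} [DecidableEq J] [Fintype Γ]
    (act : Finset J → Γ → Prop) (kill : J → Γ → Prop) (Dc : Γ → Finset J) (D0 : ℕ)
    (hD : ∀ S c, act S c → Dc c ⊆ S ∧ (Dc c).card ≤ D0)
    (hloc : ∀ S S' c, act S c → Dc c ⊆ S' → S' ⊆ S → act S' c)
    (hkill : ∀ S c h, act S c → h ∈ S → ¬ kill h c) (b Bm : ℕ)
    (hB : ∀ S, S.card ≤ b + 1 → ∀ s : Finset Γ, (∀ c ∈ s, act S c) → s.card ≤ Bm)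
    (τ : Fin (b + 1) → J) [∀ i, DecidablePred fun c : Γ =>
      act (Finset.univ.image fun j : Fin b => τ (i.succAbove j)) c ∧ kill (τ i) c] :
    ∑ i, (Finset.univ.filter fun c =>
      act (Finset.univ.image fun j : Fin b => τ (i.succAbove j)) c ∧ kill (τ i) c).card ≤
      2 ^ (D0 + 1) * Bm := by
  classical
  set S := Finset.univ.image τ with hS
  set Sr : Fin (b + 1) → Finset J := fun i => Finset.univ.image fun j : Fin b => τ (i.succAbove j)
  have hne : ∀ {i j}, i ≠ j → τ i ∈ Sr j := fun {i j} h => by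
    obtain ⟨z, hz⟩ := Fin.exists_succAbove_eq h
    exact Finset.mem_image.2 ⟨z, Finset.mem_univ _, by rw [hz]⟩
  let Z : Finset (Fin (b + 1) × Γ) := Finset.univ.filter fun ic => act (Sr ic.1) ic.2 ∧ kill (τ ic.1) ic.2
  have hZ : ∑ i, (Finset.univ.filter fun c => act (Sr i) c ∧ kill (τ i) c).card = Z.card := by
    simp only [Z, Finset.card_filter]
    rw [Fintype.sum_prod_type]
  have hSr : ∀ ic ∈ Z, Sr ic.1 = S.erase (τ ic.1) := by
    intro ic hic
    obtain ⟨h1, h2⟩ := (Finset.mem_filter.1 hic).2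
    have h3 : τ ic.1 ∉ Sr ic.1 := fun h => hkill _ _ _ h1 h h2
    ext y
    simp only [Finset.mem_erase, hS, Finset.mem_image, Finset.mem_univ, true_and]
    constructor
    · intro hy
      refine ⟨fun e => h3 (e ▸ hy), ?_⟩
      obtain ⟨j, -, rfl⟩ := Finset.mem_image.1 hy
      exact ⟨_, rfl⟩
    · rintro ⟨hy, j, rfl⟩
      exact hne fun e => hy (by rw [e])
  have hcS : S.card ≤ b + 1 := Finset.card_image_le.trans (by simp)
  rw [hZ]
  have h1 : Z.card * 2 ^ S.card ≤ 2 ^ (D0 + 1) * ∑ ic ∈ Z, (Finset.Icc (Dc ic.2) (S.erase (τ ic.1))).card := by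
    rw [Finset.mul_sum, ← smul_eq_mul, ← Finset.sum_const]
    refine Finset.sum_le_sum fun ic hic => ?_
    have h := hD _ _ (Finset.mem_filter.1 hic).2.1
    rw [hSr ic hic] at h
    exact card_Icc_finset_ge (Finset.mem_image_of_mem _ (Finset.mem_univ _)) h.1 h.2
  have h2 : ∑ ic ∈ Z, (Finset.Icc (Dc ic.2) (S.erase (τ ic.1))).card ≤ 2 ^ S.card * Bm := by
    have e : ∀ ic ∈ Z, (Finset.Icc (Dc ic.2) (S.erase (τ ic.1))).card =
        ∑ R ∈ S.powerset, if R ∈ Finset.Icc (Dc ic.2) (S.erase (τ ic.1)) then 1 else 0 := by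
      intro ic _
      rw [Finset.sum_ite_mem, Finset.sum_const, smul_eq_mul, mul_one]
      congr 1
      symm
      rw [Finset.inter_eq_right]
      intro R hR
      exact Finset.mem_powerset.2 ((Finset.mem_Icc.1 hR).2.trans (Finset.erase_subset _ _))
    rw [Finset.sum_congr rfl e, Finset.sum_comm, ← Finset.card_powerset, ← smul_eq_mul, ← Finset.sum_const]
    refine Finset.sum_le_sum fun R hR => ?_
    rw [← Finset.card_filter]
    rw [← Finset.card_image_of_injOn (f := Prod.snd)]
    · refine hB R ((Finset.card_le_card (Finset.mem_powerset.1 hR)).trans hcS) _ fun c hc => ?_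
      obtain ⟨ic, hic, rfl⟩ := Finset.mem_image.1 hc
      obtain ⟨h1, h2⟩ := Finset.mem_filter.1 hic
      have := (Finset.mem_filter.1 h1).2.1
      rw [hSr ic h1] at this
      exact hloc _ _ _ this (Finset.mem_Icc.1 h2).1 (Finset.mem_Icc.1 h2).2
    · rintro ⟨i, c⟩ hi ⟨j, c'⟩ hj (rfl : c = c')
      by_contra hij
      have hij' : i ≠ j := fun e => hij (by rw [e])
      have a1 := (Finset.mem_filter.1 (Finset.mem_filter.1 hi).1).2
      have a2 := (Finset.mem_filter.1 (Finset.mem_filter.1 hj).1).2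
      exact hkill _ _ _ a2.1 (hne hij') a1.2
  have h3 : Z.card * 2 ^ S.card ≤ (2 ^ (D0 + 1) * Bm) * 2 ^ S.card := by
    refine h1.trans ((Nat.mul_le_mul_left _ h2).trans (le_of_eq (by ring)))
  exact Nat.le_of_mul_le_mul_right h3 (by positivity)

/-- Averaged over random samples of size `b` and a further random element, few configurations are
killed. -/
lemma clarkson {J Γ : Type*} [Fintype J] [DecidableEq J] [Fintype Γ]
    (act : Finset J → Γ → Prop) (kill : J → Γ → Prop) (Dc : Γ → Finset J) (D0 : ℕ)
    (hD : ∀ S c, act S c → Dc c ⊆ S ∧ (Dc c).card ≤ D0)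
    (hloc : ∀ S S' c, act S c → Dc c ⊆ S' → S' ⊆ S → act S' c)
    (hkill : ∀ S c h, act S c → h ∈ S → ¬ kill h c) (b Bm : ℕ)
    (hB : ∀ S, S.card ≤ b + 1 → ∀ s : Finset Γ, (∀ c ∈ s, act S c) → s.card ≤ Bm)
    [∀ (t : Fin b → J) h, DecidablePred fun c : Γ => act (Finset.univ.image t) c ∧ kill h c] :
    (b + 1) * ∑ t : Fin b → J, ∑ h, (Finset.univ.filter fun c =>
      act (Finset.univ.image t) c ∧ kill h c).card ≤ 2 ^ (D0 + 1) * Bm * Fintype.card J ^ (b + 1) := by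
  have h1 : ∀ i : Fin (b + 1), ∑ t : Fin b → J, ∑ h, (Finset.univ.filter fun c =>
      act (Finset.univ.image t) c ∧ kill h c).card = ∑ τ : Fin (b + 1) → J, (Finset.univ.filter fun c =>
      act (Finset.univ.image fun j : Fin b => τ (i.succAbove j)) c ∧ kill (τ i) c).card := by
    intro i
    rw [← Equiv.sum_comp (Fin.insertNthEquiv (fun _ => J) i), Fintype.sum_prod_type_right]
    refine Finset.sum_congr rfl fun t _ => Finset.sum_congr rfl fun h _ => ?_
    simp only [Fin.insertNthEquiv_apply, Fin.insertNth_apply_same, Fin.insertNth_apply_succAbove]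
  have h2 : (b + 1) * ∑ t : Fin b → J, ∑ h, (Finset.univ.filter fun c =>
      act (Finset.univ.image t) c ∧ kill h c).card = ∑ τ : Fin (b + 1) → J, ∑ i, (Finset.univ.filter fun c =>
      act (Finset.univ.image fun j : Fin b => τ (i.succAbove j)) c ∧ kill (τ i) c).card := by
    rw [Finset.sum_comm (s := (Finset.univ : Finset (Fin (b + 1) → J))),
      ← Finset.sum_congr rfl fun i _ => h1 i, Finset.sum_const, Finset.card_univ,
      Fintype.card_fin, smul_eq_mul]
  rw [h2]
  refine (Finset.sum_le_sum fun τ _ => clarkson_one act kill Dc D0 hD hloc hkill b Bm hB τ).trans ?_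
  rw [Finset.sum_const, Finset.card_univ, Fintype.card_fun, Fintype.card_fin, smul_eq_mul, mul_comm]

/-- Independence of the coordinates of a random tuple. -/
lemma sum_prod_le {I Q : Type*} [Fintype I] [DecidableEq I] [Fintype Q] (F : Finset I) {w : Q → ℝ} {c : ℝ}
    (hw : ∀ q, 0 ≤ w q) (hc : ∑ q, w q ≤ Fintype.card Q * c) :
    ∑ z : I → Q, ∏ j ∈ F, w (z j) ≤ (Fintype.card Q : ℝ) ^ Fintype.card I * c ^ F.card := by
  have h1 : ∀ z : I → Q, ∏ j ∈ F, w (z j) = ∏ j, if j ∈ F then w (z j) else 1 := by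
    intro z; rw [Finset.prod_ite_mem, Finset.univ_inter]
  simp_rw [h1]
  rw [← Fintype.prod_sum (fun j q => if j ∈ F then w q else 1)]
  have h2 : (Fintype.card Q : ℝ) ^ Fintype.card I * c ^ F.card =
      ∏ j : I, (Fintype.card Q : ℝ) * (if j ∈ F then c else 1) := by
    rw [Finset.prod_mul_distrib, Finset.prod_const, Finset.card_univ, Finset.prod_ite_mem,
      Finset.univ_inter, Finset.prod_const]
  rw [h2]
  refine Finset.prod_le_prod (fun j _ => ?_) fun j _ => ?_
  · split_ifs
    · exact Finset.sum_nonneg fun q _ => hw q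
    · positivity
  · split_ifs
    · exact hc
    · simp

lemma exp_neg_le {g : ℝ} (h0 : 0 ≤ g) (h1 : g ≤ 1) : Real.exp (-g) ≤ 1 - g / 2 := by
  have h2 : Real.exp (-1) ≤ 1 / 2 := by
    rw [Real.exp_neg, inv_le_comm₀ (Real.exp_pos _) (by norm_num)]
    have := Real.add_one_le_exp (1 : ℝ)
    norm_num at this ⊢
    linarith
  have h3 := convexOn_exp.2 (Set.mem_univ (0 : ℝ)) (Set.mem_univ (-1 : ℝ))
    (sub_nonneg.2 h1) h0 (by ring)
  simp only [smul_eq_mul, mul_zero, zero_add, mul_neg, mul_one, Real.exp_zero] at h3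
  nlinarith

lemma exp_le_one_add {g : ℝ} (h0 : 0 ≤ g) (h1 : g ≤ 1) : Real.exp g ≤ 1 + 2 * g := by
  have h2 : Real.exp 1 ≤ 3 := by linarith [Real.exp_one_lt_d9]
  have h3 := convexOn_exp.2 (Set.mem_univ (0 : ℝ)) (Set.mem_univ (1 : ℝ))
    (sub_nonneg.2 h1) h0 (by ring)
  simp only [smul_eq_mul, mul_zero, zero_add, mul_one, Real.exp_zero] at h3
  nlinarith

variable {I Q : Type*} [Fintype I] [DecidableEq I] [Fintype Q] [Nonempty Q]

/-- Lower tail: few tuples `z` have a sum far below half its mean. -/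
lemma chernoff_lower (F : Finset I) {g : Q → ℝ} (h0 : ∀ q, 0 ≤ g q) (h1 : ∀ q, g q ≤ 1) {μ a : ℝ}
    (hμ : ∑ q, g q = Fintype.card Q * μ) [DecidablePred fun z : I → Q => ∑ j ∈ F, g (z j) ≤ a] :
    ((Finset.univ.filter fun z : I → Q => ∑ j ∈ F, g (z j) ≤ a).card : ℝ) ≤
      (Fintype.card Q : ℝ) ^ Fintype.card I * Real.exp (a - F.card * μ / 2) := by
  have h2 : ∑ q, Real.exp (-g q) ≤ Fintype.card Q * Real.exp (-μ / 2) := by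
    calc ∑ q, Real.exp (-g q) ≤ ∑ q, (1 - g q / 2) := Finset.sum_le_sum fun q _ => exp_neg_le (h0 q) (h1 q)
      _ = Fintype.card Q * (1 - μ / 2) := by
        rw [Finset.sum_sub_distrib, ← Finset.sum_div, hμ]; simp; ring
      _ ≤ _ := by
        gcongr
        have := Real.add_one_le_exp (-μ / 2)
        linarith
  have h3 := sum_prod_le (I := I) F (fun q => (Real.exp_pos (-g q)).le) h2
  have h4 : ((Finset.univ.filter fun z : I → Q => ∑ j ∈ F, g (z j) ≤ a).card : ℝ) * Real.exp (-a) ≤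
      ∑ z : I → Q, ∏ j ∈ F, Real.exp (-g (z j)) := by
    rw [← nsmul_eq_mul, ← Finset.sum_const]
    refine (Finset.sum_le_sum fun z hz => ?_).trans
      (Finset.sum_le_sum_of_subset_of_nonneg (Finset.filter_subset _ _) fun z _ _ => by positivity)
    rw [← Real.exp_sum, Finset.sum_neg_distrib]
    exact Real.exp_le_exp.2 (neg_le_neg (Finset.mem_filter.1 hz).2)
  have h5 := h4.trans h3
  rw [← Real.exp_nat_mul] at h5
  have h6 : Real.exp (a - F.card * μ / 2) = Real.exp (F.card * (-μ / 2)) * Real.exp a := by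
    rw [← Real.exp_add]; ring_nf
  rw [h6, ← mul_assoc]
  have h7 : Real.exp (-a) * Real.exp a = 1 := by rw [← Real.exp_add]; simp
  calc _ = ((Finset.univ.filter fun z : I → Q => ∑ j ∈ F, g (z j) ≤ a).card : ℝ) * (Real.exp (-a) * Real.exp a) := by
        rw [h7, mul_one]
    _ ≤ _ := by
        rw [← mul_assoc]
        exact mul_le_mul_of_nonneg_right h5 (Real.exp_pos _).le

/-- Upper tail: few tuples `z` have a sum far above twice its mean. -/
lemma chernoff_upper (F : Finset I) {g : Q → ℝ} (h0 : ∀ q, 0 ≤ g q) (h1 : ∀ q, g q ≤ 1) {μ a : ℝ}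
    (hμ : ∑ q, g q = Fintype.card Q * μ) [DecidablePred fun z : I → Q => a ≤ ∑ j ∈ F, g (z j)] :
    ((Finset.univ.filter fun z : I → Q => a ≤ ∑ j ∈ F, g (z j)).card : ℝ) ≤
      (Fintype.card Q : ℝ) ^ Fintype.card I * Real.exp (2 * F.card * μ - a) := by
  have h2 : ∑ q, Real.exp (g q) ≤ Fintype.card Q * Real.exp (2 * μ) := by
    calc ∑ q, Real.exp (g q) ≤ ∑ q, (1 + 2 * g q) := Finset.sum_le_sum fun q _ => exp_le_one_add (h0 q) (h1 q)
      _ = Fintype.card Q * (1 + 2 * μ) := by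
        rw [Finset.sum_add_distrib, ← Finset.mul_sum, hμ]; simp; ring
      _ ≤ _ := by
        gcongr
        have := Real.add_one_le_exp (2 * μ)
        linarith
  have h3 := sum_prod_le (I := I) F (fun q => (Real.exp_pos (g q)).le) h2
  have h4 : ((Finset.univ.filter fun z : I → Q => a ≤ ∑ j ∈ F, g (z j)).card : ℝ) * Real.exp a ≤
      ∑ z : I → Q, ∏ j ∈ F, Real.exp (g (z j)) := by
    rw [← nsmul_eq_mul, ← Finset.sum_const]
    refine (Finset.sum_le_sum fun z hz => ?_).trans
      (Finset.sum_le_sum_of_subset_of_nonneg (Finset.filter_subset _ _) fun z _ _ => by positivity)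
    rw [← Real.exp_sum]
    exact Real.exp_le_exp.2 (Finset.mem_filter.1 hz).2
  have h5 := h4.trans h3
  rw [← Real.exp_nat_mul] at h5
  have h6 : Real.exp (2 * F.card * μ - a) = Real.exp (F.card * (2 * μ)) * Real.exp (-a) := by
    rw [← Real.exp_add]; ring_nf
  rw [h6, ← mul_assoc]
  have h7 : Real.exp a * Real.exp (-a) = 1 := by rw [← Real.exp_add]; simp
  calc _ = ((Finset.univ.filter fun z : I → Q => a ≤ ∑ j ∈ F, g (z j)).card : ℝ) * (Real.exp a * Real.exp (-a)) := by
        rw [h7, mul_one]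
    _ ≤ _ := by
        rw [← mul_assoc]
        exact mul_le_mul_of_nonneg_right h5 (Real.exp_pos _).le

/-- The first `m` test indices. -/
def Fm (N m : ℕ) : Finset (Fin N) := Finset.univ.filter fun j => (j : ℕ) < m

lemma card_Fm {N m : ℕ} (h : m ≤ N) : (Fm N m).card = m := by
  have : (Fm N m).image (fun j : Fin N => (j : ℕ)) = Finset.range m := by
    ext a
    simp only [Fm, Finset.mem_image, Finset.mem_filter, Finset.mem_univ, true_and, Finset.mem_range]
    exact ⟨fun ⟨j, hj, e⟩ => e ▸ hj, fun ha => ⟨⟨a, by omega⟩, ha, rfl⟩⟩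
  rw [← Finset.card_image_of_injective _ Fin.val_injective, this, Finset.card_range]

/-- The thresholds of the chain of tests. -/
noncomputable def thr (k : ℕ) (θ : ℝ) (i : ℕ) : ℝ := 2 * (k + 2) * 16 ^ i * θ

/-- Test `i`: for `i ≤ k` the average over the first `s i` test elements is small, afterwards the true
mean is small. -/
def passP (k N : ℕ) (s : ℕ → ℕ) (θ : ℝ) (g : Q → ℝ) (z : Fin N → Q) (i : ℕ) : Prop :=
  if i ≤ k then ∑ j ∈ Fm N (s i), g (z j) ≤ s i * thr k θ i else ∑ q, g q ≤ Fintype.card Q * thr k θ i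

/-- The probability of failing test `i` first, up to the factor `k + 2`. -/
noncomputable def cdel (k : ℕ) (s : ℕ → ℕ) (θ : ℝ) : ℕ → ℝ
  | 0 => 1 / 2
  | i + 1 => (k + 2) * Real.exp (-(θ * s i))

lemma cdel_pos (k : ℕ) (s : ℕ → ℕ) (θ : ℝ) (i : ℕ) : 0 < cdel k s θ i := by
  cases i
  · norm_num [cdel]
  · unfold cdel; positivity

lemma thr_ge {k i : ℕ} {θ : ℝ} (hθ : 0 < θ) : θ ≤ thr k θ i := by
  unfold thr
  have h1 : (1 : ℝ) ≤ 16 ^ i := one_le_pow₀ (by norm_num)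
  have h2 : (1 : ℝ) ≤ 2 * (k + 2) := by linarith [(Nat.cast_nonneg k : (0 : ℝ) ≤ k)]
  nlinarith [mul_le_mul h2 h1 (by norm_num) (by linarith)]

lemma thr_succ (k i : ℕ) (θ : ℝ) : thr k θ (i + 1) = 16 * thr k θ i := by unfold thr; ring

/-- Passing test `i` but failing test `i + 1` is unlikely: either the mean is large and test `i` is in the
lower tail, or it is small and test `i + 1` is in the upper tail. -/
lemma chain_step {k N : ℕ} {s : ℕ → ℕ} (hs : Monotone s) (hN : s k ≤ N) {θ : ℝ} (hθ : 0 < θ) {g : Q → ℝ}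
    (h0 : ∀ q, 0 ≤ g q) (h1 : ∀ q, g q ≤ 1) {i : ℕ} (hi : i ≤ k)
    [DecidablePred fun z : Fin N → Q => passP k N s θ g z i ∧ ¬ passP k N s θ g z (i + 1)] :
    ((Finset.univ.filter fun z : Fin N → Q => passP k N s θ g z i ∧ ¬ passP k N s θ g z (i + 1)).card : ℝ) ≤
      (Fintype.card Q : ℝ) ^ N * Real.exp (-(θ * s i)) := by
  classical
  have hQ : (0 : ℝ) < Fintype.card Q := by exact_mod_cast Fintype.card_pos
  obtain ⟨μ, hμ⟩ : ∃ μ : ℝ, ∑ q, g q = Fintype.card Q * μ := ⟨(∑ q, g q) / Fintype.card Q, by field_simp⟩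
  have hT := thr_ge (k := k) (i := i) hθ
  have hsi : s i ≤ N := (hs hi).trans hN
  by_cases hlow : μ ≤ 4 * thr k θ i
  · by_cases hik : i + 1 ≤ k
    · have hsi' : s (i + 1) ≤ N := (hs hik).trans hN
      have := chernoff_upper (I := Fin N) (Fm N (s (i + 1))) h0 h1 (a := s (i + 1) * thr k θ (i + 1)) hμ
      rw [card_Fm hsi', Fintype.card_fin] at this
      refine le_trans ?_ (this.trans ?_)
      · refine Nat.cast_le.2 (Finset.card_le_card fun z hz => ?_)
        have := (Finset.mem_filter.1 hz).2.2
        rw [passP, if_pos hik, not_le] at this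
        exact Finset.mem_filter.2 ⟨Finset.mem_univ _, this.le⟩
      · have h2 : (s i : ℝ) ≤ s (i + 1) := by exact_mod_cast hs (Nat.le_succ i)
        have h3 : (0 : ℝ) ≤ s i := by positivity
        gcongr
        rw [thr_succ]
        nlinarith [mul_le_mul_of_nonneg_left hlow (h3.trans h2), mul_le_mul_of_nonneg_right h2 hθ.le,
          mul_le_mul_of_nonneg_left hT (h3.trans h2)]
    · have : (Finset.univ.filter fun z : Fin N → Q => passP k N s θ g z i ∧ ¬ passP k N s θ g z (i + 1)) = ∅ := by
        refine Finset.filter_eq_empty_iff.2 fun z _ h => h.2 ?_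
        rw [passP, if_neg hik, hμ, thr_succ]
        gcongr
        linarith
      rw [this]
      simp only [Finset.card_empty, Nat.cast_zero]
      positivity
  · push Not at hlow
    have := chernoff_lower (I := Fin N) (Fm N (s i)) h0 h1 (a := s i * thr k θ i) hμ
    rw [card_Fm hsi, Fintype.card_fin] at this
    refine le_trans ?_ (this.trans ?_)
    · refine Nat.cast_le.2 (Finset.card_le_card fun z hz => ?_)
      have := (Finset.mem_filter.1 hz).2.1
      rw [passP, if_pos hi] at this
      exact Finset.mem_filter.2 ⟨Finset.mem_univ _, this⟩
    · have h3 : (0 : ℝ) ≤ s i := by positivity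
      gcongr
      nlinarith [mul_le_mul_of_nonneg_left hlow.le h3, mul_le_mul_of_nonneg_left hT h3]

/-- Failing the first test is unlikely, by the Markov inequality. -/
lemma chain_zero {Ω : Type*} [Fintype Ω] {k N : ℕ} {s : ℕ → ℕ} (hs : Monotone s) (hs0 : 0 < s 0)
    (hN : s k ≤ N) {θ : ℝ} (hθ : 0 < θ) {g : Ω → Q → ℝ}
    (h0 : ∀ ω q, 0 ≤ g ω q) (hm : ∑ ω, ∑ q, g ω q ≤ Fintype.card Ω * (Fintype.card Q * θ))
    [∀ ω, DecidablePred fun z : Fin N → Q => ¬ passP k N s θ (g ω) z 0] :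
    ∑ ω, ((Finset.univ.filter fun z : Fin N → Q => ¬ passP k N s θ (g ω) z 0).card : ℝ) * (2 * (k + 2)) ≤
      Fintype.card Ω * (Fintype.card Q : ℝ) ^ N := by
  classical
  have hQ : (0 : ℝ) < Fintype.card Q := by exact_mod_cast Fintype.card_pos
  have hs0' : (0 : ℝ) < s 0 := by exact_mod_cast hs0
  have hsN : s 0 ≤ N := (hs (Nat.zero_le k)).trans hN
  have key : ∀ ω, ((Finset.univ.filter fun z : Fin N → Q => ¬ passP k N s θ (g ω) z 0).card : ℝ) *
      (2 * (k + 2)) * θ * Fintype.card Q ≤ (Fintype.card Q : ℝ) ^ N * ∑ q, g ω q := by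
    intro ω
    obtain ⟨μ, hμ⟩ : ∃ μ : ℝ, ∑ q, g ω q = Fintype.card Q * μ := ⟨(∑ q, g ω q) / Fintype.card Q, by field_simp⟩
    have e1 : ∀ j : Fin N, ∑ z : Fin N → Q, g ω (z j) ≤ (Fintype.card Q : ℝ) ^ N * μ := by
      intro j
      have := sum_prod_le (I := Fin N) {j} (h0 ω) hμ.le
      simpa using this
    have e2 : ((Finset.univ.filter fun z : Fin N → Q => ¬ passP k N s θ (g ω) z 0).card : ℝ) *
        (s 0 * (2 * (k + 2) * θ)) ≤ ∑ z : Fin N → Q, ∑ j ∈ Fm N (s 0), g ω (z j) := by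
      rw [← nsmul_eq_mul, ← Finset.sum_const]
      refine (Finset.sum_le_sum fun z hz => ?_).trans
        (Finset.sum_le_sum_of_subset_of_nonneg (Finset.filter_subset _ _) fun z _ _ =>
          Finset.sum_nonneg fun j _ => h0 ω _)
      have := (Finset.mem_filter.1 hz).2
      rw [passP, if_pos (Nat.zero_le k), not_le] at this
      refine le_trans (le_of_eq ?_) this.le
      unfold thr; ring
    rw [Finset.sum_comm] at e2
    have e3 := e2.trans (Finset.sum_le_sum fun j _ => e1 j)
    rw [Finset.sum_const, card_Fm hsN, nsmul_eq_mul] at e3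
    have e4 : ((Finset.univ.filter fun z : Fin N → Q => ¬ passP k N s θ (g ω) z 0).card : ℝ) *
        (2 * (k + 2)) * θ ≤ (Fintype.card Q : ℝ) ^ N * μ := by
      refine le_of_mul_le_mul_left (le_trans (le_of_eq ?_) e3) hs0'
      ring
    rw [hμ]
    nlinarith [mul_le_mul_of_nonneg_right e4 hQ.le]
  have h2 := Finset.sum_le_sum fun ω (_ : ω ∈ Finset.univ) => key ω
  rw [← Finset.mul_sum, ← Finset.sum_mul, ← Finset.sum_mul] at h2
  have h3 := h2.trans (mul_le_mul_of_nonneg_left hm (by positivity))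
  refine le_of_mul_le_mul_right (le_trans (le_of_eq ?_) (h3.trans (le_of_eq ?_))) (mul_pos hθ hQ)
  · ring
  · ring

/-- For a suitable sample and suitable test elements, only few inputs fail test `i` first, for every
`i`. -/
lemma chain_exists {X Ω : Type*} [Fintype Ω] [Nonempty Ω] (B : Finset X)
    {k N : ℕ} {s : ℕ → ℕ} (hs : Monotone s)
    (hs0 : 0 < s 0) (hN : s k ≤ N) {θ : ℝ} (hθ : 0 < θ) {g : X → Ω → Q → ℝ}
    (h0 : ∀ x ∈ B, ∀ ω q, 0 ≤ g x ω q) (h1 : ∀ x ∈ B, ∀ ω q, g x ω q ≤ 1)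
    (hm : ∀ x ∈ B, ∑ ω, ∑ q, g x ω q ≤ Fintype.card Ω * (Fintype.card Q * θ)) :
    ∃ (ω : Ω) (z : Fin N → Q), ∀ i < k + 2, ∀ B' ⊆ B,
      (∀ x ∈ B', (∀ j < i, passP k N s θ (g x ω) z j) ∧ ¬ passP k N s θ (g x ω) z i) →
      (B'.card : ℝ) ≤ cdel k s θ i * B.card := by
  classical
  let E : ℕ → Ω → (Fin N → Q) → X → Prop := fun i ω z x =>
    (∀ j < i, passP k N s θ (g x ω) z j) ∧ ¬ passP k N s θ (g x ω) z i
  have hQ : (0 : ℝ) < Fintype.card Q := by exact_mod_cast Fintype.card_pos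
  have hΩ : (0 : ℝ) < Fintype.card Ω := by exact_mod_cast Fintype.card_pos
  have hk : (0 : ℝ) < k + 2 := by positivity
  have hE : ∀ i < k + 2, ∀ x ∈ B, ∑ ω, ((Finset.univ.filter fun z => E i ω z x).card : ℝ) ≤
      Fintype.card Ω * (Fintype.card Q : ℝ) ^ N * (cdel k s θ i / (k + 2)) := by
    intro i hi x hx
    rcases i with _ | i
    · have := chain_zero hs hs0 hN hθ (h0 x hx) (hm x hx)
      rw [← Finset.sum_mul] at this
      have e : ∑ ω, ((Finset.univ.filter fun z => E 0 ω z x).card : ℝ) ≤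
          ∑ ω, ((Finset.univ.filter fun z : Fin N → Q => ¬ passP k N s θ (g x ω) z 0).card : ℝ) :=
        Finset.sum_le_sum fun ω _ => Nat.cast_le.2 (Finset.card_le_card fun z hz =>
          Finset.mem_filter.2 ⟨Finset.mem_univ _, (Finset.mem_filter.1 hz).2.2⟩)
      refine e.trans ?_
      rw [show cdel k s θ 0 / (k + 2) = 1 / (2 * ((k : ℝ) + 2)) by unfold cdel; field_simp, mul_one_div,
        le_div_iff₀ (by positivity)]
      exact this
    · have e : ∀ ω ∈ (Finset.univ : Finset Ω), ((Finset.univ.filter fun z => E (i + 1) ω z x).card : ℝ) ≤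
          (Fintype.card Q : ℝ) ^ N * Real.exp (-(θ * s i)) := by
        intro ω _
        refine le_trans (Nat.cast_le.2 (Finset.card_le_card fun z hz => ?_))
          (chain_step hs hN hθ (h0 x hx ω) (h1 x hx ω) (i := i) (by omega))
        have := (Finset.mem_filter.1 hz).2
        exact Finset.mem_filter.2 ⟨Finset.mem_univ _, this.1 i (Nat.lt_succ_self i), this.2⟩
      refine (Finset.sum_le_sum e).trans (le_of_eq ?_)
      rw [Finset.sum_const, Finset.card_univ, nsmul_eq_mul, cdel]
      field_simp
  have hsum : ∑ ωz : Ω × (Fin N → Q), ∑ i ∈ Finset.range (k + 2),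
      ((B.filter fun x => E i ωz.1 ωz.2 x).card : ℝ) / cdel k s θ i ≤
      ∑ _ωz : Ω × (Fin N → Q), (B.card : ℝ) := by
    rw [Finset.sum_comm]
    have e : ∀ i ∈ Finset.range (k + 2), ∑ ωz : Ω × (Fin N → Q),
        ((B.filter fun x => E i ωz.1 ωz.2 x).card : ℝ) / cdel k s θ i ≤
        B.card * (Fintype.card Ω * (Fintype.card Q : ℝ) ^ N / (k + 2)) := by
      intro i hi
      have hc := cdel_pos k s θ i
      rw [← Finset.sum_div, div_le_iff₀ hc, Fintype.sum_prod_type]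
      simp only [Finset.card_filter, Nat.cast_sum]
      have e2 : ∀ ω, ∑ z : Fin N → Q, ∑ x ∈ B, (((if E i ω z x then 1 else 0 : ℕ)) : ℝ) =
          ∑ x ∈ B, ((Finset.univ.filter fun z => E i ω z x).card : ℝ) := by
        intro ω
        rw [Finset.sum_comm]
        refine Finset.sum_congr rfl fun x _ => ?_
        rw [Finset.card_filter, Nat.cast_sum]
      simp_rw [e2]
      rw [Finset.sum_comm]
      refine (Finset.sum_le_sum fun x hx => hE i (Finset.mem_range.1 hi) x hx).trans (le_of_eq ?_)
      rw [Finset.sum_const, nsmul_eq_mul]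
      ring
    refine (Finset.sum_le_sum e).trans (le_of_eq ?_)
    rw [Finset.sum_const, Finset.sum_const, Finset.card_range, Finset.card_univ, Fintype.card_prod,
      Fintype.card_fun, Fintype.card_fin, nsmul_eq_mul, nsmul_eq_mul]
    push_cast
    field_simp
  obtain ⟨⟨ω, z⟩, -, hωz⟩ := Finset.exists_le_of_sum_le Finset.univ_nonempty hsum
  refine ⟨ω, z, fun i hi B' hB' h => ?_⟩
  have hc := cdel_pos k s θ i
  have h2 : ((B.filter fun x => E i ω z x).card : ℝ) / cdel k s θ i ≤ B.card :=
    (Finset.single_le_sum (f := fun i => ((B.filter fun x => E i ω z x).card : ℝ) / cdel k s θ i)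
      (fun i _ => div_nonneg (by positivity) (cdel_pos k s θ i).le) (Finset.mem_range.2 hi)).trans hωz
  rw [div_le_iff₀ hc, mul_comm] at h2
  refine le_trans ?_ h2
  exact Nat.cast_le.2 (Finset.card_le_card fun x hx => Finset.mem_filter.2 ⟨hB' hx, h x hx⟩)

end Sampling
end Hopcroft

/-! ### Badness of a sample -/

namespace Hopcroft
open Matrix MvPolynomial

section Step
variable {d : ℕ} {ι : Type}

/-- The items of a sample: its objects and the coordinate vectors. -/
def RS (S : Finset ι) : Finset (Item d ι) := S.disjSum Finset.univ

lemma RS_E (S : Finset ι) (k) : (Sum.inr k : Item d ι) ∈ RS S :=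
  Finset.inr_mem_disjSum.2 (Finset.mem_univ _)

lemma inl_mem_RS {S : Finset ι} {o : ι} : (Sum.inl o : Item d ι) ∈ RS S ↔ o ∈ S := Finset.inl_mem_disjSum

lemma card_RS (S : Finset ι) : (RS (d := d) S).card = S.card + (d + 1) := by
  simp [RS, Finset.card_disjSum]

/-- The items that define the code `c`. -/
def DS [DecidableEq (Item d ι)] (c : Code d (Item d ι)) : Finset (Item d ι) :=
  Finset.univ.image c.1 ∪ Finset.univ.biUnion c.2.2

/-- The number of defining items of a code. -/
def D0 (d : ℕ) : ℕ := d + (d + 1) * d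

lemma card_DS [DecidableEq (Item d ι)] {v : Item d ι → Fin (d + 1) → ℝ} {R : Finset (Item d ι)}
    {c : Code d (Item d ι)} (h : Act v R c) : (DS c).card ≤ D0 d := by
  refine (Finset.card_union_le _ _).trans (add_le_add (Finset.card_image_le.trans (by simp)) ?_)
  refine Finset.card_biUnion_le.trans ?_
  refine (Finset.sum_le_sum fun j _ => h.card j).trans ?_
  simp

lemma DS_sub [DecidableEq (Item d ι)] {v : Item d ι → Fin (d + 1) → ℝ} {R : Finset (Item d ι)}
    {c : Code d (Item d ι)} (h : Act v R c) : DS c ⊆ R := by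
  intro g hg
  rcases Finset.mem_union.1 hg with hg | hg
  · obtain ⟨i, -, rfl⟩ := Finset.mem_image.1 hg
    exact h.wall i
  · obtain ⟨j, -, hj⟩ := Finset.mem_biUnion.1 hg
    exact ((h.zero j g).1 hj).1

/-- Bound for the number of active codes of a sample of at most `b + 1` objects. -/
def Ym (d b : ℕ) : ℕ := (b + 1 + (d + 1)) ^ d * 3 ^ (d + 1) * 3 ^ d

variable [Fintype ι]

open Classical in
/-- The number of active codes of the sample with property `φ` crossed by `h`. -/
noncomputable def cnt (φ : (Var d ι → ℝ) → Code d (Item d ι) → Prop) (x : Var d ι → ℝ) (S : Finset ι)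
    (h : ι) : ℕ :=
  (Finset.univ.filter fun c : Code d (Item d ι) =>
    (Act (vx x) (RS S) c ∧ φ x c) ∧ Crosses (vx x) c (vx x (Sum.inl h))).card

open Classical in
/-- The set of objects in a sample given as a tuple. -/
noncomputable def smp {H : Finset ι} {b : ℕ} (t : Fin b → H) : Finset ι :=
  (Finset.univ.image t).image Subtype.val

lemma smp_sub {H : Finset ι} {b : ℕ} (t : Fin b → H) : smp t ⊆ H := by
  classical
  intro y hy
  rw [smp] at hy
  obtain ⟨z, -, rfl⟩ := Finset.mem_image.1 hy
  exact z.2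

lemma card_smp {H : Finset ι} {b : ℕ} (t : Fin b → H) : (smp t).card ≤ b := by
  classical
  exact Finset.card_image_le.trans (Finset.card_image_le.trans (by simp))

/-- The Clarkson-Shor estimate for the cones of a random sample of objects. -/
lemma clarkson_geo (φ : (Var d ι → ℝ) → Code d (Item d ι) → Prop) (x : Var d ι → ℝ) (H : Finset ι)
    (b Bm : ℕ) (hB : ∀ S ⊆ H, S.card ≤ b + 1 → ∀ s : Finset (Code d (Item d ι)),
      (∀ c ∈ s, Act (vx x) (RS S) c ∧ φ x c) → s.card ≤ Bm) :
    (b + 1) * ∑ t : Fin b → H, ∑ h : H, cnt φ x (smp t) h ≤ 2 ^ (D0 d + 1) * Bm * H.card ^ (b + 1) := by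
  classical
  have := clarkson (J := H) (Γ := Code d (Item d ι))
    (fun S c => Act (vx x) (RS (S.image Subtype.val)) c ∧ φ x c)
    (fun h c => Crosses (vx x) c (vx x (Sum.inl h)))
    (fun c => Finset.univ.filter fun j : H => (Sum.inl (j : ι) : Item d ι) ∈ DS c) (D0 d) ?_ ?_ ?_ b Bm ?_
  · rw [Fintype.card_coe] at this
    exact this
  · intro S c hc
    constructor
    · intro j hj
      have := inl_mem_RS.1 (DS_sub hc.1 (Finset.mem_filter.1 hj).2)
      obtain ⟨j', hj', e⟩ := Finset.mem_image.1 this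
      rwa [← Subtype.ext e]
    · refine le_trans ?_ (card_DS hc.1)
      refine Finset.card_le_card_of_injOn (fun j : H => (Sum.inl (j : ι) : Item d ι))
        (fun j hj => (Finset.mem_filter.1 hj).2) ?_
      intro a _ b _ hab
      exact Subtype.ext (Sum.inl_injective hab)
  · intro S S' c hc hD hS
    have key : DS c ⊆ RS (S'.image Subtype.val) := by
      intro g hg
      rcases g with o | k
      · have h1 := inl_mem_RS.1 (DS_sub hc.1 hg)
        obtain ⟨j, hj, rfl⟩ := Finset.mem_image.1 h1
        exact inl_mem_RS.2 (Finset.mem_image_of_mem _ (hD (Finset.mem_filter.2 ⟨Finset.mem_univ _, hg⟩)))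
      · exact RS_E _ k
    refine ⟨hc.1.locality ?_ ?_ ?_, hc.2⟩
    · intro g hg
      rcases g with o | k
      · obtain ⟨j, hj, rfl⟩ := Finset.mem_image.1 (inl_mem_RS.1 hg)
        exact inl_mem_RS.2 (Finset.mem_image_of_mem _ (hS hj))
      · exact RS_E _ k
    · exact fun i => key (Finset.mem_union_left _ (Finset.mem_image_of_mem _ (Finset.mem_univ _)))
    · exact fun j g hg => key (Finset.mem_union_right _ (Finset.mem_biUnion.2 ⟨j, Finset.mem_univ _, hg⟩))
  · intro S c h hc hh
    exact hc.1.not_crosses (inl_mem_RS.2 (Finset.mem_image_of_mem _ hh))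
  · intro S hS s hs
    refine hB _ ?_ (Finset.card_image_le.trans hS) s hs
    intro y hy
    obtain ⟨z, -, rfl⟩ := Finset.mem_image.1 hy
    exact z.2

/-- The measure of badness of the pair `(p, h)`: whether `h` crosses the cone of `p`, plus the scaled
number of cones crossed by `h`. -/
noncomputable def bad (b : ℕ) (x : Var d ι → ℝ) (S : Finset ι) (p h : ι) : ℝ :=
  (cnt (fun x c => InC (vx x) c (vx x (Sum.inl p))) x S h + cnt (fun _ _ => True) x S h / Ym d b) / 2

lemma Ym_pos (d b : ℕ) : 0 < Ym d b := by unfold Ym; positivity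

lemma card_act_Ym {x : Var d ι → ℝ} {b : ℕ} {S : Finset ι} (hS : S.card ≤ b + 1)
    (s : Finset (Code d (Item d ι))) (hs : ∀ c ∈ s, Act (vx x) (RS S) c) : s.card ≤ Ym d b := by
  refine (card_act_le (vx x) (RS S) s hs).trans ?_
  rw [card_RS]
  unfold Ym
  gcongr

lemma card_cell_le {x : Var d ι → ℝ} (hx : Gen x) {S : Finset ι} {p : ι} (hp : p ∉ S)
    (s : Finset (Code d (Item d ι)))
    (hs : ∀ c ∈ s, Act (vx x) (RS S) c ∧ InC (vx x) c (vx x (Sum.inl p))) : s.card ≤ 1 :=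
  Finset.card_le_one.2 fun c hc c' hc' => hx.unique_act (fun h => hp (inl_mem_RS.1 h)) (RS_E S)
    (hs c hc).1 (hs c' hc').1 (hs c hc).2 (hs c' hc').2

lemma bad_nonneg (b : ℕ) (x : Var d ι → ℝ) (S : Finset ι) (p h : ι) : 0 ≤ bad b x S p h := by
  unfold bad; positivity

lemma cnt_le {φ : (Var d ι → ℝ) → Code d (Item d ι) → Prop} {x : Var d ι → ℝ} {S : Finset ι} {m : ℕ}
    (hB : ∀ s : Finset (Code d (Item d ι)), (∀ c ∈ s, Act (vx x) (RS S) c ∧ φ x c) → s.card ≤ m) (h : ι) :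
    cnt φ x S h ≤ m := by
  classical
  exact hB _ fun c hc => (Finset.mem_filter.1 hc).2.1

lemma bad_le_one {b : ℕ} {x : Var d ι → ℝ} (hx : Gen x) {S : Finset ι} (hS : S.card ≤ b + 1) {p : ι}
    (hp : p ∉ S) (h : ι) : bad b x S p h ≤ 1 := by
  classical
  have h1 : cnt (fun x c => InC (vx x) c (vx x (Sum.inl p))) x S h ≤ 1 :=
    cnt_le (fun s hs => card_cell_le hx hp s hs) h
  have h2 : cnt (fun _ _ => True) x S h ≤ Ym d b :=
    cnt_le (fun s hs => card_act_Ym hS s fun c hc => (hs c hc).1) h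
  have h3 : (cnt (fun _ _ => True) x S h : ℝ) / Ym d b ≤ 1 :=
    div_le_one_of_le₀ (by exact_mod_cast h2) (by positivity)
  have h4 : (cnt (fun x c => InC (vx x) c (vx x (Sum.inl p))) x S h : ℝ) ≤ 1 := by exact_mod_cast h1
  unfold bad
  linarith

/-- The bound for the average badness of a random sample, see `mean_bad`. -/
noncomputable def tht (d b : ℕ) : ℝ := 2 ^ (D0 d + 1) / (b + 1)

lemma tht_pos (d b : ℕ) : 0 < tht d b := by unfold tht; positivity

/-- The average badness over all samples and all pairs is at most `tht d b`, by `clarkson_geo`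
applied to all cones and to the cone of `p`. -/
lemma mean_bad {x : Var d ι → ℝ} (hx : Gen x) {P H : Finset ι} (hPH : Disjoint P H) (b : ℕ) :
    ∑ t : Fin b → H, ∑ q : P × H, bad b x (smp t) q.1 q.2 ≤
      Fintype.card (Fin b → H) * (Fintype.card (P × H) * tht d b) := by
  classical
  have hY : (0 : ℝ) < Ym d b := by exact_mod_cast Ym_pos d b
  have a1 : ∀ p : P, ((b : ℝ) + 1) * ∑ t : Fin b → H, ∑ h : H,
      (cnt (fun x c => InC (vx x) c (vx x (Sum.inl (p : ι)))) x (smp t) h : ℝ) ≤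
      2 ^ (D0 d + 1) * (H.card : ℝ) ^ (b + 1) := by
    intro p
    have := clarkson_geo (fun x c => InC (vx x) c (vx x (Sum.inl (p : ι)))) x H b 1 fun S hS _ s hs =>
      card_cell_le hx (fun h => Finset.disjoint_left.1 hPH p.2 (hS h)) s hs
    rw [mul_one] at this
    exact_mod_cast this
  have a2 : ((b : ℝ) + 1) * ∑ t : Fin b → H, ∑ h : H, (cnt (fun _ _ => True) x (smp t) h : ℝ) ≤
      2 ^ (D0 d + 1) * Ym d b * (H.card : ℝ) ^ (b + 1) := by
    have := clarkson_geo (d := d) (fun _ _ => True) x H b (Ym d b) fun S hS hc s hs =>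
      card_act_Ym hc s fun c h => (hs c h).1
    exact_mod_cast this
  have e : ∑ t : Fin b → H, ∑ q : P × H, bad b x (smp t) q.1 q.2 =
      (∑ p : P, ((∑ t : Fin b → H, ∑ h : H,
        (cnt (fun x c => InC (vx x) c (vx x (Sum.inl (p : ι)))) x (smp t) h : ℝ)) +
        (∑ t : Fin b → H, ∑ h : H, (cnt (fun _ _ => True) x (smp t) h : ℝ)) / Ym d b) / 2) := by
    simp_rw [Fintype.sum_prod_type]
    rw [Finset.sum_comm]
    refine Finset.sum_congr rfl fun p _ => ?_
    simp only [bad, ← Finset.sum_div, Finset.sum_add_distrib]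
  rw [e]
  have a3 : ∀ p ∈ (Finset.univ : Finset P), ((∑ t : Fin b → H, ∑ h : H,
        (cnt (fun x c => InC (vx x) c (vx x (Sum.inl (p : ι)))) x (smp t) h : ℝ)) +
        (∑ t : Fin b → H, ∑ h : H, (cnt (fun _ _ => True) x (smp t) h : ℝ)) / Ym d b) / 2 ≤
      tht d b * (H.card : ℝ) ^ (b + 1) := by
    intro p _
    have hb : (0 : ℝ) < b + 1 := by positivity
    have b1 : (∑ t : Fin b → H, ∑ h : H,
        (cnt (fun x c => InC (vx x) c (vx x (Sum.inl (p : ι)))) x (smp t) h : ℝ)) ≤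
        tht d b * (H.card : ℝ) ^ (b + 1) := by
      rw [tht, div_mul_eq_mul_div, le_div_iff₀ hb, mul_comm]
      exact a1 p
    have b2 : (∑ t : Fin b → H, ∑ h : H, (cnt (fun _ _ => True) x (smp t) h : ℝ)) / Ym d b ≤
        tht d b * (H.card : ℝ) ^ (b + 1) := by
      rw [tht, div_mul_eq_mul_div, le_div_iff₀ hb, div_mul_eq_mul_div, div_le_iff₀ hY, mul_comm]
      refine a2.trans (le_of_eq (by ring))
    linarith
  refine (Finset.sum_le_sum a3).trans (le_of_eq ?_)
  rw [Finset.sum_const, Finset.card_univ, nsmul_eq_mul, Fintype.card_prod, Fintype.card_fun, Fintype.card_fin,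
    Fintype.card_coe, Fintype.card_coe]
  push_cast
  ring

/-- The badness of a pair is determined once the sample is known and both objects are located. -/
lemma bad_congr {B : Finset (Var d ι → ℝ)} {b : ℕ} {S : Finset ι} (hN : KN B (RS S)) {p h : ι}
    (hp : Loc B (RS S) p) (hh : Loc B (RS S) h) {x x' : Var d ι → ℝ} (hx : x ∈ B) (hx' : x' ∈ B) :
    bad b x S p h = bad b x' S p h := by
  classical
  have h1 : ∀ φ : (Var d ι → ℝ) → Code d (Item d ι) → Prop,
      (∀ x ∈ B, ∀ x' ∈ B, ∀ c, Act (vx x) (RS S) c → φ x c → φ x' c) → cnt φ x S h = cnt φ x' S h := by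
    intro φ hφ
    have key : ∀ x ∈ B, ∀ x' ∈ B, ∀ c, (Act (vx x) (RS S) c ∧ φ x c) ∧ Crosses (vx x) c (vx x (Sum.inl h)) →
        (Act (vx x') (RS S) c ∧ φ x' c) ∧ Crosses (vx x') c (vx x' (Sum.inl h)) :=
      fun x hx x' hx' c hc => ⟨⟨hN.act (RS_E S) hx hx' hc.1.1, hφ x hx x' hx' c hc.1.1 hc.1.2⟩,
        hh.crosses hx hx' hc.1.1 hc.2⟩
    unfold cnt
    congr 1
    exact Finset.filter_congr fun c _ => ⟨key x hx x' hx' c, key x' hx' x hx c⟩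
  unfold bad
  rw [h1 _ fun x hx x' hx' c hc hi => hp.inC hN hx hx' hc hi, h1 _ fun _ _ _ _ _ _ _ => trivial]

variable {K : ℝ}

/-- The cost bound for making a sample known. -/
def brt (d b : ℕ) : ℕ := bruteB d (b + (d + 1)) + 1

lemma bruteB_mono (d : ℕ) : Monotone (bruteB d) := fun m m' h => by
  unfold bruteB
  exact Nat.mul_le_mul (clB_mono d (wfB_mono d h)) (clB_mono d (clB_mono d (wfB_mono d h)))

/-- The cost of making a sample known and locating all objects of `O`. -/
lemma cost_known {b : ℕ} (hKR : ((2 * (d + 1) : ℕ) : ℝ) * (optB d (clB d (wfB d (b + (d + 1)))) : ℕ) ≤ K)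
    {S : Finset ι} (hS : S.card ≤ b) (O : Finset ι) (A : Finset (Var d ι → ℝ)) :
    Cost (sgQ (d := d) (ι := ι)) K (fun B => KN B (RS S) ∧ ∀ o ∈ O, Loc B (RS S) o) A
      (brt d b + 2 * (d + 1) * O.card) := by
  have hK : 0 ≤ K := le_trans (by positivity) hKR
  have hc : (RS (d := d) S).card ≤ b + (d + 1) := by rw [card_RS]; omega
  have h1 := cost_brute hK A (RS (d := d) S)
  have := h1.bind (P' := fun B => KN B (RS S) ∧ ∀ o ∈ O, Loc B (RS S) o) fun B _ hB =>
    (Cost.all (sg := sgQ (d := d) (ι := ι)) (K := K) (A := B) O (P := fun o B => Loc B (RS S) o)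
      (c := fun _ => ((2 * (d + 1) : ℕ) : ℝ)) (fun o _ => hered_Loc _ o)
      fun o _ B' hB' => cost_locate (RS_E S) (le_trans (by
        gcongr; exact optB_mono d (clB_mono d (wfB_mono d hc))) hKR) B' (hB.mono hB') o).imp
      fun B' hB' h => ⟨hB.mono hB', h⟩
  refine this.of_le ?_
  rw [Finset.sum_const, nsmul_eq_mul]
  have : ((bruteB d (RS (d := d) S).card : ℕ) : ℝ) ≤ brt d b := by
    exact_mod_cast (bruteB_mono d hc).trans (Nat.le_succ _)
  push_cast at this ⊢
  linarith

/-- Signs of pairs whose hyperplane misses the cone of the point are determined. -/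
lemma kp_of_not_crosses {B : Finset (Var d ι → ℝ)} {S : Finset ι} (hN : KN B (RS S)) {p h : ι}
    (hp : Loc B (RS S) p) (hh : Loc B (RS S) h) {x : Var d ι → ℝ} (hx : x ∈ B) {c : Code d (Item d ι)}
    (hc : Act (vx x) (RS S) c) (hi : InC (vx x) c (vx x (Sum.inl p)))
    (hn : ¬ Crosses (vx x) c (vx x (Sum.inl h))) : KP B (vP (Sum.inl p) ⬝ᵥ vP (Sum.inl h)) := by
  have key : ∀ x' ∈ B, SignType.sign (eval x (vP (Sum.inl p) ⬝ᵥ vP (Sum.inl h))) =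
      SignType.sign (eval x' (vP (Sum.inl p) ⬝ᵥ vP (Sum.inl h))) := by
    intro x' hx'
    have hc' := hN.act (RS_E S) hx hx' hc
    have hi' := hp.inC hN hx hx' hc hi
    have hn' : ¬ Crosses (vx x') c (vx x' (Sum.inl h)) := fun h' => hn (hh.crosses hx' hx hc' h')
    obtain ⟨a1, a2⟩ := sign_of_not_crosses hc.dual hi hn
    obtain ⟨b1, b2⟩ := sign_of_not_crosses hc'.dual hi' hn'
    have e : ∀ x : Var d ι → ℝ, eval x (vP (Sum.inl p) ⬝ᵥ vP (Sum.inl h)) =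
        vx x (Sum.inl h) ⬝ᵥ vx x (Sum.inl p) := fun x => by
      rw [vx, vx, evv_dot, dotProduct_comm]
    rw [e, e]
    have c1 : (0 < vx x (Sum.inl h) ⬝ᵥ vx x (Sum.inl p)) ↔ 0 < vx x' (Sum.inl h) ⬝ᵥ vx x' (Sum.inl p) := by
      rw [a1, b1]
      exact exists_congr fun j => pos_congr (hh.dot_oc hx hx' hc j)
    have c2 : (vx x (Sum.inl h) ⬝ᵥ vx x (Sum.inl p) < 0) ↔ vx x' (Sum.inl h) ⬝ᵥ vx x' (Sum.inl p) < 0 := by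
      rw [a2, b2]
      exact exists_congr fun j => neg_congr (hh.dot_oc hx hx' hc j)
    rcases lt_trichotomy (vx x (Sum.inl h) ⬝ᵥ vx x (Sum.inl p)) 0 with h0 | h0 | h0
    · rw [sign_neg h0, sign_neg (c2.1 h0)]
    · have : vx x' (Sum.inl h) ⬝ᵥ vx x' (Sum.inl p) = 0 := by
        rcases lt_trichotomy (vx x' (Sum.inl h) ⬝ᵥ vx x' (Sum.inl p)) 0 with h1 | h1 | h1
        · exact absurd (c2.2 h1) (by rw [h0]; exact lt_irrefl _)
        · exact h1
        · exact absurd (c1.2 h1) (by rw [h0]; exact lt_irrefl _)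
      rw [h0, this]
    · rw [sign_pos h0, sign_pos (c1.1 h0)]
  intro y hy z hz
  rw [← key y hy, ← key z hz]

end Step
end Hopcroft

/-! ### Splitting along a good sample -/

namespace Hopcroft
open Matrix MvPolynomial

section Step
variable {d : ℕ} {ι : Type} [Fintype ι] {K : ℝ}

lemma sum_subtype_prod (P H : Finset ι) (f : ι → ι → ℝ) :
    ∑ q : P × H, f q.1 q.2 = ∑ p ∈ P, ∑ h ∈ H, f p h := by
  rw [Fintype.sum_prod_type, ← Finset.sum_coe_sort P]
  exact Finset.sum_congr rfl fun p _ => Finset.sum_coe_sort H fun h => f p h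

lemma double_count {α Γ : Type*} (C : Finset Γ) (P H : Finset α) (f g : α → Γ → Prop)
    [∀ a, DecidablePred (f a)] [∀ a, DecidablePred (g a)] [∀ c, DecidablePred fun a => f a c]
    [∀ c, DecidablePred fun a => g a c] :
    ∑ c ∈ C, (P.filter fun p => f p c).card * (H.filter fun h => g h c).card =
      ∑ p ∈ P, ∑ h ∈ H, (C.filter fun c => f p c ∧ g h c).card := by
  simp_rw [Finset.card_filter, Finset.sum_mul_sum]
  rw [Finset.sum_comm]
  refine Finset.sum_congr rfl fun p _ => ?_
  rw [Finset.sum_comm]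
  refine Finset.sum_congr rfl fun h _ => Finset.sum_congr rfl fun c _ => ?_
  by_cases h1 : f p c <;> by_cases h2 : g h c <;> simp [h1, h2]

lemma double_count_one {α Γ : Type*} (C : Finset Γ) (H : Finset α) (g : α → Γ → Prop)
    [∀ a, DecidablePred (g a)] [∀ c, DecidablePred fun a => g a c] :
    ∑ c ∈ C, (H.filter fun h => g h c).card = ∑ h ∈ H, (C.filter fun c => g h c).card := by
  simp_rw [Finset.card_filter]
  exact Finset.sum_comm

lemma cnt_eq (φ : (Var d ι → ℝ) → Code d (Item d ι) → Prop) (x : Var d ι → ℝ) (S : Finset ι) (h : ι)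
    (C : Finset (Code d (Item d ι))) (hC : ∀ c, c ∈ C ↔ Act (vx x) (RS S) c)
    [DecidablePred fun c => φ x c ∧ Crosses (vx x) c (vx x (Sum.inl h))] :
    (C.filter fun c => φ x c ∧ Crosses (vx x) c (vx x (Sum.inl h))).card = cnt φ x S h := by
  classical
  unfold cnt
  congr 1
  ext c
  simp only [Finset.mem_filter, hC, Finset.mem_univ, true_and, and_assoc]

lemma cast_sum_one {α Γ : Type*} {C : Finset Γ} {H : Finset α} {u : Γ → ℕ} {w : α → ℕ}
    (h : ∑ c ∈ C, u c = ∑ a ∈ H, w a) : ∑ c ∈ C, (u c : ℝ) = ∑ a ∈ H, (w a : ℝ) := by exact_mod_cast h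

lemma cast_sum_two {α Γ : Type*} {C : Finset Γ} {P H : Finset α} {u v : Γ → ℕ} {w : α → α → ℕ}
    (h : ∑ c ∈ C, u c * v c = ∑ p ∈ P, ∑ a ∈ H, w p a) :
    ∑ c ∈ C, (u c : ℝ) * v c = ∑ p ∈ P, ∑ a ∈ H, (w p a : ℝ) := by exact_mod_cast h

/-- Small total badness bounds both the number of crossings `u` and the number `w` of pairs
left to the subproblems. -/
lemma split_bad {p h Y θ u w : ℝ} (hp : 0 < p) (hY : 0 < Y) (hu : 0 ≤ u) (hw : 0 ≤ w)
    (hb : (w + p * u / Y) / 2 ≤ p * h * θ) : u ≤ 2 * θ * Y * h ∧ w ≤ 2 * θ * (p * h) := by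
  rw [mul_div_assoc] at hb
  have h0 : 0 ≤ p * (u / Y) := by positivity
  refine ⟨?_, by linarith⟩
  have : p * (u / Y) ≤ p * (2 * θ * h) := by linarith
  have := le_of_mul_le_mul_left this hp
  rw [div_le_iff₀ hY] at this
  linarith

set_option maxHeartbeats 1000000 in
/-- Once a sample of small total badness is found, the problem splits into one subproblem for each active
cone: the points in the cone against the hyperplanes that cross it. -/
lemma cost_final {b : ℕ}
    (hKR : ((2 * (d + 1) : ℕ) : ℝ) * (optB d (clB d (wfB d (b + (d + 1)))) : ℕ) ≤ K)
    {α β γ δ : ℝ} (hα : 0 ≤ α) (hβ : 0 ≤ β) (hγ : 0 ≤ γ) (hδ : 0 ≤ δ) (hBd : Bd d ι K α β γ δ)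
    {P H : Finset ι} (hPH : Disjoint P H) (hP : P.Nonempty) {A : Finset (Var d ι → ℝ)} (hA : ∀ x ∈ A, Gen x)
    {S : Finset ι} (hS : S.card ≤ b) (hSH : S ⊆ H) {θ : ℝ} (hθ : 0 ≤ θ)
    (hbad : ∀ x ∈ A, ∑ q : P × H, bad b x S q.1 q.2 ≤ Fintype.card (P × H) * θ) :
    Cost (sgQ (d := d) (ι := ι)) K
      (fun B => ∀ p ∈ P, ∀ h ∈ H, KP B (vP (Sum.inl p) ⬝ᵥ vP (Sum.inl h))) A
      (brt d b + 2 * (d + 1) * (P.card + H.card) + (α * P.card + 2 * θ * Ym d b * β * H.card +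
        2 * θ * γ * (P.card * H.card) + Ym d b * δ)) := by
  classical
  have hK : 0 ≤ K := le_trans (by positivity) hKR
  have h0 := cost_known (ι := ι) hKR hS (P ∪ H) A
  rw [Finset.card_union_of_disjoint hPH] at h0
  push_cast at h0
  refine h0.bind fun B hBA ⟨hN, hL⟩ => ?_
  rcases B.eq_empty_or_nonempty with rfl | ⟨x, hxB⟩
  · refine Cost.pure (fun p _ h _ y hy => absurd hy (Finset.notMem_empty _)) ?_
    positivity
  have hx := hA x (hBA hxB)
  have hPS : ∀ p ∈ P, p ∉ S := fun p hp h => Finset.disjoint_left.1 hPH hp (hSH h)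
  set C : Finset (Code d (Item d ι)) := Finset.univ.filter fun c => Act (vx x) (RS S) c with hC
  have hCm : ∀ c, c ∈ C ↔ Act (vx x) (RS S) c := fun c => by simp [hC]
  set Pc : Code d (Item d ι) → Finset ι := fun c => P.filter fun p => InC (vx x) c (vx x (Sum.inl p)) with hPc
  set Hc : Code d (Item d ι) → Finset ι := fun c =>
    H.filter fun h => Crosses (vx x) c (vx x (Sum.inl h)) with hHc
  have hCc : C.card ≤ Ym d b := card_act_Ym (hS.trans (Nat.le_succ _)) C fun c hc => (hCm c).1 hc
  have hY : (0 : ℝ) < Ym d b := by exact_mod_cast Ym_pos d b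
  have hP0 : (0 : ℝ) < P.card := by exact_mod_cast hP.card_pos
  -- the three sums over the cones
  have s1 : ∑ c ∈ C, (Pc c).card ≤ P.card := by
    rw [hPc, double_count_one]
    refine (Finset.sum_le_card_nsmul _ _ 1 fun p hp => ?_).trans (by simp)
    refine card_cell_le hx (hPS p hp) _ fun c hc => ?_
    rw [Finset.mem_filter, hCm] at hc
    exact hc
  have s2 : ∑ c ∈ C, (Hc c).card = ∑ h ∈ H, cnt (fun _ _ => True) x S h := by
    rw [hHc, double_count_one]
    refine Finset.sum_congr rfl fun h _ => ?_
    rw [← cnt_eq (fun _ _ => True) x S h C hCm]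
    simp
  have s3 : ∑ c ∈ C, (Pc c).card * (Hc c).card =
      ∑ p ∈ P, ∑ h ∈ H, cnt (fun x c => InC (vx x) c (vx x (Sum.inl p))) x S h := by
    rw [hPc, hHc, double_count]
    exact Finset.sum_congr rfl fun p _ => Finset.sum_congr rfl fun h _ =>
      cnt_eq (fun x c => InC (vx x) c (vx x (Sum.inl p))) x S h C hCm
  have hb := hbad x (hBA hxB)
  rw [sum_subtype_prod P H fun p h => bad b x S p h] at hb
  simp only [bad, ← Finset.sum_div, Finset.sum_add_distrib, Finset.sum_const, nsmul_eq_mul, Fintype.card_prod,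
    Fintype.card_coe] at hb
  push_cast at hb
  have r2 : (∑ c ∈ C, ((Hc c).card : ℝ)) = ∑ h ∈ H, (cnt (fun _ _ => True) x S h : ℝ) :=
    cast_sum_one s2
  have r3 : (∑ c ∈ C, ((Pc c).card : ℝ) * (Hc c).card) =
      ∑ p ∈ P, ∑ h ∈ H, (cnt (fun x c => InC (vx x) c (vx x (Sum.inl p))) x S h : ℝ) :=
    cast_sum_two s3
  rw [← r2, ← r3] at hb
  have n2 : 0 ≤ ∑ c ∈ C, ((Hc c).card : ℝ) := Finset.sum_nonneg fun _ _ => Nat.cast_nonneg _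
  have n3 : 0 ≤ ∑ c ∈ C, ((Pc c).card : ℝ) * (Hc c).card :=
    Finset.sum_nonneg fun _ _ => mul_nonneg (Nat.cast_nonneg _) (Nat.cast_nonneg _)
  obtain ⟨t2, t3⟩ := split_bad hP0 hY n2 n3 hb
  have t1 : ∑ c ∈ C, ((Pc c).card : ℝ) ≤ P.card := by exact_mod_cast s1
  have t4 : (C.card : ℝ) ≤ Ym d b := by exact_mod_cast hCc
  have hall := Cost.all (sg := sgQ (d := d) (ι := ι)) (K := K) (A := B) C
    (P := fun c B => ∀ p ∈ Pc c, ∀ h ∈ Hc c, KP B (vP (Sum.inl p) ⬝ᵥ vP (Sum.inl h)))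
    (c := fun c => α * (Pc c).card + β * (Hc c).card + γ * ((Pc c).card * (Hc c).card) + δ)
    (fun c _ A B hAB h p hp q hq => (h p hp q hq).mono hAB)
    fun c _ B' hB' => hBd (Pc c) (Hc c)
      (Finset.disjoint_of_subset_left (Finset.filter_subset _ _)
        (Finset.disjoint_of_subset_right (Finset.filter_subset _ _) hPH)) B'
      fun y hy => hA y (hBA (hB' hy))
  refine (hall.imp fun B' hB' h p hp q hq => ?_).of_le ?_
  · obtain ⟨c, hc, hi⟩ := hx.exists_act (R := RS S) (o := p) (fun h => hPS p hp (inl_mem_RS.1 h)) (RS_E S)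
    by_cases hcr : Crosses (vx x) c (vx x (Sum.inl q))
    · exact h c ((hCm c).2 hc) p (Finset.mem_filter.2 ⟨hp, hi⟩) q (Finset.mem_filter.2 ⟨hq, hcr⟩)
    · exact (kp_of_not_crosses hN (hL p (Finset.mem_union_left _ hp)) (hL q (Finset.mem_union_right _ hq))
        hxB hc hi hcr).mono hB'
  · simp only [Finset.sum_add_distrib, ← Finset.mul_sum, Finset.sum_const, nsmul_eq_mul]
    have u1 := mul_le_mul_of_nonneg_left t1 hα
    have u2 := mul_le_mul_of_nonneg_left t2 hβ
    have u3 := mul_le_mul_of_nonneg_left t3 hγ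
    have u4 := mul_le_mul_of_nonneg_left t4 hδ
    generalize ∑ c ∈ C, ((Pc c).card : ℝ) = w1 at *
    generalize ∑ c ∈ C, ((Hc c).card : ℝ) = w2 at *
    generalize ∑ c ∈ C, ((Pc c).card : ℝ) * (Hc c).card = w3 at *
    linarith

end Step
end Hopcroft

/-! ### One step of the recursion -/

namespace Hopcroft
open Matrix MvPolynomial

section Step
variable {d : ℕ} {ι : Type} [Fintype ι] {K : ℝ}

/-- The size of the first test. -/
def s0v (d b k : ℕ) : ℕ := (k + 2) * (b + 1) * brt d b

/-- The sizes of the tests for a problem with `M` objects. -/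
def sq (d b k M i : ℕ) : ℕ := min (s0v d b k * b ^ i) (M + s0v d b k)

lemma brt_le_s0v (d b k : ℕ) : brt d b ≤ s0v d b k :=
  Nat.le_mul_of_pos_left _ (by positivity)

lemma brt_pos (d b : ℕ) : 0 < brt d b := Nat.succ_pos _

lemma s0v_pos (d b k : ℕ) : 0 < s0v d b k := (brt_pos d b).trans_le (brt_le_s0v d b k)

lemma sq_zero (d b k M : ℕ) : sq d b k M 0 = s0v d b k := by simp [sq]

lemma sq_mono {b : ℕ} (hb : 1 ≤ b) (d k M : ℕ) : Monotone (sq d b k M) := fun i j h => by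
  unfold sq
  exact min_le_min (Nat.mul_le_mul le_rfl (Nat.pow_le_pow_right hb h)) le_rfl

lemma sq_le (d b k M i : ℕ) : sq d b k M i ≤ M + s0v d b k := min_le_right _ _

lemma sq_succ {b : ℕ} (hb : 1 ≤ b) (d k M i : ℕ) : sq d b k M (i + 1) ≤ b * sq d b k M i := by
  unfold sq
  rw [mul_min_of_nonneg _ _ (Nat.zero_le b)]
  refine le_min ((min_le_left _ _).trans (le_of_eq (by ring))) ((min_le_right _ _).trans ?_)
  exact Nat.le_mul_of_pos_left _ hb

lemma sq_last {b k M : ℕ} (d : ℕ) (h : M + 1 ≤ b ^ (k + 1)) : sq d b k M (k + 1) = M + s0v d b k := by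
  refine min_eq_right ?_
  calc M + s0v d b k ≤ s0v d b k * (M + 1) := by nlinarith [s0v_pos d b k]
    _ ≤ _ := Nat.mul_le_mul le_rfl h

lemma tht_ge (d b : ℕ) : 2 / ((b : ℝ) + 1) ≤ tht d b := by
  unfold tht
  gcongr
  calc (2 : ℝ) = 2 ^ 1 := by norm_num
    _ ≤ _ := pow_le_pow_right₀ (by norm_num) (by omega)

lemma tht_s0v (d b k : ℕ) : 2 * ((k : ℝ) + 2) ≤ tht d b * s0v d b k := by
  have h1 : (1 : ℝ) ≤ brt d b := by exact_mod_cast brt_pos d b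
  have hb : (0 : ℝ) < b + 1 := by positivity
  calc 2 * ((k : ℝ) + 2) = 2 / ((b : ℝ) + 1) * (((k : ℝ) + 2) * (b + 1) * 1) := by field_simp
    _ ≤ tht d b * (((k : ℝ) + 2) * (b + 1) * brt d b) := by
      have h2 := tht_ge d b
      have h3 := (tht_pos d b).le
      gcongr
    _ = _ := by rw [s0v]; push_cast; ring

lemma cdel_log {b : ℕ} (hb : 1 ≤ b) (d k M i : ℕ) :
    tht d b * sq d b k M i / 2 ≤ -Real.log (cdel k (sq d b k M) (tht d b) (i + 1)) := by
  have hk : (0 : ℝ) < (k : ℝ) + 2 := by positivity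
  rw [cdel, Real.log_mul hk.ne' (Real.exp_pos _).ne', Real.log_exp]
  have h1 := Real.log_le_sub_one_of_pos hk
  have h2 : tht d b * s0v d b k ≤ tht d b * sq d b k M i := by
    have := sq_mono hb d k M (Nat.zero_le i)
    rw [sq_zero] at this
    have h3 : (s0v d b k : ℝ) ≤ sq d b k M i := by exact_mod_cast this
    exact mul_le_mul_of_nonneg_left h3 (tht_pos d b).le
  linarith [tht_s0v d b k]

lemma cdel_lt_one {b : ℕ} (hb : 1 ≤ b) (d k M i : ℕ) : cdel k (sq d b k M) (tht d b) i < 1 := by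
  rcases i with _ | i
  · norm_num [cdel]
  · have h1 := cdel_log hb d k M i
    have h2 := cdel_pos k (sq d b k M) (tht d b) (i + 1)
    rw [← Real.log_neg_iff h2]
    have : 0 < tht d b * sq d b k M i / 2 := by
      have h3 : 0 < sq d b k M i := by
        have := sq_mono hb d k M (Nat.zero_le i)
        rw [sq_zero] at this
        exact (s0v_pos d b k).trans_le this
      have h4 : (0 : ℝ) < sq d b k M i := by exact_mod_cast h3
      have := tht_pos d b
      positivity
    linarith

/-- The potential pays for all tests made up to and including the failed one. -/
lemma step_pay {b : ℕ} (hb : 1 ≤ b) (d k M : ℕ) (t : ℕ → ℝ)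
    (ht : ∀ j < k + 2, t j = 5 * (d + 1) * sq d b k M j) (i : ℕ) (hi : i < k + 2) :
    ∑ j ∈ Finset.range (i + 1), t j ≤
      10 * (d + 1) * b * s0v d b k * -Real.log (cdel k (sq d b k M) (tht d b) i) := by
  have hb' : (1 : ℝ) ≤ b := by exact_mod_cast hb
  rcases i with _ | i
  · rw [Finset.sum_range_one, ht 0 (by omega), sq_zero, cdel, one_div, Real.log_inv, neg_neg]
    have h2 := Real.log_two_gt_d9
    have hA : (0 : ℝ) ≤ (d + 1) * s0v d b k := by positivity
    calc 5 * ((d : ℝ) + 1) * s0v d b k = 5 * ((d + 1) * s0v d b k) := by ring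
      _ ≤ (10 * b * Real.log 2) * ((d + 1) * s0v d b k) := by
        refine mul_le_mul_of_nonneg_right ?_ hA
        nlinarith
      _ = _ := by ring
  · have h1 : ∀ j ∈ Finset.range (i + 1 + 1), t j ≤ 5 * (d + 1) * (b * sq d b k M i) := by
      intro j hj
      rw [Finset.mem_range] at hj
      rw [ht j (by omega)]
      have : sq d b k M j ≤ b * sq d b k M i :=
        (sq_mono hb d k M (by omega : j ≤ i + 1)).trans (sq_succ hb d k M i)
      have : (sq d b k M j : ℝ) ≤ b * sq d b k M i := by exact_mod_cast this
      gcongr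
    refine (Finset.sum_le_card_nsmul _ _ _ h1).trans ?_
    rw [Finset.card_range, nsmul_eq_mul]
    have h2 := cdel_log hb d k M i
    have h3 := tht_s0v d b k
    have h4 : ((i + 1 + 1 : ℕ) : ℝ) ≤ k + 2 := by exact_mod_cast hi
    calc ((i + 1 + 1 : ℕ) : ℝ) * (5 * (d + 1) * (b * sq d b k M i))
        ≤ (k + 2) * (5 * (d + 1) * (b * sq d b k M i)) := by gcongr
      _ = 5 * (d + 1) * b * sq d b k M i / 2 * (2 * (k + 2)) := by ring
      _ ≤ 5 * (d + 1) * b * sq d b k M i / 2 * (tht d b * s0v d b k) := by gcongr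
      _ ≤ 10 * (d + 1) * b * s0v d b k * (tht d b * sq d b k M i / 2) := by
        have : 0 ≤ (d + 1) * b * s0v d b k * (tht d b * sq d b k M i) := by
          have := tht_pos d b
          positivity
        linarith
      _ ≤ _ := by gcongr

lemma decide_of_congr {X : Type} {B : Finset X} {f : X → Prop} (h : ∀ x ∈ B, ∀ y ∈ B, f x → f y) :
    (∀ x ∈ B, f x) ∨ ∀ x ∈ B, ¬ f x := by
  by_cases hx : ∃ x ∈ B, f x
  · obtain ⟨x, hx, hf⟩ := hx
    exact Or.inl fun y hy => h x hx y hy hf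
  · exact Or.inr fun x hx' hf => hx ⟨x, hx', hf⟩

/-- One step of the recursion: a good sample of `b` hyperplanes is found by repeated testing, where the
failed tests are paid for by the decrease of the potential. -/
theorem bd_step {b k : ℕ} (hb : 1 ≤ b) (hk : Fintype.card ι + 1 ≤ b ^ (k + 1))
    (hKR : ((2 * (d + 1) : ℕ) : ℝ) * (optB d (clB d (wfB d (b + (d + 1)))) : ℕ) ≤ K)
    {α β γ δ : ℝ} (hα : 0 ≤ α) (hβ : 0 ≤ β) (hγ : 0 ≤ γ) (hδ : 0 ≤ δ) (hBd : Bd d ι K α β γ δ) :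
    Bd d ι (K + 10 * (d + 1) * b * s0v d b k) (α + 7 * (d + 1) * (k + 2))
      (2 * thr k (tht d b) (k + 1) * Ym d b * β + 7 * (d + 1) * (k + 2))
      (2 * thr k (tht d b) (k + 1) * γ) (Ym d b * δ + 7 * (d + 1) * (k + 2) * s0v d b k) := by
  classical
  intro P H hPH A hA
  have hθ := tht_pos d b
  have hθ' : 0 ≤ thr k (tht d b) (k + 1) := hθ.le.trans (thr_ge hθ)
  have hPHne : (P.Nonempty ∧ H.Nonempty) ∨ ∀ p ∈ P, ∀ h ∈ H, False := by
    rcases P.eq_empty_or_nonempty with rfl | hP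
    · exact Or.inr fun p hp => absurd hp (Finset.notMem_empty _)
    · rcases H.eq_empty_or_nonempty with rfl | hH
      · exact Or.inr fun p _ h hh => absurd hh (Finset.notMem_empty _)
      · exact Or.inl ⟨hP, hH⟩
  rcases hPHne with ⟨hP, hH⟩ | he
  swap
  · exact Cost.pure (fun p hp h hh => (he p hp h hh).elim) (by positivity)
  have : Nonempty P := hP.to_subtype
  have : Nonempty H := hH.to_subtype
  set M := P.card + H.card with hM
  have hMι : M ≤ Fintype.card ι := by
    rw [hM, ← Finset.card_union_of_disjoint hPH]
    exact Finset.card_le_univ _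
  set s := sq d b k M with hs
  have hsm : Monotone s := sq_mono hb d k M
  have hs0 : s 0 = s0v d b k := sq_zero d b k M
  have hsl : s (k + 1) = M + s0v d b k := sq_last d (by omega)
  have hbrt : ∀ i, (brt d b : ℝ) ≤ s i := fun i => by
    have := (brt_le_s0v d b k).trans (hs0.symm.le.trans (hsm (Nat.zero_le i)))
    exact_mod_cast this
  set F : ℝ := brt d b + 2 * (d + 1) * (P.card + H.card) + (α * P.card +
    2 * thr k (tht d b) (k + 1) * Ym d b * β * H.card +
    2 * thr k (tht d b) (k + 1) * γ * (P.card * H.card) + Ym d b * δ) with hF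
  set t : ℕ → ℝ := fun j => if j < k + 2 then 5 * (d + 1) * s j else F with ht
  have ht1 : ∀ j < k + 2, t j = 5 * (d + 1) * s j := fun j hj => if_pos hj
  have ht2 : t (k + 2) = F := if_neg (lt_irrefl _)
  have hst := Cost.staged (sg := sgQ (d := d) (ι := ι)) (K₁ := K) (K₂ := 10 * (d + 1) * b * s0v d b k)
    (by positivity) (P := fun B => ∀ p ∈ P, ∀ h ∈ H, KP B (vP (Sum.inl p) ⬝ᵥ vP (Sum.inl h))) A (m := k + 2)
    t (cdel k s (tht d b)) (fun i _ => ⟨cdel_pos _ _ _ _, cdel_lt_one hb d k M i⟩)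
    (step_pay hb d k M t ht1) ?_
  · refine hst.of_le ?_
    rw [Finset.sum_range_succ, ht2]
    have h1 : ∀ j ∈ Finset.range (k + 2), t j ≤ 5 * (d + 1) * (M + s0v d b k) := by
      intro j hj
      rw [ht1 j (Finset.mem_range.1 hj)]
      have : (s j : ℝ) ≤ M + s0v d b k := by exact_mod_cast sq_le d b k M j
      gcongr
    have h2 := Finset.sum_le_card_nsmul _ _ _ h1
    rw [Finset.card_range, nsmul_eq_mul] at h2
    have h3 : (brt d b : ℝ) ≤ s0v d b k := by exact_mod_cast brt_le_s0v d b k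
    have h4 : (M : ℝ) = P.card + H.card := by rw [hM]; push_cast; ring
    rw [hF]
    push_cast at h2
    rw [h4] at h2
    have hd0 : (0 : ℝ) ≤ d := Nat.cast_nonneg d
    have hk0 : (0 : ℝ) ≤ k := Nat.cast_nonneg k
    have hp0 : (0 : ℝ) ≤ (P.card : ℝ) + H.card := by positivity
    have hz0 : (0 : ℝ) ≤ s0v d b k := Nat.cast_nonneg _
    have h5 : (brt d b : ℝ) + 2 * (d + 1) * (P.card + H.card) ≤
        2 * (d + 1) * (k + 2) * (P.card + H.card + s0v d b k) := by
      have h6 : (1 : ℝ) ≤ k + 2 := by linarith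
      have h7 : (0 : ℝ) ≤ 2 * (d + 1) * (P.card + H.card + s0v d b k) := by positivity
      nlinarith [mul_le_mul_of_nonneg_left h6 h7]
    linarith
  · intro B hBA hBne
    obtain ⟨ω, z, hω⟩ := chain_exists (Q := P × H) (Ω := Fin b → H) B (k := k) (N := M + s0v d b k) hsm
      (by rw [hs0]; exact s0v_pos d b k) (sq_le d b k M k) hθ
      (g := fun x ω q => bad b x (smp ω) q.1 q.2) (fun x _ ω q => bad_nonneg _ _ _ _ _)
      (fun x hx ω q => bad_le_one (hA x (hBA hx)) ((card_smp ω).trans (Nat.le_succ _))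
        (fun h => Finset.disjoint_left.1 hPH q.1.2 (smp_sub ω h)) _)
      fun x hx => mean_bad (hA x (hBA hx)) hPH b
    refine ⟨fun i x => passP k (M + s0v d b k) s (tht d b) (fun q : P × H => bad b x (smp ω) q.1 q.2) z i,
      fun i hi B' hB' => ?_, hω, fun B' hB' hp => ?_⟩
    · rw [ht1 i hi]
      rcases Nat.lt_or_ge k i with hik | hik
      · have hi' : i = k + 1 := by omega
        subst hi'
        have h0 := cost_known (ι := ι) hKR (card_smp ω) (P ∪ H) B'
        rw [Finset.card_union_of_disjoint hPH, ← hM] at h0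
        refine Cost.of_le (h0.imp ?_) ?_
        · rintro B'' - ⟨hN, hL⟩
          refine decide_of_congr fun x hx y hy => ?_
          have : ∀ q : P × H, bad b x (smp ω) q.1 q.2 = bad b y (smp ω) q.1 q.2 := fun q =>
            bad_congr hN (hL _ (Finset.mem_union_left _ q.1.2)) (hL _ (Finset.mem_union_right _ q.2.2)) hx hy
          simp only [passP, this, imp_self]
        · have h1 := hbrt (k + 1)
          have h2 : (M : ℝ) ≤ s (k + 1) := by rw [hsl]; push_cast; linarith [(Nat.cast_nonneg (s0v d b k) : (0:ℝ) ≤ _)]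
          have h3 : (0 : ℝ) ≤ d + 1 := by positivity
          have h4 : (1 : ℝ) ≤ d + 1 := by linarith [(Nat.cast_nonneg d : (0 : ℝ) ≤ d)]
          have h5 : (0 : ℝ) ≤ s (k + 1) := Nat.cast_nonneg _
          nlinarith [mul_le_mul_of_nonneg_left h2 h3, mul_le_mul_of_nonneg_right h4 h5]
      · set O : Finset ι := (Fm (M + s0v d b k) (s i)).image (fun j => ((z j).1 : ι)) ∪
          (Fm (M + s0v d b k) (s i)).image (fun j => ((z j).2 : ι)) with hO
        have hOc : O.card ≤ 2 * s i := by
          have hc := card_Fm (sq_le d b k M i)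
          refine (Finset.card_union_le _ _).trans ?_
          have h1 := Finset.card_image_le (s := Fm (M + s0v d b k) (s i)) (f := fun j => ((z j).1 : ι))
          have h2 := Finset.card_image_le (s := Fm (M + s0v d b k) (s i)) (f := fun j => ((z j).2 : ι))
          rw [hs] at h1 h2 ⊢
          omega
        have h0 := cost_known (ι := ι) hKR (card_smp ω) O B'
        refine Cost.of_le (h0.imp ?_) ?_
        · rintro B'' - ⟨hN, hL⟩
          refine decide_of_congr fun x hx y hy => ?_
          have : ∀ j ∈ Fm (M + s0v d b k) (s i), bad b x (smp ω) (z j).1 (z j).2 =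
              bad b y (smp ω) (z j).1 (z j).2 := fun j hj =>
            bad_congr hN (hL _ (Finset.mem_union_left _ (Finset.mem_image_of_mem _ hj)))
              (hL _ (Finset.mem_union_right _ (Finset.mem_image_of_mem _ hj))) hx hy
          simp only [passP, if_pos hik]
          rw [Finset.sum_congr rfl this]
          exact id
        · have h1 := hbrt i
          have h2 : (O.card : ℝ) ≤ 2 * s i := by exact_mod_cast hOc
          have h3 : (0 : ℝ) ≤ d + 1 := by positivity
          have h4 : (1 : ℝ) ≤ d + 1 := by linarith [(Nat.cast_nonneg d : (0 : ℝ) ≤ d)]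
          have h5 : (0 : ℝ) ≤ s i := Nat.cast_nonneg _
          nlinarith [mul_le_mul_of_nonneg_left h2 h3, mul_le_mul_of_nonneg_right h4 h5]
    · rw [ht2]
      refine cost_final hKR hα hβ hγ hδ hBd hPH hP (fun x hx => hA x (hBA (hB' hx))) (card_smp ω) (smp_sub ω)
        hθ' fun x hx => ?_
      have := hp x hx (k + 1) (by omega)
      simpa only [passP, if_neg (show ¬ k + 1 ≤ k by omega)] using this

end Step
end Hopcroft

/-! ### Iteration of the recursion -/

namespace Hopcroft
open Matrix MvPolynomial

section Recursion
variable {d : ℕ} {ι : Type} [Fintype ι] {K : ℝ}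

lemma PB.optB {f : ℕ → ℕ} (hf : PB f) (d : ℕ) : PB fun m => optB d (f m) :=
  ((hf.pow d).pow (d + 1)).mul (PB.const _)

lemma PB.brt (d : ℕ) : PB fun b => brt d b := by
  have h : PB fun b => Hopcroft.wfB d (b + (d + 1)) := (PB.id.add (PB.const (d + 1))).wfB d
  exact (((h.clB d).mul ((h.clB d).clB d))).add (PB.const 1)

lemma Bd.mono_K {K₁ K₂ α β γ δ : ℝ} (hK : K₁ ≤ K₂) (h : Bd d ι K₁ α β γ δ) : Bd d ι K₂ α β γ δ :=
  fun P H hPH A hA => (h P H hPH A hA).mono_K hK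

lemma thr_eq (d b k : ℕ) : 2 * thr k (tht d b) (k + 1) =
    (4 * (k + 2) * 16 ^ (k + 1) * 2 ^ (D0 d + 1)) / ((b : ℝ) + 1) := by
  unfold thr tht
  ring

lemma Ym_le {b : ℕ} (hb : 2 ≤ b) (d : ℕ) :
    (Ym d b : ℝ) ≤ ((d + 3) ^ d * 3 ^ (d + 1) * 3 ^ d : ℝ) * b ^ d := by
  have h : Ym d b ≤ ((d + 3) * b) ^ d * 3 ^ (d + 1) * 3 ^ d := by
    unfold Ym
    gcongr
    nlinarith
  calc (Ym d b : ℝ) ≤ (((d + 3) * b) ^ d * 3 ^ (d + 1) * 3 ^ d : ℕ) := by exact_mod_cast h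
    _ = _ := by push_cast; rw [mul_pow]; ring

/-- The constants of one step, with the dependence on the sample size `b` made explicit. -/
lemma step_const (hd : 1 ≤ d) : ∃ e0 : ℕ, ∀ k : ℕ, ∃ C : ℝ, 1 ≤ C ∧ ∀ b : ℕ, 2 ≤ b →
    2 * thr k (tht d b) (k + 1) * Ym d b ≤ C * (b : ℝ) ^ (d - 1) ∧
    2 * thr k (tht d b) (k + 1) ≤ C / b ∧ (Ym d b : ℝ) ≤ C * (b : ℝ) ^ d ∧
    7 * ((d : ℝ) + 1) * (k + 2) ≤ C ∧ 7 * ((d : ℝ) + 1) * (k + 2) * s0v d b k ≤ C * (b : ℝ) ^ e0 ∧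
    10 * ((d : ℝ) + 1) * b * s0v d b k ≤ C * (b : ℝ) ^ e0 := by
  obtain ⟨e0, he0⟩ : PB fun b => b * (b + 1) * brt d b :=
    (PB.id.mul (PB.id.add (PB.const 1))).mul (PB.brt d)
  refine ⟨e0, fun k => ?_⟩
  set c1 : ℝ := 4 * (k + 2) * 16 ^ (k + 1) * 2 ^ (D0 d + 1) with hc1
  set y : ℝ := (d + 3) ^ d * 3 ^ (d + 1) * 3 ^ d with hy
  set c2 : ℝ := 10 * (d + 1) * (k + 2) * (k + 2) with hc2
  have hk0 : (0 : ℝ) ≤ k := Nat.cast_nonneg k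
  have hd0 : (0 : ℝ) ≤ d := Nat.cast_nonneg d
  have h16 : (1 : ℝ) ≤ 16 ^ (k + 1) := one_le_pow₀ (by norm_num)
  have h2 : (1 : ℝ) ≤ 2 ^ (D0 d + 1) := one_le_pow₀ (by norm_num)
  have hc1' : 1 ≤ c1 := by
    have h3 : (1 : ℝ) ≤ 4 * (k + 2) := by linarith
    exact one_le_mul_of_one_le_of_one_le (one_le_mul_of_one_le_of_one_le h3 h16) h2
  have hy' : 1 ≤ y := by
    have h3 : (1 : ℝ) ≤ d + 3 := by linarith
    exact one_le_mul_of_one_le_of_one_le (one_le_mul_of_one_le_of_one_le (one_le_pow₀ h3)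
      (one_le_pow₀ (by norm_num))) (one_le_pow₀ (by norm_num))
  have hc2' : 0 ≤ c2 := by positivity
  have hcy : 1 ≤ c1 * y := one_le_mul_of_one_le_of_one_le hc1' hy'
  refine ⟨c2 + c1 * y, by linarith, fun b hb => ?_⟩
  have hb0 : (0 : ℝ) < b := by exact_mod_cast (by omega : 0 < b)
  have hth : 2 * thr k (tht d b) (k + 1) ≤ c1 / b := by
    rw [thr_eq, ← hc1]
    gcongr
    linarith
  have hth0 : 0 ≤ 2 * thr k (tht d b) (k + 1) := by rw [thr_eq]; positivity
  have hYm := Ym_le hb d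
  have hs : b * (s0v d b k : ℝ) ≤ (k + 2) * (b : ℝ) ^ e0 := by
    have h3 : ((b * (b + 1) * brt d b : ℕ) : ℝ) ≤ (b ^ e0 : ℕ) := by exact_mod_cast he0 b hb
    push_cast at h3
    have h4 : (s0v d b k : ℝ) = (k + 2) * (b + 1) * brt d b := by unfold s0v; push_cast; ring
    rw [h4]
    calc (b : ℝ) * ((k + 2) * (b + 1) * brt d b) = (k + 2) * (b * (b + 1) * brt d b) := by ring
      _ ≤ _ := by gcongr
  have hbe : (0 : ℝ) ≤ (b : ℝ) ^ e0 := by positivity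
  refine ⟨?_, ?_, ?_, ?_, ?_, ?_⟩
  · calc 2 * thr k (tht d b) (k + 1) * Ym d b ≤ c1 / b * (y * b ^ d) := by gcongr
      _ = c1 * y * (b : ℝ) ^ (d - 1) := by
        obtain ⟨d', rfl⟩ : ∃ d', d = d' + 1 := ⟨d - 1, by omega⟩
        rw [pow_succ, Nat.add_sub_cancel]
        field_simp
      _ ≤ _ := by gcongr; linarith
  · refine hth.trans ?_
    gcongr
    nlinarith
  · refine hYm.trans ?_
    gcongr
    nlinarith
  · rw [hc2]
    nlinarith [mul_nonneg hd0 hk0, mul_nonneg (mul_nonneg hd0 hk0) hk0, mul_nonneg hk0 hk0]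
  · have h5 : (s0v d b k : ℝ) ≤ b * s0v d b k := by
      have : (1 : ℝ) ≤ b := by exact_mod_cast (by omega : 1 ≤ b)
      nlinarith [(Nat.cast_nonneg (s0v d b k) : (0 : ℝ) ≤ _)]
    calc 7 * ((d : ℝ) + 1) * (k + 2) * s0v d b k ≤ 7 * (d + 1) * (k + 2) * ((k + 2) * (b : ℝ) ^ e0) := by
          gcongr; exact h5.trans hs
      _ = (7 * (d + 1) * (k + 2) * (k + 2)) * (b : ℝ) ^ e0 := by ring
      _ ≤ _ := by
        gcongr
        have : 7 * ((d : ℝ) + 1) * (k + 2) * (k + 2) ≤ c2 := by rw [hc2]; gcongr; norm_num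
        linarith
  · calc 10 * ((d : ℝ) + 1) * b * s0v d b k = 10 * (d + 1) * (b * s0v d b k) := by ring
      _ ≤ 10 * (d + 1) * ((k + 2) * (b : ℝ) ^ e0) := by gcongr
      _ = 10 * (d + 1) * (k + 2) * 1 * (b : ℝ) ^ e0 := by ring
      _ ≤ c2 * (b : ℝ) ^ e0 := by rw [hc2]; gcongr; linarith
      _ ≤ _ := by gcongr; linarith

/-- Iteration of `bd_step`. -/
lemma bd_iter {b k e0 : ℕ} (hb : 2 ≤ b) (hk : Fintype.card ι + 1 ≤ b ^ (k + 1))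
    (hKR : ((2 * (d + 1) : ℕ) : ℝ) * (optB d (clB d (wfB d (b + (d + 1)))) : ℕ) ≤ K)
    {C : ℝ} (hC : 1 ≤ C) (h1 : 2 * thr k (tht d b) (k + 1) * Ym d b ≤ C * (b : ℝ) ^ (d - 1))
    (h2 : 2 * thr k (tht d b) (k + 1) ≤ C / b) (h3 : (Ym d b : ℝ) ≤ C * (b : ℝ) ^ d)
    (h4 : 7 * ((d : ℝ) + 1) * (k + 2) ≤ C) (h5 : 7 * ((d : ℝ) + 1) * (k + 2) * s0v d b k ≤ C * (b : ℝ) ^ e0)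
    (h6 : 10 * ((d : ℝ) + 1) * b * s0v d b k ≤ C * (b : ℝ) ^ e0)
    {α β γ δ : ℝ} (hα : 0 ≤ α) (hβ : 0 ≤ β) (hγ : 0 ≤ γ) (hδ : 0 ≤ δ) (hBd : Bd d ι K α β γ δ) (j : ℕ) :
    Bd d ι (K + j * (C * (b : ℝ) ^ e0)) (α + j * C) ((2 * C * (b : ℝ) ^ (d - 1)) ^ j * (β + 1))
      ((C / b) ^ j * γ) ((2 * C * (b : ℝ) ^ d) ^ j * (δ + (b : ℝ) ^ e0)) := by
  have hb0 : (1 : ℝ) ≤ b := by exact_mod_cast (by omega : 1 ≤ b)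
  have hpd : (1 : ℝ) ≤ (b : ℝ) ^ (d - 1) := one_le_pow₀ hb0
  have hpd' : (1 : ℝ) ≤ (b : ℝ) ^ d := one_le_pow₀ hb0
  have hpe : (1 : ℝ) ≤ (b : ℝ) ^ e0 := one_le_pow₀ hb0
  -- the recurrences close up with the subtracted terms `1` and `b ^ e0`
  suffices h : Bd d ι (K + j * (C * (b : ℝ) ^ e0)) (α + j * C)
      ((2 * C * (b : ℝ) ^ (d - 1)) ^ j * (β + 1) - 1)
      ((C / b) ^ j * γ) ((2 * C * (b : ℝ) ^ d) ^ j * (δ + (b : ℝ) ^ e0) - (b : ℝ) ^ e0) from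
    h.of_le le_rfl (by linarith) le_rfl (by linarith)
  induction j with
  | zero => simpa using hBd
  | succ j ih =>
    set u := (2 * C * (b : ℝ) ^ (d - 1)) ^ j * (β + 1) with hu
    set w := (2 * C * (b : ℝ) ^ d) ^ j * (δ + (b : ℝ) ^ e0) with hw
    have g1 : (1 : ℝ) ≤ 2 * C * (b : ℝ) ^ (d - 1) := by nlinarith
    have g2 : (1 : ℝ) ≤ 2 * C * (b : ℝ) ^ d := by nlinarith
    have hu1 : 1 ≤ u := one_le_mul_of_one_le_of_one_le (one_le_pow₀ g1) (by linarith)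
    have hw1 : (b : ℝ) ^ e0 ≤ w := by
      have : 1 * (b : ℝ) ^ e0 ≤ w := by
        rw [hw]
        exact mul_le_mul (one_le_pow₀ g2) (by linarith) (by linarith) (by positivity)
      linarith
    have hstep := bd_step (by omega) hk (K := K + j * (C * (b : ℝ) ^ e0))
      (hKR.trans (le_add_of_nonneg_right (by positivity))) (by positivity)
      (by linarith : 0 ≤ u - 1) (by positivity) (by linarith : 0 ≤ w - (b : ℝ) ^ e0) ih
    refine (hstep.mono_K ?_).of_le ?_ ?_ ?_ ?_
    · push_cast; linarith
    · push_cast; linarith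
    · have a1 := mul_le_mul_of_nonneg_right h1 (by linarith : 0 ≤ u - 1)
      rw [pow_succ]
      have e : (2 * C * (b : ℝ) ^ (d - 1)) ^ j * (2 * C * (b : ℝ) ^ (d - 1)) * (β + 1) =
          2 * C * (b : ℝ) ^ (d - 1) * u := by rw [hu]; ring
      rw [e]
      have a2 : C ≤ C * (b : ℝ) ^ (d - 1) := le_mul_of_one_le_right (by linarith) hpd
      have a3 : C * (b : ℝ) ^ (d - 1) ≤ C * (b : ℝ) ^ (d - 1) * u :=
        le_mul_of_one_le_right (by linarith) hu1
      nlinarith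
    · rw [pow_succ]
      calc 2 * thr k (tht d b) (k + 1) * ((C / b) ^ j * γ) ≤ C / b * ((C / b) ^ j * γ) := by
            gcongr
        _ = _ := by ring
    · have a1 := mul_le_mul_of_nonneg_right h3 (by linarith : 0 ≤ w - (b : ℝ) ^ e0)
      rw [pow_succ]
      have e : (2 * C * (b : ℝ) ^ d) ^ j * (2 * C * (b : ℝ) ^ d) * (δ + (b : ℝ) ^ e0) =
          2 * C * (b : ℝ) ^ d * w := by rw [hw]; ring
      rw [e]
      have a2 : C ≤ C * (b : ℝ) ^ d := le_mul_of_one_le_right (by linarith) hpd'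
      have a3 : C * (b : ℝ) ^ d * (b : ℝ) ^ e0 ≤ C * (b : ℝ) ^ d * w :=
        mul_le_mul_of_nonneg_left hw1 (by linarith)
      have a4 : C * (b : ℝ) ^ e0 ≤ C * (b : ℝ) ^ d * (b : ℝ) ^ e0 := by gcongr
      have a5 : (b : ℝ) ^ e0 ≤ C * (b : ℝ) ^ e0 := le_mul_of_one_le_left (by linarith) hC
      linarith

/-- The bounds after `2 * L` steps: a group of `b ^ e0` points is treated directly, `L - e0` steps sample
hyperplanes, and after exchanging the roles of points and hyperplanes `L` more steps are made. -/
theorem bd_main (hd : 2 ≤ d) : ∃ e2 Lmin : ℕ, ∀ L, Lmin ≤ L → ∀ k : ℕ, ∃ c : ℝ, 0 ≤ c ∧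
    ∀ (ι : Type) [Fintype ι] (b : ℕ), 2 ≤ b → Fintype.card ι + 1 ≤ b ^ (k + 1) →
      Bd d ι (c * (b : ℝ) ^ e2) (c * ((b : ℝ) ^ L) ^ (d - 1)) (c * ((b : ℝ) ^ L) ^ (d - 1))
        (c / ((b : ℝ) ^ L) ^ 2) (c * ((b : ℝ) ^ L) ^ (2 * d)) := by
  obtain ⟨e0, he0⟩ := step_const (d := d) (by omega)
  obtain ⟨e1, he1⟩ : PB fun b => 2 * (d + 1) * optB d (clB d (wfB d (b + (d + 1)))) +
      2 * (d + 1) * optB d (b ^ e0 + (d + 1)) :=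
    ((PB.const _).mul ((((PB.id.add (PB.const (d + 1))).wfB d).clB d).optB d)).add
      ((PB.const _).mul (((PB.id.pow e0).add (PB.const (d + 1))).optB d))
  refine ⟨e1 + e0, e0, fun L hL k => ?_⟩
  obtain ⟨C, hC, hCb⟩ := he0 k
  set D2 : ℝ := ((2 * (d + 1) : ℕ) : ℝ) with hD2
  have hD2' : 0 ≤ D2 := Nat.cast_nonneg _
  set c3 : ℝ := D2 * (d + 2) ^ (d - 1) with hc3
  have hc3' : 1 ≤ c3 := by
    have h1 : (1 : ℝ) ≤ D2 := by rw [hD2]; exact_mod_cast (by omega : 1 ≤ 2 * (d + 1))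
    exact one_le_mul_of_one_le_of_one_le h1 (one_le_pow₀ (by linarith [(Nat.cast_nonneg d : (0 : ℝ) ≤ d)]))
  have hC0 : 0 ≤ C := by linarith
  set E : ℝ := (2 * C) ^ L with hE
  have hE0 : 1 ≤ E := one_le_pow₀ (by linarith)
  set c4 : ℝ := D2 + L * C with hc4
  set c5 : ℝ := E * (2 * c3) with hc5
  have hc4' : 0 ≤ c4 := by positivity
  have hc5' : 0 ≤ c5 := by positivity
  refine ⟨(1 + 2 * L * C) + (c5 + L * C) + E * (c4 + 1) + E * (E * D2) + E * (E + 1), by positivity, ?_⟩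
  intro ι _ b hb hk
  obtain ⟨h1, h2, h3, h4, h5, h6⟩ := hCb b hb
  have hb0 : (1 : ℝ) ≤ b := by exact_mod_cast (by omega : 1 ≤ b)
  set r : ℝ := (b : ℝ) ^ L with hr
  have hr1 : 1 ≤ r := one_le_pow₀ hb0
  have hrd : 1 ≤ r ^ (d - 1) := one_le_pow₀ hr1
  have hK0 : ((2 * (d + 1) * optB d (clB d (wfB d (b + (d + 1)))) +
      2 * (d + 1) * optB d (b ^ e0 + (d + 1)) : ℕ) : ℝ) ≤ (b : ℝ) ^ e1 := by exact_mod_cast he1 b hb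
  rw [Nat.cast_add, Nat.cast_mul, Nat.cast_mul (2 * (d + 1))] at hK0
  have hKa : ((2 * (d + 1) : ℕ) : ℝ) * (optB d (clB d (wfB d (b + (d + 1)))) : ℕ) ≤ (b : ℝ) ^ e1 :=
    le_trans (le_add_of_nonneg_right (by positivity)) hK0
  have hKb : ((2 * (d + 1) : ℕ) : ℝ) * (optB d (b ^ e0 + (d + 1)) : ℕ) ≤ (b : ℝ) ^ e1 :=
    le_trans (le_add_of_nonneg_left (by positivity)) hK0
  have hpow : ∀ {i j : ℕ}, i ≤ j → (b : ℝ) ^ i ≤ (b : ℝ) ^ j := fun h => pow_le_pow_right₀ hb0 h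
  have hCL : ∀ {x : ℝ}, 1 ≤ x → ∀ {j : ℕ}, j ≤ L → x ^ j ≤ x ^ L := fun hx _ hj => pow_le_pow_right₀ hx hj
  -- the groups of points
  have l0 : Bd d ι ((b : ℝ) ^ e1) D2 (c3 * (b : ℝ) ^ (e0 * (d - 1))) (D2 / (b : ℝ) ^ e0) 0 := by
    refine (bd_leaf (ι := ι) (by omega) (M := b ^ e0) (by positivity) hKb).swap.of_le le_rfl ?_ ?_ le_rfl
    · rw [hc3, pow_mul, mul_assoc, ← mul_pow]
      refine mul_le_mul_of_nonneg_left (pow_le_pow_left₀ (by positivity) ?_ _) hD2'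
      push_cast
      have : (1 : ℝ) ≤ (b : ℝ) ^ e0 := one_le_pow₀ hb0
      nlinarith [(Nat.cast_nonneg d : (0 : ℝ) ≤ d)]
    · rw [Nat.cast_pow]
  have l1 := bd_iter hb hk hKa hC h1 h2 h3 h4 h5 h6 hD2' (by positivity) (by positivity) le_rfl l0 (L - e0)
  have l2 : Bd d ι ((b : ℝ) ^ e1 + L * (C * (b : ℝ) ^ e0)) c4 (c5 * r ^ (d - 1)) (E * D2 / r) (E * r ^ d) := by
    have hLe : ((L - e0 : ℕ) : ℝ) ≤ L := by exact_mod_cast Nat.sub_le L e0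
    have hsplit : (b : ℝ) ^ (L - e0) * (b : ℝ) ^ e0 = r := by rw [← pow_add, Nat.sub_add_cancel hL]
    have hbe : (0 : ℝ) < (b : ℝ) ^ e0 := by positivity
    have hEL : (2 * C) ^ (L - e0) ≤ E := pow_le_pow_right₀ (by linarith) (Nat.sub_le _ _)
    refine (l1.mono_K ?_).of_le ?_ ?_ ?_ ?_
    · gcongr
    · rw [hc4]; gcongr
    · have a1 : c3 * (b : ℝ) ^ (e0 * (d - 1)) + 1 ≤ 2 * c3 * (b : ℝ) ^ (e0 * (d - 1)) := by
        have : 1 ≤ c3 * (b : ℝ) ^ (e0 * (d - 1)) := one_le_mul_of_one_le_of_one_le hc3' (one_le_pow₀ hb0)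
        linarith
      calc (2 * C * (b : ℝ) ^ (d - 1)) ^ (L - e0) * (c3 * (b : ℝ) ^ (e0 * (d - 1)) + 1)
          ≤ (2 * C * (b : ℝ) ^ (d - 1)) ^ (L - e0) * (2 * c3 * (b : ℝ) ^ (e0 * (d - 1))) := by gcongr
        _ = (2 * C) ^ (L - e0) * (2 * c3) * ((b : ℝ) ^ (L - e0) * (b : ℝ) ^ e0) ^ (d - 1) := by
          rw [mul_pow (2 * C), mul_pow ((b : ℝ) ^ (L - e0)), ← pow_mul, ← pow_mul, ← pow_mul, mul_comm (d - 1)]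
          ring
        _ ≤ _ := by
          rw [hsplit, hc5]
          gcongr
    · calc (C / b) ^ (L - e0) * (D2 / (b : ℝ) ^ e0)
          = C ^ (L - e0) * D2 / ((b : ℝ) ^ (L - e0) * (b : ℝ) ^ e0) := by
            rw [div_pow, div_mul_div_comm]
        _ ≤ _ := by
          rw [hsplit, hE]
          gcongr
          refine (hCL hC (Nat.sub_le _ _)).trans ?_
          gcongr
          linarith
    · calc (2 * C * (b : ℝ) ^ d) ^ (L - e0) * (0 + (b : ℝ) ^ e0)
          = (2 * C) ^ (L - e0) * (((b : ℝ) ^ (L - e0)) ^ d * (b : ℝ) ^ e0) := by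
            rw [mul_pow, ← pow_mul, ← pow_mul, mul_comm d]; ring
        _ ≤ (2 * C) ^ (L - e0) * (((b : ℝ) ^ (L - e0)) ^ d * ((b : ℝ) ^ e0) ^ d) := by
          gcongr
          exact le_self_pow₀ (one_le_pow₀ hb0) (by omega)
        _ ≤ _ := by
          rw [← mul_pow, hsplit]
          gcongr
  have hr0 : 0 < r := by linarith
  have l3 := bd_iter hb hk (hKa.trans (le_add_of_nonneg_right (by positivity))) hC h1 h2 h3 h4 h5 h6
    (by positivity) hc4' (by positivity) (by positivity) l2.swap L
  have hel : (b : ℝ) ^ e0 ≤ r ^ d := (hpow hL).trans (le_self_pow₀ hr1 (by omega))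
  have n1 : 0 ≤ (1 + 2 * L * C) := by positivity
  have n2 : 0 ≤ (c5 + L * C) := by positivity
  have n3 : 0 ≤ E * (c4 + 1) := by positivity
  have n4 : 0 ≤ E * (E * D2) := by positivity
  have n5 : 0 ≤ E * (E + 1) := by positivity
  refine (l3.mono_K ?_).of_le ?_ ?_ ?_ ?_
  · have a1 : (b : ℝ) ^ e1 ≤ (b : ℝ) ^ (e1 + e0) := hpow (by omega)
    have a2 : (b : ℝ) ^ e0 ≤ (b : ℝ) ^ (e1 + e0) := hpow (by omega)
    calc (b : ℝ) ^ e1 + L * (C * (b : ℝ) ^ e0) + L * (C * (b : ℝ) ^ e0)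
        ≤ (b : ℝ) ^ (e1 + e0) + L * (C * (b : ℝ) ^ (e1 + e0)) + L * (C * (b : ℝ) ^ (e1 + e0)) := by gcongr
      _ = (1 + 2 * L * C) * (b : ℝ) ^ (e1 + e0) := by ring
      _ ≤ _ := mul_le_mul_of_nonneg_right (by linarith) (by positivity)
  · calc c5 * r ^ (d - 1) + L * C ≤ c5 * r ^ (d - 1) + L * C * r ^ (d - 1) := by
          have := le_mul_of_one_le_right (by positivity : 0 ≤ L * C) hrd
          linarith
      _ = (c5 + L * C) * r ^ (d - 1) := by ring
      _ ≤ _ := mul_le_mul_of_nonneg_right (by linarith) (by positivity)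
  · calc (2 * C * (b : ℝ) ^ (d - 1)) ^ L * (c4 + 1) = E * (c4 + 1) * r ^ (d - 1) := by
          rw [mul_pow, hr, ← pow_mul, ← pow_mul, mul_comm (d - 1)]; ring
      _ ≤ _ := mul_le_mul_of_nonneg_right (by linarith) (by positivity)
  · calc (C / b) ^ L * (E * D2 / r) = C ^ L * (E * D2) / r ^ 2 := by
          rw [div_pow, div_mul_div_comm, pow_two]
      _ ≤ E * (E * D2) / r ^ 2 := by
        rw [hE]
        gcongr
        linarith
      _ ≤ _ := div_le_div_of_nonneg_right (by linarith) (by positivity)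
  · calc (2 * C * (b : ℝ) ^ d) ^ L * (E * r ^ d + (b : ℝ) ^ e0)
        ≤ (2 * C * (b : ℝ) ^ d) ^ L * (E * r ^ d + r ^ d) := by gcongr
      _ = E * (E + 1) * r ^ (2 * d) := by
        rw [mul_pow, ← pow_mul (b : ℝ), mul_comm d L, pow_mul (b : ℝ), ← hr, two_mul d, pow_add r]
        ring
      _ ≤ _ := mul_le_mul_of_nonneg_right (by linarith) (by positivity)

end Recursion
end Hopcroft

/-! ### From generic inputs to all inputs -/

namespace Hopcroft
open Matrix MvPolynomial Filter Topology

section Assembly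
variable {d : ℕ} {ι : Type} [Fintype ι]

/-- Representatives of all sign patterns of generic inputs; their number is controlled by Warren's
bound. -/
lemma exists_reps [Nonempty ι] : ∃ A : Finset (Var d ι → ℝ), (∀ x ∈ A, Gen x) ∧
    (∀ x : Var d ι → ℝ, Gen x → ∃ y ∈ A, ∀ q ∈ QQ d ι,
      SignType.sign (eval x q) = SignType.sign (eval y q)) ∧
    A.card ≤ (2 * Fintype.card (Var d ι) * (2 * ((QQ d ι).card * qdeg d) + 2)) ^
      (Fintype.card (Var d ι) + 1) := by
  classical
  let pat : (Var d ι → ℝ) → (QQ d ι → SignType) := fun x q => SignType.sign (eval x q.1)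
  let S : Finset (QQ d ι → SignType) := Finset.univ.filter fun s => ∃ x, Gen x ∧ pat x = s
  have hS : ∀ s : S, ∃ x : Var d ι → ℝ, Gen x ∧ pat x = s.1 := fun s => (Finset.mem_filter.1 s.2).2
  choose rep hrep hpat using hS
  have hA : ∀ x ∈ Finset.univ.image rep, Gen x := by
    intro x hx
    obtain ⟨s, -, rfl⟩ := Finset.mem_image.1 hx
    exact hrep s
  refine ⟨Finset.univ.image rep, hA, ?_, ?_⟩
  · intro x hx
    let s : S := ⟨pat x, Finset.mem_filter.2 ⟨Finset.mem_univ _, x, hx, rfl⟩⟩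
    refine ⟨rep s, Finset.mem_image_of_mem _ (Finset.mem_univ _), fun q hq => ?_⟩
    exact (congrFun (hpat s) ⟨q, hq⟩).symm
  · have hw := warren ((QQ d ι).filter fun q => q ≠ 0) (qdeg d)
      (fun q hq => QQ_deg q (Finset.mem_filter.1 hq).1) (Finset.univ.image rep)
      (fun x hx q hq => hA x hx q (Finset.mem_filter.1 hq).1 (Finset.mem_filter.1 hq).2) ?_
    · refine hw.trans (Nat.pow_le_pow_left ?_ _)
      have := Finset.card_filter_le (QQ d ι) fun q => q ≠ 0
      gcongr
    · intro x hx y hy hxy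
      obtain ⟨s, -, rfl⟩ := Finset.mem_image.1 hx
      obtain ⟨s', -, rfl⟩ := Finset.mem_image.1 hy
      have : s = s' := by
        apply Subtype.ext
        rw [← hpat s, ← hpat s']
        funext q
        by_cases hq : q.1 = 0
        · simp [pat, hq]
        · exact hxy q.1 (Finset.mem_filter.2 ⟨q.2, hq⟩)
      rw [this]

/-- The number of pairs (point, hyperplane) with positive inner product. -/
noncomputable def posCount (d n : ℕ) (x : Var d (Fin n ⊕ Fin n) → ℝ) : ℕ := by
  classical exact ((Finset.univ : Finset (Fin n × Fin n)).filter fun ij =>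
    0 < eval x (vP (d := d) (ι := Fin n ⊕ Fin n) (Sum.inl (Sum.inl ij.1)) ⬝ᵥ
      vP (Sum.inl (Sum.inr ij.2)))).card

lemma posCount_congr {n : ℕ} {x y : Var d (Fin n ⊕ Fin n) → ℝ}
    (h : ∀ i j : Fin n, SignType.sign (eval x (vP (d := d) (ι := Fin n ⊕ Fin n)
      (Sum.inl (Sum.inl i)) ⬝ᵥ vP (Sum.inl (Sum.inr j)))) =
      SignType.sign (eval y (vP (Sum.inl (Sum.inl i)) ⬝ᵥ vP (Sum.inl (Sum.inr j))))) :
    posCount d n x = posCount d n y := by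
  classical
  unfold posCount
  congr 1
  apply Finset.filter_congr
  intro ij _
  rw [← sign_eq_one_iff, h, sign_eq_one_iff]

lemma vdot_mem_QQ (o o' : ι) :
    vP (d := d) (Sum.inl o) ⬝ᵥ vP (Sum.inl o') ∈ QQ d ι :=
  dot_mem_QQ (N2_sub_N3 _ (N1_sub_N2 _ (item_mem_N1 (Finset.mem_univ _))))
    (N2_sub_N3 _ (N1_sub_N2 _ (item_mem_N1 (Finset.mem_univ _))))

/-- A bound `Bd` gives a query tree correct on generic inputs: the initial inputs are representatives of
the sign patterns, whose number is bounded by Warren's theorem. -/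
lemma exists_qtree {n : ℕ} (hn : 1 ≤ n) {K α β γ δ : ℝ} (hK : 0 ≤ K) (hα : 0 ≤ α) (hβ : 0 ≤ β)
    (hγ : 0 ≤ γ) (hδ : 0 ≤ δ) (hB : Bd d (Fin n ⊕ Fin n) K α β γ δ) :
    ∃ t : QTree (Qr d (Fin n ⊕ Fin n)) ℕ,
      (t.depth : ℝ) ≤ α * n + β * n + γ * (n * n) + δ + K * Real.log
        (((2 * Fintype.card (Var d (Fin n ⊕ Fin n)) *
          (2 * ((QQ d (Fin n ⊕ Fin n)).card * qdeg d) + 2) : ℕ) : ℝ) ^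
          (Fintype.card (Var d (Fin n ⊕ Fin n)) + 1)) ∧
      ∀ x, Gen x → t.eval (fun q => sgQ q x) = posCount d n x := by
  classical
  have : Nonempty (Fin n ⊕ Fin n) := ⟨Sum.inl ⟨0, hn⟩⟩
  obtain ⟨A, hA, hrep, hcard⟩ := exists_reps (d := d) (ι := Fin n ⊕ Fin n)
  have hdis : Disjoint ((Finset.univ : Finset (Fin n)).image (Sum.inl : _ → Fin n ⊕ Fin n))
      ((Finset.univ : Finset (Fin n)).image (Sum.inr : _ → Fin n ⊕ Fin n)) := by
    rw [Finset.disjoint_left]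
    intro a ha hb
    obtain ⟨i, -, rfl⟩ := Finset.mem_image.1 ha
    obtain ⟨j, -, h⟩ := Finset.mem_image.1 hb
    simp at h
  have hC := hB _ _ hdis A hA
  rw [Finset.card_image_of_injective _ Sum.inl_injective,
    Finset.card_image_of_injective _ Sum.inr_injective, Finset.card_univ, Fintype.card_fin] at hC
  have hR := RunG.bind hC (T' := fun B F => (∀ x ∈ B, ∀ y ∈ B, posCount d n x = posCount d n y) ∧ 0 ≤ F)
    (fun B _ F hF => RunG.halt ⟨fun x hx y hy => posCount_congr fun i j =>
      hF.1 _ (Finset.mem_image_of_mem _ (Finset.mem_univ _)) _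
        (Finset.mem_image_of_mem _ (Finset.mem_univ _)) x hx y hy,
      (pot_nonneg hK B).trans hF.2⟩)
  obtain ⟨t, ht1, ht2, ht3⟩ := RunG.exists_tree
    (fun B => if h : B.Nonempty then posCount d n h.choose else 0) hR
  refine ⟨t, ?_, ?_⟩
  · rcases A.eq_empty_or_nonempty with hE | hE
    · rw [ht2 hE]
      have : 0 ≤ Real.log
        (((2 * Fintype.card (Var d (Fin n ⊕ Fin n)) *
          (2 * ((QQ d (Fin n ⊕ Fin n)).card * qdeg d) + 2) : ℕ) : ℝ) ^
          (Fintype.card (Var d (Fin n ⊕ Fin n)) + 1)) := by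
        rw [← Nat.cast_pow]; exact Real.log_natCast_nonneg _
      push_cast at this ⊢
      positivity
    · refine (ht1 hE).trans ?_
      have : pot K A ≤ K * Real.log
        (((2 * Fintype.card (Var d (Fin n ⊕ Fin n)) *
          (2 * ((QQ d (Fin n ⊕ Fin n)).card * qdeg d) + 2) : ℕ) : ℝ) ^
          (Fintype.card (Var d (Fin n ⊕ Fin n)) + 1)) := by
        refine mul_le_mul_of_nonneg_left (Real.log_le_log ?_ ?_) hK
        · exact_mod_cast hE.card_pos
        · exact_mod_cast hcard
      linarith
  · intro x hx
    obtain ⟨y, hy, hxy⟩ := hrep x hx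
    have e : (fun q : Qr d (Fin n ⊕ Fin n) => sgQ q x) = fun q => sgQ q y :=
      funext fun q => hxy q.1 q.2
    obtain ⟨B, hyB, hP, hev⟩ := ht3 y hy
    have hBn : B.Nonempty := ⟨y, hyB⟩
    rw [e, hev, dif_pos hBn, hP _ hBn.choose_spec y hyB]
    exact (posCount_congr fun i j => hxy _ (vdot_mem_QQ _ _)).symm

/-- The generic variables as linear polynomials in the input: points get the last coordinate `-1`,
hyperplanes the last coordinate `b`. -/
noncomputable def baseP (d n : ℕ) : Var d (Fin n ⊕ Fin n) → MvPolynomial (Fin (d * n + (d + 1) * n)) ℝ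
  | (Sum.inl i, k) => Fin.lastCases (motive := fun _ => MvPolynomial (Fin (d * n + (d + 1) * n)) ℝ)
      (C (-1)) (fun t => X (ptIdx d n i t)) k
  | (Sum.inr j, k) => Fin.lastCases (motive := fun _ => MvPolynomial (Fin (d * n + (d + 1) * n)) ℝ)
      (X (offIdx d n j)) (fun t => X (coefIdx d n j t)) k

/-- The first-order perturbation: all offsets are increased by `ε`. -/
noncomputable def pertE (d n : ℕ) : Var d (Fin n ⊕ Fin n) → ℝ
  | (Sum.inl _, _) => 0
  | (Sum.inr _, k) => Fin.lastCases (motive := fun _ => ℝ) 1 (fun _ => 0) k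

lemma baseP_deg (n : ℕ) (s) : (baseP d n s).totalDegree ≤ 1 := by
  rcases s with ⟨i | j, k⟩
  · refine Fin.lastCases ?_ (fun t => ?_) k
    · simp [baseP, -map_neg]
    · simp [baseP]
  · refine Fin.lastCases ?_ (fun t => ?_) k
    · simp [baseP]
    · simp [baseP]

/-- For small `ε > 0` the perturbed inner product is positive exactly if the strict inequality holds for the
input: an equality becomes negative because the offset is increased. -/
lemma eventually_dot {n : ℕ} (g : Var d (Fin n ⊕ Fin n) → ℝ) (y : Fin (d * n + (d + 1) * n) → ℝ)
    (i j : Fin n) : ∀ᶠ ε in 𝓝[>] (0 : ℝ),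
      (0 < eval (pertPt (baseP d n) (pertE d n) g y ε) (vP (d := d) (ι := Fin n ⊕ Fin n)
        (Sum.inl (Sum.inl i)) ⬝ᵥ vP (Sum.inl (Sum.inr j))) ↔
      y (offIdx d n j) < ∑ t : Fin d, y (coefIdx d n j t) * y (ptIdx d n i t)) := by
  set v : ℝ := ∑ t : Fin d, y (coefIdx d n j t) * y (ptIdx d n i t) - y (offIdx d n j) with hv
  -- the value along the curve is `v + ε * (-1 + ε * R ε)` with a continuous `R`
  let R : ℝ → ℝ := fun ε => ∑ t : Fin d, (y (coefIdx d n j t) * g (Sum.inl i, t.castSucc) +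
      y (ptIdx d n i t) * g (Sum.inr j, t.castSucc) +
      g (Sum.inl i, t.castSucc) * g (Sum.inr j, t.castSucc) * ε ^ 2) +
    (- g (Sum.inr j, Fin.last d) + g (Sum.inl i, Fin.last d) * y (offIdx d n j) +
      g (Sum.inl i, Fin.last d) * ε + g (Sum.inl i, Fin.last d) * g (Sum.inr j, Fin.last d) * ε ^ 2)
  have hval : ∀ ε, eval (pertPt (baseP d n) (pertE d n) g y ε) (vP (d := d) (ι := Fin n ⊕ Fin n)
        (Sum.inl (Sum.inl i)) ⬝ᵥ vP (Sum.inl (Sum.inr j))) = v + ε * (-1 + ε * R ε) := by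
    intro ε
    simp only [dotProduct, vP, map_add, map_sum, map_mul, eval_X, Fin.sum_univ_castSucc, pertPt, baseP, pertE,
      Fin.lastCases_castSucc, Fin.lastCases_last, eval_C, R, hv]
    have : ∀ a b c : Fin d → ℝ, (∀ t, a t = b t + ε ^ 2 * c t) →
        ∑ t, a t = ∑ t, b t + ε ^ 2 * ∑ t, c t := by
      intro a b c h
      rw [Finset.mul_sum, ← Finset.sum_add_distrib]
      exact Finset.sum_congr rfl fun t _ => h t
    rw [this _ (fun t => y (coefIdx d n j t) * y (ptIdx d n i t)) (fun t =>
      y (coefIdx d n j t) * g (Sum.inl i, t.castSucc) +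
      y (ptIdx d n i t) * g (Sum.inr j, t.castSucc) +
      g (Sum.inl i, t.castSucc) * g (Sum.inr j, t.castSucc) * ε ^ 2) (fun t => by ring)]
    ring
  have hRc : Continuous R := by fun_prop
  simp only [hval]
  rcases lt_or_ge 0 v with h | h
  · have hc : Continuous fun ε : ℝ => v + ε * (-1 + ε * R ε) := by fun_prop
    have h0 : ∀ᶠ ε in 𝓝 (0 : ℝ), 0 < v + ε * (-1 + ε * R ε) :=
      hc.continuousAt.eventually (lt_mem_nhds (by simpa using h))
    filter_upwards [nhdsWithin_le_nhds h0] with ε hε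
    exact iff_of_true hε (by linarith)
  · have hc : Continuous fun ε : ℝ => -1 + ε * R ε := by fun_prop
    have h0 : ∀ᶠ ε in 𝓝 (0 : ℝ), -1 + ε * R ε < 0 :=
      hc.continuousAt.eventually (gt_mem_nhds (by simp))
    filter_upwards [nhdsWithin_le_nhds h0, self_mem_nhdsWithin] with ε hε hp
    have : ε * (-1 + ε * R ε) < 0 := mul_neg_of_pos_of_neg hp hε
    exact iff_of_false (by linarith) (by linarith)

/-- A query tree correct on generic inputs gives a decision tree correct on all inputs. -/
lemma exists_adt_posCount {n : ℕ} (t : QTree (Qr d (Fin n ⊕ Fin n)) ℕ)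
    (ht : ∀ x, Gen x → t.eval (fun q => sgQ q x) = posCount d n x) :
    ∃ T : ADT (d * n + (d + 1) * n) ℕ, T.DegLE (qdeg d) ∧ T.depth ≤ (2 * qdeg d + 1) * t.depth ∧
      ∀ x, T.eval x = ((Finset.univ : Finset (Fin n × Fin n)).filter fun ij =>
              x (offIdx d n ij.2) <
                ∑ t : Fin d, x (coefIdx d n ij.2 t) * x (ptIdx d n ij.1 t)).card := by
  classical
  obtain ⟨g, hg⟩ := exists_top_generic ((QQ d (Fin n ⊕ Fin n)).filter fun q => q ≠ 0)
    (fun q hq => (Finset.mem_filter.1 hq).2)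
  obtain ⟨T, hT1, hT2, hT3⟩ := exists_adt (baseP_deg (d := d) n) (pertE d n) g
    (poly := fun q : Qr d (Fin n ⊕ Fin n) => q.1) (fun q => QQ_deg q.1 q.2) t
  refine ⟨T, hT1, hT2, fun y => ?_⟩
  have hgen : ∀ᶠ ε in 𝓝[>] (0 : ℝ), Gen (pertPt (baseP d n) (pertE d n) g y ε) := by
    have : ∀ᶠ ε in 𝓝[>] (0 : ℝ), ∀ q ∈ (QQ d (Fin n ⊕ Fin n)).filter fun q => q ≠ 0,
        eval (pertPt (baseP d n) (pertE d n) g y ε) q ≠ 0 :=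
      (Filter.eventually_all_finset _).2 fun q hq => eventually_generic _ _ g (hg q hq) y
    exact this.mono fun ε h q hq hq0 => h q (Finset.mem_filter.2 ⟨hq, hq0⟩)
  have hdot : ∀ᶠ ε in 𝓝[>] (0 : ℝ), ∀ ij : Fin n × Fin n, _ :=
    Filter.eventually_all.2 fun ij => eventually_dot g y ij.1 ij.2
  obtain ⟨ε, h1, h2, h3⟩ := ((hT3 y).and (hgen.and hdot)).exists
  rw [h1]
  refine (ht _ h2).trans ?_
  unfold posCount
  exact congrArg _ (Finset.filter_congr fun ij _ => h3 ij)

end Assembly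
end Hopcroft

/-! ### Choice of parameters -/

namespace Hopcroft
open Matrix MvPolynomial Filter Topology

section Numerics

/-- Polynomial bound for the base of Warren's estimate with `n ≤ m` points and hyperplanes. -/
lemma exists_warren_exp (d : ℕ) : ∃ e3 : ℕ, ∀ n m : ℕ, 2 ≤ m → n ≤ m →
    2 * Fintype.card (Var d (Fin n ⊕ Fin n)) *
      (2 * ((QQ d (Fin n ⊕ Fin n)).card * qdeg d) + 2) ≤ m ^ e3 := by
  have h1 : PB fun m => m + m + (d + 1) := (PB.id.add PB.id).add (PB.const _)
  have h2 : PB fun m => (clB d (clB d (clB d (wfB d (m + m + (d + 1)))))) ^ 2 :=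
    ((((h1.wfB d).clB d).clB d).clB d).pow 2
  have h3 : PB fun m => 2 * ((m + m) * (d + 1)) *
      (2 * ((clB d (clB d (clB d (wfB d (m + m + (d + 1)))))) ^ 2 * qdeg d) + 2) :=
    ((PB.const 2).mul ((PB.id.add PB.id).mul (PB.const _))).mul
      (((PB.const 2).mul (h2.mul (PB.const _))).add (PB.const 2))
  obtain ⟨e, he⟩ := h3
  refine ⟨e, fun n m hm hnm => le_trans ?_ (he m hm)⟩
  have hQ := QQ_card (d := d) (ι := Fin n ⊕ Fin n)
  rw [Fintype.card_sum, Fintype.card_fin] at hQ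
  have hQ' : (QQ d (Fin n ⊕ Fin n)).card ≤
      (clB d (clB d (clB d (wfB d (m + m + (d + 1)))))) ^ 2 :=
    hQ.trans (Nat.pow_le_pow_left (clB_mono d (clB_mono d (clB_mono d
      (wfB_mono d (by omega))))) 2)
  rw [Fintype.card_prod, Fintype.card_sum, Fintype.card_fin, Fintype.card_fin]
  beta_reduce
  gcongr

/-- The four terms of the cost for `b` about `x = (n + 1) ^ (1 / (L (d + 1)))`, where
`x ^ (2 d L) = (n + 1) ^ (2 d / (d + 1))`. -/
lemma depth_numerics {d L e2 n b : ℕ} {x : ℝ} (hd : 2 ≤ d) (hL : e2 + 1 ≤ L)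
    (hx : 1 < x) (hxb : x ≤ b) (hbx : (b : ℝ) ≤ 2 * x) (hn : (n : ℝ) + 1 = x ^ (L * (d + 1))) :
    (n : ℝ) * ((b : ℝ) ^ L) ^ (d - 1) ≤ 2 ^ (L * (d - 1)) * x ^ (2 * d * L) ∧
    (n : ℝ) * n / ((b : ℝ) ^ L) ^ 2 ≤ x ^ (2 * d * L) ∧
    ((b : ℝ) ^ L) ^ (2 * d) ≤ 2 ^ (2 * d * L) * x ^ (2 * d * L) ∧
    (b : ℝ) ^ (e2 + 1) * ((n : ℝ) + 1) ≤ 2 ^ (e2 + 1) * x ^ (2 * d * L) := by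
  obtain ⟨d, rfl⟩ : ∃ d', d = d' + 1 := ⟨d - 1, by omega⟩
  have hx0 : 0 < x := by linarith
  have hb0 : (0 : ℝ) < b := by linarith
  have hn' : (n : ℝ) ≤ x ^ (L * (d + 1 + 1)) := by linarith
  have hn0 : (0 : ℝ) ≤ n := Nat.cast_nonneg n
  refine ⟨?_, ?_, ?_, ?_⟩
  · rw [Nat.add_sub_cancel, ← pow_mul]
    calc (n : ℝ) * (b : ℝ) ^ (L * d) ≤ x ^ (L * (d + 1 + 1)) * (2 * x) ^ (L * d) := by gcongr
      _ = 2 ^ (L * d) * x ^ (2 * (d + 1) * L) := by rw [mul_pow]; ring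
  · rw [div_le_iff₀ (by positivity)]
    calc (n : ℝ) * n ≤ x ^ (L * (d + 1 + 1)) * x ^ (L * (d + 1 + 1)) := by gcongr
      _ = x ^ (2 * (d + 1) * L) * (x ^ L) ^ 2 := by ring
      _ ≤ _ := by gcongr
  · rw [← pow_mul, mul_comm L]
    calc (b : ℝ) ^ (2 * (d + 1) * L) ≤ (2 * x) ^ (2 * (d + 1) * L) := by gcongr
      _ = _ := mul_pow _ _ _
  · rw [hn]
    have h1 : x ^ (e2 + 1) * x ^ (L * (d + 1 + 1)) ≤ x ^ (2 * (d + 1) * L) := by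
      rw [← pow_add]
      refine pow_le_pow_right₀ hx.le ?_
      have : L * 1 ≤ L * d := Nat.mul_le_mul_left _ (by omega)
      nlinarith
    calc (b : ℝ) ^ (e2 + 1) * x ^ (L * (d + 1 + 1))
        ≤ (2 * x) ^ (e2 + 1) * x ^ (L * (d + 1 + 1)) := by gcongr
      _ = 2 ^ (e2 + 1) * (x ^ (e2 + 1) * x ^ (L * (d + 1 + 1))) := by rw [mul_pow]; ring
      _ ≤ _ := by gcongr

/-- Query trees of the required depth for generic inputs: `bd_main` with `b` about
`n ^ (1 / (L (d + 1)))` for a large constant `L`. -/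
theorem exists_qtree_bound (d : ℕ) (hd : 2 ≤ d) : ∃ C : ℝ, 0 ≤ C ∧ ∀ n : ℕ, 1 ≤ n →
    ∃ t : QTree (Qr d (Fin n ⊕ Fin n)) ℕ,
      (t.depth : ℝ) ≤ C * (n : ℝ) ^ ((2 * (d : ℝ)) / ((d : ℝ) + 1)) ∧
      ∀ x, Gen x → t.eval (fun q => sgQ q x) = posCount d n x := by
  obtain ⟨e2, Lmin, hmain⟩ := bd_main hd
  obtain ⟨e3, he3⟩ := exists_warren_exp d
  set L : ℕ := Lmin + e2 + 1 with hL
  obtain ⟨c, hc, hB⟩ := hmain L (by omega) (2 * L * (d + 1))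
  set C0 : ℝ := c * (2 * 2 ^ (L * (d - 1)) + 1 + 2 ^ (2 * d * L)) +
    c * (2 * (d + 1) + 1) * e3 * (L * (d + 1)) * 2 ^ (e2 + 1) with hC0
  have hC0n : 0 ≤ C0 := by positivity
  refine ⟨C0 * 2 ^ ((2 * (d : ℝ)) / ((d : ℝ) + 1)), by positivity, fun n hn => ?_⟩
  have hn0 : (0 : ℝ) < n := by exact_mod_cast hn
  have hn1 : (1 : ℝ) ≤ n := by exact_mod_cast hn
  set x : ℝ := ((n : ℝ) + 1) ^ ((1 : ℝ) / (L * (d + 1) : ℕ)) with hxdef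
  have hE : 0 < L * (d + 1) := by positivity
  have hER : (0 : ℝ) < (L * (d + 1) : ℕ) := by exact_mod_cast hE
  have hx : 1 < x := Real.one_lt_rpow (by linarith) (by positivity)
  have hxn : (n : ℝ) + 1 = x ^ (L * (d + 1)) := by
    rw [hxdef, ← Real.rpow_natCast, ← Real.rpow_mul (by positivity), one_div_mul_cancel hER.ne',
      Real.rpow_one]
  have hx0 : 0 < x := by linarith
  set b : ℕ := ⌈x⌉₊ with hb
  have hxb : x ≤ b := Nat.le_ceil x
  have hbx : (b : ℝ) ≤ 2 * x := by
    have := (Nat.ceil_lt_add_one hx0.le).le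
    linarith
  have hb2 : 2 ≤ b := by
    have : (1 : ℝ) < b := lt_of_lt_of_le hx hxb
    have : 1 < b := by exact_mod_cast this
    omega
  have hb0 : (0 : ℝ) < b := by linarith
  obtain ⟨f1, f2, f3, f4⟩ := depth_numerics (b := b) hd (by omega : e2 + 1 ≤ L) hx hxb hbx hxn
  set Y : ℝ := x ^ (2 * d * L) with hY
  have hY0 : 0 ≤ Y := by positivity
  have hYn : Y ≤ 2 ^ ((2 * (d : ℝ)) / ((d : ℝ) + 1)) * (n : ℝ) ^ ((2 * (d : ℝ)) / ((d : ℝ) + 1)) := by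
    have hL0 : (L : ℝ) ≠ 0 := by
      have : 0 < L := by omega
      positivity
    have : Y = ((n : ℝ) + 1) ^ ((2 * (d : ℝ)) / ((d : ℝ) + 1)) := by
      rw [hY, hxdef, ← Real.rpow_natCast, ← Real.rpow_mul (by positivity)]
      congr 1
      push_cast
      field_simp
    rw [this, ← Real.mul_rpow (by norm_num) hn0.le]
    exact Real.rpow_le_rpow (by positivity) (by linarith) (by positivity)
  have hcard : Fintype.card (Fin n ⊕ Fin n) + 1 ≤ b ^ (2 * L * (d + 1) + 1) := by
    rw [Fintype.card_sum, Fintype.card_fin]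
    have h1 : (n : ℝ) + 1 ≤ (b : ℝ) ^ (L * (d + 1)) := by
      rw [hxn]; gcongr
    have h2 : n + 1 ≤ b ^ (L * (d + 1)) := by exact_mod_cast h1
    calc n + n + 1 ≤ (n + 1) * (n + 1) := by nlinarith
      _ ≤ b ^ (L * (d + 1)) * b ^ (L * (d + 1)) := Nat.mul_le_mul h2 h2
      _ = b ^ (2 * L * (d + 1)) := by rw [← pow_add]; congr 1; ring
      _ ≤ _ := Nat.pow_le_pow_right (by omega) (by omega)
  obtain ⟨t, ht, hev⟩ := exists_qtree hn (by positivity) (by positivity) (by positivity)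
    (by positivity) (by positivity) (hB (Fin n ⊕ Fin n) b hb2 hcard)
  refine ⟨t, ht.trans ?_, hev⟩
  have hlog : Real.log (((2 * Fintype.card (Var d (Fin n ⊕ Fin n)) *
          (2 * ((QQ d (Fin n ⊕ Fin n)).card * qdeg d) + 2) : ℕ) : ℝ) ^
          (Fintype.card (Var d (Fin n ⊕ Fin n)) + 1)) ≤
      (2 * (d + 1) + 1) * (n + 1) * (e3 * (L * (d + 1) * b)) := by
    have hV : (Fintype.card (Var d (Fin n ⊕ Fin n)) : ℝ) = (n + n) * (d + 1) := by
      rw [Fintype.card_prod, Fintype.card_sum, Fintype.card_fin, Fintype.card_fin]; push_cast; ring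
    have hW0 : 0 < 2 * Fintype.card (Var d (Fin n ⊕ Fin n)) *
          (2 * ((QQ d (Fin n ⊕ Fin n)).card * qdeg d) + 2) := by
      have : 0 < Fintype.card (Var d (Fin n ⊕ Fin n)) := by
        rw [Fintype.card_prod, Fintype.card_sum, Fintype.card_fin, Fintype.card_fin]
        positivity
      exact Nat.mul_pos (Nat.mul_pos two_pos this) (Nat.succ_pos _)
    have hW := he3 n (n + 1) (by omega) (by omega)
    set W := 2 * Fintype.card (Var d (Fin n ⊕ Fin n)) *
          (2 * ((QQ d (Fin n ⊕ Fin n)).card * qdeg d) + 2)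
    have h1 : Real.log W ≤ e3 * (L * (d + 1) * b) := by
      have : (W : ℝ) ≤ ((n : ℝ) + 1) ^ e3 := by exact_mod_cast hW
      refine (Real.log_le_log (by exact_mod_cast hW0) this).trans ?_
      rw [Real.log_pow, hxn, Real.log_pow]
      have h2 : Real.log x ≤ b := (Real.log_le_self hx0.le).trans hxb
      push_cast
      gcongr
    rw [Real.log_pow]
    push_cast
    rw [hV]
    refine mul_le_mul ?_ h1 (Real.log_natCast_nonneg _) (by positivity)
    nlinarith
  calc _ ≤ c * ((b : ℝ) ^ L) ^ (d - 1) * n + c * ((b : ℝ) ^ L) ^ (d - 1) * n +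
        c / ((b : ℝ) ^ L) ^ 2 * (n * n) + c * ((b : ℝ) ^ L) ^ (2 * d) +
        c * (b : ℝ) ^ e2 * ((2 * (d + 1) + 1) * (n + 1) * (e3 * (L * (d + 1) * b))) := by gcongr
    _ = c * (2 * (n * ((b : ℝ) ^ L) ^ (d - 1)) + n * n / ((b : ℝ) ^ L) ^ 2 +
          ((b : ℝ) ^ L) ^ (2 * d)) +
        c * (2 * (d + 1) + 1) * e3 * (L * (d + 1)) * ((b : ℝ) ^ (e2 + 1) * (n + 1)) := by ring
    _ ≤ c * (2 * (2 ^ (L * (d - 1)) * Y) + Y + 2 ^ (2 * d * L) * Y) +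
        c * (2 * (d + 1) + 1) * e3 * (L * (d + 1)) * (2 ^ (e2 + 1) * Y) := by gcongr
    _ = C0 * Y := by rw [hC0]; ring
    _ ≤ C0 * (2 ^ ((2 * (d : ℝ)) / ((d : ℝ) + 1)) * (n : ℝ) ^ ((2 * (d : ℝ)) / ((d : ℝ) + 1))) := by
      gcongr
    _ = _ := by ring

end Numerics
end Hopcroft

/-- **Decision-tree complexity of Hopcroft's problem in `ℝ^d`:** there is an
algebraic decision tree of constant degree and depth `O(n^{2d/(d+1)})` counting
the point-above-hyperplane pairs. -/
theorem hopcroft_decision_tree (d : ℕ) (hd : 2 ≤ d) :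
    ∃ (C : ℝ) (D : ℕ), ∀ n : ℕ, 1 ≤ n →
      ∃ T : ADT (d * n + (d + 1) * n) ℕ,
        T.DegLE D ∧
        (T.depth : ℝ) ≤ C * (n : ℝ) ^ ((2 * (d : ℝ)) / ((d : ℝ) + 1)) ∧
        ∀ x : Fin (d * n + (d + 1) * n) → ℝ,
          (∀ j : Fin n, (fun t : Fin d => x (coefIdx d n j t)) ≠ 0) →
          T.eval x =
            ((Finset.univ : Finset (Fin n × Fin n)).filter fun ij =>
              x (offIdx d n ij.2) <
                ∑ t : Fin d, x (coefIdx d n ij.2 t) * x (ptIdx d n ij.1 t)).card := by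
  obtain ⟨C, hC, h⟩ := Hopcroft.exists_qtree_bound d hd
  refine ⟨(2 * Hopcroft.qdeg d + 1) * C, Hopcroft.qdeg d, fun n hn => ?_⟩
  obtain ⟨t, ht, hev⟩ := h n hn
  obtain ⟨T, hT1, hT2, hT3⟩ := Hopcroft.exists_adt_posCount t hev
  refine ⟨T, hT1, ?_, fun x _ => hT3 x⟩
  have h2 : (T.depth : ℝ) ≤ (2 * Hopcroft.qdeg d + 1) * t.depth := by exact_mod_cast hT2
  rw [mul_assoc]
  exact h2.trans (mul_le_mul_of_nonneg_left ht (by positivity))
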